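/- Let α be an irrational number which is not of finite Diophantine type, witnessed by a sequence of integer pairs (b_j, q_j) with q_j ≥ 2, gcd(b_j, q_j) = 1, and a sequence of integers k_j → ∞ such that |α − b_j/q_j| ≤ q_j^{−k_j} for every j. Let d, d′ ≥ 2 be integers. If n^d α mod 1 is Poissonian with respect to (b_j/q_j)_{j∈ℕ}, then n^{d′} α mod 1 is also Poissonian with respect to (b_j/q_j)_{j∈ℕ}. (Hence either n^d α mod 1 is Poissonian with respect to (b_j/q_j) for every d ≥ 2, or for no d ≥ 2.) -/

import Mathlib

open Filter MeasureTheory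
open scoped BigOperators Classical

/-- The `m`-level correlation sum `R^(m)(N, 𝒩, f)` of a sequence `x` (the paper's
`F_N` is unfolded as a sum over the integer lattice). -/
noncomputable def corrGen (m N : ℕ) (x : ℕ → ℝ) (f : (Fin (m - 1) → ℝ) → ℝ) : ℝ :=
  (1 / (N : ℝ)) *
    ∑ n ∈ (Fintype.piFinset fun _ : Fin m => Finset.Icc 1 N).filter
        (fun n => Function.Injective n),
      ∑' ℓ : Fin (m - 1) → ℤ,
        f (fun i =>
          (N : ℝ) * ((ℓ i : ℝ) +
            (x (n ⟨i.1, by have := i.isLt; omega⟩) -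
             x (n ⟨i.1 + 1, by have := i.isLt; omega⟩))))

/-- `f ∈ C_c^∞(ℝ^m)`. -/
def SmoothCpt (m : ℕ) (f : (Fin m → ℝ) → ℝ) : Prop :=
  ContDiff ℝ (⊤ : ℕ∞) f ∧ HasCompactSupport f

/-- The `m`-level correlation sum `R^(m)(N, d, α, f)` of `n^d α mod 1`. -/
noncomputable def corrPow (m N d : ℕ) (α : ℝ) (f : (Fin (m - 1) → ℝ) → ℝ) : ℝ :=
  corrGen m N (fun n => (n : ℝ) ^ d * α) f

/-- `n^d α mod 1` is Poissonian along the sequence `Nseq`. -/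
def PoissonianAlong (d : ℕ) (α : ℝ) (Nseq : ℕ → ℕ) : Prop :=
  ∀ m : ℕ, 2 ≤ m → ∀ f : (Fin (m - 1) → ℝ) → ℝ, SmoothCpt (m - 1) f →
    Tendsto (fun j => corrPow m (Nseq j) d α f) atTop
      (nhds (∫ y : Fin (m - 1) → ℝ, f y))

/-- `n^d α mod 1` is Poissonian with respect to the sequence of rationals `b j / q j`. -/
def PoissonianWrt (d : ℕ) (α : ℝ) (q : ℕ → ℕ) : Prop :=
  ∃ Nseq : ℕ → ℕ, Tendsto Nseq atTop atTop ∧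
    Tendsto (fun j => Real.log (Nseq j) / Real.log (q j)) atTop (nhds 1) ∧
    PoissonianAlong d α Nseq

namespace Pois

noncomputable section

open Finset (HasAntidiagonal Icc abs_sum_le_sum_abs add_sum_erase card_biUnion_le
  card_eq_sum_card_fiberwise card_filter card_filter_add_card_filter_not card_filter_le
  card_image_le card_image_of_injective card_insert_le card_insert_of_notMem card_le_card
  card_le_card_of_injOn card_le_mul_card_image_of_maps_to card_product card_sigma card_univ
  coe_filter coe_product coe_sigma dvd_prod_of_mem filter_subset mem_Icc mem_biUnion mem_coe
  mem_erase mem_filter mem_image mem_insert mem_insert_of_mem mem_insert_self mem_of_mem_filter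
  mem_powerset mem_product mem_range mem_univ mul_prod_erase mul_sum ne_of_mem_erase prod_congr
  prod_const prod_filter prod_insert prod_mul_distrib prod_ne_zero_iff prod_pos prod_pow
  prod_primes_dvd prod_univ_sum range sum_add_distrib sum_comm sum_congr sum_const sum_eq_single
  sum_fiberwise sum_filter sum_insert sum_le_sum sum_le_sum_of_subset_of_nonneg sum_mul
  sum_mul_sum sum_sub_distrib univ)
open Function (Injective Surjective update update_of_ne update_self)
open PowerSeries (HasSubst coe_substAlgHom substAlgHom substAlgHom_X)
open Polynomial (IsRoot card_nthRoots evalRingHom mem_nthRoots mem_roots natDegree)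
open Fintype (card_fin card_fun card_piFinset mem_piFinset piFinset sum_equiv)
open Real (exp log log_mul log_nonneg log_pos log_pow norm_eq_abs one_le_sqrt rpow_natCast sq_sqrt
  sqrt)
open Nat (Coprime cast_nonneg)
open LinearMap (codRestrict mulLeft)
open Module (finBasis finrank)
open Submodule (span_le)
open Finsupp (sum_fintype)
open Int (abs_eq_natAbs cast_abs natCast_dvd)
open Sum (elim_inr)
open Complex (mul_conj')
open AddChar (map_add_eq_mul map_neg_eq_conj norm_apply sum_mulShift)
open Set (mem_ofPred_eq)
open ZMod (castHom intCast_zmod_eq_zero_iff_dvd stdAddChar)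
open Ideal (span)
open Algebra (smul_def)
open scoped Polynomial

section

open MvPolynomial

/-- Polynomials in two variables. -/
notation:max K "[X,Y]" => MvPolynomial (Fin 2) K

-- The subscripts mark one-variable polynomials and power series.
notation "Cₚ" => Polynomial.C
notation "Xₚ" => Polynomial.X
notation "Cₛ" => PowerSeries.C
notation "Xₛ" => PowerSeries.X

/-- Bivariate polynomials of total degree at most `n`. -/
abbrev T (K : Type*) [Field K] (n : ℕ) : Submodule K K[X,Y] :=
  restrictTotalDegree (Fin 2) K n

lemma mem_T {K : Type*} [Field K] {n : ℕ} {g : K[X,Y]} :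
    g ∈ T K n ↔ g.totalDegree ≤ n := mem_restrictTotalDegree _ _ _

lemma two_mul_finrank_T (K : Type*) [Field K] (n : ℕ) :
    2 * finrank K (T K n) = (n + 1) * (n + 2) := by
  have hb := Module.finrank_eq_nat_card_basis
    (basisRestrictSupport K {s : Fin 2 →₀ ℕ | (s.sum fun _ e => e) ≤ n})
  have h1 : finrank K (T K n) =
      Nat.card ({s : Fin 2 →₀ ℕ | (s.sum fun _ e => e) ≤ n} : Set _) := hb
  rw [h1]
  let E : (Fin 2 →₀ ℕ) ≃ ℕ × ℕ := Finsupp.equivFunOnFinite.trans (finTwoArrowEquiv ℕ)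
  have h2 : Nat.card ({s : Fin 2 →₀ ℕ | (s.sum fun _ e => e) ≤ n} : Set _) =
      ((range (n + 1)).biUnion HasAntidiagonal.antidiagonal).card := by
    rw [← Nat.card_eq_finsetCard]
    refine Nat.card_congr (E.subtypeEquiv fun s => ?_)
    simp only [Set.mem_ofPred_eq, mem_biUnion, mem_range]
    rw [sum_fintype _ _ (by simp)]
    simp [E, Fin.sum_univ_two, finTwoArrowEquiv]
  rw [h2, Finset.card_biUnion]
  · simp only [Finset.Nat.card_antidiagonal]
    have := Finset.sum_range_id_mul_two (n + 2)
    rw [Finset.sum_range_succ'] at this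
    simp only [add_zero] at this
    rw [mul_comm, this]; simp [mul_comm]
  · intro i _ j _ hij
    rw [Function.onFun, Finset.disjoint_left]
    intro x hx hx'
    simp at hx hx'
    exact hij (hx.symm.trans hx')

instance finite_T (K : Type*) [Field K] (n : ℕ) : Module.Finite K (T K n) := by
  have := two_mul_finrank_T K n
  refine Module.finite_of_finrank_pos ?_
  nlinarith

lemma T_mono (K : Type*) [Field K] {m n : ℕ} (h : m ≤ n) : T K m ≤ T K n := by
  intro g hg
  rw [mem_T] at *
  omega

/-- A finite-dimensional quotient of the polynomial ring is already attained in bounded degree. -/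
lemma exists_T_surj {K W : Type*} [Field K] [AddCommGroup W] [Module K W] [Module.Finite K W]
    (L : K[X,Y] →ₗ[K] W) (hL : Surjective L) :
    ∃ n0, ∀ n, n0 ≤ n → (T K n).map L = ⊤ := by
  let B := finBasis K W
  choose g hg using fun i => hL (B i)
  refine ⟨univ.sup fun i => (g i).totalDegree, fun n hn => ?_⟩
  rw [eq_top_iff, ← B.span_eq, span_le]
  rintro _ ⟨i, rfl⟩
  refine ⟨g i, ?_, hg i⟩
  exact mem_T.2 (le_trans (Finset.le_sup (f := fun i => (g i).totalDegree) (mem_univ i)) hn)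

/-- The Bézout bound in the form used throughout: a vector space onto which the polynomial ring
maps so that all multiples of `g` and of the irreducible `P` die has dimension at most
`deg P * deg g`. -/
lemma bezout_codim {K W : Type*} [Field K] [AddCommGroup W] [Module K W] [Module.Finite K W]
    (P g : K[X,Y]) (hP : Irreducible P) (hPg : ¬ P ∣ g) {e : ℕ}
    (he : g.totalDegree ≤ e) (L : K[X,Y] →ₗ[K] W) (hL : Surjective L)
    (hLg : ∀ a, L (g * a) = 0) (hLP : ∀ a, L (P * a) = 0) :
    finrank K W ≤ P.totalDegree * e := by
  set D := P.totalDegree with hD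
  have hg0 : g ≠ 0 := by rintro rfl; exact hPg (dvd_zero _)
  obtain ⟨n0, hn0⟩ := exists_T_surj L hL
  set n := n0 + D + e with hn
  have htop := hn0 n (by omega)
  -- the map `(a, b) ↦ g a + P b` into `T n`
  let μ : (T K (n - e) × T K (n - D)) →ₗ[K] T K n :=
    codRestrict (T K n)
      (((mulLeft K g).comp (T K (n - e)).subtype).coprod
        ((mulLeft K P).comp (T K (n - D)).subtype)) (by
        rintro ⟨⟨a, ha⟩, ⟨b, hb⟩⟩
        rw [mem_T] at *
        simp only [LinearMap.coprod_apply, LinearMap.comp_apply, Submodule.subtype_apply,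
          LinearMap.mulLeft_apply]
        refine (totalDegree_add _ _).trans (max_le ?_ ?_)
        · refine (totalDegree_mul _ _).trans ?_; omega
        · refine (totalDegree_mul _ _).trans ?_; omega)
  -- its kernel is at most as large as `T (n - e - D)`
  have hker : finrank K (LinearMap.ker μ) ≤ finrank K (T K (n - e - D)) := by
    have key : ∀ x : LinearMap.ker μ, ∃ a' : T K (n - e - D), (x.1.1 : K[X,Y]) = P * a' := by
      rintro ⟨⟨⟨a, ha⟩, ⟨b, hb⟩⟩, hx⟩
      have hx' : g * a + P * b = 0 := congrArg Subtype.val (LinearMap.mem_ker.1 hx)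
      have hdvd : P ∣ g * a := ⟨-b, by linear_combination hx'⟩
      obtain ⟨a', rfl⟩ := (hP.prime.dvd_or_dvd hdvd).resolve_left hPg
      refine ⟨⟨a', ?_⟩, rfl⟩
      rw [mem_T] at *
      by_cases h0 : a' = 0
      · simp [h0]
      · rw [totalDegree_mul_of_isDomain hP.ne_zero h0] at ha
        omega
    choose φ hφ using key
    have hinj : Injective φ := by
      rintro x y hxy
      have h1 : (x.1.1 : K[X,Y]) = y.1.1 := by rw [hφ, hφ, hxy]
      have hx' : g * x.1.1 + P * x.1.2 = 0 := congrArg Subtype.val (LinearMap.mem_ker.1 x.2)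
      have hy' : g * y.1.1 + P * y.1.2 = 0 := congrArg Subtype.val (LinearMap.mem_ker.1 y.2)
      have h2 : (x.1.2 : K[X,Y]) = y.1.2 := by
        apply mul_left_cancel₀ hP.ne_zero
        rw [h1] at hx'
        linear_combination hx' - hy'
      exact Subtype.ext (Prod.ext (Subtype.ext h1) (Subtype.ext h2))
    let φl : LinearMap.ker μ →ₗ[K] T K (n - e - D) :=
      { toFun := φ
        map_add' := fun x y => by
          apply Subtype.ext
          apply mul_left_cancel₀ hP.ne_zero
          have := hφ (x + y)
          have h1 := hφ x
          have h2 := hφ y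
          simp only [Submodule.coe_add, Prod.fst_add] at this ⊢
          rw [← this, mul_add, ← h1, ← h2]
        map_smul' := fun c x => by
          apply Subtype.ext
          apply mul_left_cancel₀ hP.ne_zero
          have := hφ (c • x)
          have h1 := hφ x
          simp only [Submodule.coe_smul, Prod.smul_fst, RingHom.id_apply] at this ⊢
          rw [← this, mul_smul_comm, ← h1] }
    exact LinearMap.finrank_le_finrank_of_injective (f := φl) hinj
  have hrn := LinearMap.finrank_range_add_finrank_ker μ
  rw [Module.finrank_prod] at hrn
  let Λ : T K n →ₗ[K] W := L.comp (T K n).subtype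
  have hΛ : LinearMap.range Λ = ⊤ := by
    rw [LinearMap.range_comp, Submodule.range_subtype, htop]
  have hrn2 := LinearMap.finrank_range_add_finrank_ker Λ
  rw [hΛ, finrank_top] at hrn2
  have hle : finrank K (LinearMap.range μ) ≤ finrank K (LinearMap.ker Λ) := by
    apply Submodule.finrank_mono
    rintro _ ⟨⟨a, b⟩, rfl⟩
    rw [LinearMap.mem_ker]
    change L (g * a + P * b) = 0
    rw [map_add, hLg, hLP, add_zero]
  have t1 := two_mul_finrank_T K n
  have t2 := two_mul_finrank_T K (n - e)
  have t3 := two_mul_finrank_T K (n - D)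
  have t4 := two_mul_finrank_T K (n - e - D)
  have e2 : n - e = n0 + D := by omega
  have e3 : n - D = n0 + e := by omega
  have e4 : n - e - D = n0 := by omega
  generalize finrank K (T K (n - e - D)) = A4 at *
  generalize finrank K (T K (n - e)) = A2 at *
  generalize finrank K (T K (n - D)) = A3 at *
  generalize finrank K (T K n) = A1 at *
  rw [e4] at t4
  rw [e2] at t2
  rw [e3] at t3
  rw [hn] at t1
  nlinarith

section

variable {K : Type*} [Field K]

/-- The derivation `P_Y ∂_X - P_X ∂_Y`, tangent to the curve `P = 0`. -/
def nab (P : K[X,Y]) :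
    Derivation K K[X,Y] K[X,Y] :=
  pderiv 1 P • pderiv 0 - pderiv 0 P • pderiv 1

/-- `nab P` as a linear endomorphism, so that it can be iterated. -/
def nabL (P : K[X,Y]) : Module.End K K[X,Y] :=
  (nab P).toLinearMap

lemma nabL_apply (P g : K[X,Y]) : nabL P g = nab P g := rfl

/-- The `l`-th derivative along the curve `P = 0`, evaluated at `φ`. -/
def jet (P : K[X,Y]) (φ : Fin 2 → K) (l : ℕ) :
    K[X,Y] →ₗ[K] K :=
  (aeval φ).toLinearMap ∘ₗ (nabL P ^ l)

lemma nab_apply (P g : K[X,Y]) :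
    nab P g = pderiv 1 P * pderiv 0 g - pderiv 0 P * pderiv 1 g := by
  simp [nab]

lemma nab_self (P : K[X,Y]) : nab P P = 0 := by
  rw [nab_apply]; ring

lemma jet_zero (P : K[X,Y]) (φ : Fin 2 → K) (g) : jet P φ 0 g = eval φ g := by
  simp [jet, aeval_eq_eval]

lemma jet_succ (P : K[X,Y]) (φ : Fin 2 → K) (l : ℕ) (g) :
    jet P φ (l + 1) g = jet P φ l (nab P g) := by
  simp [jet, pow_succ, nabL_apply]

/-- `g` vanishes to order at least `M` at `φ` along the curve `P = 0`. -/
def OrdGE (P : K[X,Y]) (φ : Fin 2 → K) (M : ℕ) (g : K[X,Y]) :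
    Prop := ∀ l < M, jet P φ l g = 0

variable {P : K[X,Y]} {φ : Fin 2 → K}

lemma OrdGE.mono {M N : ℕ} {g} (h : OrdGE P φ N g) (hMN : M ≤ N) : OrdGE P φ M g :=
  fun l hl => h l (by omega)

lemma OrdGE.nab {M : ℕ} {g} (h : OrdGE P φ (M + 1) g) : OrdGE P φ M (nab P g) :=
  fun l hl => by rw [← jet_succ]; exact h _ (by omega)

lemma ordGE_succ {M : ℕ} {g} (h0 : eval φ g = 0) (h : OrdGE P φ M (Pois.nab P g)) :
    OrdGE P φ (M + 1) g := by
  intro l hl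
  cases l with
  | zero => rw [jet_zero, h0]
  | succ l => rw [jet_succ]; exact h l (by omega)

lemma nab_mul (g a : K[X,Y]) :
    Pois.nab P (g * a) = g * Pois.nab P a + Pois.nab P g * a := by
  rw [Derivation.leibniz]; simp only [smul_eq_mul]; ring

lemma OrdGE.mul {M : ℕ} : ∀ {g} (_ : OrdGE P φ M g) (a), OrdGE P φ M (g * a) := by
  induction M with
  | zero => intro g _ a l hl; omega
  | succ M ih =>
    intro g h a
    apply ordGE_succ
    · have := h 0 (by omega)
      rw [jet_zero] at this
      rw [map_mul, this, zero_mul]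
    · intro l hl
      rw [nab_mul, map_add, ih (h.mono (by omega)) _ l hl, ih h.nab _ l hl, add_zero]

lemma ordGE_self (h : eval φ P = 0) (M : ℕ) : OrdGE P φ M P := by
  intro l _
  cases l with
  | zero => rw [jet_zero, h]
  | succ l => rw [jet_succ, nab_self, map_zero]

lemma jet_mul_of_ord {l : ℕ} : ∀ {g} (_ : OrdGE P φ l g) (a),
    jet P φ l (g * a) = jet P φ l g * eval φ a := by
  induction l with
  | zero => intro g _ a; simp [jet_zero]
  | succ l ih =>
    intro g h a
    rw [jet_succ, nab_mul, map_add, (h.mul _) l (by omega), zero_add, ih h.nab, jet_succ]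

lemma jet_mul_param {u : K[X,Y]} (hu : eval φ u = 0) {l : ℕ} :
    ∀ {g} (_ : OrdGE P φ l g), OrdGE P φ (l + 1) (u * g) ∧
      jet P φ (l + 1) (u * g) = (l + 1 : ℕ) * eval φ (Pois.nab P u) * jet P φ l g := by
  induction l with
  | zero =>
    intro g _
    refine ⟨ordGE_succ (by simp [hu]) (fun l hl => by omega), ?_⟩
    rw [jet_succ, nab_mul]
    simp [jet_zero, hu]
  | succ l ih =>
    intro g h
    obtain ⟨h1, h2⟩ := ih h.nab
    have h3 := h.mul (Pois.nab P u)
    have h4 := jet_mul_of_ord h (Pois.nab P u)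
    refine ⟨ordGE_succ (by simp [hu]) (fun i hi => ?_), ?_⟩
    · rw [nab_mul, map_add, h1 i hi, mul_comm, h3 i hi, add_zero]
    · rw [jet_succ, nab_mul, map_add, h2, mul_comm (Pois.nab P u), h4, jet_succ P φ l g]
      push_cast
      ring

lemma jet_pow_param {u s : K[X,Y]} (hu : eval φ u = 0) (l : ℕ) :
    OrdGE P φ l (u ^ l * s) ∧
      jet P φ l (u ^ l * s) = (l.factorial : K) * eval φ (Pois.nab P u) ^ l * eval φ s := by
  induction l with
  | zero => exact ⟨fun l hl => by omega, by simp [jet_zero]⟩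
  | succ l ih =>
    obtain ⟨h1, h2⟩ := jet_mul_param hu ih.1
    have : u ^ (l + 1) * s = u * (u ^ l * s) := by ring
    rw [this]
    refine ⟨h1, ?_⟩
    rw [h2, ih.2, Nat.factorial_succ]
    push_cast
    ring

/-- The simultaneous jet map at finitely many points. -/
def jets (P : K[X,Y]) (Φ : Finset (Fin 2 → K)) (M : ℕ) :
    K[X,Y] →ₗ[K] (Φ × Fin M → K) :=
  LinearMap.pi fun x => jet P x.1 x.2

lemma ordGE_pow {M : ℕ} {s : K[X,Y]} (hs : eval φ s = 0) :
    OrdGE P φ M (s ^ M) := by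
  have := (jet_pow_param (P := P) (s := 1) hs M).1
  rwa [mul_one] at this

lemma jets_surjective (Φ : Finset (Fin 2 → K)) (M : ℕ)
    (hM : ∀ l : ℕ, 0 < l → l < M → (l : K) ≠ 0)
    (hs : M ≤ 1 ∨ ∀ φ ∈ Φ, eval φ (pderiv 1 P) ≠ 0) :
    Surjective (jets P Φ M) := by
  rw [← LinearMap.range_eq_top]
  by_contra hne
  obtain ⟨f, hf0, hf⟩ := Submodule.exists_le_ker_of_lt_top _ (lt_top_iff_ne_top.2 hne)
  -- the coefficients of a functional killing all jets vanish, by downward induction on the order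
  have key : ∀ (φ : Φ) (n : ℕ) (l : Fin M), M ≤ l.1 + n → f (Pi.single (φ, l) 1) = 0 := by
    intro φ n
    induction n with
    | zero => intro l hl; have := l.2; omega
    | succ n ih =>
      intro l hl
      -- a polynomial separating `φ` from the other points
      have hsep : ∃ s : K[X,Y], eval φ.1 s ≠ 0 ∧ ∀ ψ ∈ Φ, ψ ≠ φ.1 → eval ψ s = 0 := by
        have : ∀ ψ : Fin 2 → K, ψ ≠ φ.1 → ∃ i, φ.1 i ≠ ψ i := by
          intro ψ h
          by_contra hh
          push Not at hh
          exact h (funext fun i => (hh i).symm)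
        choose! i hi using this
        refine ⟨∏ ψ ∈ Φ.erase φ.1, (X (i ψ) - C (ψ (i ψ))), ?_, ?_⟩
        · rw [map_prod, prod_ne_zero_iff]
          intro ψ hψ
          have := hi ψ (ne_of_mem_erase hψ)
          simpa [sub_eq_zero] using this
        · intro ψ hψ hne
          rw [map_prod]
          exact Finset.prod_eq_zero (mem_erase.2 ⟨hne, hψ⟩) (by simp)
      obtain ⟨s, hs1, hs2⟩ := hsep
      set u : K[X,Y] := X 0 - C (φ.1 0) with hu
      have hu0 : eval φ.1 u = 0 := by simp [hu]
      have hnu : nab P u = pderiv 1 P := by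
        rw [nab_apply]; simp [hu, pderiv_X]
      obtain ⟨h1, h2⟩ := jet_pow_param (P := P) (s := s ^ M) hu0 l
      have hval : jet P φ.1 l (u ^ (l : ℕ) * s ^ M) ≠ 0 := by
        rw [h2, hnu]
        refine mul_ne_zero (mul_ne_zero ?_ ?_) ?_
        · have hfac : ∀ j : ℕ, j < M → (j.factorial : K) ≠ 0 := by
            intro j
            induction j with
            | zero => simp
            | succ j ih =>
              intro hj
              rw [Nat.factorial_succ, Nat.cast_mul]
              exact mul_ne_zero (hM _ (by omega) hj) (ih (by omega))
          exact hfac _ l.2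
        · rcases hs with hs | hs
          · have : (l : ℕ) = 0 := by have := l.2; omega
            simp [this]
          · exact pow_ne_zero _ (hs _ φ.2)
        · simpa using pow_ne_zero M hs1
      have hker : f (jets P Φ M (u ^ (l : ℕ) * s ^ M)) = 0 := hf ⟨_, rfl⟩
      rw [LinearMap.pi_apply_eq_sum_univ] at hker
      rw [sum_eq_single (φ, l)] at hker
      · exact (smul_eq_zero.1 hker).resolve_left hval |> fun h => by
          convert h using 2
          ext x
          simp [Pi.single_apply, eq_comm]
      · rintro ⟨ψ, i⟩ _ hne
        by_cases hψ : ψ = φ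
        · subst hψ
          rcases lt_trichotomy i.1 l.1 with h | h | h
          · change jet P ψ.1 i (u ^ (l : ℕ) * s ^ M) • _ = 0
            rw [h1 _ h, zero_smul]
          · exact absurd (show (ψ, i) = (ψ, l) from Prod.ext rfl (Fin.ext h)) hne
          · have := ih i (by omega)
            convert smul_zero _
            convert this using 2
            ext x
            simp [Pi.single_apply, eq_comm]
        · change jet P ψ.1 i (u ^ (l : ℕ) * s ^ M) • _ = 0
          have h0 := hs2 ψ.1 ψ.2 (fun h => hψ (Subtype.ext h))
          have := (ordGE_pow (P := P) (M := M) h0).mul (u ^ (l : ℕ)) i i.2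
          rw [mul_comm, this, zero_smul]
      · simp
  apply hf0
  ext x
  obtain ⟨φ, l⟩ := x
  simpa using key φ M l (by omega)

/-- Zero estimate: the total order of vanishing of `g` along the irreducible curve `P = 0` is at
most `deg P * deg g`. -/
lemma zero_est (hP : Irreducible P) {g : K[X,Y]} (hg : ¬ P ∣ g) {e : ℕ}
    (he : g.totalDegree ≤ e)
    (Φ : Finset (Fin 2 → K)) (M : ℕ) (hM : ∀ l : ℕ, 0 < l → l < M → (l : K) ≠ 0)
    (hs : M ≤ 1 ∨ ∀ φ ∈ Φ, eval φ (pderiv 1 P) ≠ 0)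
    (hΦ : ∀ φ ∈ Φ, eval φ P = 0) (hord : ∀ φ ∈ Φ, OrdGE P φ M g) :
    M * Φ.card ≤ P.totalDegree * e := by
  have := bezout_codim P g hP hg he (jets P Φ M) (jets_surjective Φ M hM hs)
    (fun a => funext fun x => (hord x.1 x.1.2).mul a x.2 x.2.2)
    (fun a => funext fun x => (ordGE_self (hΦ x.1 x.1.2) M).mul a x.2 x.2.2)
  rw [Module.finrank_fintype_fun_eq_card] at this
  simpa [mul_comm] using this

end

section

variable {K : Type*} [Field K]

lemma totalDegree_pderiv_le (i : Fin 2) (g : K[X,Y]) :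
    (pderiv i g).totalDegree ≤ g.totalDegree - 1 := by
  refine Finset.sup_le fun m hm => ?_
  rw [mem_support_iff, coeff_pderiv] at hm
  have h1 : m + Finsupp.single i 1 ∈ g.support := by
    rw [mem_support_iff]; exact left_ne_zero_of_mul hm
  have h2 := le_totalDegree h1
  rw [Finsupp.sum_add_index' (by simp) (by simp), Finsupp.sum_single_index (by simp)] at h2
  omega

lemma totalDegree_nab_le (P g : K[X,Y]) :
    (nab P g).totalDegree ≤ g.totalDegree + P.totalDegree := by
  rw [nab_apply]
  have h (i) := totalDegree_pderiv_le i g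
  have h' (i) := totalDegree_pderiv_le i P
  refine (totalDegree_sub _ _).trans (max_le ?_ ?_) <;> refine (totalDegree_mul _ _).trans ?_
  · have := h 0; have := h' 1; omega
  · have := h 1; have := h' 0; omega

/-- The quotient map onto the coordinate ring of the curve `P = 0`. -/
def qmap (P : K[X,Y]) :
    K[X,Y] →ₗ[K] (K[X,Y] ⧸ span {P}) :=
  (Ideal.Quotient.mkₐ K (span {P})).toLinearMap

lemma qmap_eq_zero {P g : K[X,Y]} : qmap P g = 0 ↔ P ∣ g := by
  rw [← Ideal.mem_span_singleton]
  exact Ideal.Quotient.eq_zero_iff_mem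

/-- The functions on the curve represented by polynomials of degree at most `n`. -/
abbrev W (P : K[X,Y]) (n : ℕ) := (T K n).map (qmap P)

lemma finrank_W {P : K[X,Y]} (hP : P ≠ 0) {n : ℕ} (hn : P.totalDegree ≤ n) :
    2 * finrank K (W P n) + P.totalDegree * P.totalDegree =
      P.totalDegree * (2 * n + 3) := by
  set D := P.totalDegree with hD
  let f : T K n →ₗ[K] _ := (qmap P).domRestrict (T K n)
  have h1 := LinearMap.finrank_range_add_finrank_ker f
  have h2 : LinearMap.range f = W P n := by
    rw [LinearMap.range_domRestrict]
  have hμ : ∀ b : T K (n - D), P * b.1 ∈ T K n := by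
    rintro ⟨b, hb⟩
    rw [mem_T] at *
    refine (totalDegree_mul _ _).trans ?_
    change P.totalDegree + b.totalDegree ≤ n
    omega
  let μ0 : T K (n - D) →ₗ[K] T K n :=
    codRestrict (T K n) ((mulLeft K P).comp (T K (n - D)).subtype) hμ
  let μ : T K (n - D) →ₗ[K] LinearMap.ker f :=
    codRestrict _ μ0 (fun b => LinearMap.mem_ker.2 (qmap_eq_zero.2 ⟨b.1, rfl⟩))
  have h3 : Function.Bijective μ := by
    constructor
    · intro a b hab
      have : P * a.1 = P * b.1 := congrArg (fun x => (x.1 : T K n).1) hab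
      exact Subtype.ext (mul_left_cancel₀ hP this)
    · rintro ⟨⟨a, ha⟩, ha'⟩
      obtain ⟨b, rfl⟩ : P ∣ a := qmap_eq_zero.1 (LinearMap.mem_ker.1 ha')
      refine ⟨⟨b, ?_⟩, rfl⟩
      rw [mem_T] at *
      by_cases h0 : b = 0
      · simp [h0]
      · rw [totalDegree_mul_of_isDomain hP h0] at ha
        omega
  have h4 := (LinearEquiv.ofBijective μ h3).finrank_eq
  rw [h2, ← h4] at h1
  have t1 := two_mul_finrank_T K n
  have t2 := two_mul_finrank_T K (n - D)
  obtain ⟨r, rfl⟩ := Nat.exists_eq_add_of_le hn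
  rw [Nat.add_sub_cancel_left] at *
  nlinarith

lemma pderiv_expand_eq_zero (p : ℕ) [CharP K p] (i : Fin 2) (v : K[X,Y]) :
    pderiv i (expand p v) = 0 := by
  induction v using MvPolynomial.induction_on with
  | C a => rw [expand_C, pderiv_C]
  | add a b ha hb => rw [map_add, map_add, ha, hb, add_zero]
  | mul_X a j ha =>
    rw [map_mul, expand_X, pderiv_mul, ha, pderiv_pow]
    have : (p : K[X,Y]) = 0 := by
      rw [← map_natCast C, CharP.cast_eq_zero K p, map_zero]
    rw [this]
    ring

lemma jet_mul_expand (P : K[X,Y]) (φ : Fin 2 → K) (p : ℕ) [CharP K p] (l : ℕ)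
    (v : K[X,Y]) : ∀ a : K[X,Y],
    jet P φ l (a * expand p v) = jet P φ l a * eval φ (expand p v) := by
  induction l with
  | zero => intro a; simp [jet_zero]
  | succ l ih =>
    intro a
    have : nab P (expand p v) = 0 := by
      rw [nab_apply, pderiv_expand_eq_zero, pderiv_expand_eq_zero]; ring
    rw [jet_succ, nab_mul, this, mul_zero, zero_add, ih, jet_succ]

lemma jet_eq_eval_iterate (P : K[X,Y]) (φ : Fin 2 → K) (l : ℕ) (a) :
    jet P φ l a = eval φ ((nabL P ^ l) a) := by
  simp [jet, aeval_eq_eval]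

lemma totalDegree_nab_pow_le (P a : K[X,Y]) (l : ℕ) :
    ((nabL P ^ l) a).totalDegree
      ≤ a.totalDegree + l * P.totalDegree := by
  induction l with
  | zero => simp
  | succ l ih =>
    have h := totalDegree_nab_le P ((nabL P ^ l) a)
    have h' : (nabL P ^ (l + 1)) a = nab P ((nabL P ^ l) a) := by
      rw [pow_succ', Module.End.mul_apply, nabL_apply]
    rw [h', Nat.succ_mul]
    omega

/-- Stepanov's method: an auxiliary polynomial of degree `k + p V` which does not vanish
identically on the curve but vanishes to order `M` at all its rational points. -/
lemma stepanov_core (p : ℕ) [CharP K p] {P : K[X,Y]}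
    (hP : Irreducible P) (Φ : Finset (Fin 2 → K)) (hfix : ∀ φ ∈ Φ, ∀ i, φ i ^ p = φ i)
    (hzero : ∀ φ ∈ Φ, eval φ P = 0) (hsm : ∀ φ ∈ Φ, eval φ (pderiv 1 P) ≠ 0)
    (k V M : ℕ) (hM : M ≤ p) (hk : P.totalDegree * k < p) (hΦ : P.totalDegree * V < Φ.card)
    (hdim : M * finrank K (W P (k + P.totalDegree * M + V)) <
      finrank K (W P k) * finrank K (W P V)) :
    M * Φ.card ≤ P.totalDegree * (k + p * V) := by
  have hlne : ∀ l : ℕ, 0 < l → l < p → (l : K) ≠ 0 := by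
    intro l h0 hl h
    rw [CharP.cast_eq_zero_iff K p] at h
    exact absurd (Nat.le_of_dvd h0 h) (by omega)
  let B1 := finBasis K (W P k)
  let B2 := finBasis K (W P V)
  have hB1 : ∀ i, ∃ e ∈ T K k, qmap P e = B1 i := fun i => (B1 i).2
  have hB2 : ∀ i, ∃ e ∈ T K V, qmap P e = B2 i := fun i => (B2 i).2
  choose e he he' using hB1
  choose v hv hv' using hB2
  have hinde : ∀ c : Fin (finrank K (W P k)) → K, P ∣ ∑ i, c i • e i → ∀ i, c i = 0 := by
    intro c hc
    have h1 := qmap_eq_zero.2 hc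
    have h2 : ∑ i, c i • B1 i = 0 := by
      apply Subtype.ext
      rw [Submodule.coe_zero, ← h1, map_sum, AddSubmonoidClass.coe_finsetSum]
      exact sum_congr rfl fun i _ => by rw [map_smul, he']; rfl
    exact Fintype.linearIndependent_iff.1 B1.linearIndependent c h2
  have hindv : ∀ c : Fin (finrank K (W P V)) → K, P ∣ ∑ i, c i • v i → ∀ i, c i = 0 := by
    intro c hc
    have h1 := qmap_eq_zero.2 hc
    have h2 : ∑ i, c i • B2 i = 0 := by
      apply Subtype.ext
      rw [Submodule.coe_zero, ← h1, map_sum, AddSubmonoidClass.coe_finsetSum]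
      exact sum_congr rfl fun i _ => by rw [map_smul, hv']; rfl
    exact Fintype.linearIndependent_iff.1 B2.linearIndependent c h2
  set N := nabL P with hN
  -- the vanishing conditions, as a linear map in the coefficients
  let F : Fin M → (Fin (finrank K (W P k)) × Fin (finrank K (W P V)) → K) →ₗ[K] K[X,Y] := fun l =>
    Fintype.linearCombination K (fun x : Fin (finrank K (W P k)) × Fin (finrank K (W P V)) => (N ^ (l : ℕ)) (e x.1) * v x.2)
  have hF : ∀ l α, qmap P (F l α) ∈ W P (k + P.totalDegree * M + V) := by
    intro l α
    refine ⟨F l α, ?_, rfl⟩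
    change ∑ x : Fin (finrank K (W P k)) × Fin (finrank K (W P V)), α x • ((N ^ (l : ℕ)) (e x.1) * v x.2) ∈ T K (k + P.totalDegree * M + V)
    refine Submodule.sum_mem _ fun x _ => Submodule.smul_mem _ _ ?_
    rw [mem_T]
    refine (totalDegree_mul _ _).trans ?_
    have h1 := totalDegree_nab_pow_le P (e x.1) l
    have h2 := mem_T.1 (he x.1)
    have h3 := mem_T.1 (hv x.2)
    have h4 : (l : ℕ) * P.totalDegree ≤ P.totalDegree * M := by rw [mul_comm]; exact Nat.mul_le_mul_left _ l.2.le
    rw [← hN] at h1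
    omega
  let Ξ : (Fin (finrank K (W P k)) × Fin (finrank K (W P V)) → K) →ₗ[K] (Fin M → W P (k + P.totalDegree * M + V)) :=
    LinearMap.pi fun l => codRestrict _ ((qmap P).comp (F l)) (hF l)
  have hker : LinearMap.ker Ξ ≠ ⊥ := by
    apply LinearMap.ker_ne_bot_of_finrank_lt
    rw [Module.finrank_pi_fintype, Module.finrank_fintype_fun_eq_card]
    simpa using hdim
  obtain ⟨α, hα, hα0⟩ := Submodule.exists_mem_ne_zero_of_ne_bot hker
  have hcond : ∀ l : Fin M, P ∣ ∑ x : Fin (finrank K (W P k)) × Fin (finrank K (W P V)), α x • ((N ^ (l : ℕ)) (e x.1) * v x.2) := by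
    intro l
    have := congrFun (LinearMap.mem_ker.1 hα) l
    exact qmap_eq_zero.1 (congrArg Subtype.val this)
  set G : K[X,Y] := ∑ x : Fin (finrank K (W P k)) × Fin (finrank K (W P V)), α x • (e x.1 * expand p (v x.2)) with hG
  have heval : ∀ φ ∈ Φ, ∀ w : K[X,Y], eval φ (expand p w) = eval φ w := by
    intro φ hφ w
    rw [eval_expand]
    congr 2
    exact funext fun i => hfix φ hφ i
  have hjetG : ∀ φ ∈ Φ, ∀ l, jet P φ l G = ∑ x : Fin (finrank K (W P k)) × Fin (finrank K (W P V)), α x * (jet P φ l (e x.1) * eval φ (v x.2)) := by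
    intro φ hφ l
    rw [hG, map_sum]
    refine sum_congr rfl fun x _ => ?_
    rw [map_smul, jet_mul_expand, heval φ hφ, smul_eq_mul]
  have hord : ∀ φ ∈ Φ, OrdGE P φ M G := by
    intro φ hφ l hl
    rw [hjetG φ hφ]
    obtain ⟨c, hc⟩ := hcond ⟨l, hl⟩
    have := congrArg (eval φ) hc
    rw [map_mul, hzero φ hφ, zero_mul, map_sum] at this
    rw [← this]
    refine sum_congr rfl fun x _ => ?_
    rw [smul_eval, map_mul, jet_eq_eval_iterate]
  have hdegG : G.totalDegree ≤ k + p * V := by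
    rw [← mem_T, hG]
    refine Submodule.sum_mem _ fun x _ => Submodule.smul_mem _ _ ?_
    rw [mem_T]
    refine (totalDegree_mul _ _).trans ?_
    rw [totalDegree_expand, mul_comm _ p]
    exact add_le_add (mem_T.1 (he _)) (Nat.mul_le_mul_left _ (mem_T.1 (hv _)))
  have hPG : ¬ P ∣ G := by
    rintro ⟨c, hc⟩
    apply hα0
    have hAi : ∀ φ ∈ Φ, ∀ i, ∑ j, α (i, j) * eval φ (v j) = 0 := by
      intro φ hφ
      by_contra hne
      push Not at hne
      obtain ⟨i0, hi0⟩ := hne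
      set g : K[X,Y] := ∑ i, (∑ j, α (i, j) * eval φ (v j)) • e i with hg
      have hPg : ¬ P ∣ g := fun h => hi0 (hinde _ h i0)
      have hgdeg : g.totalDegree ≤ k := by
        rw [← mem_T]
        exact Submodule.sum_mem _ fun x _ => Submodule.smul_mem _ _ (he x)
      have hgord : OrdGE P φ p g := by
        intro l hl
        have h1 : jet P φ l G = 0 := by
          rw [hc]; exact (ordGE_self (hzero φ hφ) p).mul c l hl
        rw [hjetG φ hφ] at h1
        rw [← h1, hg, map_sum, Fintype.sum_prod_type]
        refine sum_congr rfl fun i _ => ?_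
        rw [map_smul, smul_eq_mul, sum_mul]
        exact sum_congr rfl fun j _ => by ring
      have := zero_est hP hPg hgdeg {φ} p hlne (Or.inr (by simpa using hsm φ hφ))
        (by simpa using hzero φ hφ) (by simpa using hgord)
      rw [Finset.card_singleton] at this
      omega
    ext ⟨i, j⟩
    refine hindv (fun j => α (i, j)) ?_ j
    by_contra hnd
    have hgdeg : (∑ j, α (i, j) • v j).totalDegree ≤ V := by
      rw [← mem_T]
      exact Submodule.sum_mem _ fun x _ => Submodule.smul_mem _ _ (hv x)
    have := zero_est hP hnd hgdeg Φ 1 (fun l h0 h1 => by omega) (Or.inl le_rfl) hzero (by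
      intro φ hφ l hl
      obtain rfl : l = 0 := by omega
      rw [jet_zero, map_sum, ← hAi φ hφ i]
      exact sum_congr rfl fun j _ => by rw [smul_eval])
    omega
  exact zero_est hP hPG hdegG Φ M (fun l h0 hl => hlne l h0 (by omega)) (Or.inr hsm) hzero hord

end

section

variable {K : Type*} [Field K]

lemma stepanov_dim {D p V k M h1 h2 h3 : ℕ} (hD : 1 ≤ D) (hV : V * V ≤ p)
    (hVD : 18 * D ^ 4 ≤ V) (hk1 : p < 2 * D * k + 2 * D)
    (hM : M + 9 * D ^ 4 = D * V)
    (e1 : 2 * h1 + D * D = D * (2 * (k + D * M + V) + 3))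
    (e2 : 2 * h2 + D * D = D * (2 * k + 3)) (e3 : 2 * h3 + D * D = D * (2 * V + 3)) :
    M * h1 < h2 * h3 := by
  have hpD : 2 * D ^ 2 ≤ p := by
    have h2 : D ^ 2 ≤ D ^ 4 := Nat.pow_le_pow_right hD (by norm_num)
    have h3 : 1 ≤ D ^ 2 := Nat.one_le_pow _ _ hD
    have : V ≤ V * V := by nlinarith
    omega
  zify at *
  set d : ℤ := (D : ℤ)
  set a : ℤ := 2 * k + 3 - d with ha
  have hda' : d * a = 2 * (d * k) + 3 * d - d ^ 2 := by rw [ha]; ring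
  have hda : (p : ℤ) + 2 ≤ 2 * (d * a) := by
    have : 2 * d * (k : ℤ) = 2 * (d * k) := by ring
    linarith
  have hp0 : (0 : ℤ) ≤ p := by positivity
  have ha0 : 0 < a := by
    have : 0 < d * a := by linarith
    exact pos_of_mul_pos_right this (by omega)
  have hd4 : 0 < d ^ 4 := pow_pos (by omega) 4
  have hM0 : (M : ℤ) ≤ d * V := by linarith
  have hM1 : (0 : ℤ) ≤ M := by positivity
  have key1 : 4 * d * (M : ℤ) ^ 2 + 4 * M * V ≤ 8 * d ^ 3 * p := by
    have c1 : (M : ℤ) ^ 2 ≤ (d * V) ^ 2 := pow_le_pow_left₀ hM1 hM0 2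
    have c2 : (M : ℤ) * V ≤ d * V * V := mul_le_mul_of_nonneg_right hM0 (by positivity)
    have c3 : d * (M : ℤ) ^ 2 ≤ d ^ 3 * p := by
      calc d * (M : ℤ) ^ 2 ≤ d * (d * V) ^ 2 := mul_le_mul_of_nonneg_left c1 (by omega)
        _ = d ^ 3 * (V * V) := by ring
        _ ≤ d ^ 3 * p := mul_le_mul_of_nonneg_left hV (by positivity)
    have c4 : d * V * V ≤ d ^ 3 * (p : ℤ) := by
      calc d * V * V = d * (V * V) := by ring
        _ ≤ d ^ 3 * p := by
          refine mul_le_mul ?_ hV (by positivity) (by positivity)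
          calc d = d ^ 1 := (pow_one d).symm
            _ ≤ d ^ 3 := pow_le_pow_right₀ (by omega) (by norm_num)
    linarith
  have key2 : 8 * d ^ 3 * p < a * (2 * (9 * d ^ 4) + 3 * d - d * d) := by
    have c1 : d * d ≤ d ^ 4 := by
      calc d * d = d ^ 2 := by ring
        _ ≤ d ^ 4 := pow_le_pow_right₀ (by omega) (by norm_num)
    have c2 : a * (17 * d ^ 4) ≤ a * (2 * (9 * d ^ 4) + 3 * d - d * d) := by
      apply mul_le_mul_of_nonneg_left _ ha0.le
      linarith
    have c4 : 0 < d ^ 3 := pow_pos (by omega) 3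
    have c3 : d ^ 3 * ((p : ℤ) + 2) ≤ d ^ 3 * (2 * (d * a)) :=
      mul_le_mul_of_nonneg_left hda c4.le
    have c5 : 0 ≤ d ^ 3 * p := by positivity
    have c6 : a * (17 * d ^ 4) = 17 * (d ^ 3 * (d * a)) := by ring
    linarith
  have e1' : 2 * (h1 : ℤ) = d * (a + 2 * d * M + 2 * V) := by rw [ha]; linarith
  have e2' : 2 * (h2 : ℤ) = d * a := by rw [ha]; linarith
  have e3' : 2 * (h3 : ℤ) = d * (2 * V + 3 - d) := by linarith
  have e4 : 4 * ((M : ℤ) * h1) = d * (2 * M * (a + 2 * d * M + 2 * V)) := by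
    calc 4 * ((M : ℤ) * h1) = 2 * M * (2 * h1) := by ring
      _ = _ := by rw [e1']; ring
  have e5 : 4 * ((h2 : ℤ) * h3) = d * (d * a * (2 * V + 3 - d)) := by
    calc 4 * ((h2 : ℤ) * h3) = (2 * h2) * (2 * h3) := by ring
      _ = _ := by rw [e2', e3']; ring
  have e6 : 2 * (M : ℤ) * (a + 2 * d * M + 2 * V) < d * a * (2 * V + 3 - d) := by
    have : (M : ℤ) = d * V - 9 * d ^ 4 := by linarith
    have e7 : 2 * (M : ℤ) * a = 2 * d * V * a - 2 * (9 * d ^ 4) * a := by rw [this]; ring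
    have e8 : (9 * d ^ 4 : ℤ) * 2 * a + (3 * d - d * d) * a =
      a * (2 * (9 * d ^ 4) + 3 * d - d * d) := by ring
    have e9 : 2 * (M : ℤ) * (a + 2 * d * M + 2 * V) =
      2 * M * a + (4 * d * (M : ℤ) ^ 2 + 4 * M * V) := by ring
    have e10 : d * a * (2 * V + 3 - d) = 2 * d * V * a + (3 * d - d * d) * a := by ring
    linarith
  have : d * (2 * (M : ℤ) * (a + 2 * d * M + 2 * V)) < d * (d * a * (2 * V + 3 - d)) := by
    apply mul_lt_mul_of_pos_left e6; omega
  linarith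

/-- The number of rational points (fixed points of `x ↦ x ^ p`) on an irreducible plane curve of
bounded degree over a field of characteristic `p` is at most `p + O(√p)`. -/
theorem curve_bound (D0 : ℕ) : ∃ C : ℝ, 0 ≤ C ∧ ∀ (K : Type) [Field K] (p : ℕ) [Fact p.Prime]
    [CharP K p] (P : K[X,Y]), Irreducible P → P.totalDegree ≤ D0 →
    pderiv 1 P ≠ 0 → ∀ Φ : Finset (Fin 2 → K), (∀ φ ∈ Φ, ∀ i, φ i ^ p = φ i) →
    (∀ φ ∈ Φ, eval φ P = 0) → (Φ.card : ℝ) ≤ p + C * sqrt p := by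
  set κ : ℕ := 9 * D0 ^ 4 with hκ
  set p0 : ℝ := (2 * κ + 1) ^ 2 with hp0
  refine ⟨p0 ^ 2 + 4 * (κ + D0) + D0 * D0, by positivity, ?_⟩
  intro K _ p hp _ P hP hPD hPY Φ hfix hzero
  have hpp := hp.out
  have hp1 : (1 : ℝ) ≤ p := by exact_mod_cast hpp.one_lt.le
  have hsq1 : 1 ≤ sqrt p := one_le_sqrt.2 hp1
  have hsq : sqrt p * sqrt p = p := Real.mul_self_sqrt (by linarith)
  rcases lt_or_ge (p : ℝ) p0 with hsmall | hbig
  · -- for small `p` the trivial bound `p ^ 2` suffices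
    have hcard : Φ.card ≤ p * p := by
      set R : Finset K := (Xₚ ^ p - Xₚ : K[X]).roots.toFinset with hR
      have hne : (Xₚ ^ p - Xₚ : K[X]) ≠ 0 :=
        FiniteField.X_pow_card_sub_X_ne_zero K hpp.one_lt
      have hRc : R.card ≤ p := by
        refine (Multiset.toFinset_card_le _).trans ((Polynomial.card_roots' _).trans ?_)
        rw [FiniteField.X_pow_card_sub_X_natDegree_eq K hpp.one_lt]
      have hsub : Φ ⊆ piFinset (fun _ : Fin 2 => R) := by
        intro φ hφ
        rw [mem_piFinset]
        intro i
        rw [hR, Multiset.mem_toFinset, mem_roots hne]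
        simp [hfix φ hφ i]
      have := card_le_card hsub
      rw [card_piFinset] at this
      simp only [prod_const, card_univ, card_fin] at this
      nlinarith
    have h1 : (Φ.card : ℝ) ≤ p * p := by exact_mod_cast hcard
    have h2 : (p : ℝ) * p ≤ p0 ^ 2 := by nlinarith
    have h3 : 0 ≤ (4 * (κ + D0) + D0 * D0 : ℝ) := by positivity
    nlinarith [sq_nonneg p0]
  set D := P.totalDegree with hD
  have hD1 : 1 ≤ D := by
    by_contra h
    have h0 : D = 0 := by omega
    rw [hD, totalDegree_eq_zero_iff_eq_C] at h0
    rw [h0, pderiv_C] at hPY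
    exact hPY rfl
  set Φ1 := Φ.filter (fun φ => eval φ (pderiv 1 P) ≠ 0) with hΦ1
  set Φ2 := Φ.filter (fun φ => ¬ eval φ (pderiv 1 P) ≠ 0) with hΦ2
  have hsplit : Φ1.card + Φ2.card = Φ.card := card_filter_add_card_filter_not _
  have hsing : Φ2.card ≤ D0 * D0 := by
    have hnd : ¬ P ∣ pderiv 1 P := by
      rintro ⟨c, hc⟩
      have h1 := totalDegree_pderiv_le 1 P
      have hc0 : c ≠ 0 := by rintro rfl; exact hPY (by rw [hc, mul_zero])
      rw [hc, totalDegree_mul_of_isDomain hP.ne_zero hc0] at h1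
      omega
    have := zero_est hP hnd (totalDegree_pderiv_le 1 P) Φ2 1 (fun l _ _ => by omega)
      (Or.inl le_rfl) (fun φ hφ => hzero φ (mem_of_mem_filter _ hφ)) (by
        intro φ hφ l hl
        obtain rfl : l = 0 := by omega
        rw [jet_zero]
        exact not_not.1 (mem_filter.1 hφ).2)
    calc Φ2.card ≤ D * (D - 1) := by simpa using this
      _ ≤ D0 * D0 := Nat.mul_le_mul hPD (by omega)
  set V := Nat.sqrt p with hV
  have hVV : V * V ≤ p := Nat.sqrt_le p
  have hVV' : p < (V + 1) * (V + 1) := Nat.lt_succ_sqrt p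
  have hVs : (V : ℝ) ≤ sqrt p := by
    apply Real.le_sqrt_of_sq_le
    rw [sq]; exact_mod_cast hVV
  have hVs' : sqrt p ≤ V + 1 := by
    rw [Real.sqrt_le_left (by positivity), sq]
    exact_mod_cast hVV'.le
  have hVκ : 2 * κ ≤ V := by
    have : (2 * κ + 1 : ℝ) ≤ sqrt p := Real.le_sqrt_of_sq_le hbig
    have : (2 * κ : ℝ) ≤ V := by linarith
    exact_mod_cast this
  have hDκ : 9 * D ^ 4 ≤ κ := by rw [hκ]; gcongr
  have hD0 : D ≤ κ := by
    have : D ^ 1 ≤ D ^ 4 := Nat.pow_le_pow_right hD1 (by norm_num)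
    rw [pow_one] at this
    omega
  have hVp : 1 ≤ V := by omega
  have hpos2D : 0 < 2 * D := by omega
  have hsmooth : (Φ1.card : ℝ) ≤ p + 4 * (κ + D0) * sqrt p := by
    by_cases hDV : D * V < Φ1.card
    · set k := p / (2 * D) with hk
      have hk2 : 2 * D * k ≤ p := Nat.mul_div_le p (2 * D)
      have hk1 : p < 2 * D * k + 2 * D := Nat.lt_mul_div_succ p hpos2D |> fun h => by
        rw [mul_add, mul_one] at h; exact h
      obtain ⟨M, hM⟩ : ∃ M, M + 9 * D ^ 4 = D * V := ⟨D * V - 9 * D ^ 4, by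
        apply Nat.sub_add_cancel
        nlinarith⟩
      have hDk : D ≤ k := by
        rw [hk, Nat.le_div_iff_mul_le hpos2D]
        have h2 : D ^ 2 ≤ D ^ 4 := Nat.pow_le_pow_right hD1 (by norm_num)
        nlinarith
      have hDk2 : 2 * (D * k) ≤ p := by rw [← mul_assoc]; exact hk2
      have hcore := stepanov_core p hP Φ1
        (fun φ hφ => hfix φ (mem_of_mem_filter _ hφ))
        (fun φ hφ => hzero φ (mem_of_mem_filter _ hφ))
        (fun φ hφ => (mem_filter.1 hφ).2) k V M (by
          have : D * V ≤ V * V := Nat.mul_le_mul_right _ (by omega)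
          omega) (by rw [← hD]; have := hpp.pos; omega) hDV
        (stepanov_dim hD1 hVV (by omega) hk1 hM
          (finrank_W hP.ne_zero (by
            rw [← hD]
            omega)) (finrank_W hP.ne_zero (by rw [← hD]; exact hDk))
          (finrank_W hP.ne_zero (by rw [← hD]; omega)))
      rw [← hD] at hcore
      have hc1 : (M : ℝ) * Φ1.card ≤ D * (k + p * V) := by exact_mod_cast hcore
      have hM' : (M : ℝ) + 9 * D ^ 4 = D * V := by exact_mod_cast hM
      have hDκ' : (9 * D ^ 4 : ℝ) ≤ κ := by exact_mod_cast hDκ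
      have hDk' : (D : ℝ) * k ≤ D0 * p := by
        have : D * k ≤ D0 * p := by
          calc D * k ≤ p := by
                generalize D * k = x at hDk2
                omega
            _ ≤ D0 * p := Nat.le_mul_of_pos_left _ (by omega)
        exact_mod_cast this
      have hV1 : (1 : ℝ) ≤ V := by exact_mod_cast hVp
      have hD1' : (1 : ℝ) ≤ D := by exact_mod_cast hD1
      have hM4 : sqrt p ≤ 4 * M := by
        have : (2 * κ : ℝ) ≤ V := by exact_mod_cast hVκ
        have : (V : ℝ) ≤ D * V := by nlinarith
        linarith
      have hM0 : (0 : ℝ) < M := by linarith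
      have hκ0 : (0 : ℝ) ≤ κ := by positivity
      have e1 : (M : ℝ) * Φ1.card ≤ M * p + (κ + D0) * p := by
        have : (D : ℝ) * (k + p * V) = D * k + p * (M + 9 * D ^ 4) := by rw [hM']; ring
        nlinarith
      have e2 : (κ + D0 : ℝ) * p ≤ M * (4 * (κ + D0) * sqrt p) := by
        calc (κ + D0 : ℝ) * p = (κ + D0) * sqrt p * sqrt p := by rw [mul_assoc, hsq]
          _ ≤ (κ + D0) * sqrt p * (4 * M) := by gcongr
          _ = _ := by ring
      have e3 : (M : ℝ) * Φ1.card ≤ M * (p + 4 * (κ + D0) * sqrt p) := by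
        rw [mul_add]; linarith
      exact le_of_mul_le_mul_left e3 hM0
    · push Not at hDV
      have h1 : (Φ1.card : ℝ) ≤ D * V := by exact_mod_cast hDV
      have h2 : (D : ℝ) ≤ κ := by exact_mod_cast hD0
      have h3 : (D : ℝ) * V ≤ κ * sqrt p := by gcongr
      have h4 : (0 : ℝ) ≤ D0 := by positivity
      have h5 : (0 : ℝ) ≤ κ := by positivity
      nlinarith
  have hs : (Φ.card : ℝ) = Φ1.card + Φ2.card := by exact_mod_cast hsplit.symm
  have hsing' : (Φ2.card : ℝ) ≤ D0 * D0 := by exact_mod_cast hsing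
  have : (0 : ℝ) ≤ D0 * D0 := by positivity
  rw [hs]
  nlinarith [sq_nonneg p0]

end

lemma mem_range_of_pow_eq_one {K M : Type*} [Field K] [IsAlgClosed K] [Field M] [Algebra K M]
    {d : ℕ} (hd : d ≠ 0) {ξ : M} (h : ξ ^ d = 1) : ∃ c : K, algebraMap K M c = ξ := by
  have hint : IsIntegral K ξ := IsIntegral.of_pow (Nat.pos_of_ne_zero hd) (by rw [h]; exact isIntegral_one)
  obtain ⟨c, hc⟩ := minpoly.mem_range_of_degree_eq_one K ξ
    (IsAlgClosed.degree_eq_one_of_irreducible K (minpoly.irreducible hint))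
  exact ⟨c, hc⟩

/-- Kummer independence over a Galois extension: radicals whose monomials are pairwise
inequivalent modulo `d`-th powers have linearly independent monomials. -/
lemma kummer_galois {K F M σ : Type*} [Fintype σ] [Field K] [IsAlgClosed K] [Field F]
    [Field M] [Algebra K F] [Algebra F M] [Algebra K M] [IsScalarTower K F M] [IsGalois F M]
    {d : ℕ} (hd : d ≠ 0) (γ : σ → F) (hγ : ∀ i, γ i ≠ 0) (y : σ → M)
    (hy : ∀ i, y i ^ d = algebraMap F M (γ i))
    (hdist : ∀ k k' : σ → Fin d, (∃ r : F, r ^ d * ∏ i, γ i ^ (k' i : ℕ) = ∏ i, γ i ^ (k i : ℕ)) →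
      k = k') :
    LinearIndependent F (fun k : σ → Fin d => ∏ i, y i ^ (k i : ℕ)) := by
  have hy0 : ∀ i, y i ≠ 0 := by
    intro i h0
    have := hy i
    rw [h0, zero_pow hd] at this
    exact hγ i ((map_eq_zero _).1 this.symm)
  have hfix : ∀ (g : Gal(M/F)) (i : σ), ∃ c : K, algebraMap K M c = g (y i) / y i := by
    intro g i
    apply mem_range_of_pow_eq_one hd
    rw [div_pow, ← map_pow, hy, g.commutes]
    exact div_self ((map_ne_zero _).2 (hγ i))
  have hfix2 : ∀ (h g : Gal(M/F)) (i : σ), h (g (y i) / y i) = g (y i) / y i := by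
    intro h g i
    obtain ⟨c, hc⟩ := hfix g i
    rw [← hc, IsScalarTower.algebraMap_apply K F M, h.commutes]
  let χ : (σ → Fin d) → (Gal(M/F) →* M) := fun k =>
    { toFun := fun g => ∏ i, (g (y i) / y i) ^ (k i : ℕ)
      map_one' := by simp [div_self (hy0 _)]
      map_mul' := by
        intro h g
        rw [← prod_mul_distrib]
        refine prod_congr rfl fun i _ => ?_
        rw [← mul_pow]
        congr 1
        have h1 := hfix2 h g i
        rw [map_div₀] at h1
        have hne : h (y i) ≠ 0 := (map_ne_zero _).2 (hy0 i)
        rw [← h1]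
        change h (g (y i)) / y i = _
        field_simp [hy0 i] }
  have hχ : ∀ k g, χ k g * ∏ i, y i ^ (k i : ℕ) = g (∏ i, y i ^ (k i : ℕ)) := by
    intro k g
    change (∏ i, (g (y i) / y i) ^ (k i : ℕ)) * ∏ i, y i ^ (k i : ℕ) = _
    rw [← prod_mul_distrib, map_prod]
    refine prod_congr rfl fun i _ => ?_
    rw [← mul_pow, div_mul_cancel₀ _ (hy0 i), map_pow]
  have hχinj : Injective χ := by
    intro k k' hkk
    apply hdist
    have hY0 : ∀ k : σ → Fin d, ∏ i, y i ^ (k i : ℕ) ≠ 0 := fun k =>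
      prod_ne_zero_iff.2 fun i _ => pow_ne_zero _ (hy0 i)
    have hmem : (∏ i, y i ^ (k i : ℕ)) / (∏ i, y i ^ (k' i : ℕ)) ∈ Set.range (algebraMap F M) := by
      rw [InfiniteGalois.mem_range_algebraMap_iff_fixed]
      intro g
      have h0 : χ k' g ≠ 0 := by
        intro h
        have := hχ k' g
        rw [h, zero_mul] at this
        exact hY0 k' ((map_eq_zero _).1 this.symm)
      rw [map_div₀, ← hχ, ← hχ, hkk, mul_div_mul_left _ _ h0]
    obtain ⟨r, hr⟩ := hmem
    refine ⟨r, (algebraMap F M).injective ?_⟩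
    rw [map_mul, map_pow, hr, map_prod, map_prod, div_pow]
    have e : ∀ k : σ → Fin d, ∏ i, algebraMap F M (γ i ^ (k i : ℕ))
        = (∏ i, y i ^ (k i : ℕ)) ^ d := by
      intro k
      rw [← prod_pow]
      refine prod_congr rfl fun i _ => ?_
      rw [map_pow, ← hy, ← pow_mul, ← pow_mul, mul_comm]
    rw [e, e, div_mul_cancel₀ _ (pow_ne_zero _ (hY0 k'))]
  rw [Fintype.linearIndependent_iff]
  intro H hH k
  have hli := (linearIndependent_monoidHom Gal(M/F) M).comp χ hχinj
  rw [Fintype.linearIndependent_iff] at hli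
  have h1 := hli (fun k => H k • ∏ i, y i ^ (k i : ℕ)) (by
    funext g
    simp only [Finset.sum_apply, Pi.smul_apply, smul_eq_mul, Function.comp, Pi.zero_apply]
    have : g (∑ k, H k • ∏ i, y i ^ (k i : ℕ)) = 0 := by rw [hH, map_zero]
    rw [map_sum] at this
    rw [← this]
    refine sum_congr rfl fun k _ => ?_
    rw [map_smul, ← hχ, smul_mul_assoc, mul_comm]) k
  have h2 := (smul_eq_zero.1 h1).resolve_right
    (prod_ne_zero_iff.2 fun i _ => pow_ne_zero _ (hy0 i))
  exact h2

lemma kummer_field {K F E σ : Type*} [Fintype σ] [Field K] [IsAlgClosed K] [Field F]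
    [Field E] [Algebra K F] [Algebra F E]
    {d : ℕ} (hd : (d : F) ≠ 0) (γ : σ → F) (hγ : ∀ i, γ i ≠ 0) (y : σ → E)
    (hy : ∀ i, y i ^ d = algebraMap F E (γ i))
    (hdist : ∀ k k' : σ → Fin d, (∃ r : F, r ^ d * ∏ i, γ i ^ (k' i : ℕ) = ∏ i, γ i ^ (k i : ℕ)) →
      k = k') :
    LinearIndependent F (fun k : σ → Fin d => ∏ i, y i ^ (k i : ℕ)) := by
  have hd0 : d ≠ 0 := by rintro rfl; simp at hd
  let A := IntermediateField.adjoin F (Set.range y)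
  have hsep : Algebra.IsSeparable F A := by
    rw [IntermediateField.isSeparable_adjoin_iff_isSeparable]
    rintro _ ⟨i, rfl⟩
    refine (Polynomial.separable_X_pow_sub_C (γ i) hd (hγ i)).of_dvd (minpoly.dvd _ _ ?_)
    simp [hy]
  let M := separableClosure F (AlgebraicClosure F)
  have : IsSepClosed M := SeparableClosure.isSepClosed F
  let L : A →ₐ[F] M := IsSepClosed.lift
  let yA : σ → A := fun i => ⟨y i, IntermediateField.subset_adjoin F _ ⟨i, rfl⟩⟩
  have hyA : ∀ i, yA i ^ d = algebraMap F A (γ i) := fun i => Subtype.ext (hy i)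
  let _ : Algebra K M := ((algebraMap F M).comp (algebraMap K F)).toAlgebra
  have : IsScalarTower K F M := IsScalarTower.of_algebraMap_eq fun _ => rfl
  have h := kummer_galois (K := K) (M := M) hd0 γ hγ (fun i => L (yA i))
    (fun i => by rw [← map_pow, hyA, L.commutes]) hdist
  have e : (fun k : σ → Fin d => ∏ i, L (yA i) ^ (k i : ℕ))
      = L.toLinearMap ∘ fun k : σ → Fin d => ∏ i, yA i ^ (k i : ℕ) := by
    funext k
    simp [Function.comp]
  rw [e] at h
  have h3 := (h.of_comp L.toLinearMap).map' A.val.toLinearMap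
    (LinearMap.ker_eq_bot.2 A.val.injective)
  have e2 : (A.val.toLinearMap ∘ fun k : σ → Fin d => ∏ i, yA i ^ (k i : ℕ))
      = fun k : σ → Fin d => ∏ i, y i ^ (k i : ℕ) := by
    funext k
    simp [Function.comp, yA]
  rw [e2] at h3
  exact h3

lemma prime_X_add_C {K τ : Type*} [Field K] (j : τ) (c : K) :
    Prime (X j + C c : MvPolynomial τ K) := by
  apply Irreducible.prime
  have hnd : coeff (Finsupp.single j 1) (X j + C c : MvPolynomial τ K) = 1 := by
    have h0 : (0 : τ →₀ ℕ) ≠ Finsupp.single j 1 := by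
      intro h
      have := DFunLike.congr_fun h j
      simp at this
    rw [coeff_add, coeff_X, coeff_C, if_neg h0, add_zero, if_pos rfl]
  apply irreducible_of_totalDegree_eq_one
  · apply le_antisymm
    · refine (totalDegree_add _ _).trans ?_
      simp [totalDegree_X]
    · have := le_totalDegree (p := (X j + C c : MvPolynomial τ K)) (s := Finsupp.single j 1)
        (by rw [mem_support_iff, hnd]; exact one_ne_zero)
      simpa using this
  · intro x hx
    have := hx (Finsupp.single j 1)
    rw [hnd] at this
    exact isUnit_of_dvd_one this

lemma X_add_C_dvd {K τ : Type*} [Field K] {j j' : τ} {c c' : K}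
    (h : (X j + C c : MvPolynomial τ K) ∣ X j' + C c') : j = j' ∧ c = c' := by
  obtain ⟨g, hg⟩ := h
  by_cases hj : j = j'
  · subst hj
    refine ⟨rfl, ?_⟩
    have := congrArg (eval (fun _ => -c)) hg
    simp at this
    linear_combination -this
  · exfalso
    have := congrArg (eval (update (fun _ => -c) j' (1 - c'))) hg
    simp [update_of_ne hj] at this

/-- The monomials `y ^ k`, `0 ≤ k i < d`, in the radicals `y i = (u i (z (j i) + c i)) ^ (1 / d)`
are linearly independent over the polynomial ring in the algebraically independent `z`. -/
lemma kummer_poly {K E τ σ : Type*} [Fintype σ] [Field K] [IsAlgClosed K] [Field E] [Algebra K E]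
    {d : ℕ} (hd : (d : K) ≠ 0) {z : τ → E} (hz : AlgebraicIndependent K z)
    {j : σ → τ} {c u : σ → K} (hu : ∀ i, u i ≠ 0)
    (hinj : Injective fun i => (j i, c i)) {y : σ → E}
    (hy : ∀ i, y i ^ d = algebraMap K E (u i) * (z (j i) + algebraMap K E (c i)))
    (h : (σ → Fin d) → MvPolynomial τ K)
    (hsum : ∑ k, aeval z (h k) * ∏ i, y i ^ (k i : ℕ) = 0) : h = 0 := by
  let R := MvPolynomial τ K
  let F := FractionRing R
  let φ : F →+* E := IsFractionRing.lift (A := R) (g := (aeval z : R →ₐ[K] E).toRingHom) hz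
  let _ : Algebra F E := φ.toAlgebra
  have hφ : ∀ r : R, algebraMap F E (algebraMap R F r) = aeval z r := fun r =>
    IsFractionRing.lift_algebraMap (K := F) (g := (aeval z : R →ₐ[K] E).toRingHom) hz r
  have hRF : Injective (algebraMap R F) := IsFractionRing.injective R F
  have hd0 : d ≠ 0 := by rintro rfl; simp at hd
  let π : σ → R := fun i => X (j i) + C (c i)
  have hπ : ∀ i, Prime (π i) := fun i => prime_X_add_C _ _
  let γ : σ → R := fun i => C (u i) * π i
  have hγ0 : ∀ i, γ i ≠ 0 := fun i =>
    mul_ne_zero (by simpa using hu i) (hπ i).ne_zero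
  have hem : ∀ (k : σ → Fin d) (i : σ),
      emultiplicity (π i) (∏ l, γ l ^ (k l : ℕ)) = ((k i : ℕ) : ℕ∞) := by
    intro k i
    rw [Finset.emultiplicity_prod (hπ i), sum_eq_single i]
    · rw [emultiplicity_pow (hπ i), emultiplicity_mul (hπ i)]
      have h1 : emultiplicity (π i) (C (u i) : R) = 0 := by
        rw [emultiplicity_eq_zero]
        intro hdv
        exact (hπ i).not_isUnit (isUnit_of_dvd_unit hdv
          ((isUnit_iff_ne_zero.2 (hu i)).map (C : K →+* R)))
      have h2 : emultiplicity (π i) (π i) = 1 := by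
        have := emultiplicity_pow_self_of_prime (hπ i) 1
        simpa using this
      rw [h1, h2]
      simp
    · intro l _ hl
      rw [emultiplicity_pow (hπ i)]
      have : emultiplicity (π i) (γ l) = 0 := by
        rw [emultiplicity_eq_zero]
        intro hdv
        rcases (hπ i).dvd_or_dvd hdv with h1 | h1
        · exact (hπ i).not_isUnit (isUnit_of_dvd_unit h1
            ((isUnit_iff_ne_zero.2 (hu l)).map (C : K →+* R)))
        · have := X_add_C_dvd h1
          exact hl (hinj (Prod.ext this.1 this.2)).symm
      rw [this, mul_zero]
    · simp
  have hli := kummer_field (K := K) (F := F) (E := E) (d := d)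
    (by
      have : (d : F) = algebraMap R F (C (d : K)) := by simp
      rw [this, map_ne_zero_iff _ hRF, Ne, map_eq_zero_iff _ (C_injective τ K)]
      exact hd)
    (fun i => algebraMap R F (γ i)) (fun i => by rw [map_ne_zero_iff _ hRF]; exact hγ0 i) y
    (fun i => by
      rw [hφ, hy]
      simp [γ, π])
    (by
      rintro k k' ⟨r, hr⟩
      obtain ⟨a, b, hb, rfl⟩ := IsFractionRing.div_surjective (A := R) r
      have hb0 : b ≠ 0 := nonZeroDivisors.ne_zero hb
      have hbF : algebraMap R F b ≠ 0 := by rwa [map_ne_zero_iff _ hRF]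
      rw [div_pow, div_mul_eq_mul_div, div_eq_iff (pow_ne_zero _ hbF)] at hr
      have hR : a ^ d * ∏ i, γ i ^ (k' i : ℕ) = (∏ i, γ i ^ (k i : ℕ)) * b ^ d := by
        apply hRF
        push_cast [map_mul, map_pow, map_prod]
        simpa only [map_mul, map_pow, map_prod] using hr
      have ha0 : a ≠ 0 := by
        rintro rfl
        rw [zero_pow hd0, zero_mul] at hR
        refine mul_ne_zero ?_ (pow_ne_zero _ hb0) hR.symm
        exact prod_ne_zero_iff.2 fun i _ => pow_ne_zero _ (hγ0 i)
      funext i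
      have h1 := congrArg (emultiplicity (π i)) hR
      rw [emultiplicity_mul (hπ i), emultiplicity_mul (hπ i), hem, hem,
        emultiplicity_pow (hπ i), emultiplicity_pow (hπ i)] at h1
      rw [(FiniteMultiplicity.of_prime_left (hπ i) ha0).emultiplicity_eq_multiplicity,
        (FiniteMultiplicity.of_prime_left (hπ i) hb0).emultiplicity_eq_multiplicity] at h1
      have h2 : d * multiplicity (π i) a + (k' i : ℕ) = (k i : ℕ) + d * multiplicity (π i) b := by
        exact_mod_cast h1
      have h3 := congrArg (· % d) h2
      simp only [Nat.mul_add_mod, Nat.add_mul_mod_self_left, Nat.mod_eq_of_lt (k i).2,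
        Nat.mod_eq_of_lt (k' i).2] at h3
      exact Fin.ext h3.symm)
  rw [Fintype.linearIndependent_iff] at hli
  funext k
  have h1 := hli (fun k => algebraMap R F (h k)) (by
    rw [← hsum]
    refine sum_congr rfl fun k _ => ?_
    rw [smul_def, hφ]) k
  exact (map_eq_zero_iff _ hRF).1 h1

lemma kummer_succ {B σ : Type*} [Fintype σ] [CommRing B] {d : ℕ} (hdpos : 0 < d) (s : σ)
    (v : σ → B) (W : (σ → Fin d) → B)
    (hW : ∀ k : σ → Fin d, W k = if (k s : ℕ) + 1 = d then v s ^ d else 1) (k : σ → Fin d) :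
    (∏ i, v i ^ (k i : ℕ)) * v s = W k *
      ∏ i, v i ^ (update k s ⟨((k s : ℕ) + 1) % d, Nat.mod_lt _ hdpos⟩ i : ℕ) := by
  rw [← mul_prod_erase _ _ (mem_univ s),
    ← mul_prod_erase _ (fun i => v i ^
      (update k s ⟨((k s : ℕ) + 1) % d, Nat.mod_lt _ hdpos⟩ i : ℕ)) (mem_univ s)]
  have e1 : ∏ i ∈ univ.erase s, v i ^
      (update k s ⟨((k s : ℕ) + 1) % d, Nat.mod_lt _ hdpos⟩ i : ℕ)
      = ∏ i ∈ univ.erase s, v i ^ (k i : ℕ) := by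
    refine prod_congr rfl fun i hi => ?_
    rw [update_of_ne (ne_of_mem_erase hi)]
  rw [e1, hW]
  simp only [update_self]
  split_ifs with hs
  · have e2 : ((k s : ℕ) + 1) % d = 0 := by rw [hs, Nat.mod_self]
    have e3 : v s ^ d = v s ^ (k s : ℕ) * v s := by rw [← pow_succ, hs]
    rw [e2, e3]; ring
  · rw [Nat.mod_eq_of_lt (by have := (k s).2; omega), pow_succ]; ring

/-- **Vanishing transfer.** A polynomial relation satisfied by the generic point of the affine
variety `x i ^ d = u i (z (j i) + c i)` holds at all its points. -/
theorem vanishing_transfer {K E τ σ : Type*} [Fintype σ] [Field K] [IsAlgClosed K] [Field E]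
    [Algebra K E]
    {d : ℕ} (hd : (d : K) ≠ 0) {z : τ → E} (hz : AlgebraicIndependent K z)
    {j : σ → τ} {c u : σ → K} (hu : ∀ i, u i ≠ 0)
    (hinj : Injective fun i => (j i, c i)) {y : σ → E}
    (hy : ∀ i, y i ^ d = algebraMap K E (u i) * (z (j i) + algebraMap K E (c i)))
    {G : MvPolynomial (τ ⊕ σ) K} (hG : aeval (Sum.elim z y) G = 0)
    {z0 : τ → K} {x0 : σ → K} (hx0 : ∀ i, x0 i ^ d = u i * (z0 (j i) + c i)) :
    eval (Sum.elim z0 x0) G = 0 := by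
  have hd0 : d ≠ 0 := by rintro rfl; simp at hd
  have hdpos : 0 < d := Nat.pos_of_ne_zero hd0
  -- normal form of a polynomial: reduce the exponents of the radicals modulo `d`
  have hnf : ∀ G : MvPolynomial (τ ⊕ σ) K, ∃ h : (σ → Fin d) → MvPolynomial τ K,
      (aeval (Sum.elim z y) G = ∑ k, aeval z (h k) * ∏ i, y i ^ (k i : ℕ)) ∧
      (eval (Sum.elim z0 x0) G = ∑ k, eval z0 (h k) * ∏ i, x0 i ^ (k i : ℕ)) := by
    intro G
    induction G using MvPolynomial.induction_on with
    | C a =>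
      refine ⟨fun k => if k = fun _ => ⟨0, hdpos⟩ then C a else 0, ?_, ?_⟩
      · rw [sum_eq_single (fun _ => ⟨0, hdpos⟩)]
        · simp
        · intro b _ hb; simp [hb]
        · simp
      · rw [sum_eq_single (fun _ => ⟨0, hdpos⟩)]
        · simp
        · intro b _ hb; simp [hb]
        · simp
    | add p q hp hq =>
      obtain ⟨h1, a1, b1⟩ := hp
      obtain ⟨h2, a2, b2⟩ := hq
      refine ⟨h1 + h2, ?_, ?_⟩
      · simp [a1, a2, add_mul, sum_add_distrib]
      · simp [b1, b2, add_mul, sum_add_distrib]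
    | mul_X p s hp =>
      obtain ⟨h1, a1, b1⟩ := hp
      rcases s with s | s
      · refine ⟨fun k => h1 k * X s, ?_, ?_⟩
        · simp [a1, sum_mul, mul_right_comm]
        · simp [b1, sum_mul, mul_right_comm]
      · let succ : (σ → Fin d) → (σ → Fin d) := fun k =>
          update k s ⟨((k s : ℕ) + 1) % d, Nat.mod_lt _ hdpos⟩
        let w : (σ → Fin d) → MvPolynomial τ K := fun k =>
          if (k s : ℕ) + 1 = d then C (u s) * (X (j s) + C (c s)) else 1
        refine ⟨fun k => ∑ k' with succ k' = k, h1 k' * w k', ?_, ?_⟩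
        · rw [map_mul, a1, aeval_X, elim_inr, sum_mul]
          simp only [map_sum, sum_mul, map_mul]
          rw [← sum_fiberwise (s := univ) (g := succ)]
          refine sum_congr rfl fun k _ => sum_congr rfl fun k' hk' => ?_
          rw [← (mem_filter.1 hk').2, mul_assoc, mul_assoc,
            kummer_succ hdpos s y (fun k => aeval z (w k)) (fun k => ?_) k']
          simp only [w]
          split_ifs <;> simp [hy]
        · rw [map_mul, b1, eval_X, elim_inr, sum_mul]
          simp only [map_sum, sum_mul, map_mul]
          rw [← sum_fiberwise (s := univ) (g := succ)]
          refine sum_congr rfl fun k _ => sum_congr rfl fun k' hk' => ?_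
          rw [← (mem_filter.1 hk').2, mul_assoc, mul_assoc,
            kummer_succ hdpos s x0 (fun k => eval z0 (w k)) (fun k => ?_) k']
          simp only [w]
          split_ifs <;> simp [hx0]
  obtain ⟨h, h1, h2⟩ := hnf G
  rw [hG] at h1
  have := kummer_poly hd hz hu hinj hy h h1.symm
  rw [h2, this]
  simp

section

/-- Span of the monomials `z ^ e * y ^ k` with all `e j ≤ n` and all `k i < d`. -/
def VV (K : Type*) {E τ σ : Type*} [Fintype τ] [Fintype σ] [Field K] [Field E] [Algebra K E]
    (d : ℕ) (z : τ → E) (y : σ → E) (n : ℕ) : Submodule K E :=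
  Submodule.span K (Set.range fun s : (τ → Fin (n + 1)) × (σ → Fin d) =>
    (∏ j, z j ^ (s.1 j : ℕ)) * ∏ i, y i ^ (s.2 i : ℕ))

variable {K E τ σ : Type*} [Fintype τ] [Fintype σ] [Field K] [Field E] [Algebra K E]
variable {d : ℕ} {z : τ → E} {y : σ → E}

lemma finrank_VV (n : ℕ) : finrank K (VV K d z y n)
    ≤ (n + 1) ^ Fintype.card τ * d ^ Fintype.card σ := by
  refine (finrank_range_le_card _).trans ?_
  simp

instance (n : ℕ) : Module.Finite K (VV K d z y n) := by
  unfold VV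
  exact Module.Finite.span_of_finite K (Set.finite_range _)

lemma mem_VV {n : ℕ} (e : τ → ℕ) (k : σ → ℕ) (he : ∀ j, e j ≤ n) (hk : ∀ i, k i < d) :
    (∏ j, z j ^ e j) * ∏ i, y i ^ k i ∈ VV K d z y n :=
  Submodule.subset_span ⟨(fun j => ⟨e j, Nat.lt_succ_of_le (he j)⟩, fun i => ⟨k i, hk i⟩), rfl⟩

lemma VV_mono {m n : ℕ} (h : m ≤ n) : VV K d z y m ≤ VV K d z y n := by
  refine span_le.2 ?_
  rintro _ ⟨s, rfl⟩
  exact mem_VV _ _ (fun j => (Nat.lt_succ_iff.1 (s.1 j).2).trans h) (fun i => (s.2 i).2)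

lemma one_mem_VV (hd : 0 < d) : (1 : E) ∈ VV K d z y 0 := by
  have := mem_VV (K := K) (d := d) (z := z) (y := y) (n := 0) (fun _ => 0) (fun _ => 0)
    (fun _ => le_rfl) (fun _ => hd)
  simpa using this

variable (K d z y) in
/-- `w` acts on the filtration `VV` with degree `r`. -/
def DegLE (r : ℕ) (w : E) : Prop := ∀ n, ∀ v ∈ VV K d z y n, w * v ∈ VV K d z y (n + r)

lemma DegLE.mono {r r' : ℕ} (h : r ≤ r') {w : E} (hw : DegLE K d z y r w) :
    DegLE K d z y r' w := fun n v hv => VV_mono (by omega) (hw n v hv)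

lemma DegLE.add {r : ℕ} {w w' : E} (hw : DegLE K d z y r w) (hw' : DegLE K d z y r w') :
    DegLE K d z y r (w + w') := fun n v hv => by
  rw [add_mul]; exact Submodule.add_mem _ (hw n v hv) (hw' n v hv)

lemma DegLE.smul {r : ℕ} {w : E} (c : K) (hw : DegLE K d z y r w) :
    DegLE K d z y r (c • w) := fun n v hv => by
  rw [smul_mul_assoc]; exact Submodule.smul_mem _ _ (hw n v hv)

lemma DegLE.sum {r : ℕ} {ι : Type*} (s : Finset ι) (w : ι → E)
    (hw : ∀ i ∈ s, DegLE K d z y r (w i)) : DegLE K d z y r (∑ i ∈ s, w i) := fun n v hv => by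
  rw [sum_mul]; exact Submodule.sum_mem _ fun i hi => hw i hi n v hv

lemma DegLE.mul {r r' : ℕ} {w w' : E} (hw : DegLE K d z y r w) (hw' : DegLE K d z y r' w') :
    DegLE K d z y (r + r') (w * w') := fun n v hv => by
  rw [mul_assoc]
  have := hw _ _ (hw' n v hv)
  rwa [add_assoc, add_comm r'] at this

lemma DegLE.one : DegLE K d z y 0 1 := fun n v hv => by simpa using hv

lemma DegLE.pow {r : ℕ} {w : E} (hw : DegLE K d z y r w) (k : ℕ) :
    DegLE K d z y (k * r) (w ^ k) := by
  induction k with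
  | zero => simpa using DegLE.one
  | succ k ih =>
    rw [pow_succ, Nat.succ_mul]
    exact ih.mul hw

lemma DegLE.mem {r : ℕ} {w : E} (hd : 0 < d) (hw : DegLE K d z y r w) : w ∈ VV K d z y r := by
  simpa using hw 0 1 (one_mem_VV hd)

lemma degLE_z (j : τ) : DegLE K d z y 1 (z j) := by
  intro n v hv
  induction hv using Submodule.span_induction with
  | mem v hv =>
    obtain ⟨s, rfl⟩ := hv
    have h1 := mem_VV (K := K) (d := d) (z := z) (y := y) (n := n + 1)
      (update (fun l => (s.1 l : ℕ)) j (s.1 j + 1)) (fun i => s.2 i)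
      (fun l => by
        by_cases h : l = j
        · subst h; simpa using Nat.lt_succ_iff.1 (s.1 l).2
        · rw [update_of_ne h]; have := (s.1 l).2; omega) (fun i => (s.2 i).2)
    convert h1 using 1
    rw [← mul_assoc]
    congr 1
    rw [← mul_prod_erase _ _ (mem_univ j),
      ← mul_prod_erase _ (fun l => z l ^
        update (fun l => (s.1 l : ℕ)) j (s.1 j + 1) l) (mem_univ j),
      update_self, pow_succ]
    rw [prod_congr rfl (g := fun l => z l ^ (s.1 l : ℕ))
      (s₁ := univ.erase j) (s₂ := univ.erase j)
      (f := fun l => z l ^ update (fun l => (s.1 l : ℕ)) j (s.1 j + 1) l)]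
    · ring
    · intro l hl
      rw [update_of_ne (ne_of_mem_erase hl)]
  | zero => simp
  | add v w _ _ hv hw => rw [mul_add]; exact Submodule.add_mem _ hv hw
  | smul a v _ hv => rw [mul_smul_comm]; exact Submodule.smul_mem _ _ hv

lemma degLE_y (hd : 0 < d) {j : σ → τ} {c u : σ → K}
    (hy : ∀ i, y i ^ d = algebraMap K E (u i) * (z (j i) + algebraMap K E (c i))) (i : σ) :
    DegLE K d z y 1 (y i) := by
  intro n v hv
  induction hv using Submodule.span_induction with
  | mem v hv =>
    obtain ⟨s, rfl⟩ := hv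
    dsimp only
    rw [mul_left_comm, mul_comm (y i), kummer_succ hd i y
      (fun k => if (k i : ℕ) + 1 = d then y i ^ d else 1) (fun _ => rfl) s.2]
    set k' := update s.2 i ⟨((s.2 i : ℕ) + 1) % d, Nat.mod_lt _ hd⟩
    have h1 : ∀ n', n ≤ n' → (∏ j, z j ^ (s.1 j : ℕ)) * ∏ i, y i ^ (k' i : ℕ) ∈ VV K d z y n' :=
      fun n' hn' => mem_VV _ _ (fun j => (Nat.lt_succ_iff.1 (s.1 j).2).trans hn')
        (fun i => (k' i).2)
    split_ifs with h
    · rw [hy, mul_left_comm, mul_assoc, add_mul, ← smul_def]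
      refine Submodule.smul_mem _ _ (Submodule.add_mem _ (degLE_z _ _ _ (h1 n le_rfl)) ?_)
      rw [← smul_def]
      exact Submodule.smul_mem _ _ (h1 _ (Nat.le_succ n))
    · rw [one_mul]; exact h1 _ (Nat.le_succ n)
  | zero => simp
  | add v w _ _ hv hw => rw [mul_add]; exact Submodule.add_mem _ hv hw
  | smul a v _ hv => rw [mul_smul_comm]; exact Submodule.smul_mem _ _ hv

lemma exists_relation {ι : Type*} [Fintype ι] {n : ℕ} (v : ι → E) (hv : ∀ i, v i ∈ VV K d z y n)
    (hcard : (n + 1) ^ Fintype.card τ * d ^ Fintype.card σ < Fintype.card ι) :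
    ∃ g : ι → K, ∑ i, g i • v i = 0 ∧ ∃ i, g i ≠ 0 := by
  have hnli : ¬ LinearIndependent K (fun i => (⟨v i, hv i⟩ : VV K d z y n)) := by
    intro h
    have := h.fintype_card_le_finrank.trans (finrank_VV (K := K) (d := d) (z := z) (y := y) n)
    omega
  obtain ⟨g, hg, hi⟩ := Fintype.not_linearIndependent_iff.1 hnli
  refine ⟨g, ?_, hi⟩
  have := congrArg (Submodule.subtype _) hg
  simpa using this

lemma exists_irreducible_relation {ι : Type*} {a : ι → E} {R : MvPolynomial ι K} (hR : R ≠ 0)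
    (haR : aeval a R = 0) :
    ∃ P : MvPolynomial ι K, Irreducible P ∧ P.totalDegree ≤ R.totalDegree ∧ aeval a P = 0 := by
  let S : Set (MvPolynomial ι K) := {F | F ≠ 0 ∧ aeval a F = 0}
  have hS : S.Nonempty := ⟨R, hR, haR⟩
  obtain ⟨h1, h2⟩ := Function.argminOn_mem totalDegree S hS
  exact ⟨_, irreducible_of_forall_totalDegree_le
    (fun G h0 hG => Function.argminOn_le totalDegree S ⟨h0, hG⟩) h1 h2,
    Function.argminOn_le totalDegree S ⟨hR, haR⟩, h2⟩

/-- Two elements of degree at most one over a single transcendental are algebraically dependent,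
with a relation of bounded degree. -/
lemma exists_relation_two (hd : 0 < d) (hτ : Fintype.card τ = 1) {w : Fin 2 → E}
    (hw : ∀ i, DegLE K d z y 1 (w i)) :
    ∃ R : K[X,Y], R ≠ 0 ∧ R.totalDegree ≤ 4 * d ^ Fintype.card σ ∧
      aeval w R = 0 := by
  set n := 2 * d ^ Fintype.card σ with hn
  have hD : 0 < d ^ Fintype.card σ := pow_pos hd _
  obtain ⟨g, hg, hi⟩ := exists_relation (K := K) (d := d) (z := z) (y := y) (n := 2 * n)
    (ι := Fin 2 → Fin (n + 1))
    (fun s => ∏ i, w i ^ (s i : ℕ)) (fun s => by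
      rw [Fin.prod_univ_two]
      refine VV_mono ?_ (DegLE.mem hd (((hw 0).pow (s 0)).mul ((hw 1).pow (s 1))))
      have := (s 0).2; have := (s 1).2; omega) (by
      rw [hτ]
      simp only [card_fun, card_fin, pow_one]
      generalize d ^ Fintype.card σ = D at *
      rw [hn]
      nlinarith)
  let e : (Fin 2 → Fin (n + 1)) → (Fin 2 →₀ ℕ) := fun s =>
    Finsupp.equivFunOnFinite.symm fun i => (s i : ℕ)
  have he : Injective e := by
    intro s s' h
    have := Finsupp.equivFunOnFinite.symm.injective h
    funext i
    exact Fin.ext (congrFun this i)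
  refine ⟨∑ s, monomial (e s) (g s), ?_, ?_, ?_⟩
  · obtain ⟨s, hs⟩ := hi
    intro h0
    have := congrArg (coeff (e s)) h0
    rw [coeff_sum, sum_eq_single s] at this
    · simp at this; exact hs this
    · intro b _ hb
      rw [coeff_monomial, if_neg (fun h => hb (he h))]
    · simp
  · refine totalDegree_finsetSum_le fun s _ => ?_
    refine (totalDegree_monomial_le _ _).trans ?_
    rw [sum_fintype _ _ (fun _ => rfl), Fin.sum_univ_two]
    have h0 := (s 0).2; have h1 := (s 1).2
    change (s 0 : ℕ) + (s 1 : ℕ) ≤ _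
    omega
  · rw [map_sum, ← hg]
    refine sum_congr rfl fun s _ => ?_
    rw [aeval_monomial, Finsupp.prod_fintype _ _ (fun _ => pow_zero _), smul_def]
    rfl

/-- In characteristic `p` a polynomial of degree below `p` with vanishing derivative along the
second variable is a polynomial in the first one. -/
lemma pderiv_ne_zero {p : ℕ} [CharP K p] {P : K[X,Y]} (hP : P ≠ 0)
    (hdeg : P.totalDegree < p) {A : Type*} [CommRing A] [Algebra K A] {a : Fin 2 → A}
    (hP0 : aeval a P = 0)
    (ha : AlgebraicIndependent K (fun _ : Unit => a 0)) : pderiv 1 P ≠ 0 := by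
  intro h0
  have hv : ↑P.vars ⊆ Set.range (fun _ : Unit => (0 : Fin 2)) := by
    intro i hi
    obtain ⟨s, hs, his⟩ := (mem_vars_iff_mem_support i).1 hi
    fin_cases i
    · exact ⟨(), rfl⟩
    · exfalso
      have hs1 : s 1 ≠ 0 := by simpa using his
      have hle : Finsupp.single 1 1 ≤ s := by
        intro l
        by_cases hl : l = 1
        · subst hl; simp; omega
        · rw [Finsupp.single_eq_of_ne (by simpa using hl)]; exact Nat.zero_le _
      have h1 := congrArg (coeff (s - Finsupp.single 1 1)) h0
      rw [coeff_pderiv, tsub_add_cancel_of_le hle, coeff_zero] at h1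
      have h2 : (((s - Finsupp.single 1 1 : Fin 2 →₀ ℕ) 1 : ℕ) : K) + 1 = ((s 1 : ℕ) : K) := by
        rw [Finsupp.tsub_apply, Finsupp.single_eq_same, ← Nat.cast_succ]
        congr 1; omega
      rw [h2] at h1
      rcases mul_eq_zero.1 h1 with h3 | h3
      · exact (mem_support_iff.1 hs) h3
      · rw [CharP.cast_eq_zero_iff K p] at h3
        have h4 := Nat.le_of_dvd (Nat.pos_of_ne_zero hs1) h3
        have h5 := le_totalDegree hs
        rw [sum_fintype _ _ (fun _ => rfl), Fin.sum_univ_two] at h5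
        omega
  obtain ⟨Q, rfl⟩ := exists_rename_eq_of_vars_subset_range P (fun _ : Unit => (0 : Fin 2))
    (fun _ _ _ => rfl) hv
  rw [aeval_rename] at hP0
  have : Q = 0 := by
    apply ha
    rw [map_zero]
    exact hP0
  rw [this, map_zero] at hP
  exact hP rfl

/-- A field containing a generic point of the variety `x i ^ d = u i (z (j i) + c i)`. -/
lemma exists_generic (K τ σ : Type) [Field K] [IsAlgClosed K] {d : ℕ} (hd : 0 < d)
    (j : σ → τ) (c u : σ → K) :
    ∃ (E : Type) (_ : Field E) (_ : Algebra K E) (z : τ → E) (y : σ → E),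
      AlgebraicIndependent K z ∧
      ∀ i, y i ^ d = algebraMap K E (u i) * (z (j i) + algebraMap K E (c i)) := by
  let F := FractionRing (MvPolynomial τ K)
  let E := AlgebraicClosure F
  let z : τ → E := fun j => algebraMap F E (algebraMap (MvPolynomial τ K) F (X j))
  have h : ∀ i, ∃ y : E, y ^ d = algebraMap K E (u i) * (z (j i) + algebraMap K E (c i)) :=
    fun i => IsAlgClosed.exists_pow_nat_eq _ hd
  choose y hy using h
  refine ⟨E, inferInstance, inferInstance, z, y, ?_, hy⟩
  have h1 : AlgebraicIndependent K (X : τ → MvPolynomial τ K) := algebraicIndependent_X τ K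
  have h2 := h1.map' (f := IsScalarTower.toAlgHom K (MvPolynomial τ K) F)
    (IsFractionRing.injective _ _)
  exact h2.map' (f := IsScalarTower.toAlgHom K F E) (algebraMap F E).injective

end

lemma dvd_sub_subst {K : Type*} [Field K] (a : K) (P : K[X,Y]) :
    (X 1 - C a) ∣ P - aeval (![X 0, C a] : Fin 2 → K[X,Y]) P := by
  rw [← Ideal.mem_span_singleton, ← Ideal.Quotient.eq]
  have : (Ideal.Quotient.mkₐ K (span {(X 1 - C a : K[X,Y])}))
      = (Ideal.Quotient.mkₐ K (span {(X 1 - C a : K[X,Y])})).comp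
        (aeval (![X 0, C a] : Fin 2 → K[X,Y])) := by
    apply algHom_ext
    intro i
    fin_cases i
    · simp
    · simp [Ideal.Quotient.eq]
  exact DFunLike.congr_fun this P

/-- On the curve `x i ^ d = u i (z + c i)` the coordinate `z` and a linear form in the `x i` satisfy
an irreducible relation of bounded degree. -/
lemma curve_rel {K : Type} [Field K] [IsAlgClosed K] {p : ℕ} [CharP K p] {d m : ℕ}
    (hdK : (d : K) ≠ 0) (hp : 4 * d ^ m < p) {c u : Fin m → K}
    (hc : Injective c) (hu : ∀ i, u i ≠ 0) (l : Fin m → K) :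
    ∃ P : K[X,Y], Irreducible P ∧ P.totalDegree ≤ 4 * d ^ m ∧ pderiv 1 P ≠ 0 ∧
      (∀ (z : K) (x : Fin m → K), (∀ i, x i ^ d = u i * (z + c i)) →
        eval ![z, ∑ i, l i * x i] P = 0) ∧
      (2 ≤ d → l ≠ 0 → ∀ a, aeval (![Xₚ, Cₚ a] : Fin 2 → K[X]) P ≠ 0) := by
  have hd0 : 0 < d := by
    rcases Nat.eq_zero_or_pos d with rfl | h
    · simp at hdK
    · exact h
  obtain ⟨E, _, _, z, y, hz, hy⟩ := exists_generic K Unit (Fin m) hd0 (fun _ => ()) c u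
  let w : Fin 2 → E := ![z (), ∑ i, l i • y i]
  have hw : ∀ i, DegLE K d z y 1 (w i) := by
    intro i
    fin_cases i
    · exact degLE_z ()
    · change DegLE K d z y 1 (∑ i, l i • y i)
      exact DegLE.sum _ _ fun i _ => (degLE_y hd0 hy i).smul _
  obtain ⟨R, hR0, hRd, hRw⟩ := exists_relation_two hd0 (by simp) hw
  rw [card_fin] at hRd
  obtain ⟨P, hPirr, hPd, hPw⟩ := exists_irreducible_relation hR0 hRw
  have hvt : ∀ Q : K[X,Y], aeval w Q = 0 →
      ∀ (z : K) (x : Fin m → K), (∀ i, x i ^ d = u i * (z + c i)) →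
        eval ![z, ∑ i, l i * x i] Q = 0 := by
    intro Q hQ z0 x0 hx0
    let G : MvPolynomial (Unit ⊕ Fin m) K :=
      aeval (![X (Sum.inl ()), ∑ i, C (l i) * X (Sum.inr i)] :
        Fin 2 → MvPolynomial (Unit ⊕ Fin m) K) Q
    have hG : aeval (Sum.elim z y) G = 0 := by
      rw [← hQ, ← AlgHom.comp_apply]
      congr 1
      apply algHom_ext
      intro i
      fin_cases i
      · simp [w]
      · simp [w, smul_def]
    have := vanishing_transfer hdK hz hu (fun i i' h => hc (Prod.ext_iff.1 h).2) hy hG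
      (z0 := fun _ => z0) hx0
    rw [← this, ← coe_aeval_eq_eval, ← coe_aeval_eq_eval, RingHom.coe_coe, RingHom.coe_coe,
      ← AlgHom.comp_apply]
    congr 1
    apply algHom_ext
    intro i
    fin_cases i
    · simp
    · simp
  refine ⟨P, hPirr, hPd.trans hRd, pderiv_ne_zero hPirr.ne_zero (by omega) hPw hz,
    hvt P hPw, ?_⟩
  intro hd2 hl a h0
  -- otherwise `P` is associated to `X 1 - a`, so the linear form is constant on the curve
  have hdv := dvd_sub_subst a P
  have h1 : aeval (![X 0, C a] : Fin 2 → K[X,Y]) P = 0 := by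
    have : aeval (![X 0, C a] : Fin 2 → K[X,Y])
        = (Polynomial.aeval (X 0 : K[X,Y])).comp
          (aeval (![Xₚ, Cₚ a] : Fin 2 → K[X])) := by
      apply algHom_ext
      intro i
      fin_cases i
      · simp
      · simp [MvPolynomial.algebraMap_eq]
    rw [this, AlgHom.comp_apply, h0, map_zero]
  rw [h1, sub_zero] at hdv
  have hprime : Prime (X 1 - C a : K[X,Y]) := by
    have := prime_X_add_C (1 : Fin 2) (-a)
    simpa [sub_eq_add_neg] using this
  have hass := (hprime.irreducible.associated_of_dvd hPirr hdv).symm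
  have hconst : ∀ (z : K) (x : Fin m → K), (∀ i, x i ^ d = u i * (z + c i)) →
      ∑ i, l i * x i = a := by
    intro z x hx
    have := hvt (X 1 - C a) (by
      obtain ⟨v, hv⟩ := hass
      rw [← hv, map_mul, hPw, zero_mul]) z x hx
    simpa [sub_eq_zero] using this
  obtain ⟨i, hi⟩ := Function.ne_iff.1 hl
  have hne : NeZero (d : K) := ⟨hdK⟩
  obtain ⟨ζ, hζ⟩ := HasEnoughRootsOfUnity.exists_primitiveRoot K d
  have hx : ∀ r, ∃ x : K, x ^ d = u r * ((1 - c i) + c r) :=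
    fun r => IsAlgClosed.exists_pow_nat_eq _ hd0
  choose x hx using hx
  have e1 := hconst (1 - c i) x hx
  have e2 := hconst (1 - c i) (update x i (ζ * x i)) (fun r => by
    by_cases hr : r = i
    · subst hr; simp [mul_pow, hζ.pow_eq_one, hx]
    · rw [update_of_ne hr, hx])
  rw [← e1, ← sub_eq_zero, ← sum_sub_distrib, sum_eq_single i] at e2
  · rw [update_self, ← mul_sub, mul_eq_zero, ← sub_one_mul, mul_eq_zero] at e2
    rcases e2 with h | h | h
    · exact hi h
    · exact hζ.ne_one (by omega) (sub_eq_zero.1 h)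
    · have := hx i
      rw [h, zero_pow hd0.ne'] at this
      simp at this
      exact hu i this.symm
  · intro r _ hr
    rw [update_of_ne hr, sub_self]
  · simp

lemma card_pow_eq_le {F : Type*} [Field F] [Fintype F] {d : ℕ} (hd : 0 < d) (a : F) :
    (univ.filter fun x : F => x ^ d = a).card ≤ d := by
  refine le_trans (le_trans (card_le_card ?_) (Multiset.toFinset_card_le _))
    (card_nthRoots d a)
  intro x hx
  rw [Multiset.mem_toFinset, mem_nthRoots hd]
  exact (mem_filter.1 hx).2

lemma card_pi_pow_le {F σ : Type*} [Field F] [Fintype F] [Fintype σ] {d : ℕ} (hd : 0 < d)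
    (a : σ → F) :
    (univ.filter fun x : σ → F => ∀ i, x i ^ d = a i).card ≤ d ^ Fintype.card σ := by
  have : (univ.filter fun x : σ → F => ∀ i, x i ^ d = a i)
      = piFinset fun i => univ.filter fun x : F => x ^ d = a i := by
    ext x; simp
  rw [this, card_piFinset]
  refine (Finset.prod_le_prod' fun i _ => card_pow_eq_le hd (a i)).trans ?_
  simp

lemma card_dot_eq_zero {F σ : Type*} [Field F] [Fintype F] [Fintype σ] {v : σ → F} (hv : v ≠ 0) :
    (univ.filter fun l : σ → F => ∑ i, l i * v i = 0).card * Fintype.card F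
      ≤ Fintype.card F ^ Fintype.card σ := by
  obtain ⟨i, hi⟩ := Function.ne_iff.1 hv
  rw [← card_fun, ← card_univ (α := F), ← card_product,
    ← card_univ (α := σ → F)]
  refine card_le_card_of_injOn (fun s => s.1 + Pi.single i s.2) (fun _ _ => by simp) ?_
  rintro ⟨l, a⟩ h1 ⟨l', a'⟩ h2 h
  simp only [coe_product, coe_filter, Set.mem_prod, mem_univ, true_and,
    mem_ofPred_eq, Finset.coe_univ, Set.mem_univ, and_true] at h1 h2 h
  have e : ∀ (l : σ → F) (a : F), ∑ r, (l + Pi.single i a : σ → F) r * v r = ∑ r, l r * v r + a * v i := by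
    intro l a
    simp only [Pi.add_apply, add_mul, sum_add_distrib]
    congr 1
    rw [sum_eq_single i]
    · simp
    · intro b _ hb; simp [Pi.single_eq_of_ne hb]
    · simp
  have e1 := congrArg (fun l => ∑ r, l r * v r) h
  simp only [e, h1, h2, zero_add] at e1
  have e2 : a = a' := mul_right_cancel₀ hi e1
  subst e2
  rw [add_left_inj] at h
  rw [h]

/-- Averaging over linear forms: some form separates all but few of the given pairs. -/
lemma exists_sep {ι F σ : Type*} [Field F] [Fintype F] [Fintype σ] (T : Finset (ι × ι))
    (x : ι → σ → F) (hT : ∀ s ∈ T, x s.1 ≠ x s.2) {B : ℕ} (hB : T.card ≤ B * Fintype.card F) :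
    ∃ l : σ → F, (T.filter fun s => ∑ i, l i * x s.1 i = ∑ i, l i * x s.2 i).card ≤ B := by
  by_contra hcon
  push Not at hcon
  have h1 : ∑ l : σ → F, (B + 1) ≤
      ∑ l : σ → F, (T.filter fun s => ∑ i, l i * x s.1 i = ∑ i, l i * x s.2 i).card :=
    sum_le_sum fun l _ => hcon l
  simp only [card_filter] at h1
  rw [sum_comm] at h1
  have h2 : ∀ s ∈ T, (∑ l : σ → F, if ∑ i, l i * x s.1 i = ∑ i, l i * x s.2 i then 1 else 0)
      * Fintype.card F ≤ Fintype.card F ^ Fintype.card σ := by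
    intro s hs
    rw [← card_filter]
    refine le_trans (le_of_eq ?_) (card_dot_eq_zero (sub_ne_zero.2 (hT s hs)))
    congr 3
    funext l
    simp only [Pi.sub_apply, mul_sub, sum_sub_distrib, sub_eq_zero]
  have h3 := Nat.mul_le_mul_right (Fintype.card F) h1
  have h4 := h3.trans ((sum_mul T _ _).le.trans (sum_le_sum h2))
  rw [sum_const, sum_const, card_univ, card_fun, smul_eq_mul,
    smul_eq_mul] at h4
  have hpos : 0 < Fintype.card F ^ Fintype.card σ := pow_pos Fintype.card_pos _
  have h5 : (B + 1) * Fintype.card F ≤ T.card := by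
    by_contra hlt
    push Not at hlt
    have := Nat.mul_lt_mul_of_pos_right hlt hpos
    nlinarith
  have : 0 < Fintype.card F := Fintype.card_pos
  nlinarith

lemma card_le_image_add {ι γ : Type*} (S : Finset ι) (h : ι → γ) :
    S.card ≤ (S.image h).card +
      ((S ×ˢ S).filter fun s => s.1 ≠ s.2 ∧ h s.1 = h s.2).card := by
  induction S using Finset.induction_on with
  | empty => simp
  | insert a S ha ih =>
    rw [card_insert_of_notMem ha, Finset.image_insert]
    have hsub : ((S ×ˢ S).filter fun s => s.1 ≠ s.2 ∧ h s.1 = h s.2) ⊆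
        ((insert a S ×ˢ insert a S).filter fun s => s.1 ≠ s.2 ∧ h s.1 = h s.2) := by
      refine Finset.filter_subset_filter _ (Finset.product_subset_product ?_ ?_) <;>
      exact Finset.subset_insert _ _
    by_cases hm : h a ∈ S.image h
    · rw [Finset.insert_eq_of_mem hm]
      obtain ⟨b, hb, hab⟩ := mem_image.1 hm
      have hlt : ((S ×ˢ S).filter fun s => s.1 ≠ s.2 ∧ h s.1 = h s.2).card <
        ((insert a S ×ˢ insert a S).filter fun s => s.1 ≠ s.2 ∧ h s.1 = h s.2).card := by
        apply Finset.card_lt_card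
        refine ⟨hsub, fun hh => ?_⟩
        have : (a, b) ∈ (S ×ˢ S).filter fun s => s.1 ≠ s.2 ∧ h s.1 = h s.2 := by
          apply hh
          simp only [mem_filter, mem_product, mem_insert, true_or, hb, or_true,
            and_self, true_and]
          exact ⟨fun e => ha (by rw [e]; exact hb), hab.symm⟩
        exact ha (mem_product.1 (mem_filter.1 this).1).1
      omega
    · rw [card_insert_of_notMem hm]
      have := card_le_card hsub
      omega

/-- Points over the base field `F` of the curve `κ i * x i ^ d = z + c i`. -/
def pts {F : Type*} [Field F] [Fintype F] (d m : ℕ) (κ c : Fin m → F) :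
    Finset (F × (Fin m → F)) :=
  univ.filter fun s => ∀ i, κ i * s.2 i ^ d = s.1 + c i

lemma mem_pts {F : Type*} [Field F] [Fintype F] {d m : ℕ} {κ c : Fin m → F} {s} :
    s ∈ pts d m κ c ↔ ∀ i, κ i * s.2 i ^ d = s.1 + c i := by
  simp [pts]

lemma card_pts_fst_le {F : Type*} [Field F] [Fintype F] {d m : ℕ} (hd : 0 < d) {κ c : Fin m → F}
    (hκ : ∀ i, κ i ≠ 0) (z : F) : ((pts d m κ c).filter fun s => s.1 = z).card ≤ d ^ m := by
  refine le_trans ?_ (le_trans (card_pi_pow_le hd fun i => (κ i)⁻¹ * (z + c i))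
    (by rw [card_fin]))
  refine card_le_card_of_injOn (fun s => s.2) ?_ ?_
  · rintro s hs
    simp only [coe_filter, mem_pts, mem_ofPred_eq] at hs
    simp only [coe_filter, mem_univ, true_and, mem_ofPred_eq]
    intro i
    rw [← hs.2, ← hs.1 i, inv_mul_cancel_left₀ (hκ i)]
  · rintro s hs t ht h
    simp only [coe_filter, mem_pts, mem_ofPred_eq] at hs ht
    exact Prod.ext (hs.2.trans ht.2.symm) h

lemma card_pts_le {F : Type*} [Field F] [Fintype F] {d m : ℕ} (hd : 0 < d) {κ c : Fin m → F}
    (hκ : ∀ i, κ i ≠ 0) : (pts d m κ c).card ≤ d ^ m * Fintype.card F := by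
  have := card_le_mul_card_image_of_maps_to (s := pts d m κ c) (t := univ)
    (f := fun s => s.1) (fun _ _ => mem_univ _) (d ^ m)
    (fun z _ => card_pts_fst_le hd hκ z)
  simpa using this

/-- Pushes a set of points over the prime field to the algebraic closure and applies the
Stepanov bound. -/
lemma curve_bound_prime (D0 : ℕ) : ∃ C : ℝ, 0 ≤ C ∧ ∀ (p : ℕ) [Fact p.Prime]
    (P : MvPolynomial (Fin 2) (AlgebraicClosure (ZMod p))), Irreducible P → P.totalDegree ≤ D0 →
    pderiv 1 P ≠ 0 → ∀ S : Finset (ZMod p × ZMod p),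
    (∀ s ∈ S, eval ![algebraMap _ _ s.1, algebraMap _ _ s.2] P = 0) →
    (S.card : ℝ) ≤ p + C * sqrt p := by
  obtain ⟨C, hC, h⟩ := curve_bound D0
  refine ⟨C, hC, fun p _ P hP hPd hPp S hS => ?_⟩
  let g : ZMod p × ZMod p → (Fin 2 → AlgebraicClosure (ZMod p)) := fun s =>
    ![algebraMap _ _ s.1, algebraMap _ _ s.2]
  have hg : Injective g := by
    rintro ⟨a, b⟩ ⟨a', b'⟩ hab
    have h0 := congrFun hab 0
    have h1 := congrFun hab 1
    simp only [g, Matrix.cons_val_zero, Matrix.cons_val_one] at h0 h1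
    exact Prod.ext ((algebraMap _ _).injective h0) ((algebraMap _ _).injective h1)
  have hpow : ∀ a : ZMod p, (algebraMap (ZMod p) (AlgebraicClosure (ZMod p)) a) ^ p
      = algebraMap _ _ a := fun a => by rw [← map_pow, ZMod.pow_card]
  have hch : CharP (AlgebraicClosure (ZMod p)) p :=
    charP_of_injective_algebraMap (algebraMap (ZMod p) (AlgebraicClosure (ZMod p))).injective p
  have := h (AlgebraicClosure (ZMod p)) p P hP hPd hPp (S.image g) (by
    intro φ hφ i
    obtain ⟨s, _, rfl⟩ := mem_image.1 hφ
    fin_cases i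
    · exact hpow s.1
    · exact hpow s.2) (by
    intro φ hφ
    obtain ⟨s, hs, rfl⟩ := mem_image.1 hφ
    exact hS s hs)
  rwa [card_image_of_injective _ hg] at this

lemma natCast_ne_zero_closure {p : ℕ} [Fact p.Prime] {d : ℕ} (hd : ¬ p ∣ d) :
    (d : AlgebraicClosure (ZMod p)) ≠ 0 := by
  have hch : CharP (AlgebraicClosure (ZMod p)) p :=
    charP_of_injective_algebraMap (algebraMap (ZMod p) (AlgebraicClosure (ZMod p))).injective p
  rwa [Ne, CharP.cast_eq_zero_iff _ p]

lemma pts_upper (d m : ℕ) (hd : 0 < d) : ∃ C : ℝ, 0 ≤ C ∧ ∀ (p : ℕ) [Fact p.Prime], ¬ p ∣ d →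
    4 * d ^ m < p → ∀ κ c : Fin m → ZMod p, (∀ i, κ i ≠ 0) → Injective c →
    ((pts d m κ c).card : ℝ) ≤ p + C * sqrt p := by
  obtain ⟨C, hC, h⟩ := curve_bound_prime (4 * d ^ m)
  refine ⟨C + d ^ (2 * m), by positivity, fun p _ hpd hp κ c hκ hc => ?_⟩
  let T := (pts d m κ c ×ˢ pts d m κ c).filter fun s => s.1 ≠ s.2 ∧ s.1.1 = s.2.1
  have hT : T.card ≤ d ^ (2 * m) * Fintype.card (ZMod p) := by
    have h1 : T.card ≤ d ^ m * (pts d m κ c).card := by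
      refine card_le_mul_card_image_of_maps_to (f := fun s => s.1) (fun s hs => ?_) _
        (fun b hb => ?_)
      · exact (mem_product.1 (mem_filter.1 hs).1).1
      · refine le_trans ?_ (card_pts_fst_le (c := c) hd hκ b.1)
        refine card_le_card_of_injOn (fun s => s.2) (fun s hs => ?_) ?_
        · simp only [T, coe_filter, mem_filter, mem_product,
            mem_ofPred_eq] at hs ⊢
          obtain ⟨⟨⟨-, h2⟩, -, h3⟩, rfl⟩ := hs
          exact ⟨h2, h3.symm⟩
        · rintro s hs t ht hst
          simp only [coe_filter, mem_ofPred_eq] at hs ht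
          exact Prod.ext (hs.2.trans ht.2.symm) hst
    refine h1.trans ?_
    rw [two_mul, pow_add, mul_assoc]
    exact Nat.mul_le_mul_left _ (card_pts_le hd hκ)
  obtain ⟨l, hl⟩ := exists_sep T (fun s => s.2) (by
    rintro ⟨s, t⟩ hs heq
    have := (mem_filter.1 hs).2
    exact this.1 (Prod.ext this.2 heq)) hT
  have hcard := card_le_image_add (pts d m κ c) (fun s => (s.1, ∑ i, l i * s.2 i))
  replace hcard : (pts d m κ c).card ≤
      ((pts d m κ c).image (fun s => (s.1, ∑ i, l i * s.2 i))).card + d ^ (2 * m) := by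
    refine le_trans hcard (add_le_add (le_of_eq (by congr; exact Subsingleton.elim _ _)) (le_trans ?_ hl))
    apply card_le_card
    intro s hs
    simp only [T, mem_filter, Prod.mk.injEq] at hs ⊢
    tauto
  have hch : CharP (AlgebraicClosure (ZMod p)) p :=
    charP_of_injective_algebraMap (algebraMap (ZMod p) (AlgebraicClosure (ZMod p))).injective p
  let a := algebraMap (ZMod p) (AlgebraicClosure (ZMod p))
  obtain ⟨P, hP, hPd, hPp, hPv, -⟩ := curve_rel (K := AlgebraicClosure (ZMod p)) (d := d) (m := m)
    (natCast_ne_zero_closure hpd) hp (c := fun i => a (c i)) (u := fun i => a (κ i)⁻¹)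
    (a.injective.comp hc) (fun i => (map_ne_zero _).2 (inv_ne_zero (hκ i))) (fun i => a (l i))
  have hup := h p P hP hPd hPp ((pts d m κ c).image (fun s => (s.1, ∑ i, l i * s.2 i))) (by
    intro s hs
    obtain ⟨t, ht, rfl⟩ := mem_image.1 hs
    have := hPv (a t.1) (fun i => a (t.2 i)) (fun i => by
      rw [← map_pow, ← map_add, ← map_mul, ← mem_pts.1 ht i, inv_mul_cancel_left₀ (hκ i)])
    simpa [a] using this)
  have h1 : ((pts d m κ c).card : ℝ) ≤ ((pts d m κ c).image
      (fun s => (s.1, ∑ i, l i * s.2 i))).card + (d : ℝ) ^ (2 * m) := by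
    exact_mod_cast hcard
  have hs1 : 1 ≤ sqrt p := by
    rw [one_le_sqrt]
    exact_mod_cast (Fact.out : p.Prime).one_le
  have : (d : ℝ) ^ (2 * m) ≤ d ^ (2 * m) * sqrt p := le_mul_of_one_le_right (by positivity) hs1
  linarith

lemma pts_lower (d m : ℕ) (hd : 0 < d) : ∃ C : ℝ, 0 ≤ C ∧ ∀ (p : ℕ) [Fact p.Prime], ¬ p ∣ d →
    4 * d ^ m < p → ∀ c : Fin m → ZMod p, Injective c →
    (p : ℝ) - C * sqrt p ≤ (pts d m 1 c).card := by
  obtain ⟨C, hC, h⟩ := pts_upper d m hd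
  refine ⟨d ^ m * (m + C), by positivity, fun p _ hpd hp c hc => ?_⟩
  have hs1 : 1 ≤ sqrt p := by
    rw [one_le_sqrt]
    exact_mod_cast (Fact.out : p.Prime).one_le
  let A : Finset (Fin m → ZMod p) := univ.filter fun κ => ∀ i, κ i ≠ 0
  let δ : (Fin m → ZMod p) → ℝ := fun κ => p + C * sqrt p - (pts d m κ c).card
  have hA : ∀ κ, κ ∈ A ↔ ∀ i, κ i ≠ 0 := fun κ => by simp [A]
  have hδ0 : ∀ κ ∈ A, 0 ≤ δ κ := fun κ hκ => by
    have := h p hpd hp κ c ((hA κ).1 hκ) hc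
    simp only [δ]; linarith
  -- summing over all twists gives an exact count
  have htot : (p - m : ℝ) * A.card ≤ ∑ κ ∈ A, ((pts d m κ c).card : ℝ) := by
    let U : Finset (ZMod p) := univ \ univ.image fun i => -c i
    have hU : (p : ℝ) - m ≤ U.card := by
      have h1 := Finset.le_card_sdiff (univ.image fun i => -c i) (univ : Finset (ZMod p))
      have h2 : (univ.image fun i => -c i).card ≤ m := by
        simpa using card_image_le (s := (univ : Finset (Fin m))) (f := fun i => -c i)
      rw [card_univ, ZMod.card] at h1
      have h3 : p ≤ U.card + m := by
        change _ ≤ U.card at h1; omega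
      have : (p : ℝ) ≤ U.card + m := by exact_mod_cast h3
      linarith
    have h2 : (U ×ˢ A).card ≤ (A.sigma fun κ => pts d m κ c).card := by
      refine card_le_card_of_injOn
        (fun s => ⟨fun i => (s.1 + c i) / s.2 i ^ d, s⟩) ?_ ?_
      · rintro ⟨z, x⟩ hs
        have hx := (hA x).1 (mem_product.1 (mem_coe.1 hs)).2
        have hz := (mem_product.1 (mem_coe.1 hs)).1
        simp only [U, Finset.mem_sdiff, mem_univ, true_and, mem_image,
          not_exists] at hz
        rw [mem_coe, Finset.mem_sigma]
        refine ⟨(hA _).2 fun i => div_ne_zero ?_ (pow_ne_zero _ (hx i)), mem_pts.2 fun i => ?_⟩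
        · intro h0; exact hz i (eq_neg_of_add_eq_zero_left h0).symm
        · exact div_mul_cancel₀ _ (pow_ne_zero _ (hx i))
      · intro s _ t _ hst
        simp only [Sigma.mk.injEq] at hst
        exact eq_of_heq hst.2
    rw [card_product, card_sigma] at h2
    have h3 : ((U.card * A.card : ℕ) : ℝ) ≤ ((∑ κ ∈ A, (pts d m κ c).card : ℕ) : ℝ) := by
      exact_mod_cast h2
    push_cast at h3
    exact (mul_le_mul_of_nonneg_right hU (cast_nonneg _)).trans h3
  have hδtot : ∑ κ ∈ A, δ κ ≤ A.card * (m + C * sqrt p) := by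
    simp only [δ]
    rw [sum_sub_distrib, sum_const, nsmul_eq_mul]
    nlinarith
  -- twisting by `d`-th powers does not change the count
  have htw : ∀ w ∈ A, δ (fun i => w i ^ d) = δ 1 := by
    intro w hw
    have hw := (hA w).1 hw
    simp only [δ]
    congr 2
    refine Finset.card_bij' (fun s _ => (s.1, fun i => w i * s.2 i))
      (fun s _ => (s.1, fun i => (w i)⁻¹ * s.2 i)) ?_ ?_ ?_ ?_
    · intro s hs
      rw [mem_pts] at hs ⊢
      intro i
      simp [mul_pow, ← hs i]
    · intro s hs
      rw [mem_pts] at hs ⊢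
      intro i
      simp only [mul_pow, inv_pow, ← hs i, Pi.one_apply, one_mul]
      exact mul_inv_cancel_left₀ (pow_ne_zero _ (hw i)) _
    · intro s _
      simp [inv_mul_cancel_left₀ (hw _)]
    · intro s _
      simp [mul_inv_cancel_left₀ (hw _)]
  have hfib : ∑ w ∈ A, δ (fun i => w i ^ d) ≤ d ^ m * ∑ κ ∈ A, δ κ := by
    rw [← Finset.sum_fiberwise_of_maps_to (s := A) (t := A) (g := fun w i => w i ^ d)
      (fun w hw => (hA _).2 fun i => pow_ne_zero _ ((hA w).1 hw i)), mul_sum]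
    refine sum_le_sum fun κ hκ => ?_
    rw [sum_congr rfl (g := fun _ => δ κ) (fun w hw => by rw [← (mem_filter.1 hw).2]),
      sum_const, nsmul_eq_mul]
    refine mul_le_mul_of_nonneg_right ?_ (hδ0 κ hκ)
    have h1 := card_pi_pow_le hd κ
    rw [card_fin] at h1
    have h2 : (A.filter fun w => (fun i => w i ^ d) = κ).card ≤ d ^ m := by
      refine le_trans (card_le_card ?_) h1
      intro w hw
      simp only [mem_filter, mem_univ, true_and] at hw ⊢
      exact fun i => congrFun hw.2 i
    exact_mod_cast h2
  rw [sum_congr rfl htw, sum_const, nsmul_eq_mul] at hfib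
  have hApos : (0 : ℝ) < A.card := by
    have : A.Nonempty := ⟨1, (hA _).2 fun i => by simp⟩
    exact_mod_cast Finset.card_pos.2 this
  have h1 : δ 1 ≤ d ^ m * (m + C * sqrt p) := by
    have : (A.card : ℝ) * δ 1 ≤ A.card * (d ^ m * (m + C * sqrt p)) := by
      refine hfib.trans ?_
      have := mul_le_mul_of_nonneg_left hδtot (show (0 : ℝ) ≤ (d : ℝ) ^ m by positivity)
      linarith
    exact le_of_mul_le_mul_left this hApos
  have h2 : (m : ℝ) ≤ m * sqrt p := le_mul_of_one_le_right (cast_nonneg _) hs1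
  have h3 : (d : ℝ) ^ m * (m + C * sqrt p) ≤ d ^ m * ((m + C) * sqrt p) :=
    mul_le_mul_of_nonneg_left (by linarith) (by positivity)
  have h4 : 0 ≤ C * sqrt p := by positivity
  simp only [δ] at h1
  linarith

/-- A nonzero linear form takes each value boundedly often on the curve. -/
lemma fibre_bound {p d m : ℕ} [Fact p.Prime] (hd : 2 ≤ d) (hpd : ¬ p ∣ d) (hp : 4 * d ^ m < p)
    {c : Fin m → ZMod p} (hc : Injective c) {t : Fin m → ZMod p} (ht : t ≠ 0)
    (a : ZMod p) :
    ((pts d m 1 c).filter fun s => ∑ i, t i * s.2 i = a).card ≤ 4 * d ^ m * d ^ m := by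
  have hch : CharP (AlgebraicClosure (ZMod p)) p :=
    charP_of_injective_algebraMap (algebraMap (ZMod p) (AlgebraicClosure (ZMod p))).injective p
  let A := algebraMap (ZMod p) (AlgebraicClosure (ZMod p))
  obtain ⟨P, hP, hPd, hPp, hPv, hPn⟩ := curve_rel (K := AlgebraicClosure (ZMod p)) (d := d)
    (m := m) (natCast_ne_zero_closure hpd) hp (c := fun i => A (c i)) (u := fun _ => 1)
    (A.injective.comp hc) (fun i => one_ne_zero) (fun i => A (t i))
  have hne := hPn hd (by
    obtain ⟨i, hi⟩ := Function.ne_iff.1 ht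
    exact Function.ne_iff.2 ⟨i, (map_ne_zero _).2 hi⟩) (A a)
  set Q := aeval (![Xₚ, Cₚ (A a)] :
    Fin 2 → Polynomial (AlgebraicClosure (ZMod p))) P with hQ
  have hQd : Q.natDegree ≤ 4 * d ^ m := by
    refine le_trans ?_ hPd
    rw [hQ, aeval_def, eval₂_eq']
    refine Polynomial.natDegree_sum_le_of_forall_le _ _ fun s hs => ?_
    refine le_trans ?_ (le_totalDegree hs)
    rw [sum_fintype _ _ (fun _ => rfl), Fin.sum_univ_two, Fin.prod_univ_two]
    simp only [Matrix.cons_val_zero, Matrix.cons_val_one]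
    rw [← map_pow, Polynomial.algebraMap_apply, Algebra.algebraMap_self_apply]
    refine (Polynomial.natDegree_C_mul_le _ _).trans ((Polynomial.natDegree_mul_C_le _ _).trans ?_)
    rw [Polynomial.natDegree_X_pow]
    omega
  let W := (pts d m 1 c).filter fun s => ∑ i, t i * s.2 i = a
  have h1 : W.card ≤ d ^ m * (W.image fun s => s.1).card := by
    refine Finset.card_le_mul_card_image _ _ fun z _ => ?_
    refine le_trans (card_le_card ?_) (card_pts_fst_le (by omega : 0 < d)
      (κ := (1 : Fin m → ZMod p)) (c := c) (fun _ => one_ne_zero) z)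
    intro s hs
    simp only [W, mem_filter] at hs ⊢
    exact ⟨hs.1.1, hs.2⟩
  have h2 : (W.image fun s => s.1).card ≤ 4 * d ^ m := by
    rw [← card_image_of_injective _ A.injective]
    refine le_trans (le_trans (card_le_card ?_) (Multiset.toFinset_card_le _))
      ((Polynomial.card_roots' Q).trans hQd)
    intro y hy
    obtain ⟨z, hz, rfl⟩ := mem_image.1 hy
    obtain ⟨s, hs, rfl⟩ := mem_image.1 hz
    obtain ⟨hs1, hs2⟩ := mem_filter.1 hs
    rw [Multiset.mem_toFinset, mem_roots hne, IsRoot.def]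
    have := hPv (A s.1) (fun i => A (s.2 i)) (fun i => by
      rw [← map_pow, ← map_add, one_mul, ← mem_pts.1 hs1 i, Pi.one_apply, one_mul])
    have e : ∑ i, A (t i) * A (s.2 i) = A a := by
      rw [← hs2]; simp
    rw [e] at this
    have key : (evalRingHom (A s.1)).comp
        (aeval (![Xₚ, Cₚ (A a)] : Fin 2 → Polynomial _)).toRingHom
        = eval ![A s.1, A a] := by
      apply ringHom_ext
      · intro r; simp
      · intro i; fin_cases i <;> simp
    rw [← this, ← key]
    rfl
  calc W.card ≤ _ := h1
    _ ≤ d ^ m * (4 * d ^ m) := Nat.mul_le_mul_left _ h2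
    _ = _ := mul_comm _ _

section

variable {K : Type} [Field K]

/-- A `d`-th root of `1 + X`. -/
lemma exists_root_one_add {d : ℕ} (hd : (d : K) ≠ 0) :
    ∃ g : PowerSeries K, g ^ d = 1 + Xₛ ∧ PowerSeries.constantCoeff g = 1 := by
  let Q : K[X] := (1 + Xₚ) ^ d - 1
  have h0 : PowerSeries.constantCoeff (Q : PowerSeries K) = 0 := by
    simp [Q]
  have h1 : IsUnit (PowerSeries.coeff 1 (Q : PowerSeries K)) := by
    have : PowerSeries.coeff 1 (Q : PowerSeries K) = d := by
      rw [Polynomial.coeff_coe]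
      simp [Q, Polynomial.coeff_one_add_X_pow, Polynomial.coeff_one]
    rw [this]
    exact hd.isUnit
  have hs := HasSubst.substInvOfIsUnit (Q : PowerSeries K) h1
  have h2 := PowerSeries.subst_substInvOfIsUnit_right (Q : PowerSeries K) h0 h1
  have h3 := PowerSeries.constantCoeff_substInvOfIsUnit (Q : PowerSeries K) h1
  set B := PowerSeries.substInvOfIsUnit (Q : PowerSeries K) h1
  refine ⟨1 + B, ?_, by simp [h3]⟩
  have h4 : (Q : PowerSeries K) = (1 + Xₛ) ^ d - 1 := by simp [Q]
  rw [h4, ← coe_substAlgHom hs, map_sub, map_pow, map_add, map_one,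
    substAlgHom_X] at h2
  rw [← h2]; ring

lemma exists_roots_ne [IsAlgClosed K] {d m : ℕ} (hd2 : 2 ≤ d) (hd : (d : K) ≠ 0) {t : Fin m → K}
    (ht : t ≠ 0) : ∃ ζ : Fin m → K, (∀ i, ζ i ^ d = 1) ∧ ∑ i, t i * ζ i ≠ 0 := by
  have : NeZero (d : K) := ⟨hd⟩
  obtain ⟨ω, hω⟩ := HasEnoughRootsOfUnity.exists_primitiveRoot K d
  obtain ⟨i0, hi0⟩ := Function.ne_iff.1 ht
  by_cases h : ∑ i, t i * (1 : Fin m → K) i = 0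
  · refine ⟨update 1 i0 ω, fun i => ?_, ?_⟩
    · by_cases hi : i = i0
      · subst hi; simp [hω.pow_eq_one]
      · simp [hi]
    · intro h'
      have h2 : ∑ i, t i * (update (1 : Fin m → K) i0 ω i - 1) = 0 := by
        simp only [mul_sub, sum_sub_distrib]
        rw [h']; simpa using h
      rw [sum_eq_single i0 (fun i _ hi => by simp [hi]) (by simp),
        update_self] at h2
      rcases mul_eq_zero.1 h2 with h3 | h3
      · exact hi0 h3
      · exact hω.ne_one hd2 (sub_eq_zero.1 h3)
  · exact ⟨1, fun i => by simp, h⟩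

/-- A branch at infinity of the curve `x_i ^ d = z + c_i`, parametrised by the reciprocal of the
linear form `∑ t_i x_i`: here `x_i = y_i / X` and `z = ψ / X ^ d`. -/
lemma exists_branch [IsAlgClosed K] {d m : ℕ} (hd2 : 2 ≤ d) (hd : (d : K) ≠ 0) {t : Fin m → K}
    (ht : t ≠ 0) (c : Fin m → K) :
    ∃ (y : Fin m → PowerSeries K) (ψ : PowerSeries K), PowerSeries.constantCoeff ψ ≠ 0 ∧
      (∀ i, y i ^ d = ψ + Cₛ (c i) * Xₛ ^ d) ∧
      ∑ i, Cₛ (t i) * y i = 1 := by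
  obtain ⟨g, hg, hg1⟩ := exists_root_one_add hd
  obtain ⟨ζ, hζ, hT0⟩ := exists_roots_ne hd2 hd ht
  have hd0 : d ≠ 0 := by omega
  have hs1 : ∀ i, HasSubst (Cₛ (c i) * Xₛ ^ d : PowerSeries K) :=
    fun i => HasSubst.of_constantCoeff_zero' (by simp [hd0])
  let γ : Fin m → PowerSeries K := fun i => substAlgHom (hs1 i) g
  have hγ : ∀ i, γ i ^ d = 1 + Cₛ (c i) * Xₛ ^ d := fun i => by
    simp only [γ]
    rw [← map_pow, hg, map_add, map_one, substAlgHom_X]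
  have hγ0 : ∀ i, PowerSeries.constantCoeff (γ i) = 1 := fun i => by
    have h1 : PowerSeries.constantCoeff (substAlgHom (hs1 i) (g - 1)) = 0 := by
      rw [coe_substAlgHom]
      refine PowerSeries.constantCoeff_subst_eq_zero ?_ _ (by simp [hg1])
      change PowerSeries.constantCoeff _ = 0
      simp [hd0]
    rw [map_sub, map_one, map_sub, map_one, sub_eq_zero] at h1
    exact h1
  let T : PowerSeries K := ∑ i, Cₛ (t i) * (Cₛ (ζ i) * γ i)
  have hT : PowerSeries.constantCoeff T ≠ 0 := by
    simpa [T, hγ0] using hT0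
  have hTi : T * T⁻¹ = 1 := PowerSeries.mul_inv_cancel _ hT
  let Q : PowerSeries K := Xₛ * T⁻¹
  have hQ0 : PowerSeries.constantCoeff Q = 0 := by simp [Q]
  have hQ1 : IsUnit (PowerSeries.coeff 1 Q) := by
    have : PowerSeries.coeff 1 Q = (PowerSeries.constantCoeff T)⁻¹ := by
      simp only [Q]
      rw [show (1 : ℕ) = 0 + 1 from rfl, PowerSeries.coeff_succ_X_mul]
      simp
    rw [this]
    exact (inv_ne_zero hT).isUnit
  have hs := HasSubst.substInvOfIsUnit Q hQ1
  have h2 := PowerSeries.subst_substInvOfIsUnit_right Q hQ0 hQ1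
  have h3 := PowerSeries.constantCoeff_substInvOfIsUnit Q hQ1
  set σ := PowerSeries.substInvOfIsUnit Q hQ1
  let Φ : PowerSeries K →ₐ[K] PowerSeries K := substAlgHom hs
  have hΦC : ∀ a : K, Φ (Cₛ a) = Cₛ a := fun a => Φ.commutes a
  have hΦX : Φ Xₛ = σ := substAlgHom_X hs
  have hT' : Φ T * Φ T⁻¹ = 1 := by rw [← map_mul, hTi, map_one]
  have hX : σ * Φ T⁻¹ = Xₛ := by
    rw [← hΦX, ← map_mul]
    exact (congrFun (coe_substAlgHom hs) Q).trans h2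
  refine ⟨fun i => Φ (Cₛ (ζ i) * γ i * T⁻¹), Φ T⁻¹ ^ d, ?_, fun i => ?_, ?_⟩
  · intro h0
    rw [map_pow] at h0
    have h1 := congrArg PowerSeries.constantCoeff hT'
    rw [map_mul, pow_eq_zero_iff hd0 |>.1 h0, mul_zero, map_one] at h1
    exact zero_ne_one h1
  · rw [← map_pow, mul_pow, mul_pow, ← map_pow, hζ, map_one, one_mul, hγ, add_mul, one_mul,
      map_add, map_pow, map_mul, map_mul, hΦC, map_pow, hΦX, map_pow, mul_assoc, ← mul_pow, hX]
  · have : ∑ i, Cₛ (t i) * Φ (Cₛ (ζ i) * γ i * T⁻¹) = Φ (T * T⁻¹) := by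
      have hTe : T * T⁻¹ = ∑ i, Cₛ (t i) * (Cₛ (ζ i) * γ i * T⁻¹) := by
        conv_lhs => lhs; simp only [T]
        rw [sum_mul]
        exact sum_congr rfl fun i _ => mul_assoc _ _ _
      rw [hTe, map_sum]
      refine sum_congr rfl fun i _ => ?_
      rw [map_mul Φ (Cₛ (t i)), hΦC]
    rw [this, hTi, map_one]

end

section

variable {K : Type} [Field K] {σ : Type}

/-- The value at `(v, w)` of the homogenisation of `G` to degree `n` with respect to an extra
variable. -/
def homg {A : Type*} [CommRing A] [Algebra K A] (n : ℕ) (G : MvPolynomial σ K)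
    (v : σ → A) (w : A) : A :=
  ∑ s ∈ G.support, algebraMap K A (G.coeff s) *
    ((s.prod fun i e => v i ^ e) * w ^ (n - s.sum fun _ e => e))

lemma homg_map {A B : Type*} [CommRing A] [Algebra K A] [CommRing B] [Algebra K B]
    (φ : A →ₐ[K] B) (n : ℕ) (G : MvPolynomial σ K) (v : σ → A) (w : A) :
    φ (homg n G v w) = homg n G (fun i => φ (v i)) (φ w) := by
  simp only [homg, map_sum, map_mul, map_pow, AlgHom.commutes, Finsupp.prod, map_prod]

lemma homg_eq {A : Type*} [Field A] [Algebra K A] {n : ℕ} {G : MvPolynomial σ K}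
    (hn : G.totalDegree ≤ n) (v : σ → A) {w : A} (hw : w ≠ 0) :
    homg n G v w = w ^ n * aeval (fun i => v i / w) G := by
  rw [homg, aeval_def, eval₂_eq, mul_sum]
  refine sum_congr rfl fun s hs => ?_
  have h1 : (s.sum fun _ e => e) ≤ n := (le_totalDegree hs).trans hn
  have h2 : ∏ i ∈ s.support, (v i / w) ^ s i
      = (s.prod fun i e => v i ^ e) / w ^ (s.sum fun _ e => e) := by
    simp only [div_pow, Finset.prod_div_distrib, Finsupp.prod, Finsupp.sum,
      Finset.prod_pow_eq_pow_sum]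
  rw [h2]
  have h3 : w ^ n = w ^ (n - s.sum fun _ e => e) * w ^ (s.sum fun _ e => e) := by
    rw [← pow_add, Nat.sub_add_cancel h1]
  rw [h3]
  field_simp

end

section

variable {K : Type} [Field K]

/-- The ring of power series in `r` over `K[α]`. -/
abbrev SS (K : Type) [Field K] : Type := PowerSeries K[X]

/-- Power series in `r` over `K[α]` whose `r ^ l` coefficient has degree at most `l` in `α`. -/
def adm (K : Type) [Field K] : Subalgebra K (PowerSeries K[X]) where
  carrier := {s | ∀ l, (PowerSeries.coeff l s).natDegree ≤ l}
  mul_mem' := by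
    intro a b ha hb l
    rw [PowerSeries.coeff_mul]
    refine Polynomial.natDegree_sum_le_of_forall_le _ _ fun ij hij => ?_
    rw [HasAntidiagonal.mem_antidiagonal] at hij
    refine Polynomial.natDegree_mul_le.trans ?_
    rw [← hij]
    exact add_le_add (ha _) (hb _)
  add_mem' := by
    intro a b ha hb l
    rw [map_add]
    exact (Polynomial.natDegree_add_le _ _).trans (max_le (ha l) (hb l))
  algebraMap_mem' := by
    intro c l
    have : algebraMap K (SS K) c = Cₛ (Cₚ c) :=
      PowerSeries.algebraMap_apply
    rw [this, PowerSeries.coeff_C]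
    split_ifs <;> simp

lemma mem_adm {s : SS K} : s ∈ adm K ↔ ∀ l, (PowerSeries.coeff l s).natDegree ≤ l := Iff.rfl

/-- The element `α r`. -/
def ar (K : Type) [Field K] : PowerSeries K[X] :=
  Cₛ Xₚ * Xₛ

lemma ar_mem : ar K ∈ adm K := by
  intro l
  rw [ar, PowerSeries.coeff_C_mul, PowerSeries.coeff_X]
  split_ifs with h
  · simp [h]
  · simp

lemma ar_ne_zero : ar K ≠ 0 := by
  intro h
  have := congrArg (PowerSeries.coeff 1) h
  simp [ar] at this

lemma X_mem_adm : (Xₛ : SS K) ∈ adm K := by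
  intro l
  rw [PowerSeries.coeff_X]
  split_ifs <;> simp

lemma geo_mem : (PowerSeries.mk 1 : SS K) ∈ adm K := by
  intro l
  simp

lemma subst_mem_adm {b : SS K} (hb : b ∈ adm K) (hs : HasSubst b) (f : PowerSeries K) :
    substAlgHom hs f ∈ adm K := by
  intro l
  rw [coe_substAlgHom]
  have := PowerSeries.coeff_subst' hs f l
  refine (congrArg natDegree this).trans_le ?_
  refine finsum_induction (p := fun q : K[X] => q.natDegree ≤ l) (by simp)
    (fun a b ha hb => (Polynomial.natDegree_add_le _ _).trans (max_le ha hb)) fun n => ?_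
  exact (Polynomial.natDegree_smul_le _ _).trans ((adm K).pow_mem hb n l)

/-- Specialisation of `α`. -/
def spec (a : K) : SS K →ₐ[K] PowerSeries K where
  __ := PowerSeries.map (evalRingHom a)
  commutes' := by
    intro c
    have : algebraMap K (SS K) c = Cₛ (Cₚ c) :=
      PowerSeries.algebraMap_apply
    change PowerSeries.map _ (algebraMap K (SS K) c) = _
    rw [this, PowerSeries.map_C]
    simp

lemma spec_apply (a : K) (s : SS K) : spec a s = PowerSeries.map (evalRingHom a) s := rfl

lemma spec_ar (a : K) : spec a (ar K) = Cₛ a * Xₛ := by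
  simp [spec_apply, ar]

lemma spec_subst {b : SS K} (hs : HasSubst b) (hb : spec 0 b = 0) (f : PowerSeries K) :
    spec 0 (substAlgHom hs f) = Cₛ (PowerSeries.constantCoeff f) := by
  obtain ⟨g, hg⟩ : Xₛ ∣ f - Cₛ (PowerSeries.constantCoeff f) := by
    rw [PowerSeries.X_dvd_iff]; simp
  have h1 : f = Cₛ (PowerSeries.constantCoeff f) + Xₛ * g := by
    rw [← hg]; ring
  conv_lhs => rw [h1]
  rw [map_add, map_add, map_mul, map_mul, substAlgHom_X, hb, zero_mul, add_zero]
  exact ((spec 0).comp (substAlgHom hs)).commutes _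

/-- Two branches of the curve at infinity, along which the linear form takes the values
`1 / (α r)` and `(1 - r) / (α r)`, whose difference is `1 / α`. -/
lemma exists_double [IsAlgClosed K] {d m : ℕ} (hd2 : 2 ≤ d) (hd : (d : K) ≠ 0) {t : Fin m → K}
    (ht : t ≠ 0) (c : Fin m → K) :
    ∃ (Y Y' : Fin m → SS K) (ψ ψ' : SS K) (ψ0 : K), ψ0 ≠ 0 ∧
      (∀ i, Y i ∈ adm K) ∧ (∀ i, Y' i ∈ adm K) ∧
      (∀ i, Y i ^ d = ψ + algebraMap K (SS K) (c i) * ar K ^ d) ∧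
      (∀ i, Y' i ^ d = ψ' + algebraMap K (SS K) (c i) * ar K ^ d) ∧
      ∑ i, algebraMap K (SS K) (t i) * Y i = 1 ∧
      ∑ i, algebraMap K (SS K) (t i) * Y' i = 1 - Xₛ ∧
      spec 0 ψ = Cₛ ψ0 ∧ spec 0 ψ' = Cₛ ψ0 * (1 - Xₛ) ^ d := by
  obtain ⟨y, ψ, hψ, hy, hty⟩ := exists_branch hd2 hd ht c
  have hs : HasSubst (ar K) :=
    HasSubst.of_constantCoeff_zero' (by simp [ar])
  let gg : SS K := PowerSeries.mk 1
  have hgg : gg * (1 - Xₛ) = 1 := PowerSeries.mk_one_mul_one_sub_eq_one _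
  have hs' : HasSubst (ar K * gg) :=
    HasSubst.of_constantCoeff_zero' (by simp [ar])
  let φ : PowerSeries K →ₐ[K] SS K := substAlgHom hs
  let φ' : PowerSeries K →ₐ[K] SS K := substAlgHom hs'
  have hC : ∀ (χ : PowerSeries K →ₐ[K] SS K) (a : K), χ (Cₛ a) = algebraMap K (SS K) a :=
    fun χ a => χ.commutes a
  have hφX : φ Xₛ = ar K := substAlgHom_X hs
  have hφX' : φ' Xₛ = ar K * gg := substAlgHom_X hs'
  have h1X : (1 - Xₛ : SS K) ∈ adm K := (adm K).sub_mem (adm K).one_mem X_mem_adm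
  have h0 : spec 0 (ar K) = 0 := by rw [spec_ar]; simp
  refine ⟨fun i => φ (y i), fun i => (1 - Xₛ) * φ' (y i), φ ψ,
    (1 - Xₛ) ^ d * φ' ψ, PowerSeries.constantCoeff ψ, hψ,
    fun i => subst_mem_adm ar_mem hs _,
    fun i => (adm K).mul_mem h1X (subst_mem_adm ((adm K).mul_mem ar_mem geo_mem) hs' _),
    fun i => ?_, fun i => ?_, ?_, ?_, ?_, ?_⟩
  · rw [← map_pow, hy, map_add, map_mul, map_pow, hC, hφX]
  · rw [mul_pow, ← map_pow φ', hy, map_add, map_mul, map_pow, hC, hφX', mul_add, mul_left_comm,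
      ← mul_pow, show (1 - Xₛ) * (ar K * gg) = ar K * (gg * (1 - Xₛ)) by ring,
      hgg, mul_one]
  · have := congrArg φ hty
    simpa only [map_sum, map_mul, hC, map_one] using this
  · have := congrArg φ' hty
    simp only [map_sum, map_mul, hC, map_one] at this
    simp only [mul_left_comm _ (1 - Xₛ : SS K)]
    rw [← mul_sum, this, mul_one]
  · exact spec_subst hs h0 _
  · rw [map_mul, map_pow, spec_subst hs' (by rw [map_mul, h0, zero_mul]), mul_comm]
    congr 2
    simp [spec_apply]

lemma algIndep_double {d : ℕ} (hd : 0 < d) {ψ ψ' : SS K} {ψ0 : K} (h0 : ψ0 ≠ 0)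
    (h1 : spec 0 ψ = Cₛ ψ0)
    (h2 : spec 0 ψ' = Cₛ ψ0 * (1 - Xₛ) ^ d) :
    AlgebraicIndependent K (fun i : Fin 2 => algebraMap (SS K) (FractionRing (SS K)) (![ψ, ψ'] i) /
      algebraMap (SS K) (FractionRing (SS K)) (ar K ^ d)) := by
  rw [algebraicIndependent_iff]
  intro p hp
  by_contra hp0
  set n := p.totalDegree with hn
  let ι : SS K →ₐ[K] FractionRing (SS K) := IsScalarTower.toAlgHom K (SS K) (FractionRing (SS K))
  have hι : ∀ s, ι s = algebraMap (SS K) (FractionRing (SS K)) s := fun _ => rfl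
  have hinj : Injective ι := IsFractionRing.injective (SS K) (FractionRing (SS K))
  have ha : algebraMap (SS K) (FractionRing (SS K)) (ar K ^ d) ≠ 0 := by
    rw [← hι, Ne, map_eq_zero_iff ι hinj]; exact pow_ne_zero _ ar_ne_zero
  have e1 : homg n p ![ψ, ψ'] (ar K ^ d) = 0 := by
    apply hinj
    rw [homg_map, map_zero]
    rw [← hι] at ha
    rw [homg_eq le_rfl _ ha]
    simp only [hι]
    rw [hp, mul_zero]
  have e2 := congrArg (spec 0) e1
  rw [homg_map, map_zero, map_pow, spec_ar, map_zero, zero_mul, zero_pow hd.ne'] at e2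
  let W : Finset (Fin 2 →₀ ℕ) := p.support.filter fun s => (s.sum fun _ e => e) = n
  let Q : K[X] := ∑ s ∈ W, Cₚ (p.coeff s) * Xₚ ^ (s 1)
  have e3 : Cₛ (ψ0 ^ n) *
      ((Q.comp ((1 - Xₚ) ^ d) : K[X]) : PowerSeries K) = 0 := by
    rw [← e2, homg, ← Finset.sum_filter_of_ne (p := fun s => (s.sum fun _ e => e) = n)]
    · rw [← Polynomial.coe_C, ← Polynomial.coe_mul, Polynomial.sum_comp, mul_sum,
        ← Polynomial.coeToPowerSeries.ringHom_apply, map_sum]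
      refine sum_congr rfl fun s hs => ?_
      have hs' : s 0 + s 1 = n := by
        have := (mem_filter.1 hs).2
        rwa [sum_fintype _ _ (fun _ => rfl), Fin.sum_univ_two] at this
      rw [(mem_filter.1 hs).2, Nat.sub_self, pow_zero, mul_one,
        Finsupp.prod_fintype _ _ (fun _ => pow_zero _), Fin.prod_univ_two]
      simp only [Matrix.cons_val_zero, Matrix.cons_val_one, h1, h2]
      rw [← hs']
      have : algebraMap K (PowerSeries K) (p.coeff s) = Cₛ (p.coeff s) := rfl
      rw [this]
      simp only [map_pow, Polynomial.mul_comp, Polynomial.C_comp, Polynomial.pow_comp,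
        Polynomial.X_comp, map_mul, map_sub, map_one, Polynomial.coeToPowerSeries.ringHom_apply,
        Polynomial.coe_C, Polynomial.coe_X]
      ring
    · intro s hs hne
      by_contra hlt
      have : (s.sum fun _ e => e) ≤ n := le_totalDegree hs
      apply hne
      rw [zero_pow (by omega), mul_zero, mul_zero]
  have e4 : Q.comp ((1 - Xₚ) ^ d) = 0 := by
    rcases mul_eq_zero.1 e3 with h | h
    · exfalso
      rw [map_eq_zero_iff _ PowerSeries.C_injective] at h
      exact pow_ne_zero _ h0 h
    · exact_mod_cast h
  have hQ : Q = 0 := by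
    rcases Polynomial.comp_eq_zero_iff.1 e4 with h | ⟨-, h⟩
    · exact h
    · exfalso
      have := congrArg natDegree h
      rw [Polynomial.natDegree_C, Polynomial.natDegree_pow, ← neg_sub, Polynomial.natDegree_neg,
        ← Polynomial.C_1, Polynomial.natDegree_X_sub_C] at this
      omega
  obtain ⟨s, hs, hsn⟩ := Finset.exists_mem_eq_sup p.support (support_nonempty.2 hp0)
    (fun s => s.sum fun _ e => e)
  have hsW : s ∈ W := mem_filter.2 ⟨hs, hsn.symm⟩
  have hsum : ∀ s ∈ W, s 0 + s 1 = n := fun s hs => by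
    have := (mem_filter.1 hs).2
    rwa [sum_fintype _ _ (fun _ => rfl), Fin.sum_univ_two] at this
  have hc := congrArg (fun q : K[X] => q.coeff (s 1)) hQ
  simp only [Q, Polynomial.finsetSum_coeff, Polynomial.coeff_C_mul, Polynomial.coeff_X_pow,
    Polynomial.coeff_zero] at hc
  rw [sum_eq_single s] at hc
  · rw [if_pos rfl, mul_one] at hc
    exact (mem_support_iff.1 hs) hc
  · intro s' hs' hne
    rw [if_neg, mul_zero]
    intro h
    apply hne
    ext i
    have a1 := hsum s hsW
    have a2 := hsum s' hs'
    fin_cases i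
    · change s' 0 = s 0; omega
    · exact h.symm
  · exact fun h => absurd hsW h

end

section

variable {K : Type} [Field K]

/-- The chart `U ↦ α r`, `W ↦ V` over `K[α]`. -/
def gam (V : SS K) : K[X][X,Y] →+* SS K :=
  eval₂Hom Cₛ ![ar K, V]

lemma gam_eq (V : SS K) (R : K[X][X,Y]) :
    gam V R = aeval (fun o : Option (Fin 2) => o.elim (Cₛ Xₚ) ![ar K, V])
      ((optionEquivRight K (Fin 2)).symm R) := by
  obtain ⟨G, rfl⟩ := (optionEquivRight K (Fin 2)).surjective R
  rw [AlgEquiv.symm_apply_apply]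
  induction G using MvPolynomial.induction_on with
  | C a =>
    rw [optionEquivRight_C, gam, coe_eval₂Hom, eval₂_C, aeval_C]
    exact PowerSeries.algebraMap_apply.symm
  | add p q hp hq => rw [map_add, map_add, map_add, hp, hq]
  | mul_X p o hp =>
    rw [map_mul, map_mul, map_mul, hp]
    have : gam V ((optionEquivRight K (Fin 2)) (X o)) = aeval (fun o : Option (Fin 2) =>
        o.elim (Cₛ Xₚ) ![ar K, V]) (X o : MvPolynomial _ K) := by
      rw [aeval_X]
      cases o with
      | none => rw [optionEquivRight_X_none, gam, coe_eval₂Hom, eval₂_C]; rfl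
      | some i => rw [optionEquivRight_X_some, gam, coe_eval₂Hom, eval₂_X]; rfl
    rw [this]

lemma eval_map_spec (a : K) (v : Fin 2 → K) (R : K[X][X,Y]) :
    eval v (map (evalRingHom a) R) = aeval (fun o : Option (Fin 2) => o.elim a v)
      ((optionEquivRight K (Fin 2)).symm R) := by
  obtain ⟨G, rfl⟩ := (optionEquivRight K (Fin 2)).surjective R
  rw [AlgEquiv.symm_apply_apply]
  induction G using MvPolynomial.induction_on with
  | C b => rw [optionEquivRight_C]; simp
  | add p q hp hq => rw [map_add, map_add, map_add, map_add, hp, hq]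
  | mul_X p o hp =>
    rw [map_mul, map_mul, map_mul, map_mul, hp]
    congr 1
    cases o with
    | none => rw [optionEquivRight_X_none]; simp
    | some i => rw [optionEquivRight_X_some]; simp

lemma div_aux1 {E : Type} [Field E] {A P e : E} (hA : A ≠ 0) : (P + e * A) / A = P / A + e := by
  field_simp

lemma div_aux2 {E : Type} [Field E] {a r A : E} (h : a * r = A) (hA : A ≠ 0) :
    1 / A - (1 - r) / A = 1 / a := by
  subst h
  have ha := left_ne_zero_of_mul hA
  have hr := right_ne_zero_of_mul hA
  field_simp
  ring

lemma gam_monomial (V : SS K) (i j k : ℕ) (a : K) :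
    gam V (monomial (Finsupp.single 0 j + Finsupp.single 1 k) (Polynomial.monomial i a)) =
      algebraMap K (SS K) a * Cₛ Xₚ ^ i * (ar K ^ j * V ^ k) := by
  have h : (monomial (Finsupp.single 0 j + Finsupp.single 1 k) (Polynomial.monomial i a) :
      K[X][X,Y]) =
      C (Cₚ a) * C Xₚ ^ i * (X 0 ^ j * X 1 ^ k) := by
    rw [← map_pow, ← map_mul, Polynomial.C_mul_X_pow_eq_monomial, X_pow_eq_monomial,
      X_pow_eq_monomial, monomial_mul, C_mul_monomial, mul_one, mul_one]
  have h2 : ∀ b : K[X], gam V (C b) = Cₛ b := fun b => by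
    rw [gam, coe_eval₂Hom, eval₂_C]
  have h3 : ∀ i, gam V (X i) = ![ar K, V] i := fun b => by
    rw [gam, coe_eval₂Hom, eval₂_X]
  rw [h, map_mul, map_mul, map_mul, map_pow, map_pow, map_pow, h2, h2, h3, h3]
  have h4 : (algebraMap K (SS K)) a = Cₛ (Cₚ a) := PowerSeries.algebraMap_apply
  rw [h4, Matrix.cons_val_zero, Matrix.cons_val_one, Matrix.cons_val_fin_one]

lemma div_aux3 {E : Type} [Field E] {F f w g : E} (hF : F ≠ 0) (hf : f ≠ 0) {n n' n1 i n2 j k : ℕ}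
    (a1 : n = n1 + i) (a2 : n' = n2 + j + k) :
    F ^ n * f ^ n' * (g * (1 / F) ^ i * ((1 / f) ^ j * (w / f) ^ k)) =
      g * (F ^ n1 * (f ^ n2 * w ^ k)) := by
  subst a1 a2
  rw [pow_add, pow_add, pow_add, div_pow, div_pow, div_pow, one_pow, one_pow]
  field_simp

lemma exists_polyRel {E : Type} [Field E] [Algebra K E] (ι : SS K →ₐ[K] E)
    (hinj : Injective ι) {d : ℕ} (hdpos : 0 < d) {m : ℕ} {z : Fin 2 → E}
    {y : Fin m ⊕ Fin m → E} {fE F wE : E} (hfd : DegLE K d z y 1 fE) (hFd : DegLE K d z y 1 F)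
    (hwd : DegLE K d z y 1 wE) (V : SS K) (hF : F = 1 / ι (Cₛ Xₚ))
    (hα : ι (Cₛ Xₚ) ≠ 0)
    (hA : ι (ar K) ≠ 0) (hfE : fE = 1 / ι (ar K)) (hwE : wE = ι V / ι (ar K)) :
    ∃ R : K[X][X,Y], R ≠ 0 ∧ R.totalDegree ≤ 18 * d ^ (2 * m) ∧
        gam V R = 0 := by
  set n := 9 * d ^ (2 * m) with hn
  have hfE0 : fE ≠ 0 := by rw [hfE]; exact one_div_ne_zero hA
  have hF0 : F ≠ 0 := by rw [hF]; exact one_div_ne_zero hα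
  obtain ⟨g, hg, s0, hs0⟩ := exists_relation (K := K) (d := d) (z := z) (y := y) (n := 3 * n)
    (fun s : Fin (n + 1) × Fin (n + 1) × Fin (n + 1) =>
      F ^ (n - s.1) * (fE ^ (2 * n - s.2.1 - s.2.2) * wE ^ (s.2.2 : ℕ)))
    (fun s => by
      refine VV_mono ?_ (DegLE.mem hdpos ((hFd.pow _).mul ((hfd.pow _).mul (hwd.pow _))))
      have := s.1.2; have := s.2.1.2; have := s.2.2.2
      omega)
    (by
      simp only [Fintype.card_prod, card_fin, Fintype.card_sum, ← two_mul]
      have h1 : 1 ≤ d ^ (2 * m) := Nat.one_le_pow _ _ hdpos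
      calc (3 * n + 1) ^ 2 * d ^ (2 * m) ≤ (9 * (n + 1) ^ 2) * d ^ (2 * m) := by
            gcongr; nlinarith
        _ = n * (n + 1) ^ 2 := by rw [hn]; ring
        _ < (n + 1) * (n + 1) ^ 2 := by gcongr; omega
        _ = _ := by ring)
  let R : K[X][X,Y] :=
    ∑ s : Fin (n + 1) × Fin (n + 1) × Fin (n + 1),
      monomial (Finsupp.single 0 (s.2.1 : ℕ) + Finsupp.single 1 (s.2.2 : ℕ))
        (Polynomial.monomial s.1 (g s))
  refine ⟨R, ?_, ?_, ?_⟩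
  · intro hR
    have h1 := congrArg (fun Q => (coeff (Finsupp.single 0 (s0.2.1 : ℕ) +
      Finsupp.single 1 (s0.2.2 : ℕ)) Q).coeff s0.1) hR
    simp only [R, coeff_sum, Polynomial.finsetSum_coeff, coeff_monomial, coeff_zero,
      Polynomial.coeff_zero] at h1
    rw [sum_eq_single s0] at h1
    · simp at h1; exact hs0 h1
    · intro s _ hs
      split_ifs with h2
      · rw [Polynomial.coeff_monomial, if_neg]
        intro h3
        apply hs
        have h4 := DFunLike.congr_fun h2 0
        have h5 := DFunLike.congr_fun h2 1
        simp at h4 h5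
        exact Prod.ext (Fin.ext h3) (Prod.ext (Fin.ext h4) (Fin.ext h5))
      · simp
    · simp
  · refine totalDegree_finsetSum_le fun s _ => (totalDegree_monomial_le _ _).trans ?_
    have h1 := s.2.1.2
    have h2 := s.2.2.2
    rw [Finsupp.sum_add_index' (by simp) (by simp), Finsupp.sum_single_index rfl,
      Finsupp.sum_single_index rfl]
    simp only [hn, id] at h1 h2 ⊢
    omega
  · apply hinj
    rw [map_zero]
    have key : F ^ n * fE ^ (2 * n) * ι (gam V R) = 0 := by
      rw [← hg, map_sum, map_sum, mul_sum]
      refine sum_congr rfl fun s _ => ?_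
      have h1 := s.1.2
      have h2 := s.2.1.2
      have h3 := s.2.2.2
      rw [gam_monomial, map_mul, map_mul, map_mul, map_pow, map_pow, map_pow, AlgHom.commutes]
      have e2 : ι (Cₛ Xₚ) = 1 / F := by rw [hF, one_div_one_div]
      have e3 : ι (ar K) = 1 / fE := by rw [hfE, one_div_one_div]
      have e4 : ι V = wE / fE := by rw [hwE, hfE, div_div_div_cancel_right₀ hA, div_one]
      rw [e2, e3, e4, smul_def]
      exact div_aux3 hF0 hfE0 (by omega) (by omega)
    exact (mul_eq_zero.1 key).resolve_left
      (mul_ne_zero (pow_ne_zero _ hF0) (pow_ne_zero _ hfE0))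

lemma exists_chart [IsAlgClosed K] {d m : ℕ} (hd2 : 2 ≤ d) (hd : (d : K) ≠ 0)
    {t : Fin m → K} (ht : t ≠ 0) {c : Fin m → K} (hc : Injective c)
    (l l' : Fin m → K) :
    ∃ V : SS K, V ∈ adm K ∧
      (∃ R : K[X][X,Y], R ≠ 0 ∧ R.totalDegree ≤ 18 * d ^ (2 * m) ∧
        gam V R = 0) ∧
      ∀ R : K[X][X,Y], gam V R = 0 → ∀ (z z' : K) (x x' : Fin m → K),
        (∀ i, x i ^ d = z + c i) → (∀ i, x' i ^ d = z' + c i) →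
        ∑ i, t i * x i ≠ 0 → ∑ i, t i * x i - ∑ i, t i * x' i ≠ 0 →
        eval ![1 / ∑ i, t i * x i, (∑ i, l i * x i + ∑ i, l' i * x' i) / ∑ i, t i * x i]
          (map (evalRingHom (1 / (∑ i, t i * x i - ∑ i, t i * x' i))) R) = 0 := by
  obtain ⟨Y, Y', ψ, ψ', ψ0, h0, hY, hY', hYd, hYd', hYt, hYt', hψ, hψ'⟩ := exists_double hd2 hd ht c
  have hdpos : 0 < d := by omega
  have hAI := algIndep_double hdpos h0 hψ hψ'
  let E := FractionRing (SS K)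
  let ι : SS K →ₐ[K] E := IsScalarTower.toAlgHom K (SS K) E
  have hι : ∀ s, ι s = algebraMap (SS K) E s := fun _ => rfl
  have hinj : Injective ι := IsFractionRing.injective (SS K) E
  have hιC : ∀ a : K, ι (algebraMap K (SS K) a) = algebraMap K E a := fun a => ι.commutes a
  let A : E := ι (ar K)
  have hA : A ≠ 0 := by
    simp only [A]
    rw [Ne, map_eq_zero_iff ι hinj]; exact ar_ne_zero
  let α : E := ι (Cₛ Xₚ)
  let ρ : E := ι Xₛ
  have hαρ : α * ρ = A := (map_mul ι _ _).symm
  have hα : α ≠ 0 := fun h => hA (by rw [← hαρ, h, zero_mul])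
  have hρ : ρ ≠ 0 := fun h => hA (by rw [← hαρ, h, mul_zero])
  let z : Fin 2 → E := fun i => algebraMap (SS K) E (![ψ, ψ'] i) / algebraMap (SS K) E (ar K ^ d)
  let j : Fin m ⊕ Fin m → Fin 2 := Sum.elim (fun _ => 0) (fun _ => 1)
  let cc : Fin m ⊕ Fin m → K := Sum.elim c c
  let y : Fin m ⊕ Fin m → E := Sum.elim (fun i => ι (Y i) / A) (fun i => ι (Y' i) / A)
  have hAd : algebraMap (SS K) E (ar K ^ d) = A ^ d := map_pow ι _ _
  have hy : ∀ i, y i ^ d = algebraMap K E 1 * (z (j i) + algebraMap K E (cc i)) := by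
    intro i
    rw [map_one, one_mul]
    rcases i with i | i
    · simp only [y, z, j, cc, Sum.elim_inl, Matrix.cons_val_zero, hAd]
      rw [div_pow, ← map_pow, hYd, map_add, map_mul, map_pow, hιC, hι ψ]
      exact div_aux1 (pow_ne_zero _ hA)
    · simp only [y, z, j, cc, elim_inr, Matrix.cons_val_one, hAd]
      rw [div_pow, ← map_pow, hYd', map_add, map_mul, map_pow, hιC, hι ψ']
      exact div_aux1 (pow_ne_zero _ hA)
  let V : SS K := ∑ i, algebraMap K (SS K) (l i) * Y i + ∑ i, algebraMap K (SS K) (l' i) * Y' i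
  have hV : V ∈ adm K := (adm K).add_mem
    ((adm K).sum_mem fun i _ => (adm K).mul_mem ((adm K).algebraMap_mem _) (hY i))
    ((adm K).sum_mem fun i _ => (adm K).mul_mem ((adm K).algebraMap_mem _) (hY' i))
  let fE : E := ∑ i, algebraMap K E (t i) * y (Sum.inl i)
  let fE' : E := ∑ i, algebraMap K E (t i) * y (Sum.inr i)
  let wE : E := ∑ i, algebraMap K E (l i) * y (Sum.inl i) +
    ∑ i, algebraMap K E (l' i) * y (Sum.inr i)
  have hlin : ∀ (s : Fin m → K) (Z : Fin m → SS K), ∑ i, algebraMap K E (s i) * (ι (Z i) / A)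
      = ι (∑ i, algebraMap K (SS K) (s i) * Z i) / A := by
    intro s Z
    rw [map_sum, Finset.sum_div]
    exact sum_congr rfl fun i _ => by rw [map_mul, hιC, mul_div_assoc]
  have hfE : fE = 1 / A := by
    have := hlin t Y
    rw [hYt, map_one] at this
    exact this
  have hfE' : fE' = (1 - ρ) / A := by
    have := hlin t Y'
    rw [hYt', map_sub, map_one] at this
    exact this
  have hwE : wE = ι V / A := by
    simp only [wE, y, Sum.elim_inl, elim_inr]
    rw [hlin, hlin, ← add_div, ← map_add]
  have hFE : fE - fE' = 1 / α := by
    rw [hfE, hfE']; exact div_aux2 hαρ hA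
  refine ⟨V, hV, ?_, ?_⟩
  · have hyd : ∀ i, DegLE K d z y 1 (y i) := fun i => degLE_y hdpos hy i
    have hsd : ∀ (s : Fin m → K) (e : Fin m → Fin m ⊕ Fin m),
        DegLE K d z y 1 (∑ i, algebraMap K E (s i) * y (e i)) := fun s e =>
      DegLE.sum _ _ fun i _ => by
        rw [← smul_def]; exact (hyd _).smul _
    have hFd : DegLE K d z y 1 (fE - fE') := by
      have := (hsd t Sum.inl).add ((hsd t Sum.inr).smul (-1))
      rw [neg_smul, one_smul, ← sub_eq_add_neg] at this
      exact this
    exact exists_polyRel ι hinj hdpos (hsd t Sum.inl) hFd ((hsd l Sum.inl).add (hsd l' Sum.inr)) V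
      hFE hα hA hfE hwE
  · intro R hR z0 z0' x x' hx hx' hf hF
    set R3 := (optionEquivRight K (Fin 2)).symm R with hR3
    let n := R3.totalDegree
    let fP : MvPolynomial (Fin 2 ⊕ (Fin m ⊕ Fin m)) K := ∑ i, C (t i) * X (Sum.inr (Sum.inl i))
    let fP' : MvPolynomial (Fin 2 ⊕ (Fin m ⊕ Fin m)) K := ∑ i, C (t i) * X (Sum.inr (Sum.inr i))
    let wP : MvPolynomial (Fin 2 ⊕ (Fin m ⊕ Fin m)) K := ∑ i, C (l i) * X (Sum.inr (Sum.inl i)) +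
      ∑ i, C (l' i) * X (Sum.inr (Sum.inr i))
    let G := homg n R3 (fun o : Option (Fin 2) => o.elim fP ![fP - fP', wP * (fP - fP')])
      ((fP - fP') * fP)
    have key : ∀ {B : Type} [Field B] [Algebra K B] (e : Fin 2 ⊕ (Fin m ⊕ Fin m) → B),
        aeval e fP ≠ 0 → aeval e fP - aeval e fP' ≠ 0 →
        aeval e G = ((aeval e fP - aeval e fP') * aeval e fP) ^ n *
          aeval (fun o : Option (Fin 2) => o.elim (1 / (aeval e fP - aeval e fP'))
            ![1 / aeval e fP, aeval e wP / aeval e fP]) R3 := by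
      intro B _ _ e h1 h2
      simp only [G]
      rw [homg_map, map_mul, map_sub, homg_eq le_rfl _ (mul_ne_zero h2 h1)]
      congr 3
      funext o
      rcases o with _ | i
      · simp only [Option.elim]
        field_simp
      · fin_cases i
        · simp only [Option.elim, Fin.zero_eta, Matrix.cons_val_zero, map_sub]
          field_simp
        · simp only [Option.elim, Fin.mk_one, Matrix.cons_val_one, Matrix.cons_val_fin_one, map_sub, map_mul]
          field_simp
    have e1 : aeval (Sum.elim z y) fP = fE := by
      simp only [fP, fE, map_sum, map_mul, aeval_C, aeval_X, elim_inr]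
    have e2 : aeval (Sum.elim z y) fP' = fE' := by
      simp only [fP', fE', map_sum, map_mul, aeval_C, aeval_X, elim_inr]
    have e3 : aeval (Sum.elim z y) wP = wE := by
      simp only [wP, wE, map_sum, map_mul, map_add, aeval_C, aeval_X, elim_inr]
    have hG : aeval (Sum.elim z y) G = 0 := by
      rw [key _ (by rw [e1, hfE]; exact one_div_ne_zero hA)
        (by rw [e1, e2, hFE]; exact one_div_ne_zero hα), e1, e2, e3, hFE, hfE, hwE]
      have : (fun o : Option (Fin 2) => o.elim (1 / (1 / α)) ![1 / (1 / A), ι V / A / (1 / A)])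
          = fun o => ι (o.elim (Cₛ Xₚ) ![ar K, V]) := by
        funext o
        rcases o with _ | i
        · simp [α]
        · fin_cases i
          · simp [A]
          · simp only [Option.elim, Fin.mk_one, Matrix.cons_val_one, Matrix.cons_val_fin_one]
            rw [div_div, mul_one_div, div_self hA, div_one]
      rw [this]
      have h2 := congrArg ι (gam_eq V R)
      rw [hR, map_zero, comp_aeval_apply, ← hR3] at h2
      have h3 : aeval (fun o => ι (o.elim (Cₛ Xₚ) ![ar K, V])) R3 = 0 :=
        h2.symm
      rw [h3, mul_zero]
    have hev := vanishing_transfer (u := fun _ => 1) (z0 := ![z0, z0']) (x0 := Sum.elim x x') hd hAI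
      (fun _ => one_ne_zero) (by
        rintro (a | a) (b | b) hab
        · simp only [j, cc, Sum.elim_inl, Prod.mk.injEq, true_and] at hab
          rw [hc hab]
        · simp [j] at hab
        · simp [j] at hab
        · simp only [j, cc, elim_inr, Prod.mk.injEq, true_and] at hab
          rw [hc hab]) hy hG (by
        rintro (a | a)
        · simp [j, cc, hx]
        · simp [j, cc, hx'])
    rw [← coe_aeval_eq_eval] at hev
    have e1 : aeval (Sum.elim ![z0, z0'] (Sum.elim x x')) fP = ∑ i, t i * x i := by
      simp [fP]
    have e2 : aeval (Sum.elim ![z0, z0'] (Sum.elim x x')) fP' = ∑ i, t i * x' i := by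
      simp [fP']
    have e3 : aeval (Sum.elim ![z0, z0'] (Sum.elim x x')) wP =
        ∑ i, l i * x i + ∑ i, l' i * x' i := by
      simp [wP]
    have hev' : aeval (Sum.elim ![z0, z0'] (Sum.elim x x')) G = 0 := hev
    rw [key _ (by rwa [e1]) (by rwa [e1, e2]), e1, e2, e3] at hev'
    rw [eval_map_spec]
    exact (mul_eq_zero.1 hev').resolve_left (pow_ne_zero _ (mul_ne_zero hF hf))

end

section

lemma totalDegree_map_le' {R S σ : Type*} [CommSemiring R] [CommSemiring S] (f : R →+* S)
    (p : MvPolynomial σ R) : (map f p).totalDegree ≤ p.totalDegree :=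
  Finset.sup_mono (support_map_subset f p)

lemma irreducible_of_min {F A ι : Type*} [Field F] [CommRing A] [IsDomain A] [Algebra F A]
    {a : ι → A} {P : MvPolynomial ι F}
    (hmin : ∀ Q : MvPolynomial ι F, Q ≠ 0 → aeval a Q = 0 → P.totalDegree ≤ Q.totalDegree)
    (hP : P ≠ 0) (haP : aeval a P = 0) : Irreducible P := by
  have hunit : ∀ Q Q' : MvPolynomial ι F, Q ≠ 0 → Q' ≠ 0 → P = Q * Q' → aeval a Q = 0 →
      IsUnit Q' := by
    intro Q Q' h1 h2 h3 h4
    have h5 := hmin Q h1 h4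
    rw [h3, totalDegree_mul_of_isDomain h1 h2] at h5
    rw [totalDegree_eq_zero_iff_eq_C.1 (by omega : Q'.totalDegree = 0)] at h2 ⊢
    exact (IsUnit.mk0 _ fun h => h2 (by rw [h, map_zero])).map C
  refine ⟨fun h => (h.map (aeval a)).ne_zero haP, fun Q Q' h => ?_⟩
  have h1 : Q ≠ 0 := by rintro rfl; simp at h; exact hP h
  have h2 : Q' ≠ 0 := by rintro rfl; simp at h; exact hP h
  rw [h, map_mul] at haP
  rcases mul_eq_zero.1 haP with h3 | h3
  · exact Or.inr (hunit Q Q' h1 h2 h h3)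
  · exact Or.inl (hunit Q' Q h2 h1 (by rw [h, mul_comm]) h3)

lemma exists_irreducible_min {F A ι : Type*} [Field F] [CommRing A] [IsDomain A] [Algebra F A]
    {a : ι → A} {R : MvPolynomial ι F} (hR : R ≠ 0) (haR : aeval a R = 0) :
    ∃ P : MvPolynomial ι F, Irreducible P ∧ P.totalDegree ≤ R.totalDegree ∧ aeval a P = 0 := by
  let S : Set (MvPolynomial ι F) := {F | F ≠ 0 ∧ aeval a F = 0}
  have hS : S.Nonempty := ⟨R, hR, haR⟩
  obtain ⟨h1, h2⟩ := Function.argminOn_mem totalDegree S hS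
  exact ⟨_, irreducible_of_min
    (fun G h0 hG => Function.argminOn_le totalDegree S ⟨h0, hG⟩) h1 h2,
    Function.argminOn_le totalDegree S ⟨hR, haR⟩, h2⟩

variable {K : Type} [Field K]

lemma gam_C (V : SS K) (b : K[X]) : gam V (C b) = Cₛ b := by
  rw [gam, coe_eval₂Hom, eval₂_C]

lemma gam_X (V : SS K) (i : Fin 2) : gam V (X i) = ![ar K, V] i := by
  rw [gam, coe_eval₂Hom, eval₂_X]

lemma map_gam {B : Type} [CommRing B] (φ : K[X] →+* B) [Algebra B (PowerSeries B)]
    (V : SS K) (R : K[X][X,Y]) :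
    PowerSeries.map φ (gam V R) = eval₂ Cₛ
      ![Cₛ (φ Xₚ) * Xₛ, PowerSeries.map φ V] (map φ R) := by
  induction R using MvPolynomial.induction_on with
  | C a => rw [gam_C, map_C, eval₂_C, PowerSeries.map_C]
  | add p q hp hq => rw [map_add, map_add, map_add, eval₂_add, hp, hq]
  | mul_X p i hp =>
    rw [map_mul, map_mul, map_mul, eval₂_mul, hp, gam_X, map_X, eval₂_X]
    congr 1
    fin_cases i
    · simp [ar]
    · simp

lemma spec_gam (a : K) (V : SS K) (R : K[X][X,Y]) :
    spec a (gam V R) = aeval ![Cₛ a * Xₛ, spec a V]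
      (map (evalRingHom a) R) := by
  have := map_gam (evalRingHom a) V R
  rw [Polynomial.coe_evalRingHom, Polynomial.eval_X] at this
  exact this

lemma gam_map_C (V : SS K) (g : K[X,Y]) :
    gam V (map Cₚ g) = aeval ![ar K, V] g := by
  rw [gam, coe_eval₂Hom, eval₂_map, aeval_def]
  congr 1
  ext1 a
  exact PowerSeries.algebraMap_apply.symm

lemma map_eval_eq_zero_iff (a : K) (R : K[X][X,Y]) :
    map (evalRingHom a) R = 0 ↔ C (Xₚ - Cₚ a) ∣ R := by
  rw [C_dvd_iff_dvd_coeff]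
  constructor
  · intro h i
    rw [Polynomial.dvd_iff_isRoot, IsRoot]
    have := congrArg (coeff i) h
    rwa [coeff_map, coeff_zero] at this
  · intro h
    ext i
    have := Polynomial.dvd_iff_isRoot.1 (h i)
    rw [coeff_map, coeff_zero]; exact this

/-- A kernel element may be divided by powers of `α - α₀` until it survives specialisation. -/
lemma exists_survivor (V : SS K) {R : K[X][X,Y]} (hR : R ≠ 0)
    (hV : gam V R = 0) (a : K) : ∃ R' : K[X][X,Y],
      R'.totalDegree ≤ R.totalDegree ∧ gam V R' = 0 ∧ map (evalRingHom a) R' ≠ 0 := by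
  have hp : Prime (C (Xₚ - Cₚ a) : K[X][X,Y]) :=
    (prime_C_iff _).2 (Polynomial.prime_X_sub_C a)
  obtain ⟨n, R', h1, rfl⟩ := WfDvdMonoid.max_power_factor hR hp.irreducible
  refine ⟨R', ?_, ?_, fun h => h1 ((map_eval_eq_zero_iff a R').1 h)⟩
  · rw [totalDegree_mul_of_isDomain (pow_ne_zero _ hp.ne_zero) (right_ne_zero_of_mul hR)]
    omega
  · rw [map_mul, map_pow, gam_C] at hV
    refine (mul_eq_zero.1 hV).resolve_left (pow_ne_zero _ ?_)
    rw [Ne, ← map_zero Cₛ, PowerSeries.C_injective.eq_iff]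
    exact Polynomial.X_sub_C_ne_zero a

/-- The chart has a relation of degree smaller than `D` after specialising `α = a`. -/
def Bad (V : SS K) (D : ℕ) (a : K) : Prop :=
  ∃ g : K[X,Y], g ≠ 0 ∧ g.totalDegree < D ∧
    aeval ![Cₛ a * Xₛ, spec a V] g = 0

lemma irreducible_of_not_bad (V : SS K) {D : ℕ} {a : K} (hbad : ¬ Bad V D a)
    {P : K[X,Y]} (hP : P ≠ 0) (hD : P.totalDegree ≤ D)
    (h : aeval ![Cₛ a * Xₛ, spec a V] P = 0) : Irreducible P :=
  irreducible_of_min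
    (fun F h1 h2 => hD.trans (not_lt.1 fun h3 => hbad ⟨F, h1, h3, h2⟩)) hP h

/-- Few specialisations drop the degree: otherwise an interpolated relation of degree `< D` over
`K[α]` vanishes to high order in `r`. -/
lemma exists_interp {V : SS K} (hV : V ∈ adm K) {D l0 : ℕ} {S : Finset K}
    (hS : ∀ a ∈ S, Bad V D a) (hcard : (l0 + 1) * (l0 + 1) < S.card) :
    ∃ G : K[X][X,Y], G ≠ 0 ∧ G.totalDegree < D ∧
      ∀ l ≤ l0, PowerSeries.coeff l (gam V G) = 0 := by
  have hS' : ∀ a : S, Bad V D a := fun a => hS a a.2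
  choose g hg0 hgD hgV using hS'
  let u : S → K[X] := fun a => ∏ b ∈ univ.erase a, (Xₚ - Cₚ (b : K))
  let GG : (S → K) → K[X][X,Y] := fun c =>
    ∑ a, C (Cₚ (c a) * u a) * map Cₚ (g a)
  have hgam : ∀ c, gam V (GG c) = ∑ a, Cₛ (Cₚ (c a) * u a) * aeval ![ar K, V] (g a) := by
    intro c
    simp only [GG, map_sum]
    exact sum_congr rfl fun a _ => by rw [map_mul, gam_C, gam_map_C]
  have hco : ∀ c l, PowerSeries.coeff l (gam V (GG c)) =
      ∑ a, Cₚ (c a) * (u a * PowerSeries.coeff l (aeval ![ar K, V] (g a))) := by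
    intro c l
    rw [hgam, map_sum]
    exact sum_congr rfl fun a _ => by rw [PowerSeries.coeff_C_mul, mul_assoc]
  let Φ : (S → K) →ₗ[K] (Fin (l0 + 1) × Fin (l0 + 1) → K) :=
    { toFun := fun c s => (PowerSeries.coeff s.1 (gam V (GG c))).coeff (S.card + s.2)
      map_add' := fun c c' => by
        funext s
        simp only [hco, Pi.add_apply, map_add, add_mul, sum_add_distrib, Polynomial.coeff_add]
      map_smul' := fun e c => by
        funext s
        simp only [hco, Pi.smul_apply, smul_eq_mul, map_mul, mul_assoc, ← mul_sum,
          Polynomial.coeff_C_mul, RingHom.id_apply] }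
  obtain ⟨c, hc, hc0⟩ := Submodule.exists_mem_ne_zero_of_ne_bot
    (LinearMap.ker_ne_bot_of_finrank_lt (f := Φ) (by simpa using hcard))
  obtain ⟨a0, ha0⟩ := Function.ne_iff.1 hc0
  have hmap : ∀ a : S, map (evalRingHom (a : K)) (GG c) =
      C (c a * (u a).eval (a : K)) * g a := by
    intro a
    simp only [GG, map_sum]
    rw [sum_eq_single a]
    · rw [map_mul, map_C, MvPolynomial.map_map]
      have : (evalRingHom (a : K)).comp Cₚ = RingHom.id K := by
        ext; simp
      rw [this, MvPolynomial.map_id]; simp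
    · intro b _ hb
      rw [map_mul, map_C]
      have : (u b).eval (a : K) = 0 := by
        simp only [u, Polynomial.eval_prod]
        exact Finset.prod_eq_zero (mem_erase.2 ⟨hb.symm, mem_univ a⟩) (by simp)
      simp [this]
    · simp
  have hu : (u a0).eval (a0 : K) ≠ 0 := by
    simp only [u, Polynomial.eval_prod]
    refine prod_ne_zero_iff.2 fun b hb => ?_
    have := ne_of_mem_erase hb
    simp only [Polynomial.eval_sub, Polynomial.eval_X, Polynomial.eval_C]
    exact sub_ne_zero.2 fun h => this (Subtype.ext h.symm)
  have hDpos : 0 < D := by have := hgD a0; omega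
  refine ⟨GG c, ?_, ?_, ?_⟩
  · intro h
    have h1 := hmap a0
    rw [h, map_zero] at h1
    exact mul_ne_zero ((C_injective _ _).ne_iff' (map_zero _) |>.2 (mul_ne_zero ha0 hu)) (hg0 a0)
      h1.symm
  · refine lt_of_le_of_lt (totalDegree_finsetSum_le (d := D - 1) fun a _ => ?_) (by omega)
    have := hgD a
    refine (totalDegree_mul _ _).trans ?_
    rw [totalDegree_C, zero_add]
    exact (totalDegree_map_le' _ _).trans (by omega)
  · intro l hl
    refine Polynomial.eq_zero_of_natDegree_lt_card_of_eval_eq_zero' _ S (fun a ha => ?_) ?_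
    · have h1 := spec_gam a V (GG c)
      rw [hmap ⟨a, ha⟩, map_mul, hgV ⟨a, ha⟩, mul_zero] at h1
      have h2 := congrArg (PowerSeries.coeff l) h1
      rw [spec_apply, PowerSeries.coeff_map, map_zero] at h2
      exact h2
    · have hSpos : 0 < S.card := Finset.card_pos.2 ⟨a0, a0.2⟩
      by_contra hlt
      push Not at hlt
      have hdeg : (PowerSeries.coeff l (gam V (GG c))).natDegree ≤ S.card - 1 + l := by
        rw [hco]
        refine Polynomial.natDegree_sum_le_of_forall_le _ _ fun a _ => ?_
        refine (Polynomial.natDegree_C_mul_le _ _).trans (Polynomial.natDegree_mul_le.trans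
          (add_le_add ?_ ?_))
        · refine (Polynomial.natDegree_prod_le _ _).trans ?_
          simp
        · have : aeval ![ar K, V] (g a) ∈ adm K := by
            have h1 : ∀ i, ![ar K, V] i ∈ adm K := by
              intro i; fin_cases i
              · exact ar_mem
              · exact hV
            have h2 : Algebra.adjoin K (Set.range ![ar K, V]) ≤ adm K :=
              Algebra.adjoin_le (by rintro _ ⟨i, rfl⟩; exact h1 i)
            refine h2 ?_
            rw [Algebra.adjoin_range_eq_range_aeval]
            exact ⟨_, rfl⟩
          exact this l
      have hne : PowerSeries.coeff l (gam V (GG c)) ≠ 0 := by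
        intro h; rw [h, Polynomial.natDegree_zero] at hlt; omega
      refine Polynomial.leadingCoeff_ne_zero.2 hne ?_
      rw [Polynomial.leadingCoeff]
      have h6 : (PowerSeries.coeff l (gam V (GG c))).natDegree - S.card < l0 + 1 := by omega
      have h5 := congrFun hc (⟨l, by omega⟩, ⟨_, h6⟩)
      simp only [Φ, LinearMap.coe_mk, AddHom.coe_mk, Pi.zero_apply] at h5
      rwa [Nat.add_sub_cancel' hlt] at h5

lemma aeval_scaled {F : Type} [Field F] {x : F} (hx : x ≠ 0) (W : PowerSeries F) (e : F) (n : ℕ) :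
    aeval ![Cₛ x * Xₛ, W] (C (e * (x ^ n)⁻¹) * X 0 ^ n) =
      Cₛ e * Xₛ ^ n := by
  have h : aeval ![Cₛ x * Xₛ, W] (C (e * (x ^ n)⁻¹)) =
      Cₛ (e * (x ^ n)⁻¹) := by
    rw [aeval_C, PowerSeries.algebraMap_apply, Algebra.algebraMap_self, RingHom.id_apply]
  rw [map_mul, h, map_pow, aeval_X, Matrix.cons_val_zero, mul_pow, ← mul_assoc, ← map_pow,
    ← map_mul, mul_assoc e, inv_mul_cancel₀ (pow_ne_zero _ hx), mul_one]

/-- Only boundedly many specialisations are bad, when `D` is the minimal degree of a relation. -/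
lemma card_bad_le {V : SS K} (hV : V ∈ adm K) {R0 : K[X][X,Y]}
    (hR0 : R0 ≠ 0) (hV0 : gam V R0 = 0)
    (hmin : ∀ R : K[X][X,Y], R ≠ 0 → gam V R = 0 →
      R0.totalDegree ≤ R.totalDegree)
    {S : Finset K} (hS : ∀ a ∈ S, Bad V R0.totalDegree a) :
    S.card ≤ (R0.totalDegree ^ 2 + 1) ^ 2 := by
  by_contra hcard
  push Not at hcard
  set D := R0.totalDegree with hD
  obtain ⟨G, hG0, hGD, hG⟩ := exists_interp hV hS (l0 := D ^ 2) (by rwa [← sq])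
  let k := FractionRing K[X]
  let φ : K[X] →+* k := algebraMap K[X] k
  have hφ : Injective φ := IsFractionRing.injective K[X] k
  let Γ : k[X,Y] →ₐ[k] PowerSeries k :=
    aeval ![Cₛ (φ Xₚ) * Xₛ, PowerSeries.map φ V]
  have hΓ : ∀ R : K[X][X,Y], Γ (map φ R) = PowerSeries.map φ (gam V R) :=
    fun R => (map_gam φ V R).symm
  have hmapinj : Injective (PowerSeries.map φ) := PowerSeries.map_injective φ hφ
  have hne : ∀ R : K[X][X,Y], R ≠ 0 → map φ R ≠ 0 := fun R hR h =>
    hR (map_injective φ hφ (by rw [h, map_zero]))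
  obtain ⟨P, hPirr, hPD, hP0⟩ := exists_irreducible_min (a := ![Cₛ (φ Xₚ) * Xₛ, PowerSeries.map φ V]) (hne R0 hR0) (by
    have := hΓ R0
    rw [hV0, map_zero] at this
    exact this)
  have hPD' : P.totalDegree ≤ D := hPD.trans (totalDegree_map_le' _ _)
  have hPG : ¬ P ∣ map φ G := by
    intro h
    obtain ⟨Q, hQ⟩ := h
    have hQ0 : Q ≠ 0 := by rintro rfl; rw [mul_zero] at hQ; exact hne G hG0 hQ
    have h1 : P.totalDegree < D := by
      have h2 := totalDegree_map_le' φ G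
      rw [hQ, totalDegree_mul_of_isDomain hPirr.ne_zero hQ0] at h2
      omega
    obtain ⟨b, hb⟩ := IsLocalization.exist_integer_multiples_of_finset
      (nonZeroDivisors K[X]) P.coeffs
    have hb0 : φ b ≠ 0 := fun h => nonZeroDivisors.ne_zero b.2 (hφ (by rw [h, map_zero]))
    obtain ⟨R, hR⟩ : C (φ b) * P ∈ Set.range (map (σ := Fin 2) φ) := by
      rw [mem_range_map_iff_coeffs_subset]
      intro x hx
      rw [mem_coe, mem_coeffs_iff] at hx
      obtain ⟨n, hn, rfl⟩ := hx
      rw [coeff_C_mul]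
      by_cases h0 : coeff n P = 0
      · rw [h0, mul_zero]; exact ⟨0, map_zero _⟩
      · obtain ⟨y, hy⟩ := hb (coeff n P) (coeff_mem_coeffs _ h0)
        refine ⟨y, ?_⟩
        rw [hy]; exact smul_def (b : K[X]) (coeff n P)
    have hR0 : R ≠ 0 := by
      rintro rfl
      rw [map_zero] at hR
      exact mul_ne_zero ((C_injective _ _).ne_iff' (map_zero _) |>.2 hb0) hPirr.ne_zero hR.symm
    have hRV : gam V R = 0 := by
      apply hmapinj
      rw [← hΓ, hR, map_mul, map_zero]
      exact (congrArg _ hP0).trans (mul_zero _)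
    have h2 := hmin R hR0 hRV
    have h3 : R.totalDegree ≤ P.totalDegree := by
      have h4 : R.support ⊆ P.support := by
        intro s hs
        rw [mem_support_iff] at hs ⊢
        intro h5
        have h6 := congrArg (coeff s) hR
        rw [coeff_map, coeff_C_mul, h5, mul_zero] at h6
        exact hs (hφ (by rw [h6, map_zero]))
      exact Finset.sup_mono h4
    omega
  let L : k[X,Y] →ₗ[k] (Fin (D ^ 2 + 1) → k) :=
    LinearMap.pi fun i => (PowerSeries.coeff (i : ℕ)).comp Γ.toLinearMap
  have hL : ∀ Q i, L Q i = PowerSeries.coeff (i : ℕ) (Γ Q) := fun _ _ => rfl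
  have hX : φ Xₚ ≠ 0 := fun h => Polynomial.X_ne_zero (hφ (by rw [h, map_zero]))
  have hsurj : Surjective L := by
    intro c
    refine ⟨∑ i, C (c i * (φ Xₚ ^ (i : ℕ))⁻¹) * X 0 ^ (i : ℕ), ?_⟩
    funext j
    rw [hL, map_sum, map_sum, sum_eq_single j]
    · have : Γ (C (c j * (φ Xₚ ^ (j : ℕ))⁻¹) * X 0 ^ (j : ℕ)) =
          Cₛ (c j) * Xₛ ^ (j : ℕ) := by
        exact aeval_scaled hX _ _ _
      rw [this, PowerSeries.coeff_C_mul, PowerSeries.coeff_X_pow_self, mul_one]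
    · intro i _ hij
      have : Γ (C (c i * (φ Xₚ ^ (i : ℕ))⁻¹) * X 0 ^ (i : ℕ)) =
          Cₛ (c i) * Xₛ ^ (i : ℕ) := by
        exact aeval_scaled hX _ _ _
      rw [this, PowerSeries.coeff_C_mul, PowerSeries.coeff_X_pow, if_neg (fun h => hij (Fin.ext h.symm)),
        mul_zero]
    · simp
  have h := bezout_codim P (map φ G) hPirr hPG (e := D)
    ((totalDegree_map_le' _ _).trans hGD.le) L hsurj (fun Q => by
      funext i
      rw [hL, map_mul, hΓ, PowerSeries.coeff_mul]
      refine Finset.sum_eq_zero fun s hs => ?_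
      rw [PowerSeries.coeff_map, hG s.1 (by
        have := HasAntidiagonal.mem_antidiagonal.1 hs; have := i.2; omega), map_zero, zero_mul])
    (fun Q => by
      funext i
      have : Γ P = 0 := hP0
      rw [hL, map_mul, this, zero_mul, map_zero]; rfl)
  rw [Module.finrank_fin_fun] at h
  have := Nat.mul_le_mul_right D hPD'
  nlinarith

lemma transcendental_lin {a : K} (ha : a ≠ 0) :
    AlgebraicIndependent K (fun _ : Unit => (Cₛ a * Xₛ : PowerSeries K)) := by
  rw [algebraicIndependent_unique_type_iff, transcendental_iff]
  have h1 : ∀ P : K[X], Polynomial.aeval (Cₛ a * Xₛ : PowerSeries K) P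
      = ((P.comp (Cₚ a * Xₚ) : K[X]) : PowerSeries K) := by
    intro P
    induction P using Polynomial.induction_on' with
    | add p q hp hq => rw [map_add, Polynomial.add_comp, Polynomial.coe_add, hp, hq]
    | monomial n b =>
      rw [Polynomial.aeval_monomial, Polynomial.monomial_comp, Polynomial.coe_mul, Polynomial.coe_C,
        Polynomial.coe_pow, Polynomial.coe_mul, Polynomial.coe_C, Polynomial.coe_X]
      rfl
  intro P hP
  rw [h1, Polynomial.coe_eq_zero_iff] at hP
  ext n
  have h2 := congrArg (fun Q => Polynomial.coeff Q n) hP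
  simp only [Polynomial.comp_C_mul_X_coeff, Polynomial.coeff_zero] at h2
  exact (mul_eq_zero.1 h2).resolve_right (pow_ne_zero _ ha)

/-- The Bertini statement: for all but boundedly many `a ≠ 0` the points of the curve
`f - f' = a` lie on an irreducible curve of bounded degree in the coordinates
`(1 / f, w / f)`. -/
lemma exists_curves [IsAlgClosed K] {p d m : ℕ} [CharP K p] (hp : 18 * d ^ (2 * m) < p)
    (hd2 : 2 ≤ d) (hd : (d : K) ≠ 0)
    {t : Fin m → K} (ht : t ≠ 0) {c : Fin m → K} (hc : Injective c)
    (l l' : Fin m → K) (S : Finset K) (h0 : (0 : K) ∉ S)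
    (hS : ∀ a ∈ S, ¬ ∃ P : K[X,Y], Irreducible P ∧
      P.totalDegree ≤ 18 * d ^ (2 * m) ∧ pderiv 1 P ≠ 0 ∧ ∀ (z z' : K) (x x' : Fin m → K),
        (∀ i, x i ^ d = z + c i) → (∀ i, x' i ^ d = z' + c i) →
        ∑ i, t i * x i ≠ 0 → ∑ i, t i * x i - ∑ i, t i * x' i = a →
        eval ![1 / ∑ i, t i * x i, (∑ i, l i * x i + ∑ i, l' i * x' i) / ∑ i, t i * x i] P = 0) :
    S.card ≤ ((18 * d ^ (2 * m)) ^ 2 + 1) ^ 2 := by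
  obtain ⟨V, hV, ⟨R, hR0, hRD, hRV⟩, hch⟩ := exists_chart hd2 hd ht hc l l'
  let T : Set K[X][X,Y] := {R | R ≠ 0 ∧ gam V R = 0}
  have hT : T.Nonempty := ⟨R, hR0, hRV⟩
  obtain ⟨h1, h2⟩ := Function.argminOn_mem totalDegree T hT
  have h3 := Function.argminOn_le totalDegree T ⟨hR0, hRV⟩
  have h4 : ∀ R' : K[X][X,Y], R' ≠ 0 → gam V R' = 0 →
      (Function.argminOn totalDegree T hT).totalDegree ≤ R'.totalDegree :=
    fun R' h h' => Function.argminOn_le totalDegree T ⟨h, h'⟩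
  generalize Function.argminOn totalDegree T hT = R0 at h1 h2 h3 h4
  have h5 := card_bad_le hV h1 h2 h4 (S := S.image fun a => 1 / a) (by
    intro b hb
    obtain ⟨a, ha, rfl⟩ := mem_image.1 hb
    have ha0 : a ≠ 0 := by rintro rfl; exact h0 ha
    by_contra hbad
    obtain ⟨R', hR'D, hR'V, hR'0⟩ := exists_survivor V h1 h2 (1 / a)
    have h6 := spec_gam (1 / a) V R'
    rw [hR'V, map_zero] at h6
    have hdeg := (totalDegree_map_le' (evalRingHom (1 / a)) R').trans hR'D
    refine hS a ha ⟨_, irreducible_of_not_bad V hbad hR'0 hdeg h6.symm, hdeg.trans (h3.trans hRD),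
      pderiv_ne_zero hR'0 ((hdeg.trans (h3.trans hRD)).trans_lt hp) h6.symm
        (transcendental_lin (one_div_ne_zero ha0)), ?_⟩
    intro z z' x x' hx hx' hf hff
    have := hch R' hR'V z z' x x' hx hx' hf (by rw [hff]; exact ha0)
    rwa [hff] at this)
  rw [card_image_of_injective _ (fun x y h => by simpa using h)] at h5
  refine h5.trans ?_
  have := h3.trans hRD
  gcongr

end

/-- The difference multiplicities of `f` on `A`. -/
def nu {ι : Type} {N : ℕ} (A : Finset ι) (f : ι → ZMod N) (a : ZMod N) : ℕ :=
  ((A ×ˢ A).filter fun s => f s.1 - f s.2 = a).card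

lemma fourth_moment {ι : Type} {N : ℕ} [NeZero N] (hN : 2 ≤ N) (A : Finset ι) (f : ι → ZMod N) :
    ‖∑ s ∈ A, stdAddChar (f s)‖ ^ 4 + (A.card : ℝ) ^ 4 ≤
      N * ∑ a, (nu A f a : ℝ) ^ 2 := by
  let ψ : AddChar (ZMod N) ℂ := stdAddChar
  let S : ZMod N → ℂ := fun l => ∑ s ∈ A, ψ (l * f s)
  let T : ZMod N → ℂ := fun l => ∑ a, (nu A f a : ℂ) * ψ (l * a)
  have hST : ∀ l, S l * (starRingEnd ℂ) (S l) = T l := by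
    intro l
    simp only [S, T, nu]
    rw [map_sum, sum_mul_sum, ← Finset.sum_product',
      ← sum_fiberwise (A ×ˢ A) (fun s => f s.1 - f s.2)]
    refine sum_congr rfl fun a _ => ?_
    rw [← nsmul_eq_mul, ← sum_const]
    refine sum_congr rfl fun s hs => ?_
    rw [← (mem_filter.1 hs).2, ← map_neg_eq_conj, ← map_add_eq_mul]
    congr 1; ring
  have hT : ∀ l, ((‖S l‖ ^ 4 : ℝ) : ℂ) = T l * (starRingEnd ℂ) (T l) := by
    intro l
    rw [← hST, map_mul, Complex.conj_conj, mul_conj', mul_comm ((starRingEnd ℂ) (S l)),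
      mul_conj']
    push_cast; ring
  have hsum : ∑ l, T l * (starRingEnd ℂ) (T l) = ((N * ∑ a, (nu A f a : ℝ) ^ 2 : ℝ) : ℂ) := by
    have h1 : ∀ l, T l * (starRingEnd ℂ) (T l) =
        ∑ a, ∑ b, (nu A f a : ℂ) * nu A f b * ψ (l * (a - b)) := by
      intro l
      simp only [T]
      rw [map_sum, sum_mul_sum]
      refine sum_congr rfl fun a _ => sum_congr rfl fun b _ => ?_
      rw [map_mul (starRingEnd ℂ), ← map_neg_eq_conj, mul_sub, sub_eq_add_neg, map_add_eq_mul,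
        Complex.conj_natCast]
      ring
    simp only [h1]
    rw [sum_comm]
    push_cast
    rw [mul_sum]
    refine sum_congr rfl fun a _ => ?_
    rw [sum_comm]
    simp only [← mul_sum]
    rw [sum_eq_single a]
    · rw [sum_mulShift _ (ZMod.isPrimitive_stdAddChar N)]
      simp [ZMod.card]; ring
    · intro b _ hb
      rw [sum_mulShift _ (ZMod.isPrimitive_stdAddChar N), if_neg (sub_ne_zero.2 hb.symm)]
      simp
    · simp
  have hreal : ∑ l, ‖S l‖ ^ 4 = N * ∑ a, (nu A f a : ℝ) ^ 2 := by
    have := hsum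
    simp only [← hT] at this
    exact_mod_cast this
  rw [← hreal]
  have : Fact (1 < N) := ⟨by omega⟩
  have h01 : (0 : ZMod N) ≠ 1 := zero_ne_one
  calc _ = ∑ l ∈ ({1, 0} : Finset (ZMod N)), ‖S l‖ ^ 4 := by
        rw [Finset.sum_pair h01.symm]
        simp [S, ψ]
    _ ≤ _ := sum_le_sum_of_subset_of_nonneg (Finset.subset_univ _)
        fun _ _ _ => by positivity

lemma nu_bound {d m : ℕ} (hd2 : 2 ≤ d) : ∃ (C : ℝ) (B E : ℕ), 0 ≤ C ∧
    ∀ (p : ℕ) [Fact p.Prime], ¬ p ∣ d → 4 * d ^ m < p → 18 * d ^ (2 * m) < p →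
      ∀ c : Fin m → ZMod p, Injective c → ∀ t : Fin m → ZMod p, t ≠ 0 →
      ∃ (coll : ZMod p → ℕ) (exc : Finset (ZMod p)), exc.card ≤ E ∧ ∑ a, coll a ≤ B * p ∧
        ∀ a ∉ exc, (nu (pts d m 1 c) (fun s => ∑ i, t i * s.2 i) a : ℝ) ≤ p + C * √p + coll a := by
  obtain ⟨C, hC, hcurve⟩ := curve_bound_prime (18 * d ^ (2 * m))
  set Q := 4 * d ^ m * d ^ m with hQ
  refine ⟨C + Q * Q, (d ^ m * d ^ m) * (Q * Q), ((18 * d ^ (2 * m)) ^ 2 + 1) ^ 2 + 1, by positivity, ?_⟩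
  intro p _ hpd hp4 hp18 c hc t ht
  have hp0 : (1 : ℝ) ≤ √p := one_le_sqrt.2 (by
    exact_mod_cast (Fact.out : p.Prime).one_lt.le)
  set A := pts d m 1 c with hA
  let f : ZMod p × (Fin m → ZMod p) → ZMod p := fun s => ∑ i, t i * s.2 i
  have hfib : ∀ a, (A.filter fun s => f s = a).card ≤ Q := fun a =>
    fibre_bound hd2 hpd hp4 hc ht a
  have hAcard : A.card ≤ d ^ m * p := by
    have := card_pts_le (F := ZMod p) (d := d) (κ := 1) (c := c) (by omega) (by simp)
    rwa [ZMod.card] at this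
  let P2 := ZMod p × (Fin m → ZMod p)
  -- pairs of points of the curve which cannot be told apart by `f`
  let T : Finset ((P2 × P2) × (P2 × P2)) := ((A ×ˢ A) ×ˢ (A ×ˢ A)).filter fun u =>
    u.1 ≠ u.2 ∧ f u.1.1 = f u.2.1 ∧ f u.1.2 = f u.2.2
  have hTcard : T.card ≤ ((d ^ m * d ^ m) * (Q * Q) * p) * Fintype.card (ZMod p) := by
    have h1 : T.card ≤ (Q * Q) * (A ×ˢ A).card := by
      refine card_le_mul_card_image_of_maps_to (f := Prod.fst) (fun u hu => ?_) _ ?_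
      · exact (mem_product.1 (mem_filter.1 hu).1).1
      · intro v _
        refine (card_le_card_of_injOn Prod.snd (t := (A.filter fun s => f s = f v.1) ×ˢ
          (A.filter fun s => f s = f v.2)) ?_ ?_).trans ?_
        · intro u hu
          simp only [T, coe_filter, mem_filter, mem_product,
            mem_ofPred_eq] at hu
          obtain ⟨⟨⟨_, h2⟩, _, h3, h4⟩, rfl⟩ := hu
          simp only [coe_product, Set.mem_prod, mem_coe, mem_filter]
          exact ⟨⟨h2.1, h3.symm⟩, h2.2, h4.symm⟩
        · intro u hu u' hu' h
          simp only [coe_filter, mem_ofPred_eq] at hu hu'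
          exact Prod.ext (hu.2.trans hu'.2.symm) h
        · rw [card_product]
          exact Nat.mul_le_mul (hfib _) (hfib _)
    rw [ZMod.card]
    calc T.card ≤ (Q * Q) * (A ×ˢ A).card := h1
      _ ≤ (Q * Q) * ((d ^ m * p) * (d ^ m * p)) := by
        rw [card_product]; gcongr
      _ = _ := by ring
  let x : P2 × P2 → Fin m ⊕ Fin m → ZMod p := fun u => Sum.elim u.1.2 u.2.2
  obtain ⟨i0, hi0⟩ := Function.ne_iff.1 ht
  have hdet : ∀ s ∈ A, ∀ s' ∈ A, s.2 = s'.2 → s = s' := by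
    intro s hs s' hs' h
    have h1 := (mem_pts.1 hs) i0
    have h2 := (mem_pts.1 hs') i0
    rw [h, h2] at h1
    exact Prod.ext (add_right_cancel h1).symm h
  obtain ⟨L, hL⟩ := exists_sep T x (by
    rintro ⟨u, v⟩ huv h
    simp only [T, mem_filter, mem_product] at huv
    refine huv.2.1 (Prod.ext (hdet _ huv.1.1.1 _ huv.1.2.1 ?_) (hdet _ huv.1.1.2 _ huv.1.2.2 ?_))
    · funext i; exact congrFun h (Sum.inl i)
    · funext i; exact congrFun h (Sum.inr i)) hTcard
  let w : P2 × P2 → ZMod p := fun u => ∑ i, L (Sum.inl i) * u.1.2 i + ∑ i, L (Sum.inr i) * u.2.2 i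
  have hw : ∀ u, ∑ i, L i * x u i = w u := fun u => Fintype.sum_sum_type _
  simp only [hw] at hL
  let T' := T.filter fun u => w u.1 = w u.2
  let coll : ZMod p → ℕ := fun a => (T'.filter fun u => f u.1.1 - f u.1.2 = a).card
  let K := AlgebraicClosure (ZMod p)
  let φ : ZMod p →+* K := algebraMap (ZMod p) K
  have hφ : Injective φ := φ.injective
  let Good : ZMod p → Prop := fun a => ∃ P : K[X,Y], Irreducible P ∧
      P.totalDegree ≤ 18 * d ^ (2 * m) ∧ pderiv 1 P ≠ 0 ∧ ∀ (z z' : K) (y y' : Fin m → K),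
        (∀ i, y i ^ d = z + φ (c i)) → (∀ i, y' i ^ d = z' + φ (c i)) →
        ∑ i, φ (t i) * y i ≠ 0 → ∑ i, φ (t i) * y i - ∑ i, φ (t i) * y' i = φ a →
        eval ![1 / ∑ i, φ (t i) * y i, (∑ i, φ (L (Sum.inl i)) * y i +
          ∑ i, φ (L (Sum.inr i)) * y' i) / ∑ i, φ (t i) * y i] P = 0
  let exc : Finset (ZMod p) := insert 0 (univ.filter fun a => a ≠ 0 ∧ ¬ Good a)
  refine ⟨coll, exc, ?_, ?_, ?_⟩
  · refine (card_insert_le _ _).trans (Nat.succ_le_succ ?_)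
    rw [← card_image_of_injective _ hφ]
    refine exists_curves (p := p) hp18 hd2 (natCast_ne_zero_closure hpd) (t := fun i => φ (t i))
      (Function.ne_iff.2 ⟨i0, fun h => hi0 (hφ (h.trans (map_zero φ).symm))⟩)
      (c := fun i => φ (c i)) (hφ.comp hc)
      (fun i => φ (L (Sum.inl i))) (fun i => φ (L (Sum.inr i))) _ ?_ ?_
    · intro h
      obtain ⟨a, ha, ha0⟩ := mem_image.1 h
      exact (mem_filter.1 ha).2.1 (hφ (ha0.trans (map_zero φ).symm))
    · intro b hb
      obtain ⟨a, ha, rfl⟩ := mem_image.1 hb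
      exact (mem_filter.1 ha).2.2
  · rw [← card_eq_sum_card_fiberwise (s := T') (t := univ)
      (f := fun u => f u.1.1 - f u.1.2) (fun _ _ => mem_coe.2 (mem_univ _))]
    exact hL
  · intro a ha
    have ha0 : a ≠ 0 := fun h => ha (h ▸ mem_insert_self _ _)
    obtain ⟨P, hPirr, hPD, hPd, hPv⟩ : Good a := by
      by_contra h
      exact ha (mem_insert_of_mem (mem_filter.2 ⟨mem_univ _, ha0, h⟩))
    let U := (A ×ˢ A).filter fun s => f s.1 - f s.2 = a
    let U0 := U.filter fun s => f s.1 = 0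
    let U1 := U.filter fun s => ¬ f s.1 = 0
    have hU : nu A f a = U0.card + U1.card := (card_filter_add_card_filter_not _).symm
    have hU0 : U0.card ≤ Q * Q := by
      refine (card_le_card (t := (A.filter fun s => f s = 0) ×ˢ
          (A.filter fun s => f s = -a)) ?_).trans ?_
      · intro s hs
        simp only [U0, U, mem_filter, mem_product] at hs ⊢
        obtain ⟨⟨⟨h1, h2⟩, h3⟩, h4⟩ := hs
        exact ⟨⟨h1, h4⟩, h2, by rw [← h3, h4]; ring⟩
      · rw [card_product]
        exact Nat.mul_le_mul (hfib _) (hfib _)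
    let h : P2 × P2 → ZMod p × ZMod p := fun s => (1 / f s.1, w s / f s.1)
    have hcol : (((U1 ×ˢ U1).filter fun s => s.1 ≠ s.2 ∧ h s.1 = h s.2).card) ≤ coll a := by
      refine card_le_card fun s hs => ?_
      simp only [U1, U, h, mem_filter, mem_product, Prod.mk.injEq] at hs
      obtain ⟨⟨⟨⟨h1, h2⟩, h3⟩, ⟨⟨h4, h5⟩, h6⟩⟩, h7, h8, h9⟩ := hs
      have e1 : f s.1.1 = f s.2.1 := by
        rw [one_div, one_div] at h8; exact inv_injective h8
      simp only [T', T, mem_filter, mem_product]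
      refine ⟨⟨⟨⟨h1, h4⟩, h7, e1, ?_⟩, ?_⟩, h2⟩
      · have := h2.trans h5.symm
        rw [e1] at this
        exact sub_right_injective this
      · rw [e1] at h9
        exact (div_left_inj' h6).1 h9
    have himg : ((U1.image h).card : ℝ) ≤ p + C * √p := by
      refine hcurve p P hPirr hPD hPd _ ?_
      intro v hv
      obtain ⟨s, hs, rfl⟩ := mem_image.1 hv
      simp only [U1, U, mem_filter, mem_product] at hs
      obtain ⟨⟨⟨h1, h2⟩, h3⟩, h4⟩ := hs
      have hpt : ∀ s' ∈ A, ∀ i, φ (s'.2 i) ^ d = φ s'.1 + φ (c i) := by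
        intro s' hs' i
        have := (mem_pts.1 hs') i
        rw [Pi.one_apply, one_mul] at this
        rw [← map_pow, this, map_add]
      have hfφ : ∀ s' : P2, ∑ i, φ (t i) * φ (s'.2 i) = φ (f s') := by
        intro s'; simp only [f, map_sum, map_mul]
      have hwφ : ∑ i, φ (L (Sum.inl i)) * φ (s.1.2 i) + ∑ i, φ (L (Sum.inr i)) * φ (s.2.2 i) =
          φ (w s) := by simp only [w, map_add, map_sum, map_mul]
      have := hPv (φ s.1.1) (φ s.2.1) (fun i => φ (s.1.2 i)) (fun i => φ (s.2.2 i))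
        (hpt _ h1) (hpt _ h2) (by
          rw [hfφ]; exact fun h => h4 (hφ (h.trans (map_zero φ).symm)))
        (by rw [hfφ, hfφ, ← map_sub, h3])
      rw [hfφ, hwφ, ← map_one φ, ← map_div₀, ← map_div₀] at this
      exact this
    have h1 := card_le_image_add U1 h
    have h2 : (U1.card : ℝ) ≤ (U1.image h).card + coll a := by
      have h1' : U1.card ≤ (U1.image h).card + coll a := by
        refine le_trans (le_of_le_of_eq h1 ?_) (Nat.add_le_add_left hcol _)
        congr!
      exact_mod_cast h1'
    have h3 : (U0.card : ℝ) ≤ (Q * Q : ℝ) * √p := by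
      have : (U0.card : ℝ) ≤ (Q * Q : ℝ) := by exact_mod_cast hU0
      nlinarith [mul_nonneg (cast_nonneg (α := ℝ) Q) (cast_nonneg (α := ℝ) Q)]
    have h4 : (nu A f a : ℝ) = U0.card + U1.card := by exact_mod_cast hU
    change (nu A f a : ℝ) ≤ _
    rw [h4]
    push_cast at *
    linarith

end

lemma rpow_seven_eighth_pow {x : ℝ} (hx : 0 ≤ x) : (x ^ (7 / 8 : ℝ)) ^ 4 = x ^ 3 * √x := by
  rw [← rpow_natCast, ← Real.rpow_mul hx, Real.sqrt_eq_rpow, ← rpow_natCast x 3,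
    ← Real.rpow_add_of_nonneg hx (by norm_num) (by norm_num)]
  norm_num

lemma norm_expSum_le_card {ι : Type} {N : ℕ} [NeZero N] (A : Finset ι) (f : ι → ZMod N) :
    ‖∑ s ∈ A, stdAddChar (f s)‖ ≤ A.card := by
  refine (norm_sum_le _ _).trans ?_
  simp [norm_apply]

lemma nu_le {ι : Type} {N : ℕ} (A : Finset ι) (f : ι → ZMod N) {Q : ℕ}
    (hfib : ∀ a, (A.filter fun s => f s = a).card ≤ Q) (a : ZMod N) :
    nu A f a ≤ Q * A.card := by
  refine card_le_mul_card_image_of_maps_to (f := Prod.fst) (fun u hu => ?_) _ ?_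
  · exact (mem_product.1 (mem_filter.1 hu).1).1
  · intro v _
    refine (card_le_card_of_injOn Prod.snd
      (t := A.filter fun s => f s = f v - a) ?_ ?_).trans (hfib _)
    · intro u hu
      simp only [coe_filter, mem_filter, mem_product,
        mem_ofPred_eq] at hu ⊢
      obtain ⟨⟨⟨_, h2⟩, h3⟩, rfl⟩ := hu
      exact ⟨h2, by rw [← h3]; ring⟩
    · intro u hu u' hu' h
      simp only [coe_filter, mem_ofPred_eq] at hu hu'
      exact Prod.ext (hu.2.trans hu'.2.symm) h

lemma sum_nu {ι : Type} {N : ℕ} [NeZero N] (A : Finset ι) (f : ι → ZMod N) :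
    ∑ a, nu A f a = A.card ^ 2 := by
  rw [sq, ← card_product]
  exact (card_eq_sum_card_fiberwise (s := A ×ˢ A) (t := univ)
    (f := fun u => f u.1 - f u.2) (fun _ _ => mem_coe.2 (mem_univ _))).symm

lemma moment_arith {p s M D Q C C1 B E V X : ℝ} (hp : 0 ≤ p) (hs1 : 1 ≤ s) (hM0 : 0 ≤ M)
    (hD0 : 0 ≤ D) (hQ0 : 0 ≤ Q) (hC : 0 ≤ C) (hC1 : 0 ≤ C1) (hB : 0 ≤ B) (hE : 0 ≤ E)
    (hM : M ≤ D * p) (hlow : p - C1 * s ≤ M)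
    (hsq : V ≤ (p + C * s) * M ^ 2 + Q * M * (B * p) + E * (Q * M) ^ 2)
    (hmom : X ^ 4 + M ^ 4 ≤ p * V) :
    X ^ 4 ≤ (2 * C1 * D ^ 2 + C * D ^ 2 + Q * B * D + E * Q ^ 2 * D ^ 2) * (p ^ 3 * s) := by
  have hdiff : M ^ 2 * (p ^ 2 - M ^ 2) ≤ 2 * C1 * D ^ 2 * (p ^ 3 * s) := by
    rcases le_or_gt p M with h | h
    · have : p ^ 2 - M ^ 2 ≤ 0 := by nlinarith
      have h2 : M ^ 2 * (p ^ 2 - M ^ 2) ≤ 0 := mul_nonpos_of_nonneg_of_nonpos (by positivity) this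
      exact h2.trans (by positivity)
    · have h1 : p ^ 2 - M ^ 2 ≤ (C1 * s) * (2 * p) := by
        calc p ^ 2 - M ^ 2 = (p - M) * (p + M) := by ring
          _ ≤ (C1 * s) * (2 * p) := by
            refine mul_le_mul (by linarith) (by linarith) (by linarith) (by positivity)
      calc M ^ 2 * (p ^ 2 - M ^ 2) ≤ (D * p) ^ 2 * ((C1 * s) * (2 * p)) := by
            refine (mul_le_mul_of_nonneg_left h1 (by positivity)).trans ?_
            gcongr
        _ = _ := by ring
  have h1 : X ^ 4 ≤
      p * ((p + C * s) * M ^ 2 + Q * M * (B * p) + E * (Q * M) ^ 2) - M ^ 4 := by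
    have := mul_le_mul_of_nonneg_left hsq hp
    linarith
  have e2 : C * s * p * M ^ 2 ≤ C * D ^ 2 * (p ^ 3 * s) := by
    calc C * s * p * M ^ 2 ≤ C * s * p * (D * p) ^ 2 := by gcongr
      _ = _ := by ring
  have e3 : Q * B * p ^ 2 * M ≤ Q * B * D * (p ^ 3 * s) := by
    calc Q * B * p ^ 2 * M ≤ Q * B * p ^ 2 * (D * p) := by gcongr
      _ = Q * B * D * (p ^ 3 * 1) := by ring
      _ ≤ _ := by gcongr
  have e4 : E * Q ^ 2 * p * M ^ 2 ≤ E * Q ^ 2 * D ^ 2 * (p ^ 3 * s) := by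
    calc E * Q ^ 2 * p * M ^ 2 ≤ E * Q ^ 2 * p * (D * p) ^ 2 := by gcongr
      _ = E * Q ^ 2 * D ^ 2 * (p ^ 3 * 1) := by ring
      _ ≤ _ := by gcongr
  have e5 : p * ((p + C * s) * M ^ 2 + Q * M * (B * p) + E * (Q * M) ^ 2) - M ^ 4 =
      M ^ 2 * (p ^ 2 - M ^ 2) + C * s * p * M ^ 2 + Q * B * p ^ 2 * M + E * Q ^ 2 * p * M ^ 2 := by
    ring
  have e6 : (2 * C1 * D ^ 2 + C * D ^ 2 + Q * B * D + E * Q ^ 2 * D ^ 2) * (p ^ 3 * s) = 2 * C1 * D ^ 2 * (p ^ 3 * s) + C * D ^ 2 * (p ^ 3 * s) +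
      Q * B * D * (p ^ 3 * s) + E * Q ^ 2 * D ^ 2 * (p ^ 3 * s) := by
    ring
  rw [e6]
  rw [e5] at h1
  linarith

/-- Power saving for the complete exponential sums attached to the curves
`x_i ^ d = z + c_i` over a prime field. -/
theorem prime_bound {d : ℕ} (m : ℕ) (hd2 : 2 ≤ d) : ∃ C : ℝ, 0 ≤ C ∧
    ∀ (p : ℕ) [Fact p.Prime] (c : Fin m → ZMod p), Injective c →
      ∀ t : Fin m → ZMod p, t ≠ 0 →
        ‖∑ s ∈ pts d m 1 c, stdAddChar (∑ i, t i * s.2 i)‖ ≤ C * (p : ℝ) ^ (7 / 8 : ℝ) := by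
  obtain ⟨C, B, E, hC, hnu⟩ := nu_bound (m := m) hd2
  obtain ⟨C1, hC1, hlow⟩ := pts_lower d m (by omega)
  set Q : ℝ := 4 * d ^ m * d ^ m with hQ
  set D : ℝ := (d : ℝ) ^ m with hD
  have hQ0 : 0 ≤ Q := by positivity
  have hD0 : 0 ≤ D := by positivity
  set K : ℝ := 2 * C1 * D ^ 2 + C * D ^ 2 + Q * B * D + E * Q ^ 2 * D ^ 2 with hK
  have hK0 : 0 ≤ K := by positivity
  set p0 : ℝ := 4 * d ^ m + 18 * d ^ (2 * m) + d with hp0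
  refine ⟨(K + 1) + D * p0, by positivity, ?_⟩
  intro p _ c hc t ht
  have hp1 : (1 : ℝ) ≤ p := by exact_mod_cast (Fact.out : p.Prime).one_lt.le
  have hpr : (1 : ℝ) ≤ (p : ℝ) ^ (7 / 8 : ℝ) := Real.one_le_rpow hp1 (by norm_num)
  have hM : ((pts d m 1 c).card : ℝ) ≤ D * p := by
    have := card_pts_le (F := ZMod p) (d := d) (κ := 1) (c := c) (by omega) (by simp)
    rw [ZMod.card] at this
    rw [hD]; exact_mod_cast this
  by_cases hbig : ¬ p ∣ d ∧ 4 * d ^ m < p ∧ 18 * d ^ (2 * m) < p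
  swap
  · have hple : (p : ℝ) ≤ p0 := by
      by_contra hlt
      refine hbig ⟨fun h => ?_, ?_, ?_⟩
      · have := Nat.le_of_dvd (by omega) h
        have : (p : ℝ) ≤ d := by exact_mod_cast this
        have : (0 : ℝ) ≤ 4 * d ^ m + 18 * d ^ (2 * m) := by positivity
        linarith
      · have : (0 : ℝ) ≤ 18 * d ^ (2 * m) + d := by positivity
        have : (4 * d ^ m : ℝ) < p := by linarith
        exact_mod_cast this
      · have : (0 : ℝ) ≤ 4 * d ^ m + d := by positivity
        have : (18 * d ^ (2 * m) : ℝ) < p := by linarith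
        exact_mod_cast this
    calc _ ≤ ((pts d m 1 c).card : ℝ) := norm_expSum_le_card _ _
      _ ≤ D * p := hM
      _ ≤ D * p0 := by gcongr
      _ ≤ ((K + 1) + D * p0) * 1 := by linarith
      _ ≤ _ := by gcongr
  obtain ⟨hpd, hp4, hp18⟩ := hbig
  set A := pts d m 1 c with hA
  let f : ZMod p × (Fin m → ZMod p) → ZMod p := fun s => ∑ i, t i * s.2 i
  set M : ℝ := (A.card : ℝ) with hMdef
  have hM0 : 0 ≤ M := by positivity
  set s : ℝ := √p with hs
  have hs1 : 1 ≤ s := one_le_sqrt.2 hp1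
  obtain ⟨coll, exc, hexc, hcoll, hnu⟩ := hnu p hpd hp4 hp18 c hc t ht
  have hmom := fourth_moment (Fact.out : p.Prime).two_le A f
  have hfib : ∀ a, (A.filter fun s => f s = a).card ≤ 4 * d ^ m * d ^ m := fun a =>
    fibre_bound hd2 hpd hp4 hc ht a
  have hnumax : ∀ a, (nu A f a : ℝ) ≤ Q * M := by
    intro a
    have h1 := nu_le A f hfib a
    rw [hQ, hMdef, hD]; exact_mod_cast h1
  have hnusum : ∑ a, (nu A f a : ℝ) = M ^ 2 := by
    rw [hMdef]; exact_mod_cast sum_nu A f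
  have hsq : ∑ a, (nu A f a : ℝ) ^ 2 ≤
      (p + C * s) * M ^ 2 + Q * M * (B * p) + E * (Q * M) ^ 2 := by
    have hterm : ∀ a, (nu A f a : ℝ) ^ 2 ≤ (p + C * s) * nu A f a + Q * M * coll a +
        if a ∈ exc then (Q * M) ^ 2 else 0 := by
      intro a
      have h0 : (0 : ℝ) ≤ nu A f a := cast_nonneg _
      have hc0 : (0 : ℝ) ≤ coll a := cast_nonneg _
      split_ifs with ha
      · have := pow_le_pow_left₀ h0 (hnumax a) 2
        have : 0 ≤ (p + C * s) * nu A f a + Q * M * coll a := by positivity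
        linarith
      · have h1 := hnu a ha
        change (nu A f a : ℝ) ≤ _ at h1
        have h2 := hnumax a
        nlinarith [mul_le_mul_of_nonneg_left h1 h0, mul_le_mul_of_nonneg_right h2 hc0]
    refine (sum_le_sum fun a _ => hterm a).trans ?_
    rw [sum_add_distrib, sum_add_distrib, ← mul_sum, ← mul_sum, hnusum,
      Finset.sum_ite_mem, Finset.univ_inter, sum_const, nsmul_eq_mul]
    have h1 : (∑ a, (coll a : ℝ)) ≤ B * p := by exact_mod_cast hcoll
    have h2 : (exc.card : ℝ) ≤ E := by exact_mod_cast hexc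
    gcongr
  have hlow' : p - C1 * s ≤ M := hlow p hpd hp4 c hc
  have hfin : ‖∑ u ∈ A, stdAddChar (f u)‖ ^ 4 ≤ K * (p ^ 3 * s) :=
    moment_arith (by linarith) hs1 hM0 hD0 hQ0 hC hC1 (cast_nonneg B) (cast_nonneg E)
      hM hlow' hsq hmom
  have : ‖∑ u ∈ A, stdAddChar (f u)‖ ≤ (K + 1) * (p : ℝ) ^ (7 / 8 : ℝ) := by
    refine (pow_le_pow_iff_left₀ (norm_nonneg _) (by positivity) (n := 4) (by norm_num)).1 ?_
    rw [mul_pow, rpow_seven_eighth_pow (by positivity)]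
    refine hfin.trans (mul_le_mul_of_nonneg_right ?_ (by positivity))
    exact (le_add_of_nonneg_right zero_le_one).trans
      (le_self_pow₀ (by linarith) (by norm_num))
  refine this.trans (mul_le_mul_of_nonneg_right ?_ (by positivity))
  have : 0 ≤ D * p0 := by positivity
  linarith

variable {d m M N : ℕ} {κ : ℤ} {B H : ℝ} {f : (Fin M → ℝ) → ℝ} {h : Fin M → ℤ} {P : Finset ℕ}

/-- Points `(z, x)` over `ℤ / q` of the curve `κ x_i ^ d = z + c_i`. -/
def cpts (q d m : ℕ) [NeZero q] (κ : ℤ) (c : Fin m → ℤ) :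
    Finset (ZMod q × (Fin m → ZMod q)) :=
  univ.filter fun s => ∀ i, (κ : ZMod q) * s.2 i ^ d = s.1 + (c i : ZMod q)

/-- The complete exponential sum over `cpts` with linear phase `r z + ∑ t_i x_i`. -/
def expS (q d m : ℕ) [NeZero q] (κ r : ℤ) (t c : Fin m → ℤ) : ℂ :=
  ∑ s ∈ cpts q d m κ c,
    stdAddChar ((r : ZMod q) * s.1 + ∑ i, (t i : ZMod q) * s.2 i)

lemma stdAddChar_crt {q q' : ℕ} [NeZero q] [NeZero q'] [NeZero (q * q')] {u v : ℤ}
    (huv : u * q' + v * q = 1) (x : ZMod (q * q')) : (stdAddChar x : ℂ) =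
      stdAddChar ((u : ZMod q) * castHom (dvd_mul_right q q') (ZMod q) x) *
      stdAddChar ((v : ZMod q') * castHom (dvd_mul_left q' q) (ZMod q') x) := by
  obtain ⟨n, rfl⟩ := ZMod.intCast_surjective x
  rw [map_intCast (castHom (dvd_mul_right q q') (ZMod q)),
    map_intCast (castHom (dvd_mul_left q' q) (ZMod q')), ← Int.cast_mul, ← Int.cast_mul,
    ZMod.stdAddChar_coe, ZMod.stdAddChar_coe, ZMod.stdAddChar_coe, ← Complex.exp_add]
  congr 1
  have hq : (q : ℂ) ≠ 0 := by exact_mod_cast NeZero.ne q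
  have hq' : (q' : ℂ) ≠ 0 := by exact_mod_cast NeZero.ne q'
  have : (u : ℂ) * q' + v * q = 1 := by exact_mod_cast huv
  push_cast
  field_simp
  linear_combination (-(n : ℂ)) * this

lemma crt_injective {q q' : ℕ} (h : q.Coprime q') {x y : ZMod (q * q')}
    (h1 : castHom (dvd_mul_right q q') (ZMod q) x = castHom (dvd_mul_right q q') (ZMod q) y)
    (h2 : castHom (dvd_mul_left q' q) (ZMod q') x =
      castHom (dvd_mul_left q' q) (ZMod q') y) : x = y := by
  obtain ⟨n, rfl⟩ := ZMod.intCast_surjective x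
  obtain ⟨k, rfl⟩ := ZMod.intCast_surjective y
  rw [map_intCast, map_intCast, ZMod.intCast_eq_intCast_iff_dvd_sub] at h1 h2
  rw [ZMod.intCast_eq_intCast_iff_dvd_sub]
  push_cast
  exact (Nat.isCoprime_iff_coprime.2 h).mul_dvd h1 h2

lemma crt_surjective {q q' : ℕ} (h : q.Coprime q') (a : ZMod q) (b : ZMod q') :
    ∃ x : ZMod (q * q'), castHom (dvd_mul_right q q') (ZMod q) x = a ∧
      castHom (dvd_mul_left q' q) (ZMod q') x = b := by
  obtain ⟨a, rfl⟩ := ZMod.intCast_surjective a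
  obtain ⟨b, rfl⟩ := ZMod.intCast_surjective b
  obtain ⟨u, v, huv⟩ := (Nat.isCoprime_iff_coprime.2 h)
  refine ⟨((a * (v * q') + b * (u * q) : ℤ) : ZMod (q * q')), ?_, ?_⟩
  · rw [map_intCast, ZMod.intCast_eq_intCast_iff_dvd_sub]
    exact ⟨(a - b) * u, by linear_combination (-a) * huv⟩
  · rw [map_intCast, ZMod.intCast_eq_intCast_iff_dvd_sub]
    exact ⟨(b - a) * v, by linear_combination (-b) * huv⟩

lemma expS_mul {q q' : ℕ} [NeZero q] [NeZero q'] [NeZero (q * q')] (h : q.Coprime q')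
    {u v : ℤ} (huv : u * q' + v * q = 1) (κ r : ℤ) (t c : Fin m → ℤ) : expS (q * q') d m κ r t c =
      expS q d m κ (u * r) (fun i => u * t i) c * expS q' d m κ (v * r) (fun i => v * t i) c := by
  rw [expS, expS, expS, sum_mul_sum, ← Finset.sum_product']
  let π1 := castHom (dvd_mul_right q q') (ZMod q)
  let π2 := castHom (dvd_mul_left q' q) (ZMod q')
  refine Finset.sum_nbij (fun s => ((π1 s.1, fun i => π1 (s.2 i)), (π2 s.1, fun i => π2 (s.2 i))))
    ?_ ?_ ?_ ?_
  · intro s hs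
    simp only [cpts, mem_filter, mem_univ, true_and] at hs
    simp only [cpts, mem_product, mem_filter, mem_univ, true_and]
    refine ⟨fun i => ?_, fun i => ?_⟩
    · have := congrArg π1 (hs i)
      simpa only [map_mul, map_pow, map_add, map_intCast] using this
    · have := congrArg π2 (hs i)
      simpa only [map_mul, map_pow, map_add, map_intCast] using this
  · intro s _ s' _ hss
    simp only [Prod.mk.injEq, funext_iff] at hss
    exact Prod.ext (crt_injective h hss.1.1 hss.2.1)
      (funext fun i => crt_injective h (hss.1.2 i) (hss.2.2 i))
  · rintro ⟨⟨z1, x1⟩, ⟨z2, x2⟩⟩ hs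
    simp only [cpts, coe_product, Set.mem_prod, coe_filter, mem_univ,
      true_and, mem_ofPred_eq] at hs
    obtain ⟨z, hz1, hz2⟩ := crt_surjective h z1 z2
    choose x hx1 hx2 using fun i => crt_surjective h (x1 i) (x2 i)
    refine ⟨(z, x), ?_, ?_⟩
    · simp only [cpts, coe_filter, mem_univ, true_and, mem_ofPred_eq]
      intro i
      apply crt_injective h
      · simp only [map_mul, map_pow, map_add, map_intCast, hz1, hx1]; exact hs.1 i
      · simp only [map_mul, map_pow, map_add, map_intCast, hz2, hx2]; exact hs.2 i
    · simp only [Prod.mk.injEq, funext_iff]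
      exact ⟨⟨hz1, hx1⟩, hz2, hx2⟩
  · intro s _
    rw [stdAddChar_crt huv]
    simp only [map_add, map_mul, map_sum, map_intCast, mul_add, mul_sum, Int.cast_mul,
      mul_assoc]
    rfl

lemma norm_expS_le (q d m : ℕ) [NeZero q] (κ r : ℤ) (t c : Fin m → ℤ) :
    ‖expS q d m κ r t c‖ ≤ (q : ℝ) ^ (m + 1) := by
  refine (norm_expSum_le_card (N := q) _ _).trans ?_
  have : (cpts q d m κ c).card ≤ q ^ (m + 1) := by
    refine (Finset.card_le_univ _).trans ?_
    rw [Fintype.card_prod, card_fun, ZMod.card, card_fin, pow_succ']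
  exact_mod_cast this

/-- Multiplicative bound for `expS`: a bound `w p` at each prime, stable under multiplication of
the frequencies by integers prime to `p`, gives a bound for products of distinct primes times a
cofactor treated trivially. -/
lemma expS_le_prod {c : Fin m → ℤ} (w : ℕ → ℤ → (Fin m → ℤ) → ℝ)
    (hw : ∀ (p : ℕ) (u r : ℤ) t, IsCoprime u (p : ℤ) → w p (u * r) (fun i => u * t i) = w p r t)
    (P : Finset ℕ) (hP : ∀ p ∈ P, p.Prime)
    (hexp : ∀ p ∈ P, ∀ [NeZero p], ∀ r t, ‖expS p d m κ r t c‖ ≤ w p r t)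
    {q2 : ℕ} (hcop : ∀ p ∈ P, p.Coprime q2) (q : ℕ) [NeZero q] (hq : q = (∏ p ∈ P, p) * q2)
    (r : ℤ) (t : Fin m → ℤ) : ‖expS q d m κ r t c‖ ≤ (∏ p ∈ P, w p r t) * (q2 : ℝ) ^ (m + 1) := by
  induction P using Finset.induction_on generalizing q r t with
  | empty =>
    rw [Finset.prod_empty, one_mul] at hq ⊢
    subst hq
    exact norm_expS_le _ _ _ _ _ _ _
  | insert p P hpP ih =>
    rw [prod_insert hpP] at hq ⊢
    rw [mul_assoc] at hq
    have hp := hP p (mem_insert_self _ _)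
    have : NeZero p := ⟨hp.ne_zero⟩
    have hq0 : q ≠ 0 := NeZero.ne q
    have : NeZero ((∏ p ∈ P, p) * q2) := ⟨fun h => hq0 (by rw [hq, h, mul_zero])⟩
    have : NeZero (p * ((∏ p ∈ P, p) * q2)) := ⟨by rw [← hq]; exact hq0⟩
    have hc : p.Coprime ((∏ p ∈ P, p) * q2) := by
      refine Coprime.mul_right (Coprime.prod_right fun p' hp' => ?_)
        (hcop p (mem_insert_self _ _))
      exact (Nat.coprime_primes hp (hP p' (mem_insert_of_mem hp'))).2
        (fun h => hpP (h ▸ hp'))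
    obtain ⟨v, u, huv⟩ := Nat.isCoprime_iff_coprime.2 hc
    subst hq
    rw [expS_mul hc (u := u) (v := v) (by linear_combination huv), norm_mul, mul_assoc]
    have hu : IsCoprime u (p : ℤ) := ⟨((∏ p ∈ P, p) * q2 : ℕ), v, by linear_combination huv⟩
    have hv : ∀ p' ∈ P, IsCoprime v (p' : ℤ) := by
      intro p' hp'
      obtain ⟨k, hk⟩ : p' ∣ (∏ p ∈ P, p) * q2 := (dvd_prod_of_mem _ hp').mul_right _
      refine ⟨p, u * k, ?_⟩
      rw [hk] at huv
      push_cast at huv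
      linear_combination huv
    have h1 := hexp p (mem_insert_self _ _) (u * r) (fun i => u * t i)
    rw [hw p u r t hu] at h1
    have h2 := ih (fun p' hp' => hP p' (mem_insert_of_mem hp'))
      (fun p' hp' => hexp p' (mem_insert_of_mem hp'))
      (fun p' hp' => hcop p' (mem_insert_of_mem hp')) _ rfl (v * r) (fun i => v * t i)
    rw [prod_congr rfl fun p' hp' => hw p' v r t (hv p' hp')] at h2
    exact mul_le_mul h1 h2 (norm_nonneg _) ((norm_nonneg _).trans h1)

lemma expS_zero_eq {p : ℕ} [Fact p.Prime] {r : ℤ} (hκ : ¬ (p : ℤ) ∣ κ) (hr : (p : ℤ) ∣ r)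
    (t c : Fin m → ℤ) :
    expS p d m κ r t c = ∑ s ∈ pts d m 1 (fun i => (κ : ZMod p)⁻¹ * (c i : ZMod p)),
      stdAddChar (∑ i, (t i : ZMod p) * s.2 i) := by
  have hκ' : (κ : ZMod p) ≠ 0 := fun h => hκ ((intCast_zmod_eq_zero_iff_dvd _ _).1 h)
  have hr' : (r : ZMod p) = 0 := (intCast_zmod_eq_zero_iff_dvd _ _).2 hr
  refine Finset.sum_nbij' (fun s => ((κ : ZMod p)⁻¹ * s.1, s.2)) (fun s => ((κ : ZMod p) * s.1, s.2))
    ?_ ?_ ?_ ?_ ?_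
  · intro s hs
    simp only [cpts, mem_filter, mem_univ, true_and] at hs
    refine mem_pts.2 fun i => ?_
    simp only [Pi.one_apply, one_mul]
    rw [← mul_add, ← hs i, inv_mul_cancel_left₀ hκ']
  · intro s hs
    simp only [cpts, mem_filter, mem_univ, true_and]
    intro i
    have := mem_pts.1 hs i
    simp only [Pi.one_apply, one_mul] at this
    rw [this, mul_add, mul_inv_cancel_left₀ hκ']
  · intro s _
    simp [mul_inv_cancel_left₀ hκ']
  · intro s _
    simp [inv_mul_cancel_left₀ hκ']
  · intro s _
    simp [hr']

/-- Weight at the prime `p` bounding `expS` with trivial phase in `z`. -/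
def wcurve (C : ℝ) {m : ℕ} (c : Fin m → ℤ) (p : ℕ) (r : ℤ) (t : Fin m → ℤ) : ℝ :=
  if (p : ℤ) ∣ r then C * (p : ℝ) ^ (7 / 8 : ℝ) * (if ∀ i, (p : ℤ) ∣ t i then (p : ℝ) else 1) *
    (if ∀ i j, i ≠ j → ¬ (p : ℤ) ∣ c i - c j then 1 else (p : ℝ))
  else (p : ℝ) ^ (m + 1)

lemma wcurve_mul (C : ℝ) (c : Fin m → ℤ) (p : ℕ) (u r : ℤ) (t : Fin m → ℤ)
    (h : IsCoprime u (p : ℤ)) : wcurve C c p (u * r) (fun i => u * t i) = wcurve C c p r t := by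
  have : ∀ x : ℤ, (p : ℤ) ∣ u * x ↔ (p : ℤ) ∣ x := fun x =>
    ⟨fun hx => h.symm.dvd_of_dvd_mul_left hx, fun hx => hx.mul_left _⟩
  simp only [wcurve, this]

lemma expS_prime_le (m : ℕ) (hd2 : 2 ≤ d) : ∃ C : ℝ, 1 ≤ C ∧
    ∀ (p : ℕ) [NeZero p], p.Prime → ∀ κ : ℤ, ¬ (p : ℤ) ∣ κ → ∀ (r : ℤ) (t c : Fin m → ℤ),
      ‖expS p d m κ r t c‖ ≤ wcurve C c p r t := by
  obtain ⟨C, hC, hb⟩ := prime_bound m hd2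
  refine ⟨C + (d : ℝ) ^ m + 1, by
    have : (0 : ℝ) ≤ (d : ℝ) ^ m := by positivity
    linarith, ?_⟩
  intro p _ hp κ hκ r t c
  have : Fact p.Prime := ⟨hp⟩
  have hp1 : (1 : ℝ) ≤ p := by exact_mod_cast hp.one_lt.le
  have hD : (0 : ℝ) ≤ (d : ℝ) ^ m := by positivity
  have hκ' : (κ : ZMod p) ≠ 0 := fun h => hκ ((intCast_zmod_eq_zero_iff_dvd _ _).1 h)
  have h78 : (1 : ℝ) ≤ (p : ℝ) ^ (7 / 8 : ℝ) := Real.one_le_rpow hp1 (by norm_num)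
  unfold wcurve
  split_ifs with hr ht hc hc
  all_goals try (rw [expS_zero_eq hκ hr])
  · refine (norm_expSum_le_card _ _).trans ?_
    have h1 := card_pts_le (F := ZMod p) (d := d) (m := m) (κ := 1)
      (c := fun i => (κ : ZMod p)⁻¹ * (c i : ZMod p)) (by omega) (by simp)
    rw [ZMod.card] at h1
    calc _ ≤ (d : ℝ) ^ m * p := by exact_mod_cast h1
      _ ≤ ((C + (d : ℝ) ^ m + 1) * (p : ℝ) ^ (7 / 8 : ℝ)) * p * 1 := by
        rw [mul_one]; gcongr; nlinarith
  · refine (norm_expSum_le_card _ _).trans ?_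
    have h1 := card_pts_le (F := ZMod p) (d := d) (m := m) (κ := 1)
      (c := fun i => (κ : ZMod p)⁻¹ * (c i : ZMod p)) (by omega) (by simp)
    rw [ZMod.card] at h1
    calc _ ≤ (d : ℝ) ^ m * p := by exact_mod_cast h1
      _ ≤ ((C + (d : ℝ) ^ m + 1) * (p : ℝ) ^ (7 / 8 : ℝ)) * p * 1 := by
        rw [mul_one]; gcongr; nlinarith
      _ ≤ _ := by gcongr
  · have hinj : Injective (fun i => (κ : ZMod p)⁻¹ * (c i : ZMod p)) := by
      intro i j hij
      by_contra hne
      refine hc i j hne ?_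
      have := mul_left_cancel₀ (inv_ne_zero hκ') hij
      rw [ZMod.intCast_eq_intCast_iff_dvd_sub] at this
      rw [← neg_sub]; exact this.neg_right
    have hne : (fun i => (t i : ZMod p)) ≠ 0 := by
      intro h
      exact ht fun i => (intCast_zmod_eq_zero_iff_dvd _ _).1 (congrFun h i)
    refine (hb p _ hinj _ hne).trans ?_
    rw [mul_one, mul_one]
    gcongr
    linarith
  · refine (norm_expSum_le_card _ _).trans ?_
    have h1 := card_pts_le (F := ZMod p) (d := d) (m := m) (κ := 1)
      (c := fun i => (κ : ZMod p)⁻¹ * (c i : ZMod p)) (by omega) (by simp)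
    rw [ZMod.card] at h1
    calc _ ≤ (d : ℝ) ^ m * p := by exact_mod_cast h1
      _ ≤ ((C + (d : ℝ) ^ m + 1) * (p : ℝ) ^ (7 / 8 : ℝ)) * 1 * p := by
        rw [mul_one]; gcongr; nlinarith
  · exact norm_expS_le _ _ _ _ _ _ _

/-- Complete sums of `e(a x ^ d / q)`. -/
def gaussS (q d : ℕ) [NeZero q] (a : ℤ) : ℂ :=
  ∑ x : ZMod q, stdAddChar ((a : ZMod q) * x ^ d)

lemma expS_one_eq (q d : ℕ) [NeZero q] (κ r : ℤ) : expS q d 1 κ r 0 0 = gaussS q d (r * κ) := by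
  refine Finset.sum_nbij' (fun s => s.2 0) (fun x => ((κ : ZMod q) * x ^ d, fun _ => x))
    ?_ ?_ ?_ ?_ ?_
  · intro s _; exact mem_univ _
  · intro x _
    simp [cpts]
  · intro s hs
    simp only [cpts, mem_filter, mem_univ, true_and] at hs
    have := hs 0
    refine Prod.ext ?_ (funext fun i => ?_)
    · simpa using this
    · simp only [Subsingleton.elim i 0]
  · intro x _; rfl
  · intro s hs
    simp only [cpts, mem_filter, mem_univ, true_and] at hs
    have := hs 0
    simp only [Pi.zero_apply, Int.cast_zero, add_zero] at this
    simp [← this, mul_assoc]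

lemma gaussS_prime_le {p : ℕ} [Fact p.Prime] (hd : 0 < d) {a : ℤ} (ha : ¬ (p : ℤ) ∣ a) :
    ‖gaussS p d a‖ ≤ d * √p := by
  have ha' : (a : ZMod p) ≠ 0 := fun h => ha ((intCast_zmod_eq_zero_iff_dvd _ _).1 h)
  let G : ZMod p → ℂ := fun l => ∑ x : ZMod p, stdAddChar (l * x ^ d)
  -- number of solutions of `x ^ d = y ^ d`
  let E := univ.filter fun u : ZMod p × ZMod p => u.1 ^ d = u.2 ^ d
  have hroot : ∀ y : ZMod p, (univ.filter fun x : ZMod p => x ^ d = y).card ≤ d := by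
    intro y
    refine le_trans (card_le_card fun x hx => ?_) (Multiset.toFinset_card_le _ |>.trans
      (card_nthRoots d y))
    rw [Multiset.mem_toFinset, mem_nthRoots hd]
    exact (mem_filter.1 hx).2
  have hE : E.card ≤ 1 + d * (p - 1) := by
    have h1 : E ⊆ insert ((0 : ZMod p), (0 : ZMod p)) (E.filter fun u => u.2 ≠ 0) := by
      intro u hu
      by_cases h : u.2 = 0
      · have := (mem_filter.1 hu).2
        rw [h, zero_pow hd.ne'] at this
        have h1 : u.1 = 0 := pow_eq_zero_iff hd.ne' |>.1 this
        exact mem_insert.2 (Or.inl (Prod.ext h1 h))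
      · exact mem_insert_of_mem (mem_filter.2 ⟨hu, h⟩)
    refine (card_le_card h1).trans ((card_insert_le _ _).trans ?_)
    rw [add_comm]
    refine Nat.add_le_add_left ?_ _
    have h2 := card_le_mul_card_image_of_maps_to (s := E.filter fun u => u.2 ≠ 0)
      (t := univ.erase (0 : ZMod p)) (f := fun u => u.2)
      (fun u hu => mem_erase.2 ⟨(mem_filter.1 hu).2, mem_univ _⟩) d
      (fun y _ => by
        refine le_trans (card_le_card_of_injOn (fun u => u.1) ?_ ?_) (hroot (y ^ d))
        · intro u hu
          simp only [E, coe_filter, mem_filter, mem_univ, true_and,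
            mem_ofPred_eq] at hu ⊢
          rw [hu.1.1, hu.2]
        · intro u hu u' hu' h
          simp only [coe_filter, mem_ofPred_eq] at hu hu'
          exact Prod.ext h (hu.2.trans hu'.2.symm))
    rwa [Finset.card_erase_of_mem (mem_univ _), card_univ, ZMod.card] at h2
  -- mean square
  have hms : ∑ l, ‖G l‖ ^ 2 = p * E.card := by
    have h1 : ∀ l, ((‖G l‖ ^ 2 : ℝ) : ℂ) =
        ∑ u : ZMod p × ZMod p, stdAddChar (l * (u.1 ^ d - u.2 ^ d)) := by
      intro l
      push_cast
      rw [← mul_conj', map_sum, sum_mul_sum, Fintype.sum_prod_type]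
      refine sum_congr rfl fun x _ => sum_congr rfl fun y _ => ?_
      rw [← map_neg_eq_conj, ← map_add_eq_mul]
      congr 1; ring
    have h2 : ∑ l, ((‖G l‖ ^ 2 : ℝ) : ℂ) = p * E.card := by
      simp only [h1]
      rw [sum_comm, card_filter]
      push_cast
      rw [mul_sum]
      refine sum_congr rfl fun u _ => ?_
      rw [sum_mulShift _ (ZMod.isPrimitive_stdAddChar p)]
      simp only [sub_eq_zero, ZMod.card]
      split_ifs <;> simp
    exact_mod_cast h2
  -- the value of `‖G‖` is constant on the orbit of `a` under `d`-th powers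
  have horb : ∀ y : ZMod p, y ≠ 0 → G (a * y ^ d) = G a := by
    intro y hy
    simp only [G]
    refine sum_equiv (Equiv.mulLeft₀ y hy) _ _ fun x => ?_
    simp only [Equiv.mulLeft₀_apply, mul_pow, mul_assoc]
  let O := (univ.erase (0 : ZMod p)).image fun y => (a : ZMod p) * y ^ d
  have hO : p - 1 ≤ d * O.card := by
    have h2 := Finset.card_le_mul_card_image (s := univ.erase (0 : ZMod p))
      (f := fun y => (a : ZMod p) * y ^ d) d
      (fun z _ => by
        refine le_trans (card_le_card fun x hx => ?_) (hroot ((a : ZMod p)⁻¹ * z))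
        have := (mem_filter.1 hx).2
        refine mem_filter.2 ⟨mem_univ _, ?_⟩
        rw [← this, inv_mul_cancel_left₀ ha'])
    rwa [Finset.card_erase_of_mem (mem_univ _), card_univ, ZMod.card] at h2
  have h0O : (0 : ZMod p) ∉ O := by
    intro h
    obtain ⟨y, hy, h⟩ := mem_image.1 h
    exact mul_ne_zero ha' (pow_ne_zero _ (mem_erase.1 hy).1) h
  have hG0 : ‖G 0‖ = p := by simp [G, ZMod.card]
  have hsum : ‖G 0‖ ^ 2 + O.card * ‖G a‖ ^ 2 ≤ p * E.card := by
    rw [← hms]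
    have h1 : ∑ l ∈ insert 0 O, ‖G l‖ ^ 2 = ‖G 0‖ ^ 2 + O.card * ‖G a‖ ^ 2 := by
      rw [sum_insert h0O]
      congr 1
      rw [sum_congr rfl (g := fun _ => ‖G a‖ ^ 2), sum_const, nsmul_eq_mul]
      intro l hl
      obtain ⟨y, hy, rfl⟩ := mem_image.1 hl
      rw [horb y (mem_erase.1 hy).1]
    rw [← h1]
    exact sum_le_sum_of_subset_of_nonneg (Finset.subset_univ _) fun _ _ _ => by positivity
  have hp2 : (2 : ℝ) ≤ p := by exact_mod_cast (Fact.out : p.Prime).two_le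
  have hE' : (E.card : ℝ) ≤ 1 + d * (p - 1) := by
    have : ((1 + d * (p - 1) : ℕ) : ℝ) = 1 + d * (p - 1) := by
      rw [Nat.cast_add, Nat.cast_mul, Nat.cast_sub (Fact.out : p.Prime).one_lt.le]; simp
    rw [← this]; exact_mod_cast hE
  have hO' : (p : ℝ) - 1 ≤ d * O.card := by
    have : ((p - 1 : ℕ) : ℝ) = p - 1 := by
      rw [Nat.cast_sub (Fact.out : p.Prime).one_lt.le]; simp
    rw [← this]; exact_mod_cast hO
  change ‖G a‖ ≤ _
  have hd1 : (1 : ℝ) ≤ d := by exact_mod_cast hd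
  refine abs_le_of_sq_le_sq' ?_ (by positivity) |>.2
  rw [mul_pow, sq_sqrt (by positivity)]
  rw [hG0] at hsum
  have e1 : O.card * ‖G a‖ ^ 2 ≤ p * ((d - 1) * (p - 1)) := by nlinarith
  have e2 : (p - 1) * ‖G a‖ ^ 2 ≤ d * (p * ((d - 1) * (p - 1))) := by
    calc (p - 1) * ‖G a‖ ^ 2 ≤ (d * O.card) * ‖G a‖ ^ 2 := by gcongr
      _ = d * (O.card * ‖G a‖ ^ 2) := by ring
      _ ≤ _ := by gcongr
  have e3 : ‖G a‖ ^ 2 ≤ d * (p * (d - 1)) := by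
    have : (0 : ℝ) < p - 1 := by linarith
    refine le_of_mul_le_mul_left (e2.trans (le_of_eq ?_)) this
    ring
  nlinarith

/-- Weight at the prime `p` bounding Gauss sums. -/
def wgauss (d p : ℕ) (r : ℤ) (t : Fin 1 → ℤ) : ℝ :=
  if ∀ i, (p : ℤ) ∣ t i then d * √p * (if (p : ℤ) ∣ r then √p else 1) else (p : ℝ) ^ 2

lemma wgauss_mul (d p : ℕ) (u r : ℤ) (t : Fin 1 → ℤ)
    (h : IsCoprime u (p : ℤ)) : wgauss d p (u * r) (fun i => u * t i) = wgauss d p r t := by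
  have : ∀ x : ℤ, (p : ℤ) ∣ u * x ↔ (p : ℤ) ∣ x := fun x =>
    ⟨fun hx => h.symm.dvd_of_dvd_mul_left hx, fun hx => hx.mul_left _⟩
  simp only [wgauss, this]

lemma expS_one_prime_le (hd : 0 < d) (p : ℕ) [NeZero p] (hp : p.Prime) (hκ : ¬ (p : ℤ) ∣ κ) (r : ℤ) (t : Fin 1 → ℤ) :
    ‖expS p d 1 κ r t 0‖ ≤ wgauss d p r t := by
  have : Fact p.Prime := ⟨hp⟩
  have hd1 : (1 : ℝ) ≤ d := by exact_mod_cast hd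
  unfold wgauss
  split_ifs with ht hr
  · refine (norm_expSum_le_card (N := p) _ _).trans ?_
    have h1 : (cpts p d 1 κ 0).card ≤ p := by
      have h2 : (cpts p d 1 κ 0).card ≤ (univ : Finset (ZMod p)).card := by
        refine card_le_card_of_injOn (fun s => s.2 0) (fun _ _ => mem_coe.2
          (mem_univ _)) ?_
        intro s hs s' hs' h
        simp only [cpts, coe_filter, mem_univ, true_and, mem_ofPred_eq] at hs hs'
        have h3 := hs 0
        have h4 := hs' 0
        simp only at h
        rw [h, h4] at h3
        refine Prod.ext (add_right_cancel h3).symm (funext fun i => ?_)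
        rw [Subsingleton.elim i 0]; exact h
      rwa [card_univ, ZMod.card] at h2
    calc _ ≤ (p : ℝ) := by exact_mod_cast h1
      _ = 1 * (√p * √p) := by rw [Real.mul_self_sqrt (by positivity), one_mul]
      _ ≤ d * (√p * √p) := by gcongr
      _ = _ := by ring
  · have : expS p d 1 κ r t 0 = expS p d 1 κ r 0 0 := by
      refine sum_congr rfl fun s _ => ?_
      have : ∀ i, (t i : ZMod p) = 0 := fun i =>
        (intCast_zmod_eq_zero_iff_dvd _ _).2 (ht i)
      simp [this]
    rw [this, expS_one_eq, mul_one]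
    exact gaussS_prime_le hd fun h => (Nat.prime_iff_prime_int.1 hp).dvd_or_dvd h |>.elim hr hκ
  · exact norm_expS_le _ _ _ _ _ _ _

/-- Bound for complete sums on the curves `κ x_i ^ d = z + c_i` modulo `q`, with the product of
the primes in `P` as the squarefree part over which cancellation is exploited. -/
theorem expS_le (m : ℕ) (hd2 : 2 ≤ d) : ∃ C : ℝ, 1 ≤ C ∧
    ∀ (P : Finset ℕ), (∀ p ∈ P, p.Prime) → ∀ q2 : ℕ, (∀ p ∈ P, p.Coprime q2) →
    ∀ (q : ℕ) [NeZero q], q = (∏ p ∈ P, p) * q2 → ∀ κ : ℤ, IsCoprime κ (q : ℤ) → ∀ t c : Fin m → ℤ,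
      ‖expS q d m κ 0 t c‖ ≤ C ^ P.card * ((∏ p ∈ P, p : ℕ) : ℝ) ^ (7 / 8 : ℝ) *
        ((∏ p ∈ P.filter (fun p : ℕ => ∀ i, (p : ℤ) ∣ t i), p : ℕ) : ℝ) *
        ((∏ p ∈ P.filter (fun p : ℕ => ¬ ∀ i j, i ≠ j → ¬ (p : ℤ) ∣ c i - c j), p : ℕ) : ℝ) * (q2 : ℝ) ^ (m + 1) := by
  obtain ⟨C, hC, hb⟩ := expS_prime_le m hd2
  refine ⟨C, hC, fun P hP q2 hcop q _ hq κ hκ t c => ?_⟩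
  refine (expS_le_prod (wcurve C c) (wcurve_mul C c) P hP (fun p hp _ r t => hb p (hP p hp) κ ?_ r t c)
    hcop q hq 0 t).trans (le_of_eq ?_)
  · intro h
    have hpq : (p : ℤ) ∣ q := by
      rw [hq]; exact_mod_cast (dvd_prod_of_mem _ hp).mul_right _
    exact (Nat.prime_iff_prime_int.1 (hP p hp)).not_isUnit (hκ.isUnit_of_dvd' h hpq)
  · congr 1
    simp only [wcurve, dvd_zero, if_true]
    rw [prod_mul_distrib, prod_mul_distrib, prod_mul_distrib,
      prod_const, Nat.cast_prod, Nat.cast_prod, Nat.cast_prod, prod_filter,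
      prod_filter, Real.finsetProd_rpow _ _ (fun p _ => by positivity)]
    congr 1
    refine prod_congr rfl fun p _ => ?_
    split_ifs <;> rfl

theorem gaussS_le (hd : 0 < d) (P : Finset ℕ) (hP : ∀ p ∈ P, p.Prime) (q2 : ℕ)
    (hcop : ∀ p ∈ P, p.Coprime q2) (q : ℕ) [NeZero q] (hq : q = (∏ p ∈ P, p) * q2) (hκ : IsCoprime κ (q : ℤ)) (r : ℤ) :
    ‖gaussS q d (r * κ)‖ ^ 2 ≤ ((d : ℝ) ^ 2) ^ P.card * (∏ p ∈ P, p : ℕ) *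
      ((∏ p ∈ P.filter (fun p : ℕ => (p : ℤ) ∣ r), p : ℕ) : ℝ) * (q2 : ℝ) ^ 4 := by
  rw [← expS_one_eq]
  refine (pow_le_pow_left₀ (norm_nonneg _) (expS_le_prod (wgauss d) (wgauss_mul d) P hP
    (fun p hp _ r t => expS_one_prime_le hd p (hP p hp) ?_ r t) hcop q hq r 0) 2).trans
    (le_of_eq ?_)
  · intro h
    have hpq : (p : ℤ) ∣ q := by
      rw [hq]; exact_mod_cast (dvd_prod_of_mem _ hp).mul_right _
    exact (Nat.prime_iff_prime_int.1 (hP p hp)).not_isUnit (hκ.isUnit_of_dvd' h hpq)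
  · simp only [wgauss, Pi.zero_apply, dvd_zero, implies_true, if_true]
    rw [mul_pow, ← prod_pow, ← pow_mul]
    congr 1
    simp only [mul_pow]
    rw [prod_mul_distrib, prod_mul_distrib, prod_const, Nat.cast_prod,
      Nat.cast_prod, prod_filter]
    congr 1
    · congr 1
      exact prod_congr rfl fun p _ => sq_sqrt (by positivity)
    · refine prod_congr rfl fun p _ => ?_
      split_ifs
      · exact sq_sqrt (by positivity)
      · simp

section

variable {q : ℕ} [NeZero q]

/-- Exponential sum `∑_{n ≤ N} e(t n / q)` over an interval. -/
def intS (q N : ℕ) [NeZero q] (t : ZMod q) : ℂ :=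
  ∑ n ∈ Icc 1 N, stdAddChar (t * (n : ZMod q))

lemma intS_zero (N : ℕ) : intS q N 0 = N := by simp [intS]

lemma intS_neg (N : ℕ) (t : ZMod q) : ‖intS q N (-t)‖ = ‖intS q N t‖ := by
  have : intS q N (-t) = starRingEnd ℂ (intS q N t) := by
    unfold intS
    rw [map_sum]
    refine sum_congr rfl fun n _ => ?_
    rw [neg_mul, map_neg_eq_conj]
  rw [this, Complex.norm_conj]

lemma intS_le (N : ℕ) (t : ZMod q) : ‖intS q N t‖ ≤ N := by
  refine (norm_sum_le _ _).trans ?_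
  simp [norm_apply]

lemma norm_stdAddChar_sub_one_ge (t : ZMod q) :
    4 * |(t.valMinAbs : ℝ)| / q ≤ ‖(stdAddChar t : ℂ) - 1‖ := by
  have hq : (0 : ℝ) < q := by exact_mod_cast (NeZero.pos q)
  have h1 : (stdAddChar t : ℂ) = Complex.exp (Complex.I * ((2 * Real.pi * t.valMinAbs / q : ℝ) : ℂ)) := by
    conv_lhs => rw [← ZMod.coe_valMinAbs t]
    rw [ZMod.stdAddChar_coe]
    congr 1; push_cast; ring
  rw [h1, Complex.norm_exp_I_mul_ofReal_sub_one, norm_eq_abs, abs_mul, abs_two]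
  have h2 : |(2 * Real.pi * t.valMinAbs / q : ℝ) / 2| ≤ Real.pi / 2 := by
    have h3 := ZMod.natAbs_valMinAbs_le t
    have h4 : |(t.valMinAbs : ℝ)| ≤ q / 2 := by
      rw [← cast_abs, abs_eq_natAbs]
      have : ((t.valMinAbs.natAbs : ℤ) : ℝ) = (t.valMinAbs.natAbs : ℝ) := by simp
      rw [this]
      refine le_trans (by exact_mod_cast h3) Nat.cast_div_le
    have : (2 * Real.pi * t.valMinAbs / q : ℝ) / 2 = Real.pi / q * t.valMinAbs := by ring
    rw [this, abs_mul, abs_of_pos (by positivity)]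
    calc _ ≤ Real.pi / q * (q / 2) := by gcongr
      _ = _ := by field_simp
  have h5 := Real.mul_abs_le_abs_sin h2
  have : (2 * Real.pi * t.valMinAbs / q : ℝ) / 2 = Real.pi / q * t.valMinAbs := by ring
  rw [this] at h5 ⊢
  rw [abs_mul, abs_of_pos (show 0 < Real.pi / q by positivity)] at h5
  have e : 2 / Real.pi * (Real.pi / q * |(t.valMinAbs : ℝ)|) = 2 * |(t.valMinAbs : ℝ)| / q := by
    field_simp
  rw [e] at h5
  have : 4 * |(t.valMinAbs : ℝ)| / q = 2 * (2 * |(t.valMinAbs : ℝ)| / q) := by ring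
  rw [this]
  linarith

lemma intS_mul_le (N : ℕ) (t : ZMod q) : ‖intS q N t‖ * (2 * |(t.valMinAbs : ℝ)|) ≤ q := by
  have hq : (0 : ℝ) < q := by exact_mod_cast (NeZero.pos q)
  have h1 : intS q N t * ((stdAddChar t : ℂ) - 1) =
      stdAddChar (t * ((N + 1 : ℕ) : ZMod q)) - stdAddChar t := by
    induction N with
    | zero => simp [intS]
    | succ n ih =>
      have : intS q (n + 1) t = intS q n t + stdAddChar (t * ((n + 1 : ℕ) : ZMod q)) := by
        unfold intS; rw [Finset.sum_Icc_succ_top (by omega)]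
      rw [this, add_mul, ih]
      have e : stdAddChar (t * ((n + 1 + 1 : ℕ) : ZMod q)) =
          (stdAddChar (t * ((n + 1 : ℕ) : ZMod q)) : ℂ) * stdAddChar t := by
        rw [← map_add_eq_mul]; congr 1; push_cast; ring
      rw [e]; ring
  have h2 : ‖intS q N t‖ * ‖(stdAddChar t : ℂ) - 1‖ ≤ 2 := by
    rw [← norm_mul, h1]
    refine (norm_sub_le _ _).trans ?_
    rw [norm_apply, norm_apply]; norm_num
  have h3 := norm_stdAddChar_sub_one_ge t
  have h4 : ‖intS q N t‖ * (4 * |(t.valMinAbs : ℝ)| / q) ≤ 2 :=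
    (mul_le_mul_of_nonneg_left h3 (norm_nonneg _)).trans h2
  have h5 : ‖intS q N t‖ * (4 * |(t.valMinAbs : ℝ)| / q) =
      ‖intS q N t‖ * (2 * |(t.valMinAbs : ℝ)|) * (2 / q) := by ring
  rw [h5, ← le_div_iff₀ (by positivity)] at h4
  refine h4.trans (le_of_eq ?_)
  field_simp

/-- The frequencies divisible by `Q`. -/
def frq (q Q : ℕ) [NeZero q] : Finset (ZMod q) :=
  univ.filter fun t => (Q : ℤ) ∣ t.valMinAbs

lemma zero_mem_frq (Q : ℕ) : (0 : ZMod q) ∈ frq q Q := by simp [frq]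

lemma sum_intS_le (N Q : ℕ) (hQ : 0 < Q) :
    ∑ t ∈ (frq q Q).erase 0, ‖intS q N t‖ ≤ q / Q * (1 + log q) := by
  have hq : (0 : ℝ) < q := by exact_mod_cast (NeZero.pos q)
  have hQ' : (0 : ℝ) < Q := by exact_mod_cast hQ
  let φ : ZMod q → ℕ := fun t => t.valMinAbs.natAbs / Q
  have hval : ∀ t ∈ (frq q Q).erase 0, t.valMinAbs.natAbs = Q * φ t := by
    intro t ht
    have := (mem_filter.1 (mem_erase.1 ht).2).2
    exact (Nat.mul_div_cancel' (natCast_dvd.1 this)).symm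
  have hne : ∀ t ∈ (frq q Q).erase 0, t.valMinAbs.natAbs ≠ 0 := by
    intro t ht
    have := (mem_erase.1 ht).1
    rwa [Int.natAbs_ne_zero, Ne, ZMod.valMinAbs_eq_zero]
  have hφ : ∀ t ∈ (frq q Q).erase 0, φ t ∈ Icc 1 q := by
    intro t ht
    rw [mem_Icc]
    refine ⟨Nat.pos_of_ne_zero fun h => hne t ht (by rw [hval t ht, h, mul_zero]), ?_⟩
    calc φ t ≤ t.valMinAbs.natAbs := Nat.div_le_self _ _
      _ ≤ q / 2 := ZMod.natAbs_valMinAbs_le t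
      _ ≤ q := Nat.div_le_self _ _
  calc ∑ t ∈ (frq q Q).erase 0, ‖intS q N t‖
      ≤ ∑ t ∈ (frq q Q).erase 0, (q : ℝ) / (2 * Q) * (1 / (φ t : ℝ)) := by
        refine sum_le_sum fun t ht => ?_
        have h1 := intS_mul_le N t
        have h2 : |(t.valMinAbs : ℝ)| = Q * φ t := by
          rw [← cast_abs, abs_eq_natAbs, hval t ht]; push_cast; rfl
        have h3 : (0 : ℝ) < φ t := by exact_mod_cast (mem_Icc.1 (hφ t ht)).1
        rw [h2] at h1
        rw [div_mul_div_comm, mul_one, le_div_iff₀ (by positivity)]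
        linarith
    _ = ∑ k ∈ Icc 1 q, ∑ t ∈ (frq q Q).erase 0 with φ t = k, (q : ℝ) / (2 * Q) * (1 / (φ t : ℝ)) :=
        (Finset.sum_fiberwise_of_maps_to hφ _).symm
    _ ≤ ∑ k ∈ Icc 1 q, (q : ℝ) / Q * (k : ℝ)⁻¹ := by
        refine sum_le_sum fun k hk => ?_
        rw [sum_congr rfl (g := fun _ => (q : ℝ) / (2 * Q) * (1 / (k : ℝ)))
          (fun t ht => by rw [(mem_filter.1 ht).2]), sum_const, nsmul_eq_mul]
        have hc : ((frq q Q).erase 0 |>.filter fun t => φ t = k).card ≤ 2 := by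
          refine (card_le_card (t := {((Q * k : ℤ) : ZMod q), ((-(Q * k) : ℤ) : ZMod q)})
            fun t ht => ?_).trans Finset.card_le_two
          obtain ⟨ht1, ht2⟩ := mem_filter.1 ht
          have h1 := hval t ht1
          rw [ht2] at h1
          rw [mem_insert, Finset.mem_singleton, ← ZMod.coe_valMinAbs t]
          rcases Int.natAbs_eq t.valMinAbs with h | h
          · left; rw [h, h1]; simp
          · right; rw [h, h1]; simp
        have hk' : (0 : ℝ) < k := by exact_mod_cast (mem_Icc.1 hk).1
        calc _ ≤ (2 : ℝ) * (q / (2 * Q) * (1 / (k : ℝ))) := by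
              gcongr; exact_mod_cast hc
          _ = _ := by field_simp
    _ = q / Q * ((harmonic q : ℚ) : ℝ) := by
        rw [← mul_sum, harmonic_eq_sum_Icc]; push_cast; rfl
    _ ≤ _ := by
        gcongr
        exact harmonic_le_one_add_log q

lemma add_pow_sub_pow_le {a k : ℝ} (ha : 0 ≤ a) (hk : 0 ≤ k) (m : ℕ) :
    (a + k) ^ m - a ^ m ≤ m * k * (a + k) ^ (m - 1) := by
  induction m with
  | zero => simp
  | succ n ih =>
    rcases n with _ | n
    · simp
    · simp only [Nat.add_sub_cancel] at ih ⊢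
      have h1 : a ^ (n + 1) ≤ (a + k) ^ (n + 1) := by gcongr; linarith
      have h2 : a * ((a + k) ^ (n + 1) - a ^ (n + 1)) ≤ (a + k) * (((n + 1 : ℕ) : ℝ) * k * (a + k) ^ n) := by
        have : 0 ≤ (a + k) ^ (n + 1) - a ^ (n + 1) := by linarith
        calc _ ≤ (a + k) * ((a + k) ^ (n + 1) - a ^ (n + 1)) := by gcongr; linarith
          _ ≤ _ := by gcongr
      have h3 : (a + k) ^ (n + 1 + 1) - a ^ (n + 1 + 1) =
        a * ((a + k) ^ (n + 1) - a ^ (n + 1)) + k * (a + k) ^ (n + 1) := by ring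
      rw [h3]
      push_cast at h2 ⊢
      calc _ ≤ _ := add_le_add_left h2 _
        _ = _ := by ring

lemma sum_prod_intS_le (m N Q : ℕ) (hQ : 0 < Q) :
    ∑ t ∈ (piFinset fun _ : Fin m => frq q Q).erase 0, ∏ i, ‖intS q N (t i)‖ ≤
      m * (q / Q * (1 + log q)) * (N + q / Q * (1 + log q)) ^ (m - 1) := by
  have hlog : 0 ≤ log q := log_nonneg (by exact_mod_cast NeZero.one_le)
  set K := ∑ t ∈ (frq q Q).erase 0, ‖intS q N t‖ with hK
  have hK0 : 0 ≤ K := Finset.sum_nonneg fun _ _ => norm_nonneg _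
  have hK1 := sum_intS_le (q := q) N Q hQ
  rw [← hK] at hK1
  have h0 : (0 : Fin m → ZMod q) ∈ piFinset fun _ : Fin m => frq q Q :=
    mem_piFinset.2 fun _ => zero_mem_frq Q
  have h1 : ∑ t ∈ (frq q Q), ‖intS q N t‖ = N + K := by
    rw [hK, ← add_sum_erase _ _ (zero_mem_frq Q), intS_zero]; simp
  have h2 := prod_univ_sum (fun _ : Fin m => frq q Q) (fun _ t => ‖intS q N t‖)
  rw [prod_const, h1, card_univ, card_fin, ← add_sum_erase _ _ h0] at h2
  simp only [Pi.zero_apply, intS_zero, prod_const, card_univ, card_fin, Complex.norm_natCast] at h2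
  have h3 := add_pow_sub_pow_le (a := N) (k := K) (by positivity) hK0 m
  calc _ ≤ m * K * (N + K) ^ (m - 1) := by linarith
    _ ≤ _ := by gcongr

end

section

/-- A factorisation `q = (∏ p ∈ P, p) * q2` into distinct primes and a coprime cofactor. -/
structure Dec (q : ℕ) (P : Finset ℕ) (q2 : ℕ) : Prop where
  prime : ∀ p ∈ P, p.Prime
  cop : ∀ p ∈ P, p.Coprime q2
  eq : q = (∏ p ∈ P, p) * q2

/-- The quantity by whose powers all losses are measured. -/
def loss (q : ℕ) (P : Finset ℕ) (q2 : ℕ) : ℝ :=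
  2 * 2 ^ P.card * q2 * (1 + log q)

variable {q : ℕ} [NeZero q] {P : Finset ℕ} {q2 : ℕ}

lemma Dec.q2_pos (h : Dec q P q2) : 0 < q2 := by
  rcases Nat.eq_zero_or_pos q2 with h0 | h0
  · have := h.eq; rw [h0, mul_zero] at this; exact absurd this (NeZero.ne q)
  · exact h0

lemma Dec.prod_le (h : Dec q P q2) : ∏ p ∈ P, p ≤ q := by
  conv_rhs => rw [h.eq]
  exact Nat.le_mul_of_pos_right _ h.q2_pos

lemma Dec.one_le_log (q : ℕ) [NeZero q] : 1 ≤ 1 + log q := by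
  have : 0 ≤ log q := log_nonneg (by exact_mod_cast NeZero.one_le)
  linarith

lemma Dec.le_loss (h : Dec q P q2) : 2 ≤ loss q P q2 ∧ (2 : ℝ) ^ P.card ≤ loss q P q2 ∧
    (q2 : ℝ) ≤ loss q P q2 ∧ 1 + log q ≤ loss q P q2 := by
  have h1 : (1 : ℝ) ≤ q2 := by exact_mod_cast h.q2_pos
  have h2 : (1 : ℝ) ≤ 2 ^ P.card := one_le_pow₀ (by norm_num)
  have h3 := Dec.one_le_log q
  unfold loss
  set a : ℝ := 2 ^ P.card
  set b : ℝ := (q2 : ℝ)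
  set c : ℝ := 1 + log q
  have hab : 1 ≤ a * b := one_le_mul_of_one_le_of_one_le h1 h2 |>.trans (by linarith [mul_comm a b])
  have hac : 1 ≤ a * c := one_le_mul_of_one_le_of_one_le h2 h3
  have hbc : 1 ≤ b * c := one_le_mul_of_one_le_of_one_le h1 h3
  have habc : 1 ≤ a * b * c := one_le_mul_of_one_le_of_one_le hab h3
  refine ⟨by nlinarith, ?_, ?_, ?_⟩
  · calc a = a * 1 := by ring
      _ ≤ a * (b * c) := by gcongr
      _ ≤ 2 * (a * (b * c)) := by nlinarith
      _ = _ := by ring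
  · calc b = b * 1 := by ring
      _ ≤ b * (a * c) := by gcongr
      _ ≤ 2 * (b * (a * c)) := by nlinarith
      _ = _ := by ring
  · calc c = c * 1 := by ring
      _ ≤ c * (a * b) := by gcongr
      _ ≤ 2 * (c * (a * b)) := by nlinarith
      _ = _ := by ring

lemma Dec.const_pow_le (h : Dec q P q2) {C : ℝ} {a : ℕ} (hC0 : 0 ≤ C) (hC : C ≤ 2 ^ a) :
    C ≤ loss q P q2 ^ a ∧ C ^ P.card ≤ loss q P q2 ^ a := by
  obtain ⟨h1, h2, -, -⟩ := h.le_loss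
  refine ⟨hC.trans (by gcongr), ?_⟩
  calc C ^ P.card ≤ (2 ^ a) ^ P.card := by gcongr
    _ = (2 ^ P.card) ^ a := by rw [← pow_mul, ← pow_mul, mul_comm]
    _ ≤ _ := by gcongr

lemma exists_two_pow_ge (C : ℝ) : ∃ a : ℕ, C ≤ 2 ^ a :=
  (pow_unbounded_of_one_lt C (by norm_num : (1 : ℝ) < 2)).imp fun _ h => h.le

/-- Number of `1 ≤ n ≤ N` in a residue class. -/
def wI (q N : ℕ) (x : ZMod q) : ℝ :=
  (((Icc 1 N).filter fun n => ((n : ℕ) : ZMod q) = x).card : ℝ)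

/-- Number of `(z, n_1, …, n_m)` with `n_i ≤ N` and `κ n_i ^ d = z + c_i` modulo `q`. -/
def boxCount (q d m : ℕ) [NeZero q] (κ : ℤ) (N : ℕ) (c : Fin m → ℤ) : ℝ :=
  ∑ s ∈ cpts q d m κ c, ∏ i, wI q N (s.2 i)

lemma wI_eq (N : ℕ) (x : ZMod q) :
    (q : ℂ) * wI q N x = ∑ t : ZMod q, intS q N (-t) * stdAddChar (t * x) := by
  have h1 : ∀ t : ZMod q, intS q N (-t) * stdAddChar (t * x) =
      ∑ n ∈ Icc 1 N, stdAddChar (t * (x - ((n : ℕ) : ZMod q))) := by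
    intro t
    unfold intS
    rw [sum_mul]
    refine sum_congr rfl fun n _ => ?_
    rw [← map_add_eq_mul]; congr 1; ring
  simp only [h1]
  rw [sum_comm]
  simp only [sum_mulShift _ (ZMod.isPrimitive_stdAddChar q), sub_eq_zero, ZMod.card]
  unfold wI
  rw [card_filter]
  push_cast
  rw [mul_sum]
  refine sum_congr rfl fun n _ => ?_
  by_cases hx : x = (n : ZMod q)
  · simp [hx]
  · rw [if_neg hx, if_neg fun h => hx h.symm]; simp

lemma stdAddChar_sum {ι : Type*} (s : Finset ι) (f : ι → ZMod q) :
    (stdAddChar (∑ i ∈ s, f i) : ℂ) = ∏ i ∈ s, stdAddChar (f i) := by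
  induction s using Finset.induction_on with
  | empty => simp
  | insert a s ha ih => rw [sum_insert ha, prod_insert ha, map_add_eq_mul, ih]

lemma boxCount_eq (d m : ℕ) (κ : ℤ) (N : ℕ) (c : Fin m → ℤ) : (q : ℂ) ^ m * boxCount q d m κ N c =
      ∑ t : Fin m → ZMod q, (∏ i, intS q N (- t i)) *
        expS q d m κ 0 (fun i => (t i).valMinAbs) c := by
  have h1 : ∀ s : ZMod q × (Fin m → ZMod q), (q : ℂ) ^ m * ((∏ i, wI q N (s.2 i) : ℝ) : ℂ) =
      ∑ t : Fin m → ZMod q, (∏ i, intS q N (- t i)) *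
        stdAddChar (((0 : ℤ) : ZMod q) * s.1 + ∑ i, ((t i).valMinAbs : ZMod q) * s.2 i) := by
    intro s
    have : (q : ℂ) ^ m * ((∏ i, wI q N (s.2 i) : ℝ) : ℂ) = ∏ i, ((q : ℂ) * wI q N (s.2 i)) := by
      rw [prod_mul_distrib]; simp
    rw [this]
    simp only [wI_eq]
    rw [prod_univ_sum, Fintype.piFinset_univ]
    refine sum_congr rfl fun t _ => ?_
    rw [prod_mul_distrib]
    congr 1
    simp only [ZMod.coe_valMinAbs, Int.cast_zero, zero_mul, zero_add]
    exact (stdAddChar_sum _ _).symm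
  unfold boxCount expS
  rw [Complex.ofReal_sum, mul_sum]
  simp only [h1]
  rw [sum_comm]
  refine sum_congr rfl fun t _ => ?_
  rw [← mul_sum]

omit [NeZero q] in
/-- Primes dividing a nonvanishing difference of two shifts contribute little. -/
lemma prod_bad_le (h : Dec q P q2) (c : Fin m → ℤ) (hc : Injective c) {W : ℝ}
    (hW : 1 ≤ W) (hcW : ∀ i j, |((c i - c j : ℤ) : ℝ)| ≤ W) :
    ((∏ p ∈ P.filter (fun p : ℕ => ¬ ∀ i j, i ≠ j → ¬ (p : ℤ) ∣ c i - c j), p : ℕ) : ℝ) ≤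
      W ^ (m ^ 2) := by
  set D : ℤ := ∏ e ∈ (univ : Finset (Fin m × Fin m)).filter (fun e => e.1 ≠ e.2), (c e.1 - c e.2)
    with hD
  have hD0 : D ≠ 0 := by
    rw [hD, prod_ne_zero_iff]
    intro e he
    rw [sub_ne_zero]
    exact fun h => (mem_filter.1 he).2 (hc h)
  have h1 : (∏ p ∈ P.filter (fun p : ℕ => ¬ ∀ i j, i ≠ j → ¬ (p : ℤ) ∣ c i - c j), p) ∣ D.natAbs := by
    refine prod_primes_dvd _ (fun p hp => (h.prime p (mem_filter.1 hp).1).prime) ?_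
    intro p hp
    have := (mem_filter.1 hp).2
    push Not at this
    obtain ⟨i, j, hij, hd⟩ := this
    rw [← natCast_dvd]
    refine hd.trans (dvd_prod_of_mem (fun e : Fin m × Fin m => c e.1 - c e.2) (a := (i, j)) ?_)
    simpa using hij
  have h2 := Nat.le_of_dvd (Int.natAbs_pos.2 hD0) h1
  calc _ ≤ ((D.natAbs : ℕ) : ℝ) := by exact_mod_cast h2
    _ = |(D : ℝ)| := by rw [← cast_abs, abs_eq_natAbs]; simp
    _ = ∏ e ∈ (univ : Finset (Fin m × Fin m)).filter (fun e => e.1 ≠ e.2),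
          |((c e.1 - c e.2 : ℤ) : ℝ)| := by rw [hD, Int.cast_prod, Finset.abs_prod]
    _ ≤ ∏ e ∈ (univ : Finset (Fin m × Fin m)).filter (fun e => e.1 ≠ e.2), W :=
        Finset.prod_le_prod (fun _ _ => abs_nonneg _) fun e _ => hcW _ _
    _ = W ^ ((univ : Finset (Fin m × Fin m)).filter (fun e => e.1 ≠ e.2)).card := by
        rw [prod_const]
    _ ≤ _ := by
        refine pow_le_pow_right₀ hW ((card_filter_le _ _).trans ?_)
        simp [sq]

omit [NeZero q] in
lemma prod_dvd_le_sum (h : Dec q P q2) (t : Fin m → ℤ) (f : ℕ → Prop) [DecidablePred f]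
    (hf : ∀ p, f p ↔ ∀ i, (p : ℤ) ∣ t i) : ((∏ p ∈ P.filter f, p : ℕ) : ℝ) ≤
      ∑ R ∈ P.powerset, if ∀ i, ((∏ p ∈ R, p : ℕ) : ℤ) ∣ t i then ((∏ p ∈ R, p : ℕ) : ℝ) else 0 := by
  have h0 : P.filter f ∈ P.powerset := mem_powerset.2 (filter_subset _ _)
  refine le_trans ?_ (Finset.single_le_sum (fun R _ => ?_) h0)
  · rw [if_pos]
    intro i
    rw [natCast_dvd]
    refine prod_primes_dvd _ (fun p hp => (h.prime p (mem_filter.1 hp).1).prime) ?_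
    intro p hp
    rw [← natCast_dvd]
    exact (hf p).1 (mem_filter.1 hp).2 i
  · split_ifs <;> positivity

lemma arith_five {u v e E g w W : ℝ} (hu : 0 ≤ u) (hv : 0 ≤ v) (he : 0 ≤ e) (hw : 0 ≤ w)
    (hW : 0 ≤ W) (heE : e ≤ E) (hg : g ≤ W) : u * v * e * g * w ≤ u * v * W * w * E := by
  have hE : 0 ≤ E := he.trans heE
  calc u * v * e * g * w ≤ u * v * e * W * w := by gcongr
    _ ≤ u * v * E * W * w := by gcongr
    _ = _ := by ring

/-- Completion: the number of points of the curve in a box is asymptotic to the expected one. -/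
theorem completion (m : ℕ) (hd2 : 2 ≤ d) : ∃ A : ℕ,
    ∀ (q : ℕ) [NeZero q] (P : Finset ℕ) (q2 : ℕ), Dec q P q2 → ∀ κ : ℤ, IsCoprime κ (q : ℤ) →
    ∀ N : ℕ, N ≤ q → ∀ c : Fin m → ℤ, Injective c → ∀ W : ℝ, 1 ≤ W →
    (∀ i j, |((c i - c j : ℤ) : ℝ)| ≤ W) →
      |boxCount q d m κ N c - ((N : ℝ) / q) ^ m * (cpts q d m κ c).card| ≤
        loss q P q2 ^ A * (q : ℝ) ^ (7 / 8 : ℝ) * W ^ (m ^ 2) := by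
  obtain ⟨C, hC1, hC⟩ := expS_le m hd2
  obtain ⟨a, ha⟩ := exists_two_pow_ge C
  obtain ⟨b, hb⟩ := exists_two_pow_ge (m * 2 ^ m)
  refine ⟨1 + b + m + a + (m + 1), fun q _ P q2 hdec κ hκ N hN c hc W hW hcW => ?_⟩
  have hq : (0 : ℝ) < q := by exact_mod_cast (NeZero.pos q)
  set Y := loss q P q2 with hY
  obtain ⟨hY2, hYP, hYq2, hYL⟩ := hdec.le_loss
  rw [← hY] at hY2 hYP hYq2 hYL
  set L := 1 + log q with hL
  have hL1 : 1 ≤ L := Dec.one_le_log q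
  set G : ℝ := C ^ P.card * ((∏ p ∈ P, p : ℕ) : ℝ) ^ (7 / 8 : ℝ) * W ^ (m ^ 2) * (q2 : ℝ) ^ (m + 1)
    with hG
  have hG0 : 0 ≤ G := by positivity
  -- the error term in the Fourier expansion
  have h1 : (q : ℝ) ^ m * |boxCount q d m κ N c - ((N : ℝ) / q) ^ m * (cpts q d m κ c).card| ≤
      ∑ t ∈ (univ : Finset (Fin m → ZMod q)).erase 0, (∏ i, ‖intS q N (t i)‖) *
        ‖expS q d m κ 0 (fun i => (t i).valMinAbs) c‖ := by
    have e := boxCount_eq (q := q) d m κ N c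
    rw [← add_sum_erase _ _ (mem_univ (0 : Fin m → ZMod q))] at e
    have e0 : (∏ i : Fin m, intS q N (-(0 : Fin m → ZMod q) i)) *
        expS q d m κ 0 (fun i => ((0 : Fin m → ZMod q) i).valMinAbs) c =
        (N : ℂ) ^ m * (cpts q d m κ c).card := by
      simp [intS_zero, expS]
    rw [e0] at e
    have e1 : (((q : ℝ) ^ m * (boxCount q d m κ N c - ((N : ℝ) / q) ^ m * (cpts q d m κ c).card) : ℝ) : ℂ) =
      ∑ t ∈ (univ : Finset (Fin m → ZMod q)).erase 0, (∏ i, intS q N (- t i)) *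
        expS q d m κ 0 (fun i => (t i).valMinAbs) c := by
      rw [mul_sub, div_pow, ← mul_assoc, mul_div_cancel₀ _ (by positivity)]
      push_cast
      rw [e]; ring
    have e2 := congrArg norm e1
    rw [Complex.norm_real, norm_eq_abs, abs_mul, abs_of_pos (by positivity)] at e2
    rw [e2]
    refine (norm_sum_le _ _).trans (sum_le_sum fun t _ => ?_)
    rw [norm_mul, norm_prod]
    simp only [intS_neg]
    exact le_rfl
  have h2 : ∀ t : Fin m → ZMod q, ‖expS q d m κ 0 (fun i => (t i).valMinAbs) c‖ ≤
      G * ∑ R ∈ P.powerset, if ∀ i, ((∏ p ∈ R, p : ℕ) : ℤ) ∣ (t i).valMinAbs then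
        ((∏ p ∈ R, p : ℕ) : ℝ) else 0 := by
    intro t
    have A1 := hC P hdec.prime q2 hdec.cop q hdec.eq κ hκ (fun i => (t i).valMinAbs) c
    have A2 := prod_dvd_le_sum hdec (fun i => (t i).valMinAbs)
      (fun p : ℕ => ∀ i, (p : ℤ) ∣ (t i).valMinAbs) fun p => Iff.rfl
    have A3 := prod_bad_le hdec c hc hW hcW
    have A4 : (0 : ℝ) ≤ C ^ P.card := by positivity
    have A5 : 0 ≤ ((∏ p ∈ P, p : ℕ) : ℝ) ^ (7 / 8 : ℝ) := by positivity
    have A6 : 0 ≤ W ^ (m ^ 2) := by positivity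
    exact A1.trans (arith_five A4 A5 (cast_nonneg _) (by positivity) A6 A2 A3)
  have h3 : ∑ t ∈ (univ : Finset (Fin m → ZMod q)).erase 0, (∏ i, ‖intS q N (t i)‖) *
        ‖expS q d m κ 0 (fun i => (t i).valMinAbs) c‖ ≤
      G * ∑ R ∈ P.powerset, ((∏ p ∈ R, p : ℕ) : ℝ) *
        ∑ t ∈ (piFinset fun _ : Fin m => frq q (∏ p ∈ R, p)).erase 0,
          ∏ i, ‖intS q N (t i)‖ := by
    calc _ ≤ ∑ t ∈ (univ : Finset (Fin m → ZMod q)).erase 0, (∏ i, ‖intS q N (t i)‖) *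
        (G * ∑ R ∈ P.powerset, if ∀ i, ((∏ p ∈ R, p : ℕ) : ℤ) ∣ (t i).valMinAbs then
        ((∏ p ∈ R, p : ℕ) : ℝ) else 0) := by
          gcongr with t _
          exact h2 t
      _ = G * ∑ R ∈ P.powerset, ∑ t ∈ (univ : Finset (Fin m → ZMod q)).erase 0,
          (∏ i, ‖intS q N (t i)‖) * if ∀ i, ((∏ p ∈ R, p : ℕ) : ℤ) ∣ (t i).valMinAbs then
            ((∏ p ∈ R, p : ℕ) : ℝ) else 0 := by
          rw [sum_comm, mul_sum]
          refine sum_congr rfl fun t _ => ?_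
          rw [← mul_sum, mul_left_comm]
      _ = _ := by
          congr 1
          refine sum_congr rfl fun R _ => ?_
          rw [mul_sum]
          simp only [mul_ite, mul_zero]
          rw [← sum_filter]
          refine sum_congr ?_ fun t _ => mul_comm _ _
          ext t
          simp [frq, and_comm]
  have h4 : ∀ R ∈ P.powerset, ((∏ p ∈ R, p : ℕ) : ℝ) *
        ∑ t ∈ (piFinset fun _ : Fin m => frq q (∏ p ∈ R, p)).erase 0,
          ∏ i, ‖intS q N (t i)‖ ≤ m * 2 ^ m * L ^ m * q ^ m := by
    intro R hR
    have hR0 : 0 < ∏ p ∈ R, p := prod_pos fun p hp =>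
      (hdec.prime p (mem_powerset.1 hR hp)).pos
    rcases Nat.eq_zero_or_pos m with rfl | hm
    · have := sum_prod_intS_le (q := q) 0 N (∏ p ∈ R, p) hR0
      simp only [Nat.cast_zero, zero_mul] at this ⊢
      exact mul_nonpos_of_nonneg_of_nonpos (by positivity) this
    have hR1 : (1 : ℝ) ≤ (∏ p ∈ R, p : ℕ) := by exact_mod_cast hR0
    have hN' : (N : ℝ) ≤ q := by exact_mod_cast hN
    have hqR : (q : ℝ) / (∏ p ∈ R, p : ℕ) ≤ q := div_le_self hq.le hR1
    calc _ ≤ ((∏ p ∈ R, p : ℕ) : ℝ) * (m * (q / (∏ p ∈ R, p : ℕ) * L) * (N + q / (∏ p ∈ R, p : ℕ) * L) ^ (m - 1)) := by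
          gcongr; exact sum_prod_intS_le m N _ hR0
      _ ≤ ((∏ p ∈ R, p : ℕ) : ℝ) * (m * (q / (∏ p ∈ R, p : ℕ) * L) * (q * L + q * L) ^ (m - 1)) := by
          gcongr
          nlinarith
      _ = m * 2 ^ (m - 1) * (q * L) ^ (m - 1 + 1) := by
          rw [← two_mul, mul_pow, pow_succ]
          field_simp
      _ ≤ m * 2 ^ m * (q * L) ^ m := by
          rw [Nat.sub_add_cancel hm]
          gcongr
          · norm_num
          · omega
      _ = _ := by ring_nf
  have h5 : (q : ℝ) ^ m * |boxCount q d m κ N c - ((N : ℝ) / q) ^ m * (cpts q d m κ c).card| ≤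
      (q : ℝ) ^ m * (2 ^ P.card * (m * 2 ^ m) * L ^ m * G) := by
    refine (h1.trans h3).trans ?_
    calc _ ≤ G * ∑ R ∈ P.powerset, (m * 2 ^ m * L ^ m * q ^ m : ℝ) := by
          exact mul_le_mul_of_nonneg_left (sum_le_sum h4) hG0
      _ = _ := by
          rw [sum_const, Finset.card_powerset, nsmul_eq_mul]; push_cast; ring
  refine (le_of_mul_le_mul_left h5 (by positivity)).trans ?_
  have h6 : ((∏ p ∈ P, p : ℕ) : ℝ) ^ (7 / 8 : ℝ) ≤ (q : ℝ) ^ (7 / 8 : ℝ) := by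
    refine Real.rpow_le_rpow (by positivity) (by exact_mod_cast hdec.prod_le) (by norm_num)
  calc (2 : ℝ) ^ P.card * (m * 2 ^ m) * L ^ m * G
      ≤ Y * Y ^ b * Y ^ m * (Y ^ a * (q : ℝ) ^ (7 / 8 : ℝ) * W ^ (m ^ 2) * Y ^ (m + 1)) := by
        rw [hG]
        gcongr
        · exact (hdec.const_pow_le (by positivity) hb).1
        · exact (hdec.const_pow_le (by linarith) ha).2
    _ = _ := by ring

end

section

/-- The number of solutions of `κ x ^ d = y` modulo `q`. -/
def fib (q d : ℕ) [NeZero q] (κ : ℤ) (y : ZMod q) : ℝ :=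
  ((univ.filter fun x : ZMod q => (κ : ZMod q) * x ^ d = y).card : ℝ)

/-- The average of `fib` over the window `y + 1, …, y + S`. -/
def fibAvg (q d : ℕ) [NeZero q] (κ : ℤ) (S : ℕ) (y : ZMod q) : ℝ :=
  1 / (S : ℝ) * ∑ s ∈ Icc 1 S, fib q d κ (y + ((s : ℕ) : ZMod q))

lemma fib_nonneg (q d : ℕ) [NeZero q] (κ : ℤ) (y : ZMod q) : 0 ≤ fib q d κ y := cast_nonneg _

lemma card_fib_mul {q q' : ℕ} [NeZero q] [NeZero q'] [NeZero (q * q')] (h : q.Coprime q')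
    (d : ℕ) (κ y : ℤ) : fib (q * q') d κ (y : ZMod (q * q')) ≤ fib q d κ (y : ZMod q) * fib q' d κ (y : ZMod q') := by
  let π1 := castHom (dvd_mul_right q q') (ZMod q)
  let π2 := castHom (dvd_mul_left q' q) (ZMod q')
  unfold fib
  rw [← Nat.cast_mul, ← card_product]
  refine Nat.cast_le.2 (card_le_card_of_injOn (fun x => (π1 x, π2 x)) ?_ ?_)
  · intro x hx
    have hx := (mem_filter.1 (mem_coe.1 hx)).2
    simp only [coe_product, coe_filter, mem_univ, true_and, Set.mem_prod,
      mem_ofPred_eq]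
    constructor
    · have := congrArg π1 hx
      rwa [map_mul, map_pow, map_intCast, map_intCast] at this
    · have := congrArg π2 hx
      rwa [map_mul, map_pow, map_intCast, map_intCast] at this
  · intro x _ x' _ hxx
    exact crt_injective h (Prod.ext_iff.1 hxx).1 (Prod.ext_iff.1 hxx).2

lemma fib_prime_le {p : ℕ} [NeZero p] (hp : p.Prime) (hd : 0 < d) (hκ : ¬ (p : ℤ) ∣ κ)
    (y : ZMod p) : fib p d κ y ≤ d := by
  have : Fact p.Prime := ⟨hp⟩
  have hκ' : (κ : ZMod p) ≠ 0 := by rwa [Ne, intCast_zmod_eq_zero_iff_dvd]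
  unfold fib
  refine Nat.cast_le.2 (le_trans (card_le_card fun x hx => ?_) (Multiset.toFinset_card_le _ |>.trans
      (card_nthRoots d ((κ : ZMod p)⁻¹ * y))))
  rw [Multiset.mem_toFinset, mem_nthRoots hd, ← (mem_filter.1 hx).2,
    inv_mul_cancel_left₀ hκ']

lemma not_dvd_of_coprime {q q2 : ℕ} (h : Dec q P q2) (hκ : IsCoprime κ (q : ℤ)) {p : ℕ} (hp : p ∈ P) : ¬ (p : ℤ) ∣ κ := by
  intro hd
  have hpq : (p : ℤ) ∣ q := by
    rw [h.eq]; exact_mod_cast (dvd_prod_of_mem _ hp).mul_right _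
  exact (Nat.prime_iff_prime_int.1 (h.prime p hp)).not_isUnit (hκ.isUnit_of_dvd' hd hpq)

lemma fib_le (hd : 0 < d) (P : Finset ℕ) (q q2 : ℕ) [NeZero q] (h : Dec q P q2) (hκ : IsCoprime κ (q : ℤ)) (y : ℤ) : fib q d κ (y : ZMod q) ≤ (d : ℝ) ^ P.card * q2 := by
  induction P using Finset.induction_on generalizing q with
  | empty =>
    have hq : q = q2 := by simpa using h.eq
    subst hq
    rw [Finset.card_empty, pow_zero, one_mul]
    unfold fib
    refine Nat.cast_le.2 ((Finset.card_le_univ _).trans ?_)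
    rw [ZMod.card]
  | insert p P hpP ih =>
    have hq : q = p * ((∏ p ∈ P, p) * q2) := by rw [h.eq, prod_insert hpP, mul_assoc]
    have hpp := h.prime p (mem_insert_self _ _)
    have : NeZero p := ⟨hpp.ne_zero⟩
    have : NeZero ((∏ p ∈ P, p) * q2) := ⟨fun h0 => NeZero.ne q (by rw [hq, h0, mul_zero])⟩
    subst hq
    have hdec : Dec ((∏ p ∈ P, p) * q2) P q2 := ⟨fun p hp => h.prime p (mem_insert_of_mem hp),
      fun p hp => h.cop p (mem_insert_of_mem hp), rfl⟩
    have hcop : p.Coprime ((∏ p ∈ P, p) * q2) := by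
      refine Coprime.mul_right (Coprime.prod_right fun r hr => ?_)
        (h.cop p (mem_insert_self _ _))
      exact (Nat.coprime_primes hpp (hdec.prime r hr)).2 fun e => hpP (e ▸ hr)
    have h1 := card_fib_mul hcop d κ y
    have h2 := fib_prime_le (d := d) hpp hd (not_dvd_of_coprime h hκ (mem_insert_self _ _)) (y : ZMod p)
    have h3 := ih _ hdec (hκ.of_isCoprime_of_dvd_right (by push_cast; exact dvd_mul_left _ _))
    rw [card_insert_of_notMem hpP, pow_succ']
    calc _ ≤ _ := h1
      _ ≤ d * ((d : ℝ) ^ P.card * q2) := mul_le_mul h2 h3 (fib_nonneg _ _ _ _) (by positivity)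
      _ = _ := by ring

variable {q : ℕ} [NeZero q]

lemma sum_fib (d : ℕ) (κ : ℤ) (g : ZMod q → ℂ) :
    ∑ y, (fib q d κ y : ℂ) * g y = ∑ x : ZMod q, g (κ * x ^ d) := by
  rw [← sum_fiberwise (s := univ) (g := fun x : ZMod q => (κ : ZMod q) * x ^ d)
    (f := fun x : ZMod q => g (κ * x ^ d))]
  refine sum_congr rfl fun y _ => ?_
  rw [sum_congr rfl (g := fun _ => g y) fun x hx => by rw [(mem_filter.1 hx).2],
    sum_const, nsmul_eq_mul]
  simp [fib]

lemma sum_fib_one (d : ℕ) (κ : ℤ) : ∑ y, fib q d κ y = q := by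
  have := sum_fib (q := q) d κ fun _ => 1
  simp only [mul_one, sum_const, card_univ, ZMod.card, nsmul_eq_mul] at this
  exact_mod_cast this

lemma card_cpts (d m : ℕ) (κ : ℤ) (c : Fin m → ℤ) :
    ((cpts q d m κ c).card : ℝ) = ∑ z : ZMod q, ∏ i, fib q d κ (z + (c i : ZMod q)) := by
  have h1 : ∀ z : ZMod q, ∏ i, fib q d κ (z + (c i : ZMod q)) =
      ((piFinset fun i => univ.filter fun x : ZMod q =>
        (κ : ZMod q) * x ^ d = z + c i).card : ℝ) := by
    intro z
    rw [card_piFinset]; push_cast; rfl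
  simp only [h1]
  rw [← Nat.cast_sum]
  congr 1
  rw [card_eq_sum_card_fiberwise (f := fun s => s.1) (t := univ)
    (fun _ _ => mem_coe.2 (mem_univ _))]
  refine sum_congr rfl fun z _ => ?_
  refine Finset.card_nbij' (fun s => s.2) (fun x => (z, x)) ?_ ?_ ?_ ?_
  · intro s hs
    simp only [cpts, coe_filter, mem_filter, mem_univ, true_and, mem_ofPred_eq] at hs
    simp only [mem_coe, mem_piFinset, mem_filter, mem_univ, true_and]
    intro i; rw [hs.1 i, hs.2]
  · intro x hx
    simp only [mem_coe, mem_piFinset, mem_filter, mem_univ, true_and] at hx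
    simp only [cpts, coe_filter, mem_filter, mem_univ, true_and, mem_ofPred_eq]
    exact ⟨hx, trivial⟩
  · intro s hs
    simp only [coe_filter, mem_ofPred_eq] at hs
    exact Prod.ext hs.2.symm rfl
  · intro x hx; rfl

lemma parseval (f : ZMod q → ℝ) :
    ∑ t : ZMod q, ‖∑ y, (f y : ℂ) * stdAddChar (t * y)‖ ^ 2 = q * ∑ y, f y ^ 2 := by
  have h1 : ∀ t : ZMod q, ((‖∑ y, (f y : ℂ) * stdAddChar (t * y)‖ ^ 2 : ℝ) : ℂ) =
      ∑ y, ∑ y', (f y * f y' : ℂ) * stdAddChar (t * (y - y')) := by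
    intro t
    push_cast
    rw [← mul_conj', map_sum, sum_mul_sum]
    refine sum_congr rfl fun y _ => sum_congr rfl fun y' _ => ?_
    rw [map_mul (starRingEnd ℂ), Complex.conj_ofReal, ← map_neg_eq_conj, mul_mul_mul_comm,
      ← map_add_eq_mul]
    congr 2; ring
  have h2 : ∑ t : ZMod q, ((‖∑ y, (f y : ℂ) * stdAddChar (t * y)‖ ^ 2 : ℝ) : ℂ) =
      ((q * ∑ y, f y ^ 2 : ℝ) : ℂ) := by
    simp only [h1]
    rw [sum_comm]
    push_cast
    rw [mul_sum]
    refine sum_congr rfl fun y _ => ?_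
    rw [sum_comm]
    simp only [← mul_sum, sum_mulShift _ (ZMod.isPrimitive_stdAddChar q), sub_eq_zero,
      ZMod.card]
    rw [sum_eq_single y]
    · simp; ring
    · intro y' _ hy'
      rw [if_neg (Ne.symm hy')]; simp
    · simp
  exact_mod_cast h2

lemma sum_fibAvg (d S : ℕ) (κ : ℤ) (t : ZMod q) : ∑ y, (fibAvg q d κ S y : ℂ) * stdAddChar (t * y) =
      1 / (S : ℂ) * (intS q S (-t) * gaussS q d (t.valMinAbs * κ)) := by
  have h1 : ∀ s : ℕ, ∑ y, (fib q d κ (y + (s : ZMod q)) : ℂ) * stdAddChar (t * y) =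
      stdAddChar (-t * (s : ZMod q)) * gaussS q d (t.valMinAbs * κ) := by
    intro s
    have h2 : ∑ y, (fib q d κ (y + (s : ZMod q)) : ℂ) * stdAddChar (t * y) =
        ∑ y, (fib q d κ y : ℂ) * stdAddChar (t * (y - (s : ZMod q))) :=
      sum_equiv (Equiv.addRight (s : ZMod q)) _ _ fun y => by simp
    rw [h2, sum_fib, gaussS, mul_sum]
    refine sum_congr rfl fun x _ => ?_
    rw [← map_add_eq_mul]
    congr 1; push_cast; ring
  unfold fibAvg intS
  push_cast
  simp only [mul_assoc]
  rw [← mul_sum]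
  congr 1
  simp only [sum_mul]
  rw [sum_comm]
  exact sum_congr rfl fun s _ => h1 s

/-- The averages of `fib` over windows of length `S` have variance `O(1 / S)`. -/
theorem variance_le (hd : 0 < d) : ∃ A : ℕ,
    ∀ (q : ℕ) [NeZero q] (P : Finset ℕ) (q2 : ℕ), Dec q P q2 → ∀ κ : ℤ, IsCoprime κ (q : ℤ) →
    ∀ S : ℕ, 0 < S → ∑ y, (fibAvg q d κ S y - 1) ^ 2 ≤ loss q P q2 ^ A * q / S := by
  obtain ⟨a, ha⟩ := exists_two_pow_ge ((d : ℝ) ^ 2)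
  refine ⟨1 + a + 4 + 1, fun q _ P q2 hdec κ hκ S hS => ?_⟩
  have hq : (0 : ℝ) < q := by exact_mod_cast (NeZero.pos q)
  have hS' : (0 : ℝ) < S := by exact_mod_cast hS
  set Y := loss q P q2 with hY
  obtain ⟨hY2, hYP, hYq2, hYL⟩ := hdec.le_loss
  rw [← hY] at hY2 hYP hYq2 hYL
  set L := 1 + log q with hL
  have hL1 : 1 ≤ L := Dec.one_le_log q
  set G : ℝ := ((d : ℝ) ^ 2) ^ P.card * (∏ p ∈ P, p : ℕ) * (q2 : ℝ) ^ 4 with hG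
  have hG0 : 0 ≤ G := by positivity
  have hF : ∀ t : ZMod q, ∑ y, ((fibAvg q d κ S y - 1 : ℝ) : ℂ) * stdAddChar (t * y) =
      if t = 0 then 0 else 1 / (S : ℂ) * (intS q S (-t) * gaussS q d (t.valMinAbs * κ)) := by
    intro t
    have h1 : ∑ y, ((fibAvg q d κ S y - 1 : ℝ) : ℂ) * stdAddChar (t * y) =
        ∑ y, (fibAvg q d κ S y : ℂ) * stdAddChar (t * y) - ∑ y, stdAddChar (y * t) := by
      rw [← sum_sub_distrib]
      refine sum_congr rfl fun y _ => ?_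
      rw [mul_comm y t]; push_cast; ring
    rw [h1, sum_fibAvg, sum_mulShift _ (ZMod.isPrimitive_stdAddChar q), ZMod.card]
    split_ifs with h
    · have hSc : (S : ℂ) ≠ 0 := by exact_mod_cast hS.ne'
      rw [h]
      simp [intS_zero, gaussS, ZMod.card, hSc]
    · simp
  have hP := parseval (q := q) fun y => fibAvg q d κ S y - 1
  have h2 : ∀ t ∈ (univ : Finset (ZMod q)).erase 0,
      ‖∑ y, ((fibAvg q d κ S y - 1 : ℝ) : ℂ) * stdAddChar (t * y)‖ ^ 2 ≤
      1 / S * G * ∑ R ∈ P.powerset, ‖intS q S t‖ * if (((∏ p ∈ R, p : ℕ) : ℤ) ∣ t.valMinAbs) then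
        ((∏ p ∈ R, p : ℕ) : ℝ) else 0 := by
    intro t ht
    rw [hF t, if_neg (mem_erase.1 ht).1, norm_mul, norm_mul, intS_neg]
    have A1 := gaussS_le hd P hdec.prime q2 hdec.cop q hdec.eq hκ t.valMinAbs
    have A2 := prod_dvd_le_sum (m := 1) hdec (fun _ => t.valMinAbs)
      (fun p : ℕ => (p : ℤ) ∣ t.valMinAbs) fun p => by simp
    simp only [forall_const] at A2
    set E := ∑ R ∈ P.powerset, if (((∏ p ∈ R, p : ℕ) : ℤ) ∣ t.valMinAbs) then
        ((∏ p ∈ R, p : ℕ) : ℝ) else 0 with hE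
    rw [← mul_sum, ← hE]
    have A3 : ‖gaussS q d (t.valMinAbs * κ)‖ ^ 2 ≤ G * E := by
      refine A1.trans ?_
      calc _ ≤ ((d : ℝ) ^ 2) ^ P.card * ((∏ p ∈ P, p : ℕ) : ℝ) * E * (q2 : ℝ) ^ 4 :=
            mul_le_mul_of_nonneg_right (mul_le_mul_of_nonneg_left A2 (by positivity)) (by positivity)
        _ = _ := by rw [hG]; ring
    have A4 := intS_le S t
    have A5 : ‖(1 / (S : ℂ))‖ = 1 / S := by simp
    rw [A5]
    calc _ = (1 / (S : ℝ)) ^ 2 * (‖intS q S t‖ * ‖intS q S t‖) * ‖gaussS q d (t.valMinAbs * κ)‖ ^ 2 := by ring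
      _ ≤ (1 / (S : ℝ)) ^ 2 * (S * ‖intS q S t‖) * (G * E) := by gcongr
      _ = _ := by field_simp
  have h3 : q * ∑ y, (fibAvg q d κ S y - 1) ^ 2 ≤ q * (2 ^ P.card * L * G / S) := by
    rw [← hP, ← add_sum_erase _ _ (mem_univ (0 : ZMod q)), hF 0, if_pos rfl]
    simp only [norm_zero, ne_eq, OfNat.ofNat_ne_zero, not_false_eq_true, zero_pow, zero_add]
    refine (sum_le_sum h2).trans ?_
    rw [← mul_sum, sum_comm]
    have h4 : ∀ R ∈ P.powerset, ∑ t ∈ (univ : Finset (ZMod q)).erase 0, ‖intS q S t‖ *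
        (if (((∏ p ∈ R, p : ℕ) : ℤ) ∣ t.valMinAbs) then ((∏ p ∈ R, p : ℕ) : ℝ) else 0) ≤ q * L := by
      intro R hR
      have hR0 : 0 < ∏ p ∈ R, p := prod_pos fun p hp =>
        (hdec.prime p (mem_powerset.1 hR hp)).pos
      have hR1 : (0 : ℝ) < (∏ p ∈ R, p : ℕ) := by exact_mod_cast hR0
      simp only [mul_ite, mul_zero]
      rw [← sum_filter, ← sum_mul]
      have : ((univ : Finset (ZMod q)).erase 0).filter
          (fun t => (((∏ p ∈ R, p : ℕ) : ℤ) ∣ t.valMinAbs)) = (frq q (∏ p ∈ R, p)).erase 0 := by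
        ext t; simp [frq, and_comm]
      rw [this]
      calc _ ≤ (q / (∏ p ∈ R, p : ℕ) * L) * ((∏ p ∈ R, p : ℕ) : ℝ) := by
            exact mul_le_mul_of_nonneg_right (sum_intS_le S _ hR0) hR1.le
        _ = _ := by field_simp
    calc _ ≤ 1 / S * G * ∑ R ∈ P.powerset, (q * L) :=
          mul_le_mul_of_nonneg_left (sum_le_sum h4) (by positivity)
      _ = _ := by
          rw [sum_const, Finset.card_powerset, nsmul_eq_mul]; push_cast; ring
  refine (le_of_mul_le_mul_left h3 hq).trans (div_le_div_of_nonneg_right ?_ hS'.le)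
  have h6 : ((∏ p ∈ P, p : ℕ) : ℝ) ≤ q := by exact_mod_cast hdec.prod_le
  calc (2 : ℝ) ^ P.card * L * G ≤ Y * Y * (Y ^ a * q * Y ^ 4) := by
        rw [hG]; gcongr
        exact (hdec.const_pow_le (by positivity) ha).2
    _ = _ := by ring

/-- Pointwise bound for the fibres. -/
theorem fib_le_loss (hd : 0 < d) : ∃ A : ℕ,
    ∀ (q : ℕ) [NeZero q] (P : Finset ℕ) (q2 : ℕ), Dec q P q2 → ∀ κ : ℤ, IsCoprime κ (q : ℤ) →
    ∀ y : ZMod q, fib q d κ y ≤ loss q P q2 ^ A := by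
  obtain ⟨a, ha⟩ := exists_two_pow_ge (d : ℝ)
  refine ⟨a + 1, fun q _ P q2 hdec κ hκ y => ?_⟩
  have h1 := fib_le hd P q q2 hdec hκ y.valMinAbs
  rw [ZMod.coe_valMinAbs] at h1
  refine h1.trans ?_
  rw [pow_succ]
  obtain ⟨hY2, hYP, hYq2, hYL⟩ := hdec.le_loss
  have := (hdec.const_pow_le (by positivity) ha).2
  gcongr

end

section

/-- The shifts `c_0 = 0`, `c_{i+1} = c_i - h_i` attached to a vector `h` of consecutive gaps. -/
def shf {M : ℕ} (h : Fin M → ℤ) : Fin (M + 1) → ℤ := fun j => - Fin.partialSum h j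

lemma shf_zero (h : Fin M → ℤ) : shf h 0 = 0 := by simp [shf]

lemma shf_succ (h : Fin M → ℤ) (i : Fin M) : shf h i.succ = shf h i.castSucc - h i := by
  rw [shf, shf, Fin.partialSum_succ]; ring

/-- Consecutive differences of a vector of integers. -/
def gaps {M : ℕ} (s : Fin (M + 1) → ℤ) : Fin M → ℤ := fun i => s i.castSucc - s i.succ

lemma shf_add_gaps (h : Fin M → ℤ) (s : Fin (M + 1) → ℤ) (j : Fin (M + 1)) :
    shf (h + gaps s) j = shf h j + s j - s 0 := by
  induction j using Fin.induction with
  | zero => simp [shf_zero]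
  | succ i ih => rw [shf_succ, ih, shf_succ, Pi.add_apply, gaps]; ring

lemma shf_le (h : Fin M → ℤ) {W : ℝ} (hh : ∀ i, |(h i : ℝ)| ≤ W) (j : Fin (M + 1)) :
    |(shf h j : ℝ)| ≤ j * W := by
  induction j using Fin.induction with
  | zero => simp [shf_zero]
  | succ i ih =>
    rw [shf_succ]; push_cast
    calc _ ≤ |(shf h i.castSucc : ℝ)| + |(h i : ℝ)| := abs_sub _ _
      _ ≤ i * W + W := add_le_add (by simpa using ih) (hh i)
      _ = _ := by simp; ring

lemma shf_sub_le (h : Fin M → ℤ) {W : ℝ} (hh : ∀ i, |(h i : ℝ)| ≤ W) (hW : 0 ≤ W)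
    (i j : Fin (M + 1)) : |((shf h i - shf h j : ℤ) : ℝ)| ≤ 2 * M * W := by
  have h1 := shf_le h hh i
  have h2 := shf_le h hh j
  have h3 : ((i : ℕ) : ℝ) ≤ M := by exact_mod_cast Nat.lt_succ_iff.1 i.2
  have h4 : ((j : ℕ) : ℝ) ≤ M := by exact_mod_cast Nat.lt_succ_iff.1 j.2
  push_cast
  calc _ ≤ |(shf h i : ℝ)| + |(shf h j : ℝ)| := abs_sub _ _
    _ ≤ M * W + M * W := add_le_add (h1.trans (by gcongr)) (h2.trans (by gcongr))
    _ = _ := by ring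

/-- Integer vectors of sup norm at most `W`. -/
def box (M W : ℕ) : Finset (Fin M → ℤ) :=
  piFinset fun _ : Fin M => Icc (-(W : ℤ)) W

lemma mem_box {W : ℕ} : h ∈ box M W ↔ ∀ i, |h i| ≤ (W : ℤ) := by
  simp [box, abs_le]

lemma card_box (M W : ℕ) : (box M W).card = (2 * W + 1) ^ M := by
  rw [box, card_piFinset, prod_const, Int.card_Icc, card_univ, card_fin]
  congr 1; omega

/-- Quantitative data for a test function: `B` bounds its size, its Lipschitz constant and the
size of its support. -/
structure TF (M : ℕ) (f : (Fin M → ℝ) → ℝ) (B : ℝ) : Prop where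
  one_le : 1 ≤ B
  lip : ∀ x y, |f x - f y| ≤ B * ‖x - y‖
  bdd : ∀ x, |f x| ≤ B
  supp : ∀ x, (∃ i, B < |x i|) → f x = 0

/-- The value of `f` at the rescaled lattice point `h / H`. -/
def smp {M : ℕ} (f : (Fin M → ℝ) → ℝ) (H : ℝ) (h : Fin M → ℤ) : ℝ :=
  f fun i => (h i : ℝ) / H

lemma TF.mem_box (hf : TF M f B) (hH : 0 < H)
    (hne : smp f H h ≠ 0) {W : ℕ} (hW : ⌊B * H⌋₊ ≤ W) : h ∈ box M W := by
  rw [Pois.mem_box]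
  intro i
  by_contra hi
  refine hne (hf.supp _ ⟨i, ?_⟩)
  push Not at hi
  have h1 : B * H < |(h i : ℝ)| := by
    have h2 : B * H < ⌊B * H⌋₊ + 1 := Nat.lt_floor_add_one _
    have h3 : ((W + 1 : ℤ) : ℝ) ≤ ((|h i| : ℤ) : ℝ) := by exact_mod_cast hi
    push_cast at h3
    have h4 : (⌊B * H⌋₊ : ℝ) ≤ W := by exact_mod_cast hW
    linarith
  rwa [abs_div, abs_of_pos hH, lt_div_iff₀ hH]

/-- The local density attached to the gaps `h`. -/
def sig (q d M : ℕ) [NeZero q] (κ : ℤ) (h : Fin M → ℤ) : ℝ :=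
  1 / (q : ℝ) * (cpts q d (M + 1) κ (shf h)).card

variable {q : ℕ} [NeZero q]

lemma sig_nonneg (d M : ℕ) (κ : ℤ) (h : Fin M → ℤ) : 0 ≤ sig q d M κ h := by
  unfold sig; positivity

lemma sig_eq (d M : ℕ) (κ : ℤ) (h : Fin M → ℤ) :
    sig q d M κ h = 1 / (q : ℝ) * ∑ z : ZMod q, ∏ i, fib q d κ (z + (shf h i : ZMod q)) := by
  rw [sig, card_cpts]

lemma sig_add_gaps (d M : ℕ) (κ : ℤ) (h : Fin M → ℤ) (s : Fin (M + 1) → ℤ) :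
    sig q d M κ (h + gaps s) =
      1 / (q : ℝ) * ∑ z : ZMod q, ∏ i, fib q d κ (z + (shf h i : ZMod q) + (s i : ZMod q)) := by
  rw [sig_eq]
  congr 1
  refine (sum_equiv (Equiv.addRight ((s 0 : ℤ) : ZMod q)) _ _ fun z => ?_).symm
  refine prod_congr rfl fun i _ => ?_
  rw [shf_add_gaps]; congr 1; push_cast; simp only [Equiv.coe_addRight]; ring

lemma sig_le (M : ℕ) {T : ℝ} (hT : ∀ y, fib q d κ y ≤ T) (h : Fin M → ℤ) :
    sig q d M κ h ≤ T ^ (M + 1) := by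
  have hq : (0 : ℝ) < q := by exact_mod_cast (NeZero.pos q)
  rw [sig_eq]
  have : ∑ z : ZMod q, ∏ i, fib q d κ (z + (shf h i : ZMod q)) ≤ ∑ z : ZMod q, T ^ (M + 1) := by
    refine sum_le_sum fun z _ => ?_
    refine (Finset.prod_le_prod (fun _ _ => fib_nonneg _ _ _ _) fun i _ => hT _).trans (le_of_eq ?_)
    simp
  rw [sum_const, card_univ, ZMod.card, nsmul_eq_mul] at this
  calc _ ≤ 1 / (q : ℝ) * (q * T ^ (M + 1)) := by gcongr
    _ = _ := by field_simp

lemma fibAvg_le {S : ℕ} {T : ℝ} (hS : 0 < S) (hT : ∀ y, fib q d κ y ≤ T) (y : ZMod q) :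
    0 ≤ fibAvg q d κ S y ∧ fibAvg q d κ S y ≤ T := by
  have hS' : (0 : ℝ) < S := by exact_mod_cast hS
  unfold fibAvg
  constructor
  · have := Finset.sum_nonneg (s := Icc 1 S) fun s _ => fib_nonneg q d κ (y + ((s : ℕ) : ZMod q))
    positivity
  · have := sum_le_sum (s := Icc 1 S) fun s _ => hT (y + ((s : ℕ) : ZMod q))
    rw [sum_const, Nat.card_Icc, nsmul_eq_mul, Nat.add_sub_cancel] at this
    calc _ ≤ 1 / (S : ℝ) * (S * T) := by gcongr
      _ = _ := by field_simp

lemma abs_prod_sub_one_le {ι : Type*} (s : Finset ι) (a : ι → ℝ) {T : ℝ} (hT : 1 ≤ T)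
    (ha0 : ∀ i, 0 ≤ a i) (ha : ∀ i, a i ≤ T) :
    |∏ i ∈ s, a i - 1| ≤ T ^ s.card * ∑ i ∈ s, |a i - 1| := by
  induction s using Finset.induction_on with
  | empty => simp
  | insert i s hi ih =>
    rw [prod_insert hi, sum_insert hi, card_insert_of_notMem hi]
    have h1 : a i * ∏ j ∈ s, a j - 1 = a i * (∏ j ∈ s, a j - 1) + (a i - 1) := by ring
    have h2 : 1 ≤ T ^ (s.card + 1) := one_le_pow₀ hT
    rw [h1]
    calc _ ≤ |a i * (∏ j ∈ s, a j - 1)| + |a i - 1| := abs_add_le _ _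
      _ ≤ T * (T ^ s.card * ∑ i ∈ s, |a i - 1|) + T ^ (s.card + 1) * |a i - 1| := by
          gcongr
          · rw [abs_mul, abs_of_nonneg (ha0 i)]; gcongr; exact ha i
          · exact le_mul_of_one_le_left (abs_nonneg _) h2
      _ = _ := by ring

lemma avg_sig_le {S : ℕ} {T V : ℝ} (hS : 0 < S) (hT1 : 1 ≤ T)
    (hT : ∀ y, fib q d κ y ≤ T) (hV : ∑ y, (fibAvg q d κ S y - 1) ^ 2 ≤ V * q) (c : Fin (M + 1) → ZMod q) :
    |1 / (q : ℝ) * ∑ z : ZMod q, ∏ i, fibAvg q d κ S (z + c i) - 1| ≤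
      T ^ (M + 1) * ((M + 1) * √V) := by
  have hq : (0 : ℝ) < q := by exact_mod_cast (NeZero.pos q)
  have h1 : 1 / (q : ℝ) * ∑ z : ZMod q, ∏ i, fibAvg q d κ S (z + c i) - 1 =
      1 / (q : ℝ) * ∑ z : ZMod q, (∏ i, fibAvg q d κ S (z + c i) - 1) := by
    rw [sum_sub_distrib, mul_sub]
    congr 1
    simp [ZMod.card]
  have h2 : ∀ i, ∑ z : ZMod q, |fibAvg q d κ S (z + c i) - 1| ≤ q * √V := by
    intro i
    have e : ∑ z : ZMod q, |fibAvg q d κ S (z + c i) - 1| = ∑ z : ZMod q, |fibAvg q d κ S z - 1| :=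
      sum_equiv (Equiv.addRight (c i)) _ _ fun z => rfl
    rw [e]
    have h3 := sq_sum_le_card_mul_sum_sq (s := (univ : Finset (ZMod q)))
      (f := fun z => |fibAvg q d κ S z - 1|)
    simp only [sq_abs, card_univ, ZMod.card] at h3
    have h4 : (∑ z : ZMod q, |fibAvg q d κ S z - 1|) ^ 2 ≤ q ^ 2 * V := by
      refine h3.trans ?_
      calc _ ≤ (q : ℝ) * (V * q) := by gcongr
        _ = _ := by ring
    calc _ ≤ √(q ^ 2 * V) := Real.le_sqrt_of_sq_le h4
      _ = _ := by rw [Real.sqrt_mul (by positivity), Real.sqrt_sq hq.le]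
  rw [h1, abs_mul, abs_of_pos (by positivity)]
  calc _ ≤ 1 / (q : ℝ) * ∑ z : ZMod q, T ^ (M + 1) * ∑ i : Fin (M + 1), |fibAvg q d κ S (z + c i) - 1| := by
        gcongr
        refine (abs_sum_le_sum_abs _ _).trans (sum_le_sum fun z _ => ?_)
        have := abs_prod_sub_one_le univ (fun i : Fin (M + 1) => fibAvg q d κ S (z + c i)) hT1
          (fun i => (fibAvg_le hS hT _).1) (fun i => (fibAvg_le hS hT _).2)
        simpa using this
    _ = 1 / (q : ℝ) * (T ^ (M + 1) * ∑ i : Fin (M + 1), ∑ z : ZMod q, |fibAvg q d κ S (z + c i) - 1|) := by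
        rw [← mul_sum, sum_comm]
    _ ≤ 1 / (q : ℝ) * (T ^ (M + 1) * ∑ i : Fin (M + 1), q * √V) := by
        gcongr with i _; exact h2 i
    _ = _ := by
        rw [sum_const, card_univ, card_fin, nsmul_eq_mul]; push_cast; field_simp

lemma avg_sig_eq (d M S : ℕ) (κ : ℤ) (h : Fin M → ℤ) :
    ∑ s ∈ piFinset fun _ : Fin (M + 1) => Icc 1 S, sig q d M κ (h + gaps fun i => ((s i : ℕ) : ℤ)) =
    (S : ℝ) ^ (M + 1) * (1 / (q : ℝ) * ∑ z : ZMod q, ∏ i, fibAvg q d κ S (z + (shf h i : ZMod q))) := by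
  rcases Nat.eq_zero_or_pos S with rfl | hS
  · simp
  have hS' : (S : ℝ) ≠ 0 := by exact_mod_cast hS.ne'
  simp only [sig_add_gaps]
  rw [← mul_sum, sum_comm, mul_left_comm]
  congr 1
  rw [mul_sum]
  refine sum_congr rfl fun z _ => ?_
  unfold fibAvg
  rw [prod_mul_distrib, prod_const, card_univ, card_fin,
    prod_univ_sum, ← mul_assoc, ← mul_pow, mul_one_div_cancel hS', one_pow, one_mul]
  refine sum_congr rfl fun s _ => prod_congr rfl fun i _ => ?_
  push_cast; rfl

lemma sum_box_eq (hf : TF M f B) (hH : 0 < H)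
    {W W' : ℕ} (hW : ⌊B * H⌋₊ ≤ W) (hW' : ⌊B * H⌋₊ ≤ W') (g : (Fin M → ℤ) → ℝ) :
    ∑ h ∈ box M W, smp f H h * g h = ∑ h ∈ box M W', smp f H h * g h := by
  have key : ∀ W, ⌊B * H⌋₊ ≤ W → ∑ h ∈ box M W, smp f H h * g h =
      ∑ h ∈ box M ⌊B * H⌋₊, smp f H h * g h := by
    intro W hW
    refine (Finset.sum_subset (fun h hh => ?_) fun h _ hh => ?_).symm
    · rw [mem_box] at hh ⊢
      exact fun i => (hh i).trans (by exact_mod_cast hW)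
    · by_contra h0
      exact hh (hf.mem_box hH (left_ne_zero_of_mul h0) le_rfl)
  rw [key W hW, key W' hW']

lemma sum_box_shift (hf : TF M f B) (hH : 0 < H)
    {W S : ℕ} (hW : ⌊B * H⌋₊ ≤ W) (g : (Fin M → ℤ) → ℝ) (δ : Fin M → ℤ) (hδ : ∀ i, |δ i| ≤ (S : ℤ)) :
    ∑ h ∈ box M W, smp f H h * g h = ∑ h ∈ box M (W + S), smp f H (h + δ) * g (h + δ) := by
  have h1 := Finset.sum_map (box M (W + S)) (addRightEmbedding δ) fun h => smp f H h * g h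
  simp only [addRightEmbedding_apply] at h1
  rw [← h1]
  refine Finset.sum_subset (fun h hh => ?_) fun h _ hh => ?_
  · rw [Finset.mem_map]
    refine ⟨h - δ, ?_, by simp⟩
    rw [mem_box] at hh ⊢
    intro i
    rw [Pi.sub_apply]; push_cast
    exact (abs_sub _ _).trans (add_le_add (hh i) (hδ i))
  · by_contra h0
    exact hh (hf.mem_box hH (left_ne_zero_of_mul h0) hW)

/-- The local densities `sig` are `1` on average against smooth weights. -/
lemma main_term_aux (hf : TF M f B) (hH : 0 < H)
    {W S : ℕ} {T V : ℝ} (hW : ⌊B * H⌋₊ ≤ W) (hS : 0 < S) (hT1 : 1 ≤ T)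
    (hT : ∀ y, fib q d κ y ≤ T) (hV : ∑ y, (fibAvg q d κ S y - 1) ^ 2 ≤ V * q) :
    |∑ h ∈ box M W, smp f H h * sig q d M κ h - ∑ h ∈ box M W, smp f H h| ≤
      (2 * (W + S : ℕ) + 1) ^ M * (B * (T ^ (M + 1) * (S / H)) + B * (T ^ (M + 1) * ((M + 1) * √V))) := by
  have hS' : (0 : ℝ) < S := by exact_mod_cast hS
  have hB := hf.one_le
  set Z0 := ∑ h ∈ box M W, smp f H h * sig q d M κ h with hZ0
  set X := ∑ h ∈ box M (W + S), smp f H h *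
    (1 / (q : ℝ) * ∑ z : ZMod q, ∏ i, fibAvg q d κ S (z + (shf h i : ZMod q))) with hX
  set PF := piFinset fun _ : Fin (M + 1) => Icc 1 S with hPF
  have hPFc : (PF.card : ℝ) = (S : ℝ) ^ (M + 1) := by
    rw [hPF, card_piFinset]; simp
  have h1 : |Z0 - X| ≤ (2 * (W + S : ℕ) + 1) ^ M * (B * (T ^ (M + 1) * (S / H))) := by
    have e1 : (S : ℝ) ^ (M + 1) * (Z0 - X) = ∑ s ∈ PF, (Z0 - ∑ h ∈ box M (W + S), smp f H h *
        sig q d M κ (h + gaps fun i => ((s i : ℕ) : ℤ))) := by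
      rw [sum_sub_distrib, sum_const, nsmul_eq_mul, hPFc, mul_sub, sum_comm]
      congr 1
      simp only [← mul_sum]
      rw [hX, mul_sum]
      refine sum_congr rfl fun h _ => ?_
      rw [hPF, avg_sig_eq]; ring
    have e2 : ∀ s ∈ PF, |Z0 - ∑ h ∈ box M (W + S), smp f H h *
        sig q d M κ (h + gaps fun i => ((s i : ℕ) : ℤ))| ≤
          (2 * (W + S : ℕ) + 1) ^ M * (B * (T ^ (M + 1) * (S / H))) := by
      intro s hs
      have hδ : ∀ i, |gaps (fun i => ((s i : ℕ) : ℤ)) i| ≤ (S : ℤ) := by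
        intro i
        rw [hPF, mem_piFinset] at hs
        have a1 := mem_Icc.1 (hs i.castSucc)
        have a2 := mem_Icc.1 (hs i.succ)
        rw [gaps, abs_le]; omega
      rw [hZ0, sum_box_shift hf hH hW _ _ hδ, ← sum_sub_distrib]
      refine (abs_sum_le_sum_abs _ _).trans ?_
      calc _ ≤ ∑ h ∈ box M (W + S), B * (T ^ (M + 1) * (S / H)) := by
            refine sum_le_sum fun h _ => ?_
            rw [← sub_mul, abs_mul, abs_of_nonneg (sig_nonneg _ _ _ _)]
            have a1 : |smp f H (h + gaps fun i => ((s i : ℕ) : ℤ)) - smp f H h| ≤ B * (S / H) := by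
              refine (hf.lip _ _).trans ?_
              gcongr
              rw [pi_norm_le_iff_of_nonneg (by positivity)]
              intro i
              rw [Pi.sub_apply, norm_eq_abs, ← sub_div, abs_div, abs_of_pos hH]
              gcongr
              rw [Pi.add_apply]; push_cast
              rw [add_sub_cancel_left, ← cast_abs]
              exact_mod_cast hδ i
            calc _ ≤ (B * (S / H)) * T ^ (M + 1) :=
                  mul_le_mul a1 (sig_le M hT _) (sig_nonneg _ _ _ _) (by positivity)
              _ = _ := by ring
        _ = _ := by
            rw [sum_const, card_box, nsmul_eq_mul]; push_cast; ring
    have e3 := (abs_sum_le_sum_abs _ _).trans (sum_le_sum e2)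
    rw [← e1, abs_mul, abs_of_pos (by positivity), sum_const, nsmul_eq_mul, hPFc] at e3
    exact le_of_mul_le_mul_left e3 (by positivity)
  have h2 : |X - ∑ h ∈ box M W, smp f H h| ≤
      (2 * (W + S : ℕ) + 1) ^ M * (B * (T ^ (M + 1) * ((M + 1) * √V))) := by
    have e1 : ∑ h ∈ box M W, smp f H h = ∑ h ∈ box M (W + S), smp f H h := by
      have := sum_box_eq hf hH hW (W' := W + S) (by omega) fun _ => 1
      simpa using this
    rw [e1, hX, ← sum_sub_distrib]
    refine (abs_sum_le_sum_abs _ _).trans ?_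
    calc _ ≤ ∑ h ∈ box M (W + S), B * (T ^ (M + 1) * ((M + 1) * √V)) := by
          refine sum_le_sum fun h _ => ?_
          rw [← mul_sub_one, abs_mul]
          exact mul_le_mul (hf.bdd _) (avg_sig_le hS hT1 hT hV _) (abs_nonneg _) (by positivity)
      _ = _ := by
          rw [sum_const, card_box, nsmul_eq_mul]; push_cast; ring
  calc _ ≤ |Z0 - X| + |X - ∑ h ∈ box M W, smp f H h| := abs_sub_le _ _ _
    _ ≤ _ := add_le_add h1 h2
    _ = _ := by ring

end

lemma TF_exists (hf : SmoothCpt M f) : ∃ B, TF M f B := by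
  obtain ⟨C, hC⟩ := ContDiff.lipschitzWith_of_hasCompactSupport (𝕂 := ℝ) hf.2 hf.1 (by simp)
  obtain ⟨D, hD⟩ := hf.2.exists_bound_of_continuous hf.1.continuous
  obtain ⟨R, hR⟩ := hf.2.isCompact.isBounded.exists_norm_le
  refine ⟨max (max 1 C) (max D R), le_max_of_le_left (le_max_left _ _), fun x y => ?_, fun x => ?_,
    fun x ⟨i, hi⟩ => ?_⟩
  · have h1 := hC.dist_le_mul x y
    rw [Real.dist_eq, dist_eq_norm] at h1
    exact h1.trans (mul_le_mul_of_nonneg_right (le_max_of_le_left (le_max_right _ _)) (norm_nonneg _))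
  · exact (hD x).trans (le_max_of_le_right (le_max_left _ _))
  · by_contra h0
    have h1 := hR x (subset_tsupport f h0)
    have h2 : R < |x i| := lt_of_le_of_lt (le_max_of_le_right (le_max_right _ _)) hi
    exact absurd (h2.trans_le (norm_le_pi_norm x i)) (not_lt.2 h1)

lemma TF.cont (hf : TF M f B) : Continuous f := by
  have : LipschitzWith (Real.toNNReal B) f := LipschitzWith.of_dist_le_mul fun x y => by
    rw [Real.dist_eq, dist_eq_norm, Real.coe_toNNReal _ (zero_le_one.trans hf.one_le)]
    exact hf.lip x y
  exact this.continuous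

lemma floor_mul_bounds (hB : 1 ≤ B) (hH : 1 ≤ H) :
    (2 * (⌊B * H⌋₊ : ℝ) + 1) ≤ 3 * B * H ∧ H ≤ 2 * (⌊B * H⌋₊ : ℝ) + 1 := by
  have h1 : (⌊B * H⌋₊ : ℝ) ≤ B * H := Nat.floor_le (by positivity)
  have h2 : B * H < ⌊B * H⌋₊ + 1 := Nat.lt_floor_add_one _
  have h3 : 1 * H ≤ B * H := by gcongr
  have h4 : (0 : ℝ) ≤ ⌊B * H⌋₊ := cast_nonneg _
  constructor <;> nlinarith

lemma main_arith {a t : ℕ} {Y x W S : ℝ} (hB : 1 ≤ B) (hY : 2 ≤ Y) (hx : 1 ≤ x) (hS : 0 < S)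
    (hW0 : 0 ≤ W) (hS1 : S ≤ x ^ 2) (hS2 : x ^ 2 ≤ 2 * S) (hW : W ≤ B * x ^ 4) {e : ℕ}
    (he : (5 * B) ^ M * B * (2 * M + 3) ≤ 2 ^ e) :
    (2 * (W + S) + 1) ^ M * (B * ((Y ^ t) ^ (M + 1) * (S / x ^ 4)) +
      B * ((Y ^ t) ^ (M + 1) * ((M + 1) * √(Y ^ a / S)))) ≤
    Y ^ (e + t * (M + 1) + a) * (x ^ 4) ^ M / x := by
  have hY0 : 0 < Y := by linarith
  have hx0 : 0 < x := by linarith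
  have h1 : 2 * (W + S) + 1 ≤ 5 * B * x ^ 4 := by
    have e1 : x ^ 2 ≤ x ^ 4 := pow_le_pow_right₀ hx (by norm_num)
    have e2 : 1 ≤ x ^ 4 := one_le_pow₀ hx
    have e3 : 1 * x ^ 4 ≤ B * x ^ 4 := by gcongr
    nlinarith
  have h2 : S / x ^ 4 ≤ 1 / x := by
    rw [div_le_div_iff₀ (by positivity) hx0]
    calc S * x ≤ x ^ 2 * x := by gcongr
      _ = x ^ 3 := by ring
      _ ≤ x ^ 4 := pow_le_pow_right₀ hx (by norm_num)
      _ = _ := by ring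
  have hYa : 1 ≤ Y ^ a := one_le_pow₀ (by linarith)
  have h3 : √(Y ^ a / S) ≤ 2 * Y ^ a / x := by
    refine Real.sqrt_le_iff.2 ⟨by positivity, ?_⟩
    rw [div_pow, div_le_div_iff₀ hS (by positivity)]
    calc Y ^ a * x ^ 2 ≤ Y ^ a * (2 * S) := by gcongr
      _ ≤ (Y ^ a * Y ^ a) * (4 * S) := by
        have : Y ^ a * 1 ≤ Y ^ a * Y ^ a := by gcongr
        nlinarith
      _ = _ := by ring
  have h4 : (Y ^ t) ^ (M + 1) = Y ^ (t * (M + 1)) := by rw [← pow_mul]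
  rw [h4]
  set T := Y ^ (t * (M + 1)) with hT
  have hT0 : 0 < T := by positivity
  have h5 : B * (T * (S / x ^ 4)) + B * (T * ((M + 1) * √(Y ^ a / S))) ≤
      B * (2 * M + 3) * (T * Y ^ a) / x := by
    calc _ ≤ B * (T * (1 / x)) + B * (T * ((M + 1) * (2 * Y ^ a / x))) := by gcongr
      _ = B * T * (1 + (2 * M + 2) * Y ^ a) / x := by field_simp
      _ ≤ B * T * (Y ^ a + (2 * M + 2) * Y ^ a) / x := by gcongr
      _ = _ := by ring
  have h6 : (2 : ℝ) ^ e ≤ Y ^ e := by gcongr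
  calc _ ≤ (5 * B * x ^ 4) ^ M * (B * (2 * M + 3) * (T * Y ^ a) / x) := by gcongr
    _ = ((5 * B) ^ M * B * (2 * M + 3)) * (T * Y ^ a * (x ^ 4) ^ M / x) := by
        rw [mul_pow]; ring
    _ ≤ Y ^ e * (T * Y ^ a * (x ^ 4) ^ M / x) := by
        exact mul_le_mul_of_nonneg_right (he.trans h6) (by positivity)
    _ = _ := by rw [hT]; ring

theorem main_term (hd : 0 < d) (hf : TF M f B) :
    ∃ A : ℕ, ∀ (q : ℕ) [NeZero q] (P : Finset ℕ) (q2 : ℕ), Dec q P q2 →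
    ∀ κ : ℤ, IsCoprime κ (q : ℤ) → ∀ H x : ℝ, 1 ≤ x → H = x ^ 4 →
      |∑ h ∈ box M ⌊B * H⌋₊, smp f H h * sig q d M κ h - ∑ h ∈ box M ⌊B * H⌋₊, smp f H h| ≤
        loss q P q2 ^ A * H ^ M / x := by
  obtain ⟨a, ha⟩ := variance_le hd
  obtain ⟨t, ht⟩ := fib_le_loss hd
  obtain ⟨e, he⟩ := exists_two_pow_ge ((5 * B) ^ M * B * (2 * M + 3))
  refine ⟨e + t * (M + 1) + a, fun q _ P q2 hdec κ hκ H x hx hH => ?_⟩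
  obtain ⟨hY2, -, -, -⟩ := hdec.le_loss
  have hB := hf.one_le
  have hH0 : 0 < H := by rw [hH]; positivity
  set Y := loss q P q2
  set S := ⌊x ^ 2⌋₊ with hSdef
  have hx2 : 1 ≤ x ^ 2 := one_le_pow₀ hx
  have hS : 0 < S := Nat.floor_pos.2 hx2
  have hS' : (0 : ℝ) < S := by exact_mod_cast hS
  have hS1 : (S : ℝ) ≤ x ^ 2 := Nat.floor_le (by positivity)
  have hS2 : x ^ 2 ≤ 2 * (S : ℝ) := by
    have := Nat.lt_floor_add_one (x ^ 2)
    have h1 : (1 : ℝ) ≤ S := by exact_mod_cast hS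
    linarith
  have hV := ha q P q2 hdec κ hκ S hS
  have h1 := main_term_aux hf hH0 (W := ⌊B * H⌋₊) (S := S) (κ := κ) (T := Y ^ t) (V := Y ^ a / S) le_rfl hS
    (one_le_pow₀ (by linarith)) (ht q P q2 hdec κ hκ) (hV.trans (le_of_eq (by ring)))
  refine h1.trans ?_
  rw [hH]; rw [hH] at h1; push_cast
  exact main_arith hB hY2 hx hS' (cast_nonneg _) hS1 hS2 (Nat.floor_le (by positivity)) he

lemma shf_sub_eq (h h' : Fin M → ℤ) (i : Fin M) (hh : ∀ l, l ≠ i → h l = h' l)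
    (j : Fin (M + 1)) : shf h j - shf h' j = if j ≤ i.castSucc then 0 else h' i - h i := by
  induction j using Fin.induction with
  | zero => simp [shf_zero]
  | succ l ih =>
    rw [shf_succ, shf_succ]
    have e : shf h l.castSucc - h l - (shf h' l.castSucc - h' l) =
      (shf h l.castSucc - shf h' l.castSucc) - (h l - h' l) := by ring
    rw [e, ih]
    rcases lt_trichotomy l i with hl | hl | hl
    · rw [if_pos (by simpa using hl.le), if_pos (by simpa [Fin.le_def] using hl), hh l hl.ne]; ring
    · subst hl; rw [if_pos le_rfl, if_neg (by simp [Fin.le_def])]; ring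
    · rw [if_neg (by simpa using hl), if_neg (by simp only [Fin.le_def, Fin.val_succ, Fin.val_castSucc]; omega), hh l hl.ne']; ring

lemma card_deg_pair (W : ℕ) {i j : Fin (M + 1)} (hij : i < j) :
    ((box M W).filter fun h => shf h i = shf h j).card * (2 * W + 1) ≤ (2 * W + 1) ^ M := by
  obtain ⟨i, rfl⟩ : ∃ i' : Fin M, i = i'.castSucc := 
    ⟨⟨i, by omega⟩, by ext; simp⟩
  rw [← card_box M W]
  have : 2 * W + 1 = (Icc (-(W : ℤ)) W).card := by rw [Int.card_Icc]; omega
  rw [this, ← card_product]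
  refine card_le_card_of_injOn (fun p => update p.1 i p.2) ?_ ?_
  · rintro ⟨h, v⟩ hp
    simp only [coe_product, Set.mem_prod, mem_coe, mem_filter, mem_box, mem_Icc] at hp ⊢
    intro l
    by_cases hl : l = i
    · subst hl; simpa [abs_le] using hp.2
    · rw [update_of_ne hl]; exact hp.1.1 l
  · rintro ⟨h, v⟩ hp ⟨h', v'⟩ hp' heq
    simp only [coe_product, Set.mem_prod, mem_coe, mem_filter] at hp hp' heq
    have hv : v = v' := by simpa using congrFun heq i
    have hh : ∀ l, l ≠ i → h l = h' l := fun l hl => by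
      simpa [update_of_ne hl] using congrFun heq l
    have h1 := shf_sub_eq h h' i hh i.castSucc
    have h2 := shf_sub_eq h h' i hh j
    rw [if_pos le_rfl] at h1
    rw [if_neg (not_le.2 hij)] at h2
    have h3 : h i = h' i := by linarith [hp.1.2, hp'.1.2]
    refine Prod.ext (funext fun l => ?_) hv
    by_cases hl : l = i
    · rw [hl]; exact h3
    · exact hh l hl

/-- Few gap vectors have coinciding shifts. -/
lemma card_deg (W : ℕ) : ((box M W).filter fun h => ¬ Injective (shf h)).card * (2 * W + 1) ≤
      (M + 1) ^ 2 * (2 * W + 1) ^ M := by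
  have h1 : (box M W).filter (fun h => ¬ Injective (shf h)) ⊆
      ((univ : Finset (Fin (M + 1) × Fin (M + 1))).filter fun e => e.1 < e.2).biUnion
        fun e => (box M W).filter fun h => shf h e.1 = shf h e.2 := by
    intro h hh
    rw [mem_filter, Injective] at hh
    obtain ⟨hb, hh⟩ := hh
    push Not at hh
    obtain ⟨i, j, he, hne⟩ := hh
    rw [mem_biUnion]
    rcases lt_or_gt_of_ne hne with hl | hl
    · exact ⟨(i, j), by simpa using hl, by simp [hb, he]⟩
    · exact ⟨(j, i), by simpa using hl, by simp [hb, he]⟩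
  calc _ ≤ (∑ e ∈ (univ : Finset (Fin (M + 1) × Fin (M + 1))).filter (fun e => e.1 < e.2),
        ((box M W).filter fun h => shf h e.1 = shf h e.2).card) * (2 * W + 1) :=
        Nat.mul_le_mul_right _ ((card_le_card h1).trans card_biUnion_le)
    _ ≤ ∑ e ∈ (univ : Finset (Fin (M + 1) × Fin (M + 1))).filter (fun e => e.1 < e.2),
        (2 * W + 1) ^ M := by
        rw [sum_mul]
        exact sum_le_sum fun e he => card_deg_pair W (mem_filter.1 he).2
    _ ≤ _ := by
        rw [sum_const, smul_eq_mul]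
        refine Nat.mul_le_mul_right _ ((card_filter_le _ _).trans ?_)
        simp [sq]

lemma deg_term (hd : 0 < d) (M : ℕ) (hB : 1 ≤ B) :
    ∃ A : ℕ, ∀ (q : ℕ) [NeZero q] (P : Finset ℕ) (q2 : ℕ), Dec q P q2 →
    ∀ κ : ℤ, IsCoprime κ (q : ℤ) → ∀ H : ℝ, 1 ≤ H →
      ∑ h ∈ (box M ⌊B * H⌋₊).filter (fun h => ¬ Injective (shf h)), sig q d M κ h ≤
        loss q P q2 ^ A * H ^ M / H := by
  obtain ⟨t, ht⟩ := fib_le_loss hd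
  obtain ⟨e, he⟩ := exists_two_pow_ge ((M + 1) ^ 2 * (3 * B) ^ M)
  refine ⟨e + t * (M + 1), fun q _ P q2 hdec κ hκ H hH => ?_⟩
  obtain ⟨hY2, -, -, -⟩ := hdec.le_loss
  set Y := loss q P q2
  have hc := card_deg (M := M) ⌊B * H⌋₊
  set D := (box M ⌊B * H⌋₊).filter (fun h => ¬ Injective (shf h))
  obtain ⟨b1, b2⟩ := floor_mul_bounds hB hH
  set w : ℝ := 2 * (⌊B * H⌋₊ : ℝ) + 1
  have hH0 : 0 < H := by linarith
  have h1 : (D.card : ℝ) * w ≤ ((M : ℝ) + 1) ^ 2 * w ^ M := by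
    have := (Nat.cast_le (α := ℝ)).2 hc
    push_cast at this; exact this
  have h2 : (D.card : ℝ) * H ≤ (M + 1) ^ 2 * (3 * B) ^ M * H ^ M := by
    calc _ ≤ (D.card : ℝ) * w := by gcongr
      _ ≤ _ := h1
      _ ≤ (M + 1) ^ 2 * (3 * B * H) ^ M := by gcongr
      _ = _ := by rw [mul_pow]; ring
  rw [le_div_iff₀ hH0]
  calc _ ≤ (∑ h ∈ D, (Y ^ t) ^ (M + 1)) * H := by
        gcongr with h _; exact sig_le M (ht q P q2 hdec κ hκ) h
    _ = (D.card * H) * Y ^ (t * (M + 1)) := by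
        rw [sum_const, nsmul_eq_mul, ← pow_mul]; ring
    _ ≤ ((M + 1) ^ 2 * (3 * B) ^ M * H ^ M) * Y ^ (t * (M + 1)) :=
        mul_le_mul_of_nonneg_right h2 (by positivity)
    _ ≤ (2 ^ e * H ^ M) * Y ^ (t * (M + 1)) := by gcongr
    _ ≤ (Y ^ e * H ^ M) * Y ^ (t * (M + 1)) := by gcongr
    _ = _ := by ring

open Submodule Pointwise in
lemma riemann_nat (hf : TF M f B) :
    Tendsto (fun n : ℕ => (∑ h ∈ box M ⌊B * n⌋₊, smp f n h) / (n : ℝ) ^ M) atTop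
      (nhds (∫ y, f y)) := by
  set s : Set (Fin M → ℝ) := Metric.closedBall 0 B with hs
  have hB := hf.one_le
  have hsupp : ∀ x, f x ≠ 0 → x ∈ s := by
    intro x hx
    rw [hs, mem_closedBall_zero_iff, pi_norm_le_iff_of_nonneg (by linarith)]
    intro i
    by_contra h0
    exact hx (hf.supp x ⟨i, not_le.1 h0⟩)
  have key := tendsto_tsum_div_pow_atTop_integral s f hf.cont Metric.isBounded_closedBall
    Metric.isClosed_closedBall.measurableSet ((convex_closedBall _ _).addHaar_frontier _)
  rw [setIntegral_eq_integral_of_forall_compl_eq_zero (fun x hx => by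
    by_contra h0; exact hx (hsupp x h0))] at key
  refine key.congr' ?_
  filter_upwards [eventually_gt_atTop 0] with n hn
  have hn' : (0 : ℝ) < n := by exact_mod_cast hn
  rw [card_fin]
  congr 1
  set g : (Fin M → ℤ) → (Fin M → ℝ) := fun h i => (h i : ℝ) / n with hg
  have hginj : Injective g := by
    intro h h' he
    funext i
    have := congrFun he i
    simp only [hg] at this
    have : (h i : ℝ) = h' i := by field_simp at this; exact this
    exact_mod_cast this
  have hmem : ∀ h, g h ∈ ((n : ℝ)⁻¹ • (span ℤ (Set.range (Pi.basisFun ℝ (Fin M))) : Set (Fin M → ℝ))) := by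
    intro h
    refine ⟨fun i => (h i : ℝ), ?_, ?_⟩
    · rw [SetLike.mem_coe, Module.Basis.mem_span_iff_repr_mem]
      intro i; simp
    · funext i; simp [hg, div_eq_inv_mul]
  rw [tsum_subtype (s ∩ _) f, ← hginj.tsum_eq, tsum_eq_sum (s := box M ⌊B * n⌋₊)]
  · refine sum_congr rfl fun h _ => ?_
    rw [Set.indicator_apply]
    by_cases h0 : f (g h) = 0
    · have : smp f n h = 0 := h0
      rw [this, h0, ite_self]
    · rw [if_pos (Set.mem_inter (hsupp _ h0) (hmem h))]; rfl
  · intro h hh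
    rw [Set.indicator_apply]
    split_ifs
    · by_contra h0
      exact hh (hf.mem_box hn' h0 le_rfl)
    · rfl
  · intro x hx
    have hx' := Set.indicator_apply_ne_zero.1 hx
    obtain ⟨⟨-, hx2⟩, -⟩ := hx'
    obtain ⟨y, hy, rfl⟩ := hx2
    rw [SetLike.mem_coe, Module.Basis.mem_span_iff_repr_mem] at hy
    choose h hh using hy
    refine ⟨h, ?_⟩
    funext i
    have := hh i
    simp at this
    simp [hg, this, div_eq_inv_mul]

/-- Riemann sums over the lattice `H⁻¹ ℤ^M`, as the real parameter `H` tends to infinity. -/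
lemma riemann (hf : TF M f B) :
    Tendsto (fun H : ℝ => (∑ h ∈ box M ⌊B * H⌋₊, smp f H h) / H ^ M) atTop (nhds (∫ y, f y)) := by
  have hB := hf.one_le
  have h1 := (riemann_nat hf).comp (tendsto_nat_floor_atTop (α := ℝ))
  -- the ratio of the two normalisations tends to one
  have hr : Tendsto (fun H : ℝ => ((⌊H⌋₊ : ℝ) / H) ^ M) atTop (nhds 1) := by
    simpa using (tendsto_nat_floor_div_atTop (R := ℝ)).pow M
  have h2 := h1.mul hr
  rw [mul_one] at h2
  have h3 : Tendsto (fun H : ℝ => (3 * B) ^ M * (B * (4 * B)) / H) atTop (nhds 0) :=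
    tendsto_const_nhds.div_atTop tendsto_id
  refine tendsto_of_tendsto_of_dist h2 (squeeze_zero' (Eventually.of_forall fun _ => dist_nonneg) ?_ h3)
  filter_upwards [eventually_ge_atTop (2 : ℝ)] with H hH
  have hH0 : 0 < H := by linarith
  have hn1 : (1 : ℝ) ≤ ⌊H⌋₊ := by
    exact_mod_cast Nat.floor_pos.2 (by linarith)
  have hn2 : (⌊H⌋₊ : ℝ) ≤ H := Nat.floor_le hH0.le
  have hn3 : H < ⌊H⌋₊ + 1 := Nat.lt_floor_add_one H
  simp only [Function.comp]
  set n : ℝ := (⌊H⌋₊ : ℝ) with hn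
  have hn0 : 0 < n := by linarith
  have hWW : ⌊B * n⌋₊ ≤ ⌊B * H⌋₊ := Nat.floor_mono (by gcongr)
  have e1 : ∑ h ∈ box M ⌊B * n⌋₊, smp f n h = ∑ h ∈ box M ⌊B * H⌋₊, smp f n h := by
    have := sum_box_eq hf hn0 (W := ⌊B * n⌋₊) (W' := ⌊B * H⌋₊) le_rfl hWW fun _ => 1
    simpa using this
  have e2 : (∑ h ∈ box M ⌊B * n⌋₊, smp f n h) / n ^ M * (n / H) ^ M =
      (∑ h ∈ box M ⌊B * H⌋₊, smp f n h) / H ^ M := by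
    rw [e1, div_pow]; field_simp
  rw [e2, Real.dist_eq, ← sub_div, abs_div, abs_of_pos (by positivity : 0 < H ^ M),
    ← sum_sub_distrib, div_le_iff₀ (by positivity)]
  obtain ⟨b1, -⟩ := floor_mul_bounds hB (by linarith : 1 ≤ H)
  have e3 : ∀ h ∈ box M ⌊B * H⌋₊, |smp f n h - smp f H h| ≤ B * (4 * B) / H := by
    intro h hh
    rw [mem_box] at hh
    refine (hf.lip _ _).trans ?_
    rw [mul_div_assoc]
    refine mul_le_mul_of_nonneg_left ?_ (by linarith)
    rw [pi_norm_le_iff_of_nonneg (by positivity)]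
    intro i
    have hi : |(h i : ℝ)| ≤ B * H := by
      have : (|(h i : ℝ)|) ≤ (⌊B * H⌋₊ : ℝ) := by
        rw [← cast_abs]; exact_mod_cast hh i
      exact this.trans (Nat.floor_le (by positivity))
    rw [Pi.sub_apply, norm_eq_abs]
    have e : (h i : ℝ) / n - h i / H = h i * (H - n) / (n * H) := by field_simp
    rw [e, abs_div, abs_mul, abs_of_nonneg (by linarith : 0 ≤ H - n), abs_of_pos (by positivity : 0 < n * H),
      div_le_div_iff₀ (by positivity) hH0]
    calc |(h i : ℝ)| * (H - n) * H ≤ (B * H) * 1 * H := by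
          gcongr; linarith
      _ = B * H * H := by ring
      _ ≤ B * H * (4 * n) := by gcongr; linarith
      _ = _ := by ring
  refine (abs_sum_le_sum_abs _ _).trans ((sum_le_sum e3).trans ?_)
  rw [sum_const, card_box, nsmul_eq_mul]
  push_cast
  calc _ ≤ (3 * B * H) ^ M * (B * (4 * B) / H) := by gcongr
    _ = _ := by rw [mul_pow]; ring

lemma prod_dvd_int (hP : ∀ p ∈ P, p.Prime) {x : ℤ} (hx : ∀ p ∈ P, (p : ℤ) ∣ x) :
    ((∏ p ∈ P, p : ℕ) : ℤ) ∣ x := by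
  rw [natCast_dvd]
  exact prod_primes_dvd _ (fun p hp => (hP p hp).prime) fun p hp => natCast_dvd.1 (hx p hp)

lemma div_eq_abs_lt {x y : ℤ} {L : ℕ} (hL : 0 < L) (h : x / L = y / L) : |x - y| < L := by
  have hL' : (0 : ℤ) < L := by exact_mod_cast hL
  have h1 := Int.emod_add_mul_ediv x L
  have h2 := Int.emod_add_mul_ediv y L
  have h3 := Int.emod_nonneg x hL'.ne'
  have h4 := Int.emod_nonneg y hL'.ne'
  have h5 := Int.emod_lt_of_pos x hL'
  have h6 := Int.emod_lt_of_pos y hL'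
  rw [h] at h1
  rw [abs_lt]; constructor <;> linarith

lemma lattice_nat {q1 : ℕ} (hd : 0 < d) (hP : ∀ p ∈ P, p.Prime)
    (hq1 : q1 = ∏ p ∈ P, p) {ω : ℕ → ℤ} (hω : ∀ p ∈ P, (p : ℤ) ∣ ω p ^ d - 1) {S : Finset (ℤ × ℤ)}
    (hS : ∀ u ∈ S, 1 ≤ u.1 ∧ u.1 ≤ N ∧ 1 ≤ u.2 ∧ u.2 ≤ N ∧ u.1 ≠ u.2 ∧
      ∀ p ∈ P, (p : ℤ) ∣ u.1 - ω p * u.2) (hne : S.Nonempty) :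
    ∃ L : ℕ, 0 < L ∧ L ≤ N ∧ q1 ≤ 2 * L ^ d ∧ S.card ≤ (2 * (2 * L * N / q1) + 1) * (N / L + 1) := by
  have hq10 : 0 < q1 := by rw [hq1]; exact prod_pos fun p hp => (hP p hp).pos
  let Q : ℕ → Prop := fun L => ∃ u : ℤ × ℤ, u.1.natAbs ≠ u.2.natAbs ∧ max u.1.natAbs u.2.natAbs = L ∧
    ∀ p ∈ P, (p : ℤ) ∣ u.1 - ω p * u.2
  obtain ⟨u0, hu0⟩ := hne
  have hQ0 : Q (max u0.1.natAbs u0.2.natAbs) := by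
    obtain ⟨h1, h2, h3, h4, h5, h6⟩ := hS u0 hu0
    exact ⟨u0, by omega, rfl, h6⟩
  have hQ : ∃ L, Q L := ⟨_, hQ0⟩
  set L := Nat.find hQ with hLdef
  obtain ⟨v, hv1, hv2, hv3⟩ := Nat.find_spec hQ
  rw [← hLdef] at hv2
  have hmin : ∀ u : ℤ × ℤ, u.1.natAbs ≠ u.2.natAbs → (∀ p ∈ P, (p : ℤ) ∣ u.1 - ω p * u.2) →
      L ≤ max u.1.natAbs u.2.natAbs := fun u h1 h2 => Nat.find_min' hQ ⟨u, h1, rfl, h2⟩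
  have hL0 : 0 < L := by omega
  have hLN : L ≤ N := by
    obtain ⟨h1, h2, h3, h4, h5, h6⟩ := hS u0 hu0
    have := hmin u0 (by omega) h6
    omega
  have a1 : |v.1| ≤ L := by rw [abs_eq_natAbs]; omega
  have a2 : |v.2| ≤ L := by rw [abs_eq_natAbs]; omega
  refine ⟨L, hL0, hLN, ?_, ?_⟩
  · have h1 : (q1 : ℤ) ∣ v.1 ^ d - v.2 ^ d := by
      rw [hq1]
      refine prod_dvd_int hP fun p hp => ?_
      have e : v.1 ^ d - v.2 ^ d = (v.1 ^ d - (ω p * v.2) ^ d) + (ω p ^ d - 1) * v.2 ^ d := by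
        rw [mul_pow]; ring
      rw [e]
      exact dvd_add ((hv3 p hp).trans (sub_dvd_pow_sub_pow _ _ _)) ((hω p hp).mul_right _)
    have hne' : v.1.natAbs ^ d ≠ v.2.natAbs ^ d := fun h => hv1 (Nat.pow_left_injective hd.ne' h)
    have h0 : v.1 ^ d - v.2 ^ d ≠ 0 := by
      intro h
      apply hne'
      rw [← Int.natAbs_pow, ← Int.natAbs_pow, sub_eq_zero.1 h]
    have h2 : (q1 : ℤ) ≤ |v.1 ^ d - v.2 ^ d| :=
      Int.le_of_dvd (abs_pos.2 h0) ((dvd_abs _ _).2 h1)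
    have h3 : |v.1 ^ d - v.2 ^ d| ≤ 2 * (L : ℤ) ^ d := by
      calc _ ≤ |v.1 ^ d| + |v.2 ^ d| := abs_sub _ _
        _ ≤ (L : ℤ) ^ d + (L : ℤ) ^ d := by
          rw [abs_pow, abs_pow]
          exact add_le_add (pow_le_pow_left₀ (abs_nonneg _) a1 d) (pow_le_pow_left₀ (abs_nonneg _) a2 d)
        _ = _ := by ring
    exact_mod_cast h2.trans h3
  · have hdet : ∀ u ∈ S, (q1 : ℤ) ∣ v.1 * u.2 - v.2 * u.1 := by
      intro u hu
      rw [hq1]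
      refine prod_dvd_int hP fun p hp => ?_
      have e : v.1 * u.2 - v.2 * u.1 = (v.1 - ω p * v.2) * u.2 - v.2 * (u.1 - ω p * u.2) := by ring
      rw [e]
      exact dvd_sub ((hv3 p hp).mul_right _) (((hS u hu).2.2.2.2.2 p hp).mul_left _)
    set K : ℕ := 2 * L * N / q1 with hK
    have hq1' : (0 : ℤ) < q1 := by exact_mod_cast hq10
    have hcard : ((Icc (-(K : ℤ)) K) ×ˢ Icc (0 : ℤ) (N / L : ℕ)).card =
        (2 * K + 1) * (N / L + 1) := by
      rw [card_product, Int.card_Icc, Int.card_Icc]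
      congr 1 <;> omega
    rw [← hcard]
    -- the coordinate in which the shortest vector is longest
    set pr : ℤ × ℤ → ℤ := fun u => if v.2.natAbs < v.1.natAbs then u.1 else u.2 with hpr
    refine card_le_card_of_injOn (fun u => ((v.1 * u.2 - v.2 * u.1) / q1, pr u / L)) ?_ ?_
    · intro u hu
      obtain ⟨h1, h2, h3, h4, h5, h6⟩ := hS u hu
      have hp1 : 0 ≤ pr u ∧ pr u ≤ N := by
        simp only [hpr]; split_ifs <;> constructor <;> linarith
      have hL' : (0 : ℤ) < L := by exact_mod_cast hL0
      simp only [coe_product, Set.mem_prod, mem_coe, mem_Icc]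
      refine ⟨?_, Int.ediv_nonneg hp1.1 hL'.le, ?_⟩
      · obtain ⟨t, ht⟩ := hdet u hu
        rw [ht, Int.mul_ediv_cancel_left _ hq1'.ne', ← abs_le]
        have h7 : (q1 : ℤ) * |t| ≤ 2 * L * N := by
          rw [← abs_of_pos hq1', ← abs_mul, ← ht]
          have b1 : |u.1| ≤ N := by rw [abs_of_pos (by linarith)]; exact h2
          have b2 : |u.2| ≤ N := by rw [abs_of_pos (by linarith)]; exact h4
          calc _ ≤ |v.1 * u.2| + |v.2 * u.1| := abs_sub _ _
            _ ≤ L * N + L * N := by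
              rw [abs_mul, abs_mul]
              exact add_le_add (mul_le_mul a1 b2 (abs_nonneg _) (by positivity))
                (mul_le_mul a2 b1 (abs_nonneg _) (by positivity))
            _ = _ := by ring
        rw [hK]
        have h8 : q1 * t.natAbs ≤ 2 * L * N := by
          zify; exact h7
        have h9 : t.natAbs ≤ 2 * L * N / q1 := (Nat.le_div_iff_mul_le hq10).2 (by rw [mul_comm]; exact h8)
        have : |t| = (t.natAbs : ℤ) := abs_eq_natAbs t
        rw [this]; exact_mod_cast h9
      · push_cast
        exact Int.ediv_le_ediv hL' hp1.2
    · intro u hu w hw huw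
      simp only [Prod.mk.injEq] at huw
      obtain ⟨e1, e2⟩ := huw
      have e3 : v.1 * u.2 - v.2 * u.1 = v.1 * w.2 - v.2 * w.1 := by
        rw [← Int.ediv_mul_cancel (hdet u hu), ← Int.ediv_mul_cancel (hdet w hw), e1]
      have e4 : v.1 * (u.2 - w.2) = v.2 * (u.1 - w.1) := by linarith
      have e5 : v.1.natAbs * (u.2 - w.2).natAbs = v.2.natAbs * (u.1 - w.1).natAbs := by
        rw [← Int.natAbs_mul, ← Int.natAbs_mul, e4]
      have e6 := div_eq_abs_lt hL0 e2
      rw [abs_eq_natAbs] at e6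
      have hLam : ∀ p ∈ P, (p : ℤ) ∣ (u.1 - w.1) - ω p * (u.2 - w.2) := by
        intro p hp
        have e : (u.1 - w.1) - ω p * (u.2 - w.2) = (u.1 - ω p * u.2) - (w.1 - ω p * w.2) := by ring
        rw [e]
        exact dvd_sub ((hS u hu).2.2.2.2.2 p hp) ((hS w hw).2.2.2.2.2 p hp)
      have hm := fun h => hmin (u.1 - w.1, u.2 - w.2) h hLam
      simp only at hm
      simp only [hpr] at e6
      set x := (u.1 - w.1).natAbs with hx
      set y := (u.2 - w.2).natAbs with hy
      set A := v.1.natAbs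
      set A' := v.2.natAbs
      have hxy : x = 0 ∧ y = 0 := by
        rcases lt_or_gt_of_ne hv1 with hlt | hlt
        · simp only [if_neg (not_lt.2 hlt.le)] at e6
          have hyL : y < L := by omega
          have hxy : x ≤ y := by
            by_contra hc
            push Not at hc
            nlinarith
          by_cases hxy' : x = y
          · rw [hxy'] at e5
            have : y = 0 := by
              by_contra hy0
              exact hv1 (Nat.eq_of_mul_eq_mul_right (Nat.pos_of_ne_zero hy0) e5)
            omega
          · have := hm hxy'; omega
        · simp only [if_pos hlt] at e6
          have hxL : x < L := by omega
          have hxy : y ≤ x := by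
            by_contra hc
            push Not at hc
            nlinarith
          by_cases hxy' : x = y
          · rw [← hxy'] at e5
            have : x = 0 := by
              by_contra hy0
              exact hv1 (Nat.eq_of_mul_eq_mul_right (Nat.pos_of_ne_zero hy0) e5)
            omega
          · have := hm hxy'; omega
      exact Prod.ext (by omega) (by omega)

lemma lattice_real {q q1 q2 : ℕ} (hd : 0 < d) (hP : ∀ p ∈ P, p.Prime)
    (hq1 : q1 = ∏ p ∈ P, p) (hq : q = q1 * q2) (hq0 : 0 < q) {ω : ℕ → ℤ}
    (hω : ∀ p ∈ P, (p : ℤ) ∣ ω p ^ d - 1) {S : Finset (ℤ × ℤ)}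
    (hS : ∀ u ∈ S, 1 ≤ u.1 ∧ u.1 ≤ N ∧ 1 ≤ u.2 ∧ u.2 ≤ N ∧ u.1 ≠ u.2 ∧
      ∀ p ∈ P, (p : ℤ) ∣ u.1 - ω p * u.2) {Y : ℝ} (hH : 1 ≤ H) (hY : (q2 : ℝ) ≤ Y) (hY1 : 1 ≤ Y)
    (hHN : H ≤ N) (hHq : H * N = q) (hbig : 2 * H ^ d * Y ≤ q) :
    (S.card : ℝ) ≤ 10 * Y * (N / H) := by
  have hH0 : 0 < H := by linarith
  have hN0 : (0 : ℝ) < N := by linarith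
  rcases S.eq_empty_or_nonempty with rfl | hne
  · simp; positivity
  obtain ⟨L, hL0, hLN, hL1, hcard⟩ := lattice_nat hd hP hq1 hω hS hne
  have hL0' : (0 : ℝ) < L := by exact_mod_cast hL0
  have hLN' : (L : ℝ) ≤ N := by exact_mod_cast hLN
  have hq10 : (0 : ℝ) < q1 := by
    rcases Nat.eq_zero_or_pos q1 with h | h
    · rw [h, zero_mul] at hq; omega
    · exact_mod_cast h
  have hqq : (q : ℝ) = q1 * q2 := by exact_mod_cast hq
  have hq20 : (0 : ℝ) ≤ q2 := cast_nonneg _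
  have hHL : H ≤ L := by
    by_contra hlt
    push Not at hlt
    have h1 : (L : ℝ) ^ d < H ^ d := by gcongr
    have h2 : (q1 : ℝ) ≤ 2 * (L : ℝ) ^ d := by exact_mod_cast hL1
    have h3 : (q : ℝ) < 2 * H ^ d * Y := by
      rw [hqq]
      calc (q1 : ℝ) * q2 ≤ q1 * Y := by gcongr
        _ < _ := by
          refine mul_lt_mul_of_pos_right (by linarith) (by linarith)
    linarith
  have h1 : (N : ℝ) / q1 ≤ Y / H := by
    rw [div_le_div_iff₀ hq10 hH0]
    calc (N : ℝ) * H = q1 * q2 := by rw [← hqq, ← hHq]; ring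
      _ ≤ q1 * Y := by gcongr
      _ = _ := by ring
  have h2 : (S.card : ℝ) ≤ (2 * (2 * L * N / q1) + 1) * (N / L + 1) := by
    have e1 : (((2 * (2 * L * N / q1) + 1) * (N / L + 1) : ℕ) : ℝ) ≤
        (2 * (2 * L * N / q1) + 1) * (N / L + 1) := by
      push_cast
      have e2 : ((2 * L * N / q1 : ℕ) : ℝ) ≤ 2 * L * N / q1 := by
        have := Nat.cast_div_le (α := ℝ) (m := 2 * L * N) (n := q1)
        push_cast at this; exact this
      have e3 : ((N / L : ℕ) : ℝ) ≤ N / L := Nat.cast_div_le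
      gcongr
    exact le_trans (by exact_mod_cast hcard) e1
  have h3 : (N : ℝ) / L ≤ N / H := by gcongr
  have h4 : 1 ≤ (N : ℝ) / H := by rw [le_div_iff₀ hH0]; linarith
  have h5 : (L : ℝ) * (N / q1) ≤ N * (Y / H) := by gcongr
  have h6 : (N : ℝ) * (N / q1) ≤ N * (Y / H) := by gcongr
  have h7 : (N : ℝ) / H ≤ Y * (N / H) := le_mul_of_one_le_left (by positivity) hY1
  calc (S.card : ℝ) ≤ _ := h2
    _ = 4 * (N * (N / q1)) + 4 * (L * (N / q1)) + N / L + 1 := by field_simp; ring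
    _ ≤ 4 * (N * (Y / H)) + 4 * (N * (Y / H)) + N / H + N / H := by linarith
    _ = 8 * (Y * (N / H)) + 2 * (N / H) := by ring
    _ ≤ _ := by linarith

lemma card_roots_le {p : ℕ} (hd : 0 < d) (hp : p.Prime) :
    ((range p).filter fun w : ℕ => (p : ℤ) ∣ (w : ℤ) ^ d - 1).card ≤ d := by
  have : Fact p.Prime := ⟨hp⟩
  have h1 : ((range p).filter fun w : ℕ => (p : ℤ) ∣ (w : ℤ) ^ d - 1).card ≤
      (Polynomial.nthRoots d (1 : ZMod p)).toFinset.card := by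
    refine card_le_card_of_injOn (fun w => (w : ZMod p)) ?_ ?_
    · intro w hw
      simp only [coe_filter, mem_range, mem_ofPred_eq] at hw
      rw [mem_coe, Multiset.mem_toFinset, mem_nthRoots hd]
      have := (intCast_zmod_eq_zero_iff_dvd _ _).2 hw.2
      push_cast at this
      exact sub_eq_zero.1 this
    · intro w hw w' hw' he
      simp only [coe_filter, mem_range, mem_ofPred_eq] at hw hw'
      have := (ZMod.natCast_eq_natCast_iff' _ _ _).1 he
      rwa [Nat.mod_eq_of_lt hw.1, Nat.mod_eq_of_lt hw'.1] at this
  exact h1.trans ((Multiset.toFinset_card_le _).trans (card_nthRoots _ _))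

lemma exists_root {p : ℕ} (hd : 0 < d) (hp : p.Prime) {n n' : ℤ} (h : (p : ℤ) ∣ n ^ d - n' ^ d) :
    ∃ w ∈ (range p).filter (fun w : ℕ => (p : ℤ) ∣ (w : ℤ) ^ d - 1),
      (p : ℤ) ∣ n - (w : ℤ) * n' := by
  have : Fact p.Prime := ⟨hp⟩
  have h1 : (n : ZMod p) ^ d = (n' : ZMod p) ^ d := by
    have := (intCast_zmod_eq_zero_iff_dvd _ _).2 h
    push_cast at this
    exact sub_eq_zero.1 this
  by_cases h0 : (n' : ZMod p) = 0
  · rw [h0, zero_pow hd.ne'] at h1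
    have h2 : (n : ZMod p) = 0 := pow_eq_zero_iff hd.ne' |>.1 h1
    refine ⟨1, by simp [hp.one_lt], ?_⟩
    rw [← intCast_zmod_eq_zero_iff_dvd]; push_cast; rw [h0, h2]; ring
  · set w : ZMod p := n / n' with hw
    have hwd : w ^ d = 1 := by rw [hw, div_pow, h1, div_self (pow_ne_zero _ h0)]
    refine ⟨w.val, ?_, ?_⟩
    · rw [mem_filter, mem_range]
      refine ⟨ZMod.val_lt _, ?_⟩
      rw [← intCast_zmod_eq_zero_iff_dvd]; push_cast
      rw [ZMod.natCast_zmod_val, hwd, sub_self]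
    · rw [← intCast_zmod_eq_zero_iff_dvd]; push_cast
      rw [ZMod.natCast_zmod_val, hw, div_mul_cancel₀ _ h0, sub_self]

/-- Pairs `n ≠ n'` up to `N` with equal `d`-th powers modulo `q`. -/
def eqPairs (q d N : ℕ) : Finset (ℕ × ℕ) :=
  (Icc 1 N ×ˢ Icc 1 N).filter
    fun u => u.1 ≠ u.2 ∧ ((u.1 : ℕ) : ZMod q) ^ d = ((u.2 : ℕ) : ZMod q) ^ d

lemma eqPairs_le (hd : 0 < d) : ∃ A : ℕ,
    ∀ (q : ℕ) [NeZero q] (P : Finset ℕ) (q2 : ℕ), Dec q P q2 → ∀ (N : ℕ) (H : ℝ), 1 ≤ H → H ≤ N →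
    H * N = q → 2 * H ^ d * loss q P q2 ≤ q →
      ((eqPairs q d N).card : ℝ) ≤ loss q P q2 ^ A * (N / H) := by
  obtain ⟨a, ha⟩ := exists_two_pow_ge (d : ℝ)
  obtain ⟨b, hb⟩ := exists_two_pow_ge (10 : ℝ)
  refine ⟨a + b + 1, fun q _ P q2 hdec N H hH hHN hHq hbig => ?_⟩
  obtain ⟨hY2, -, hYq2, -⟩ := hdec.le_loss
  set Y := loss q P q2 with hY
  set R : (p : ℕ) → Finset ℕ := fun p => (range p).filter fun w : ℕ => (p : ℤ) ∣ (w : ℤ) ^ d - 1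
    with hR
  set ext : ((p : ℕ) → p ∈ P → ℕ) → ℕ → ℤ := fun w p => if h : p ∈ P then (w p h : ℤ) else 0 with hext
  set S : ((p : ℕ) → p ∈ P → ℕ) → Finset (ℤ × ℤ) := fun w =>
    ((eqPairs q d N).image fun u => ((u.1 : ℤ), (u.2 : ℤ))).filter
      fun u => ∀ p ∈ P, (p : ℤ) ∣ u.1 - ext w p * u.2 with hS
  have hH0 : 0 < H := by linarith
  have hNH : (0 : ℝ) ≤ N / H := by positivity
  have hcardS : ∀ w ∈ P.pi R, ((S w).card : ℝ) ≤ 10 * Y * (N / H) := by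
    intro w hw
    refine lattice_real hd hdec.prime rfl hdec.eq (NeZero.pos q) (ω := ext w) ?_ ?_ hH hYq2 (by linarith) hHN hHq hbig
    · intro p hp
      rw [Finset.mem_pi] at hw
      have := hw p hp
      simp only [hR, mem_filter] at this
      simp only [hext, dif_pos hp]
      exact this.2
    · intro u hu
      simp only [hS, mem_filter, mem_image, eqPairs, mem_product, mem_Icc] at hu
      obtain ⟨⟨v, ⟨⟨⟨h1, h2⟩, h3, h4⟩, h5, -⟩, rfl⟩, h6⟩ := hu
      simp only
      exact ⟨by exact_mod_cast h1, by exact_mod_cast h2, by exact_mod_cast h3, by exact_mod_cast h4,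
        by exact_mod_cast h5, h6⟩
  have hcov : ((eqPairs q d N).image fun u => ((u.1 : ℤ), (u.2 : ℤ))) ⊆ (P.pi R).biUnion S := by
    intro u hu
    have hu' := hu
    simp only [mem_image, eqPairs, mem_filter] at hu'
    obtain ⟨v, ⟨-, -, h5⟩, rfl⟩ := hu'
    have hdvd : ∀ p ∈ P, (p : ℤ) ∣ (v.1 : ℤ) ^ d - (v.2 : ℤ) ^ d := by
      intro p hp
      have h1 : (q : ℤ) ∣ (v.1 : ℤ) ^ d - (v.2 : ℤ) ^ d := by
        rw [← intCast_zmod_eq_zero_iff_dvd]; push_cast; rw [h5, sub_self]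
      refine dvd_trans ?_ h1
      rw [Int.natCast_dvd_natCast, hdec.eq]
      exact (dvd_prod_of_mem _ hp).mul_right _
    have := fun p hp => exists_root hd (hdec.prime p hp) (hdvd p hp)
    choose w hw hw2 using this
    rw [mem_biUnion]
    refine ⟨w, Finset.mem_pi.2 hw, ?_⟩
    simp only [hS, mem_filter]
    refine ⟨hu, fun p hp => ?_⟩
    simp only [hext, dif_pos hp]
    exact hw2 p hp
  have hinj : ((eqPairs q d N).image fun u : ℕ × ℕ => ((u.1 : ℤ), (u.2 : ℤ))).card = (eqPairs q d N).card :=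
    card_image_of_injective _ fun u v h => by
      simp only [Prod.mk.injEq, Nat.cast_inj] at h
      exact Prod.ext h.1 h.2
  have h1 : ((eqPairs q d N).card : ℝ) ≤ ∑ w ∈ P.pi R, ((S w).card : ℝ) := by
    rw [← hinj]; exact_mod_cast (card_le_card hcov).trans card_biUnion_le
  have h2 : ((P.pi R).card : ℝ) ≤ Y ^ a := by
    rw [Finset.card_pi]
    push_cast
    calc ∏ p ∈ P, ((R p).card : ℝ) ≤ ∏ p ∈ P, (d : ℝ) :=
          Finset.prod_le_prod (fun _ _ => cast_nonneg _) fun p hp => by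
            exact_mod_cast card_roots_le hd (hdec.prime p hp)
      _ = (d : ℝ) ^ P.card := by rw [prod_const]
      _ ≤ Y ^ a := (hdec.const_pow_le (cast_nonneg _) ha).2
  have h3 : (10 : ℝ) ≤ Y ^ b := (hdec.const_pow_le (by norm_num) hb).1
  calc _ ≤ _ := h1
    _ ≤ ∑ w ∈ P.pi R, 10 * Y * (N / H) := sum_le_sum hcardS
    _ = (P.pi R).card * (10 * Y * (N / H)) := by rw [sum_const, nsmul_eq_mul]
    _ ≤ Y ^ a * (Y ^ b * Y * (N / H)) := by gcongr
    _ = _ := by ring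

section

/-- All `m`-tuples of integers between `1` and `N`. -/
def tup (N m : ℕ) : Finset (Fin m → ℕ) :=
  piFinset fun _ : Fin m => Icc 1 N

lemma mem_tup {n : Fin m → ℕ} : n ∈ tup N m ↔ ∀ i, 1 ≤ n i ∧ n i ≤ N := by
  simp [tup]

variable {q : ℕ} [NeZero q]

lemma boxCount_eq_card (κ : ℤ) (N : ℕ) {c : Fin (M + 1) → ℤ} (hc : c 0 = 0) :
    boxCount q d (M + 1) κ N c = (((tup N (M + 1)).filter fun n => ∀ j,
      (κ : ZMod q) * (n j : ZMod q) ^ d = κ * (n 0 : ZMod q) ^ d + (c j : ZMod q)).card : ℝ) := by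
  set S := (tup N (M + 1)).filter fun n => ∀ j,
      (κ : ZMod q) * (n j : ZMod q) ^ d = κ * (n 0 : ZMod q) ^ d + (c j : ZMod q) with hS
  set φ : (Fin (M + 1) → ℕ) → ZMod q × (Fin (M + 1) → ZMod q) :=
    fun n => (κ * (n 0 : ZMod q) ^ d, fun i => (n i : ZMod q)) with hφ
  have hmaps : ∀ n ∈ S, φ n ∈ cpts q d (M + 1) κ c := by
    intro n hn
    rw [hS, mem_filter] at hn
    simp only [cpts, mem_filter, mem_univ, true_and, hφ]
    exact hn.2
  rw [card_eq_sum_card_fiberwise hmaps, boxCount]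
  push_cast
  refine sum_congr rfl fun s hs => ?_
  have h1 : S.filter (fun n => φ n = s) = piFinset fun i =>
      (Icc 1 N).filter fun n => ((n : ℕ) : ZMod q) = s.2 i := by
    ext n
    simp only [cpts, mem_filter, mem_univ, true_and] at hs
    simp only [hS, hφ, mem_filter, mem_piFinset, mem_tup, mem_Icc]
    constructor
    · rintro ⟨⟨h1, h2⟩, h3⟩ i
      exact ⟨h1 i, congrFun (congrArg Prod.snd h3) i⟩
    · intro h
      have h0 : (κ : ZMod q) * (n 0 : ZMod q) ^ d = s.1 := by
        rw [(h 0).2, hs 0, hc]; simp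
      refine ⟨⟨fun i => (h i).1, fun j => ?_⟩, Prod.ext h0 (funext fun i => (h i).2)⟩
      rw [h0, (h j).2, hs j]
  rw [h1, card_piFinset]
  push_cast
  rfl

/-- The gaps of `κ n_i ^ d` modulo `q` are the entries of `h`. -/
def Solves (q d : ℕ) {M : ℕ} (κ : ℤ) (h : Fin M → ℤ) (n : Fin (M + 1) → ℕ) : Prop :=
  ∀ i : Fin M, (κ : ZMod q) * (n i.castSucc : ZMod q) ^ d - κ * (n i.succ : ZMod q) ^ d = (h i : ZMod q)

omit [NeZero q] in
lemma solves_iff {n : Fin (M + 1) → ℕ} :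
    Solves q d κ h n ↔ ∀ j, (κ : ZMod q) * (n j : ZMod q) ^ d = κ * (n 0 : ZMod q) ^ d + (shf h j : ZMod q) := by
  constructor
  · intro hs j
    induction j using Fin.induction with
    | zero => simp [shf_zero]
    | succ i ih =>
      have := hs i
      rw [shf_succ]; push_cast
      rw [ih] at this
      rw [← this]; ring
  · intro hs i
    rw [hs i.castSucc, hs i.succ, shf_succ]; push_cast; ring

/-- Number of tuples with gaps `h`. -/
lemma boxCount_shf (κ : ℤ) (N : ℕ) (h : Fin M → ℤ) :
    boxCount q d (M + 1) κ N (shf h) = (((tup N (M + 1)).filter (Solves q d κ h)).card : ℝ) := by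
  rw [boxCount_eq_card κ N (shf_zero h)]
  congr 2
  exact Finset.filter_congr fun n _ => solves_iff.symm

lemma inner_sum (hf : TF M f B) (hH : 0 < H) (hHN : H * N = q) (Yv : Fin M → ℤ) :
    ∑' ℓ : Fin M → ℤ, f (fun i => (N : ℝ) * ((ℓ i : ℝ) + (Yv i : ℝ) / q)) =
      ∑ h ∈ (box M ⌊B * H⌋₊).filter (fun h => ∀ i, ((Yv i : ℤ) : ZMod q) = (h i : ZMod q)), smp f H h := by
  have hq : (0 : ℝ) < q := by exact_mod_cast NeZero.pos q
  set g : (Fin M → ℤ) → (Fin M → ℤ) := fun ℓ i => q * ℓ i + Yv i with hg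
  have hginj : Injective g := by
    intro ℓ ℓ' he
    funext i
    have := congrFun he i
    simp only [hg, add_left_inj] at this
    exact mul_left_cancel₀ (by exact_mod_cast NeZero.ne q) this
  have hgmod : ∀ h : Fin M → ℤ, (∀ i, ((Yv i : ℤ) : ZMod q) = (h i : ZMod q)) ↔ h ∈ Set.range g := by
    intro h
    constructor
    · intro hh
      have : ∀ i, ∃ t, h i - Yv i = q * t := fun i =>
        (intCast_zmod_eq_zero_iff_dvd _ _).1 (by push_cast; rw [hh i, sub_self])
      choose t ht using this
      exact ⟨t, funext fun i => by simp only [hg]; linarith [ht i]⟩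
    · rintro ⟨ℓ, rfl⟩ i
      simp [hg]
  set F : (Fin M → ℤ) → ℝ := fun h => if ∀ i, ((Yv i : ℤ) : ZMod q) = (h i : ZMod q) then smp f H h else 0
    with hF
  have h1 : ∀ ℓ : Fin M → ℤ, f (fun i => (N : ℝ) * ((ℓ i : ℝ) + (Yv i : ℝ) / q)) = F (g ℓ) := by
    intro ℓ
    simp only [hF]
    rw [if_pos ((hgmod _).2 ⟨ℓ, rfl⟩)]
    unfold smp
    congr 1
    funext i
    simp only [hg]; push_cast
    rw [← hHN]
    have hN : (N : ℝ) ≠ 0 := fun h => by rw [h, mul_zero] at hHN; linarith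
    field_simp
  simp only [h1]
  rw [hginj.tsum_eq, tsum_eq_sum (s := box M ⌊B * H⌋₊), sum_filter]
  · intro h hh
    simp only [hF]
    split_ifs
    · by_contra h0; exact hh (hf.mem_box hH h0 le_rfl)
    · rfl
  · intro h hh
    rw [Function.mem_support] at hh
    simp only [hF] at hh
    by_contra h0
    exact hh (if_neg fun h1 => h0 ((hgmod _).1 h1))

/-- The correlation sum of `n ^ d κ / q`, sorted by the gaps of `κ n ^ d` modulo `q`. -/
lemma corr_rat (hf : TF M f B) (hH : 0 < H) (hHN : H * N = q) (κ : ℤ) :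
    corrGen (M + 1) N (fun n => (n : ℝ) ^ d * ((κ : ℝ) / q)) f =
      1 / (N : ℝ) * ∑ h ∈ box M ⌊B * H⌋₊, smp f H h *
        (((tup N (M + 1)).filter fun n => Injective n ∧ Solves q d κ h n).card : ℝ) := by
  have hq : (0 : ℝ) < q := by exact_mod_cast NeZero.pos q
  unfold corrGen
  congr 1
  have h1 : ∀ n : Fin (M + 1) → ℕ, ∑' ℓ : Fin (M + 1 - 1) → ℤ, f (fun i => (N : ℝ) * ((ℓ i : ℝ) +
      (((n ⟨i.1, by have := i.isLt; omega⟩ : ℕ) : ℝ) ^ d * ((κ : ℝ) / q) -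
        ((n ⟨i.1 + 1, by have := i.isLt; omega⟩ : ℕ) : ℝ) ^ d * ((κ : ℝ) / q)))) =
      ∑ h ∈ box M ⌊B * H⌋₊, if Solves q d κ h n then smp f H h else 0 := by
    intro n
    have := inner_sum hf hH hHN (fun i : Fin M => κ * (n i.castSucc : ℤ) ^ d - κ * (n i.succ : ℤ) ^ d)
    rw [sum_filter] at this
    refine Eq.trans ?_ (this.trans ?_)
    · congr 1
      funext ℓ
      congr 1
      funext i
      push_cast
      congr 2
      have e1 : (⟨i.1, by have := i.isLt; omega⟩ : Fin (M + 1)) = Fin.castSucc (n := M) i := rfl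
      have e2 : (⟨i.1 + 1, by have := i.isLt; omega⟩ : Fin (M + 1)) = Fin.succ (n := M) i := rfl
      rw [e1, e2]
      ring
    · refine sum_congr rfl fun h _ => ?_
      have : (∀ i : Fin M, ((κ * (n i.castSucc : ℤ) ^ d - κ * (n i.succ : ℤ) ^ d : ℤ) : ZMod q) = (h i : ZMod q)) ↔
          Solves q d κ h n := by
        unfold Solves; push_cast; rfl
      simp only [this]
  refine (sum_congr rfl fun n _ => h1 n).trans ?_
  rw [sum_comm]
  refine sum_congr rfl fun h _ => ?_
  rw [← sum_filter, Finset.filter_filter, sum_const, nsmul_eq_mul, mul_comm]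
  rfl

end

section

lemma pow_le_descFactorial (k r : ℕ) :
    (1 + k) ^ r ≤ (2 * r + 1) ^ r + 2 ^ r * k.descFactorial r := by
  rcases Nat.lt_or_ge k (2 * r) with h | h
  · exact (Nat.pow_le_pow_left (by omega) r).trans (Nat.le_add_right _ _)
  · refine le_trans ?_ (Nat.le_add_left _ _)
    calc (1 + k) ^ r ≤ (2 * (k + 1 - r)) ^ r := Nat.pow_le_pow_left (by omega) r
      _ = 2 ^ r * (k + 1 - r) ^ r := mul_pow _ _ _
      _ ≤ _ := Nat.mul_le_mul_left _ (Nat.pow_sub_le_descFactorial k r)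

lemma big_use {Y q : ℝ} {A a b : ℕ} (hY : 1 ≤ Y) (hH : 1 ≤ H) (ha : a ≤ A) (hb : b ≤ A)
    (h : (Y * H) ^ A ≤ q) : Y ^ a * H ^ b ≤ q := by
  refine le_trans ?_ h
  rw [mul_pow]
  exact mul_le_mul (pow_le_pow_right₀ hY ha) (pow_le_pow_right₀ hH hb) (by positivity) (by positivity)

variable {q : ℕ} [NeZero q]

/-- The residues `κ n ^ d` modulo `q` with `1 ≤ n ≤ N`. -/
def imPow (q d : ℕ) (κ : ℤ) (N : ℕ) : Finset (ZMod q) :=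
  (Icc 1 N).image fun n : ℕ => (κ : ZMod q) * (n : ZMod q) ^ d

/-- The elements of `imPow` within distance `W` of `y`, other than `y` itself. -/
def nbr (q d : ℕ) (κ : ℤ) (N W : ℕ) (y : ZMod q) : Finset (ZMod q) :=
  (imPow q d κ N).filter fun z => z ≠ y ∧ ∃ t : ℤ, |t| ≤ W ∧ z = y + (t : ZMod q)

lemma sum_descFactorial_le (d r : ℕ) (κ : ℤ) (N W : ℕ) :
    ((∑ y ∈ imPow q d κ N, (nbr q d κ N W y).card.descFactorial r : ℕ) : ℝ) ≤
      ∑ v ∈ (box r W).filter (fun v => Injective (Fin.cons 0 v : Fin (r + 1) → ℤ)),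
        boxCount q d (r + 1) κ N (Fin.cons 0 v) := by
  have hpre : ∀ y : ZMod q, ∃ n : ℕ, y ∈ imPow q d κ N → n ∈ Icc 1 N ∧
      (κ : ZMod q) * (n : ZMod q) ^ d = y := by
    intro y
    by_cases hy : y ∈ imPow q d κ N
    · obtain ⟨n, h1, h2⟩ := mem_image.1 hy
      exact ⟨n, fun _ => ⟨h1, h2⟩⟩
    · exact ⟨0, fun h => absurd h hy⟩
  choose pre hpre using hpre
  have hsh : ∀ y z : ZMod q, ∃ t : ℤ, z ∈ nbr q d κ N W y → |t| ≤ W ∧ z = y + (t : ZMod q) := by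
    intro y z
    by_cases hz : z ∈ nbr q d κ N W y
    · obtain ⟨t, ht⟩ := (mem_filter.1 hz).2.2
      exact ⟨t, fun _ => ht⟩
    · exact ⟨0, fun h => absurd h hz⟩
  choose sh hsh using hsh
  set T : ZMod q → Finset (Fin r → ZMod q) := fun y =>
    (piFinset fun _ : Fin r => nbr q d κ N W y).filter Injective with hT
  have hTcard : ∀ y, (nbr q d κ N W y).card.descFactorial r ≤ (T y).card := by
    intro y
    have e1 : (nbr q d κ N W y).card.descFactorial r = Fintype.card (Fin r ↪ ↥(nbr q d κ N W y)) := by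
      rw [Fintype.card_embedding_eq, Fintype.card_coe, card_fin]
    rw [e1, ← card_univ]
    refine card_le_card_of_injOn (fun e i => (e i : ZMod q)) ?_ ?_
    · intro e _
      simp only [hT, mem_coe, mem_filter, mem_piFinset]
      exact ⟨fun i => (e i).2, fun i j h => e.injective (Subtype.ext h)⟩
    · intro e _ e' _ h
      ext i
      exact congrFun h i
  set S : (Fin r → ℤ) → Finset (Fin (r + 1) → ℕ) := fun v => (tup N (r + 1)).filter fun n => ∀ j,
      (κ : ZMod q) * (n j : ZMod q) ^ d = κ * (n 0 : ZMod q) ^ d +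
        (((Fin.cons 0 v : Fin (r + 1) → ℤ) j : ℤ) : ZMod q) with hS
  have hbc : ∀ v : Fin r → ℤ, boxCount q d (r + 1) κ N (Fin.cons 0 v) = ((S v).card : ℝ) := fun v =>
    boxCount_eq_card κ N (by simp)
  simp only [hbc]
  rw [← Nat.cast_sum]
  refine Nat.cast_le.2 ((sum_le_sum fun y _ => hTcard y).trans ?_)
  rw [← card_sigma, ← card_sigma]
  refine card_le_card_of_injOn
    (fun u => ⟨fun l => sh u.1 (u.2 l), Fin.cons (pre u.1) fun l => pre (u.2 l)⟩) ?_ ?_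
  · rintro ⟨y, e⟩ hu
    simp only [hT, coe_sigma, Set.mem_sigma_iff, mem_coe, mem_filter,
      mem_piFinset] at hu
    obtain ⟨hy, he, hinj⟩ := hu
    have hs := fun l => hsh y (e l) (he l)
    have hm : ∀ l, e l ∈ imPow q d κ N := fun l => (mem_filter.1 (he l)).1
    have hne : ∀ l, e l ≠ y := fun l => (mem_filter.1 (he l)).2.1
    simp only [coe_sigma, Set.mem_sigma_iff, mem_coe, mem_filter, hS]
    refine ⟨⟨mem_box.2 fun l => (hs l).1, ?_⟩, mem_tup.2 fun j => ?_, fun j => ?_⟩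
    · rw [Fin.cons_injective_iff]
      constructor
      · rintro ⟨l, hl⟩
        change sh y (e l) = 0 at hl
        apply hne l
        rw [(hs l).2, hl]; simp
      · intro l l' hll
        apply hinj
        rw [(hs l).2, (hs l').2]
        simp only at hll
        rw [hll]
    · refine Fin.cases ?_ (fun l => ?_) j
      · simpa using mem_Icc.1 (hpre y hy).1
      · simpa using mem_Icc.1 (hpre _ (hm l)).1
    · refine Fin.cases ?_ (fun l => ?_) j
      · simp
      · simp only [Fin.cons_succ, Fin.cons_zero]
        rw [(hpre _ (hm l)).2, (hpre y hy).2]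
        exact (hs l).2
  · rintro ⟨y, e⟩ hu ⟨y', e'⟩ hu' heq
    simp only [hT, coe_sigma, Set.mem_sigma_iff, mem_coe, mem_filter,
      mem_piFinset] at hu hu'
    have h2 := eq_of_heq (Sigma.mk.inj_iff.1 heq).2
    have h0 : pre y = pre y' := by simpa using congrFun h2 0
    have hl : ∀ l, pre (e l) = pre (e' l) := fun l => by simpa using congrFun h2 l.succ
    have hyy : y = y' := by rw [← (hpre y hu.1).2, ← (hpre y' hu'.1).2, h0]
    subst hyy
    congr 1
    funext l
    rw [← (hpre (e l) (mem_filter.1 (hu.2.1 l)).1).2,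
      ← (hpre (e' l) (mem_filter.1 (hu'.2.1 l)).1).2, hl l]

lemma card_cpts_le {T : ℝ} (hT : ∀ y, fib q d κ y ≤ T) (c : Fin m → ℤ) :
    ((cpts q d m κ c).card : ℝ) ≤ q * T ^ m := by
  rw [card_cpts]
  have : ∑ z : ZMod q, ∏ i, fib q d κ (z + (c i : ZMod q)) ≤ ∑ z : ZMod q, T ^ m := by
    refine sum_le_sum fun z _ => ?_
    refine (Finset.prod_le_prod (fun _ _ => fib_nonneg _ _ _ _) fun i _ => hT _).trans (le_of_eq ?_)
    simp
  rw [sum_const, card_univ, ZMod.card, nsmul_eq_mul] at this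
  exact this

lemma q_split {q : ℕ} (hq : 0 < q) : (q : ℝ) ^ (7 / 8 : ℝ) * (q : ℝ) ^ (1 / 8 : ℝ) = q := by
  rw [← Real.rpow_add (by exact_mod_cast hq)]; norm_num

lemma q78_le {q : ℕ} (hq : 0 < q) {X : ℝ} (hH : 0 < H) (hHN : H * N = q)
    (hX : X * H ≤ (q : ℝ) ^ (1 / 8 : ℝ)) : X * (q : ℝ) ^ (7 / 8 : ℝ) ≤ N := by
  refine le_of_mul_le_mul_left ?_ hH
  rw [hHN]
  refine le_of_le_of_eq ?_ (q_split hq)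
  calc H * (X * (q : ℝ) ^ (7 / 8 : ℝ)) = (q : ℝ) ^ (7 / 8 : ℝ) * (X * H) := by ring
    _ ≤ _ := by gcongr

lemma moment_arith2 {r a t c : ℕ} {C N Y q78 w : ℝ} (hC : C ≤ 2 ^ c) (hC1 : 1 ≤ C) (hY : 2 ≤ Y)
    (hH : 1 ≤ H) (hN : 0 ≤ N) (hw0 : 1 ≤ w) (hw : w ≤ C * H) (hq0 : 0 ≤ q78)
    (hq : Y ^ (c * (r + (r + 1) ^ 2) + a) * H ^ (r + (r + 1) ^ 2) * q78 ≤ N) :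
    w ^ r * ((1 / H) ^ (r + 1) * ((H * N) * (Y ^ t) ^ (r + 1)) + Y ^ a * q78 * w ^ ((r + 1) ^ 2)) ≤
      Y ^ (c * r + t * (r + 1)) * N + N := by
  have hH0 : 0 < H := by linarith
  have hCY : C ≤ Y ^ c := hC.trans (by gcongr)
  have h1 : w ^ r * ((1 / H) ^ (r + 1) * ((H * N) * (Y ^ t) ^ (r + 1))) ≤
      Y ^ (c * r + t * (r + 1)) * N := by
    calc _ ≤ (C * H) ^ r * ((1 / H) ^ (r + 1) * ((H * N) * (Y ^ t) ^ (r + 1))) := by gcongr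
      _ = C ^ r * ((Y ^ t) ^ (r + 1)) * N := by
        rw [mul_pow, one_div, inv_pow]; field_simp; ring
      _ ≤ (Y ^ c) ^ r * ((Y ^ t) ^ (r + 1)) * N := by gcongr
      _ = _ := by rw [← pow_mul, ← pow_mul, ← pow_add]
  have h2 : w ^ r * (Y ^ a * q78 * w ^ ((r + 1) ^ 2)) ≤ N := by
    refine le_trans ?_ hq
    calc _ = w ^ (r + (r + 1) ^ 2) * (Y ^ a * q78) := by rw [pow_add]; ring
      _ ≤ (Y ^ c * H) ^ (r + (r + 1) ^ 2) * (Y ^ a * q78) := by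
        gcongr; exact hw.trans (by gcongr)
      _ = _ := by rw [mul_pow, ← pow_mul, pow_add]; ring
  rw [mul_add]
  exact add_le_add h1 h2

/-- Moments of the number of neighbours. -/
lemma moment (hd : 2 ≤ d) (r : ℕ) {C : ℝ} (hC1 : 1 ≤ C) : ∃ A : ℕ,
    ∀ (q : ℕ) [NeZero q] (P : Finset ℕ) (q2 : ℕ), Dec q P q2 → ∀ κ : ℤ, IsCoprime κ (q : ℤ) →
    ∀ (N : ℕ) (H : ℝ), 1 ≤ H → H * N = q → (loss q P q2 * H) ^ A ≤ (q : ℝ) ^ (1 / 8 : ℝ) →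
    ∀ W : ℕ, 2 * (W : ℝ) + 1 ≤ C * H →
      ((∑ y ∈ imPow q d κ N, (1 + (nbr q d κ N W y).card) ^ r : ℕ) : ℝ) ≤ loss q P q2 ^ A * N := by
  obtain ⟨a, ha⟩ := completion (r + 1) hd
  obtain ⟨t, ht⟩ := fib_le_loss (show 0 < d by omega)
  obtain ⟨c, hc⟩ := exists_two_pow_ge C
  obtain ⟨e, he⟩ := exists_two_pow_ge ((2 * r + 1) ^ r + 2 ^ r * 2)
  set A1 := c * (r + (r + 1) ^ 2) + a with hA1
  refine ⟨e + (c * r + t * (r + 1)) + A1 + (r + (r + 1) ^ 2) + 1,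
    fun q _ P q2 hdec κ hκ N H hH hHN hbig W hW => ?_⟩
  obtain ⟨hY2, -, -, -⟩ := hdec.le_loss
  set Y := loss q P q2 with hY
  have hq : 0 < q := NeZero.pos q
  have hH0 : 0 < H := by linarith
  have hNq : N ≤ q := by
    have : (N : ℝ) ≤ q := by rw [← hHN]; exact le_mul_of_one_le_left (cast_nonneg _) hH
    exact_mod_cast this
  have hW0 : (0 : ℝ) ≤ W := cast_nonneg _
  have hNH : (N : ℝ) / q = 1 / H := by
    have : (q : ℝ) ≠ 0 := by exact_mod_cast hq.ne'
    field_simp; linarith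
  have h1 : ∀ v ∈ (box r W).filter (fun v => Injective (Fin.cons 0 v : Fin (r + 1) → ℤ)),
      boxCount q d (r + 1) κ N (Fin.cons 0 v) ≤ (1 / H) ^ (r + 1) * ((H * N) * (Y ^ t) ^ (r + 1)) +
        Y ^ a * (q : ℝ) ^ (7 / 8 : ℝ) * (2 * (W : ℝ) + 1) ^ ((r + 1) ^ 2) := by
    intro v hv
    obtain ⟨hv1, hv2⟩ := mem_filter.1 hv
    have hv0 : ∀ i, |(((Fin.cons 0 v : Fin (r + 1) → ℤ) i : ℤ) : ℝ)| ≤ W := by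
      intro i
      refine Fin.cases ?_ (fun l => ?_) i
      · simp
      · rw [Fin.cons_succ, ← cast_abs]; exact_mod_cast mem_box.1 hv1 l
    have h2 := ha q P q2 hdec κ hκ N hNq _ hv2 (2 * (W : ℝ) + 1) (by linarith) (fun i j => by
      push_cast
      refine (abs_sub _ _).trans ?_
      linarith [hv0 i, hv0 j])
    have h3 := (abs_le.1 h2).2
    have h4 := card_cpts_le (ht q P q2 hdec κ hκ) (Fin.cons 0 v : Fin (r + 1) → ℤ)
    rw [hNH] at h3
    rw [hHN]
    have h5 : (1 / H) ^ (r + 1) * ((cpts q d (r + 1) κ (Fin.cons 0 v)).card : ℝ) ≤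
        (1 / H) ^ (r + 1) * (q * (Y ^ t) ^ (r + 1)) :=
      mul_le_mul_of_nonneg_left h4 (by positivity)
    linarith
  have h2 := (sum_descFactorial_le (q := q) d r κ N W).trans (sum_le_sum h1)
  rw [sum_const, nsmul_eq_mul] at h2
  have h3 : ((((box r W).filter (fun v => Injective (Fin.cons 0 v : Fin (r + 1) → ℤ))).card : ℕ) : ℝ) ≤
      (2 * (W : ℝ) + 1) ^ r := by
    have := (card_filter_le (box r W) (fun v => Injective (Fin.cons 0 v : Fin (r + 1) → ℤ))).trans
      (card_box r W).le
    exact_mod_cast this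
  have h4 := h2.trans (mul_le_mul_of_nonneg_right h3 (by positivity))
  have hbig' : Y ^ A1 * H ^ (r + (r + 1) ^ 2) * (q : ℝ) ^ (7 / 8 : ℝ) ≤ N := by
    refine q78_le hq hH0 hHN ?_
    have := big_use (a := A1) (b := r + (r + 1) ^ 2 + 1) (by linarith) hH (by omega) (by omega) hbig
    rwa [pow_succ, ← mul_assoc] at this
  have h5 := h4.trans (moment_arith2 hc hC1 hY2 hH (cast_nonneg _) (by linarith) hW (by positivity) hbig')
  have hIm : ((imPow q d κ N).card : ℝ) ≤ N := by
    have := card_image_le (s := Icc 1 N) (f := fun n : ℕ => (κ : ZMod q) * (n : ZMod q) ^ d)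
    rw [Nat.card_Icc, Nat.add_sub_cancel] at this
    exact Nat.cast_le.2 this
  have hY1 : 1 ≤ Y := by linarith
  set G := Y ^ (c * r + t * (r + 1)) with hG
  have hG1 : 1 ≤ G := one_le_pow₀ hY1
  have hN0 : (0 : ℝ) ≤ N := cast_nonneg _
  calc ((∑ y ∈ imPow q d κ N, (1 + (nbr q d κ N W y).card) ^ r : ℕ) : ℝ)
      ≤ ((∑ y ∈ imPow q d κ N, ((2 * r + 1) ^ r + 2 ^ r * (nbr q d κ N W y).card.descFactorial r) : ℕ) : ℝ) :=
        Nat.cast_le.2 (sum_le_sum fun y _ => pow_le_descFactorial _ _)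
    _ = (imPow q d κ N).card * (2 * (r : ℝ) + 1) ^ r + 2 ^ r *
        ((∑ y ∈ imPow q d κ N, (nbr q d κ N W y).card.descFactorial r : ℕ) : ℝ) := by
        rw [sum_add_distrib, sum_const, ← mul_sum]; push_cast
        rw [nsmul_eq_mul]; push_cast; ring
    _ ≤ N * (2 * (r : ℝ) + 1) ^ r + 2 ^ r * (G * N + N) := by gcongr
    _ ≤ (G * N) * (2 * (r : ℝ) + 1) ^ r + 2 ^ r * (G * N + G * N) := by
        have : (N : ℝ) ≤ G * N := le_mul_of_one_le_left hN0 hG1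
        gcongr
    _ = ((2 * (r : ℝ) + 1) ^ r + 2 ^ r * 2) * (G * N) := by ring
    _ ≤ Y ^ e * (G * N) := by
        refine mul_le_mul_of_nonneg_right (he.trans ?_) (by positivity)
        gcongr
    _ = Y ^ (e + (c * r + t * (r + 1))) * N := by rw [hG]; ring
    _ ≤ _ := by
        refine mul_le_mul_of_nonneg_right (pow_le_pow_right₀ hY1 ?_) hN0
        omega

end

section

variable {q : ℕ} [NeZero q]

omit [NeZero q] in
lemma natCast_inj {n n' : ℕ} (hN : N ≤ q) (h1 : 1 ≤ n) (h2 : n ≤ N) (h1' : 1 ≤ n') (h2' : n' ≤ N)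
    (h : (n : ZMod q) = n') : n = n' := by
  have := (ZMod.intCast_eq_intCast_iff_dvd_sub (n : ℤ) (n' : ℤ) q).1 (by exact_mod_cast h)
  have h3 := Int.eq_zero_of_abs_lt_dvd this (by rw [abs_lt]; constructor <;> omega)
  omega

omit [NeZero q] in
lemma intCast_inj {a b : ℤ} {W : ℕ} (hW : 2 * W < q) (ha : |a| ≤ W) (hb : |b| ≤ W)
    (h : (a : ZMod q) = b) : a = b := by
  have := (ZMod.intCast_eq_intCast_iff_dvd_sub a b q).1 h
  rw [abs_le] at ha hb
  have h3 := Int.eq_zero_of_abs_lt_dvd this (by rw [abs_lt]; constructor <;> omega)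
  omega

/-- Values taken at least twice by `κ n ^ d` on `1 ≤ n ≤ N`. -/
def rep (q d : ℕ) (κ : ℤ) (N : ℕ) : Finset (ZMod q) :=
  (eqPairs q d N).image fun u => (κ : ZMod q) * (u.1 : ZMod q) ^ d

omit [NeZero q] in
lemma rep_subset (d : ℕ) (κ : ℤ) (N : ℕ) : rep q d κ N ⊆ imPow q d κ N := by
  intro y hy
  obtain ⟨u, hu, rfl⟩ := mem_image.1 hy
  rw [eqPairs, mem_filter, mem_product] at hu
  exact mem_image.2 ⟨u.1, hu.1.1, rfl⟩

lemma card_near_le {W : ℕ} {T : ℝ} (hN : N ≤ q) (hT : ∀ y, fib q d κ y ≤ T) (y : ZMod q) :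
    ((((Icc 1 N).filter fun n : ℕ => (κ : ZMod q) * (n : ZMod q) ^ d ∈
      insert y (nbr q d κ N W y)).card : ℕ) : ℝ) ≤ T * (1 + (nbr q d κ N W y).card) := by
  set K := (Icc 1 N).filter fun n : ℕ => (κ : ZMod q) * (n : ZMod q) ^ d ∈
      insert y (nbr q d κ N W y) with hK
  have hT0 : 0 ≤ T := (fib_nonneg q d κ 0).trans (hT 0)
  have hmaps : ∀ n ∈ K, (κ : ZMod q) * (n : ZMod q) ^ d ∈ insert y (nbr q d κ N W y) := fun n hn =>
    (mem_filter.1 hn).2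
  rw [card_eq_sum_card_fiberwise hmaps]
  push_cast
  have h1 : ∀ z ∈ insert y (nbr q d κ N W y),
      (((K.filter fun n : ℕ => (κ : ZMod q) * (n : ZMod q) ^ d = z).card : ℕ) : ℝ) ≤ T := by
    intro z _
    refine le_trans ?_ (hT z)
    unfold fib
    refine Nat.cast_le.2 (card_le_card_of_injOn (fun n : ℕ => (n : ZMod q)) ?_ ?_)
    · intro n hn
      simpa using (mem_filter.1 hn).2
    · intro n hn n' hn' h
      have a := mem_Icc.1 (mem_filter.1 (mem_filter.1 hn).1).1
      have a' := mem_Icc.1 (mem_filter.1 (mem_filter.1 hn').1).1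
      exact natCast_inj hN a.1 a.2 a'.1 a'.2 h
  refine (sum_le_sum h1).trans ?_
  rw [sum_const, nsmul_eq_mul, mul_comm]
  refine mul_le_mul_of_nonneg_left ?_ hT0
  have := card_insert_le y (nbr q d κ N W y)
  rw [add_comm (1 : ℝ)]
  exact_mod_cast this

lemma sum_deg_le {W : ℕ} {T : ℝ} (hκ : IsCoprime κ (q : ℤ)) (hN : N ≤ q)
    (hWq : 2 * W < q) (hT : ∀ y, fib q d κ y ≤ T) :
    ((∑ h ∈ (box M W).filter (fun h => ¬ Injective (shf h)),
      ((tup N (M + 1)).filter fun n => Injective n ∧ Solves q d κ h n).card : ℕ) : ℝ) ≤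
      ∑ y ∈ rep q d κ N, (T * (1 + (nbr q d κ N (2 * M * W) y).card)) ^ (M + 1) := by
  have hu : IsUnit (κ : ZMod q) := by
    have := ((ZMod.isUnit_iff_coprime κ.natAbs q).2 (Int.isCoprime_iff_gcd_eq_one.1 hκ))
    rcases Int.natAbs_eq κ with h | h
    · rw [h, Int.cast_natCast]; exact this
    · rw [h, Int.cast_neg, Int.cast_natCast]; exact this.neg
  set K : ZMod q → Finset ℕ := fun y => (Icc 1 N).filter fun n : ℕ =>
    (κ : ZMod q) * (n : ZMod q) ^ d ∈ insert y (nbr q d κ N (2 * M * W) y) with hK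
  have h1 : (∑ h ∈ (box M W).filter (fun h => ¬ Injective (shf h)),
      ((tup N (M + 1)).filter fun n => Injective n ∧ Solves q d κ h n).card) ≤
      ((rep q d κ N).biUnion fun y => piFinset fun _ : Fin (M + 1) => K y).card := by
    rw [← card_sigma]
    refine card_le_card_of_injOn (fun u => u.2) ?_ ?_
    · rintro ⟨h, n⟩ hhn
      simp only [coe_sigma, Set.mem_sigma_iff, mem_coe, mem_filter] at hhn
      obtain ⟨⟨hbox, hni⟩, hn, hinj, hs⟩ := hhn
      rw [mem_tup] at hn
      rw [solves_iff] at hs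
      obtain ⟨i, j, hij, hne⟩ : ∃ i j, shf h i = shf h j ∧ i ≠ j := by
        simpa [Injective] using hni
      have hsh := shf_sub_le h (W := (W : ℝ)) (fun i => by
        rw [← cast_abs]; exact_mod_cast mem_box.1 hbox i) (cast_nonneg _)
      simp only [Finset.coe_biUnion, Set.mem_iUnion, mem_coe, mem_piFinset]
      refine ⟨(κ : ZMod q) * (n i : ZMod q) ^ d, ?_, fun l => ?_⟩
      · refine mem_image.2 ⟨(n i, n j), ?_, rfl⟩
        rw [eqPairs, mem_filter, mem_product]
        refine ⟨⟨mem_Icc.2 (hn i), mem_Icc.2 (hn j)⟩, fun h => hne (hinj h), ?_⟩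
        refine hu.mul_left_cancel ?_
        rw [hs i, hs j, hij]
      · rw [hK, mem_filter]
        refine ⟨mem_Icc.2 (hn l), ?_⟩
        by_cases hl : (κ : ZMod q) * (n l : ZMod q) ^ d = κ * (n i : ZMod q) ^ d
        · rw [hl]; exact mem_insert_self _ _
        · refine mem_insert_of_mem (mem_filter.2
            ⟨mem_image.2 ⟨n l, mem_Icc.2 (hn l), rfl⟩, hl, shf h l - shf h i, ?_, ?_⟩)
          · have := hsh l i
            rw [← cast_abs] at this
            exact_mod_cast this
          · rw [hs l, hs i]; push_cast; ring
    · rintro ⟨h, n⟩ hhn ⟨h', n'⟩ hhn' heq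
      simp only at heq
      subst heq
      simp only [coe_sigma, Set.mem_sigma_iff, mem_coe, mem_filter] at hhn hhn'
      have : h = h' := by
        funext i
        refine intCast_inj hWq (mem_box.1 hhn.1.1 i) (mem_box.1 hhn'.1.1 i) ?_
        rw [← hhn.2.2.2 i, ← hhn'.2.2.2 i]
      subst this
      rfl
  refine (Nat.cast_le.2 (h1.trans card_biUnion_le)).trans ?_
  push_cast
  refine sum_le_sum fun y _ => ?_
  rw [card_piFinset, prod_const, card_univ, card_fin]
  push_cast
  exact pow_le_pow_left₀ (cast_nonneg _) (card_near_le hN hT y) _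

omit [NeZero q] in
lemma sq_sum_pow_le {ι : Type*} {D S : Finset ι} (hDS : D ⊆ S) {T : ℝ} (hT : 0 ≤ T) {k : ι → ℕ} {r : ℕ} :
    (∑ y ∈ D, (T * (1 + (k y : ℝ))) ^ r) ^ 2 ≤
      (D.card : ℝ) * (T ^ (2 * r) * ((∑ y ∈ S, (1 + k y) ^ (2 * r) : ℕ) : ℝ)) := by
  refine (sq_sum_le_card_mul_sum_sq).trans (mul_le_mul_of_nonneg_left ?_ (cast_nonneg _))
  push_cast
  rw [mul_sum]
  calc ∑ y ∈ D, ((T * (1 + (k y : ℝ))) ^ r) ^ 2 = ∑ y ∈ D, T ^ (2 * r) * (1 + (k y : ℝ)) ^ (2 * r) := by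
        refine sum_congr rfl fun y _ => ?_
        rw [← pow_mul, mul_pow, mul_comm r 2]
    _ ≤ _ := sum_le_sum_of_subset_of_nonneg hDS fun y _ _ => by positivity

lemma deg_arith {Y N x E : ℝ} {e t a r A : ℕ} (hY1 : 1 ≤ Y) (hx : 1 ≤ x) (hHx : H = x ^ 4)
    (hE0 : 0 ≤ E) (hN0 : 0 ≤ N) (hA : e + t * r + a ≤ A)
    (h4 : E ^ 2 ≤ (Y ^ e * (N / H)) * ((Y ^ t) ^ r * (Y ^ a * N))) : E ≤ Y ^ A * N / x := by
  have hx0 : 0 < x := by linarith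
  refine (pow_le_pow_iff_left₀ hE0 (by positivity) two_ne_zero).1 (h4.trans ?_)
  rw [hHx]
  have hxx : N / x ^ 4 ≤ N / x ^ 2 := by
    apply div_le_div_of_nonneg_left hN0 (by positivity)
    exact pow_le_pow_right₀ hx (by norm_num)
  calc _ ≤ (Y ^ e * (N / x ^ 2)) * ((Y ^ t) ^ r * (Y ^ a * N)) := by gcongr
    _ = Y ^ (e + t * r + a) * (N / x) ^ 2 := by
      rw [← pow_mul, pow_add, pow_add]; field_simp
    _ ≤ Y ^ (A * 2) * (N / x) ^ 2 := by
      refine mul_le_mul_of_nonneg_right (pow_le_pow_right₀ hY1 ?_) (by positivity)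
      omega
    _ = _ := by rw [pow_mul]; ring

/-- The contribution of difference vectors forcing two coordinates to share a residue. -/
lemma deg_count (hd : 2 ≤ d) (M : ℕ) (hB : 1 ≤ B) : ∃ A : ℕ,
    ∀ (q : ℕ) [NeZero q] (P : Finset ℕ) (q2 : ℕ), Dec q P q2 → ∀ κ : ℤ, IsCoprime κ (q : ℤ) →
    ∀ (N : ℕ) (x H : ℝ), 1 ≤ x → H = x ^ 4 → H * N = q →
      (loss q P q2 * H) ^ A ≤ (q : ℝ) ^ (1 / 8 : ℝ) → 2 * ⌊B * H⌋₊ < q →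
      ((∑ h ∈ (box M ⌊B * H⌋₊).filter (fun h => ¬ Injective (shf h)),
        ((tup N (M + 1)).filter fun n => Injective n ∧ Solves q d κ h n).card : ℕ) : ℝ) ≤
      loss q P q2 ^ A * N / x := by
  obtain ⟨e, he⟩ := eqPairs_le (show 0 < d by omega)
  obtain ⟨t, ht⟩ := fib_le_loss (show 0 < d by omega)
  obtain ⟨a, ha⟩ := moment hd (2 * (M + 1)) (C := 4 * M * B + 1) (by nlinarith [cast_nonneg (α := ℝ) M])
  refine ⟨e + t * (2 * (M + 1)) + a + d + 16, fun q _ P q2 hdec κ hκ N x H hx hHx hHN hbig hWq => ?_⟩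
  obtain ⟨hY2, -, -, -⟩ := hdec.le_loss
  have hT := ht q P q2 hdec κ hκ
  set Y := loss q P q2 with hY
  have hY1 : 1 ≤ Y := by linarith
  have hH : 1 ≤ H := by rw [hHx]; exact one_le_pow₀ hx
  have hq : 0 < q := NeZero.pos q
  have hq1 : (1 : ℝ) ≤ q := by exact_mod_cast hq
  have hN0 : (0 : ℝ) ≤ N := cast_nonneg _
  have hNq : N ≤ q := by
    have : (N : ℝ) ≤ q := by rw [← hHN]; exact le_mul_of_one_le_left hN0 hH
    exact_mod_cast this
  have hq8 : (q : ℝ) ^ (1 / 8 : ℝ) ≤ q := by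
    calc (q : ℝ) ^ (1 / 8 : ℝ) ≤ (q : ℝ) ^ (1 : ℝ) := Real.rpow_le_rpow_of_exponent_le hq1 (by norm_num)
      _ = q := Real.rpow_one _
  have hHleN : H ≤ N := by
    have h1 := (big_use (a := 0) (b := 2) hY1 hH (by omega) (by omega) hbig).trans hq8
    rw [pow_zero, one_mul, ← hHN, pow_two] at h1
    exact le_of_mul_le_mul_left h1 (by linarith)
  have hbig2 : 2 * H ^ d * Y ≤ q := by
    have h1 := (big_use (a := 2) (b := d) hY1 hH (by omega) (by omega) hbig).trans hq8
    refine le_trans ?_ h1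
    calc 2 * H ^ d * Y ≤ Y * H ^ d * Y := by gcongr
      _ = _ := by ring
  have h1 := he q P q2 hdec N H hH hHleN hHN hbig2
  have hWf : ((⌊B * H⌋₊ : ℕ) : ℝ) ≤ B * H := Nat.floor_le (by positivity)
  have h2 := ha q P q2 hdec κ hκ N H hH hHN (by
    refine le_trans ?_ hbig
    exact pow_le_pow_right₀ (by nlinarith) (by omega)) (2 * M * ⌊B * H⌋₊) (by
    push_cast
    have : 2 * (2 * (M : ℝ) * (⌊B * H⌋₊ : ℕ)) ≤ 2 * (2 * M * (B * H)) := by gcongr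
    nlinarith)
  set W := ⌊B * H⌋₊ with hW
  have h3 := sum_deg_le (M := M) (W := W) hκ hNq hWq hT
  set E := ((∑ h ∈ (box M W).filter (fun h => ¬ Injective (shf h)),
        ((tup N (M + 1)).filter fun n => Injective n ∧ Solves q d κ h n).card : ℕ) : ℝ) with hE
  have hE0 : 0 ≤ E := cast_nonneg _
  have h4 : E ^ 2 ≤ (Y ^ e * (N / H)) * ((Y ^ t) ^ (2 * (M + 1)) * (Y ^ a * N)) := by
    have hYt : 0 ≤ Y ^ t := pow_nonneg (by linarith) t
    refine (pow_le_pow_left₀ hE0 h3 2).trans ((sq_sum_pow_le (rep_subset d κ N) hYt).trans ?_)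
    exact mul_le_mul ((Nat.cast_le.2 card_image_le).trans h1)
      (mul_le_mul_of_nonneg_left h2 (pow_nonneg hYt _))
      (mul_nonneg (pow_nonneg hYt _) (cast_nonneg _))
      ((cast_nonneg _).trans h1)
  exact deg_arith hY1 hx hHx hE0 hN0 (by omega) h4

end

lemma weighted_cmp {ι : Type*} (S : Finset ι) (p : ι → Prop) (s v σ : ι → ℝ) {g Err E F : ℝ} (hB : 0 ≤ B) (hg : 0 ≤ g) (hErr : 0 ≤ Err) (hs : ∀ h, |s h| ≤ B) (hv : ∀ h, 0 ≤ v h)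
    (hσ : ∀ h, 0 ≤ σ h) (h1 : ∀ h ∈ S, p h → |v h - g * σ h| ≤ Err)
    (hE : ∑ h ∈ S.filter (fun h => ¬ p h), v h ≤ E) (hF : ∑ h ∈ S.filter (fun h => ¬ p h), σ h ≤ F) :
    |∑ h ∈ S, s h * v h - g * ∑ h ∈ S, s h * σ h| ≤ S.card * (B * Err) + B * E + g * (B * F) := by
  have e : ∑ h ∈ S, s h * v h - g * ∑ h ∈ S, s h * σ h = ∑ h ∈ S, s h * (v h - g * σ h) := by
    rw [mul_sum, ← sum_sub_distrib]
    exact sum_congr rfl fun h _ => by ring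
  rw [e, ← Finset.sum_filter_add_sum_filter_not S p]
  have a1 : |∑ h ∈ S.filter p, s h * (v h - g * σ h)| ≤ S.card * (B * Err) := by
    refine (abs_sum_le_sum_abs _ _).trans ?_
    calc ∑ h ∈ S.filter p, |s h * (v h - g * σ h)| ≤ ∑ h ∈ S.filter p, B * Err := by
          refine sum_le_sum fun h hh => ?_
          rw [abs_mul]
          exact mul_le_mul (hs h) (h1 h (mem_filter.1 hh).1 (mem_filter.1 hh).2)
            (abs_nonneg _) hB
      _ = (S.filter p).card * (B * Err) := by rw [sum_const, nsmul_eq_mul]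
      _ ≤ _ := by gcongr; exact filter_subset _ _
  have a2 : |∑ h ∈ S.filter (fun h => ¬ p h), s h * (v h - g * σ h)| ≤ B * E + g * (B * F) := by
    refine (abs_sum_le_sum_abs _ _).trans ?_
    calc ∑ h ∈ S.filter (fun h => ¬ p h), |s h * (v h - g * σ h)|
        ≤ ∑ h ∈ S.filter (fun h => ¬ p h), (B * v h + g * (B * σ h)) := by
          refine sum_le_sum fun h hh => ?_
          rw [abs_mul]
          calc |s h| * |v h - g * σ h| ≤ B * (v h + g * σ h) := by
                refine mul_le_mul (hs h) ?_ (abs_nonneg _) hB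
                have := mul_nonneg hg (hσ h)
                rw [abs_le]; constructor <;> linarith [hv h]
            _ = _ := by ring
      _ = B * ∑ h ∈ S.filter (fun h => ¬ p h), v h + g * (B * ∑ h ∈ S.filter (fun h => ¬ p h), σ h) := by
          rw [sum_add_distrib, ← mul_sum, ← mul_sum, ← mul_sum]
      _ ≤ _ := by gcongr
  refine (abs_add_le _ _).trans ?_
  linarith

lemma count_inj {q : ℕ} [NeZero q] {W : ℕ} (hh : h ∈ box M W)
    (hW : 2 * M * W < q) (hinj : Injective (shf h)) :
    (((tup N (M + 1)).filter fun n => Injective n ∧ Solves q d κ h n).card : ℝ) =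
      boxCount q d (M + 1) κ N (shf h) := by
  rw [boxCount_shf]
  congr 2
  refine Finset.filter_congr fun n _ => ⟨fun a => a.2, fun a => ⟨fun i j hij => ?_, a⟩⟩
  rw [solves_iff] at a
  have e : ((shf h i - shf h j : ℤ) : ZMod q) = 0 := by
    have h1 := a i
    have h2 := a j
    rw [hij, h2] at h1
    push_cast
    exact sub_eq_zero.2 (add_left_cancel h1).symm
  rw [intCast_zmod_eq_zero_iff_dvd] at e
  have hsh := shf_sub_le h (W := (W : ℝ)) (fun i => by
    rw [← cast_abs]; exact_mod_cast mem_box.1 hh i) (cast_nonneg _) i j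
  rw [← cast_abs] at hsh
  have hsh' : |shf h i - shf h j| ≤ 2 * M * W := by exact_mod_cast hsh
  have := Int.eq_zero_of_abs_lt_dvd e (lt_of_le_of_lt hsh' (by exact_mod_cast hW))
  exact hinj (sub_eq_zero.1 this)

lemma corr_arith {a1 a2 a3 a4 b c A : ℕ} {N x Y q q78 S w V : ℝ} (hB : 1 ≤ B) (hY : 2 ≤ Y)
    (hx : 1 ≤ x) (hHx : H = x ^ 4) (hN : 0 < N) (hHN : H * N = q) (hB' : B ≤ 2 ^ b)
    (hq78 : 0 ≤ q78) (hS : S ≤ (2 ^ c * H) ^ M) (hw0 : 0 ≤ w) (hw : w ≤ 2 ^ c * H)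
    (hbig : (Y ^ (c * M + b + a1 + c * (M + 1) ^ 2) * H ^ (M + (M + 1) ^ 2 + 1)) * q78 ≤ N)
    (hA : b + a2 + b + a3 + a4 + 2 ≤ A)
    (hV : V ≤ S * (B * (Y ^ a1 * q78 * w ^ ((M + 1) ^ 2))) + B * (Y ^ a2 * N / x) +
      ((1 / H) ^ (M + 1) * q) * (B * (Y ^ a3 * H ^ M / H))) :
    1 / N * V + 1 / H ^ M * (Y ^ a4 * H ^ M / x) ≤ Y ^ A / x := by
  have hH : 1 ≤ H := by rw [hHx]; exact one_le_pow₀ hx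
  have hH0 : 0 < H := by linarith
  have hx0 : 0 < x := by linarith
  have hY1 : 1 ≤ Y := by linarith
  have hxH : x ≤ H := by rw [hHx]; exact le_self_pow₀ hx (by norm_num)
  have hBY : B ≤ Y ^ b := hB'.trans (by gcongr)
  have t1 : S * (B * (Y ^ a1 * q78 * w ^ ((M + 1) ^ 2))) ≤ N / x := by
    rw [le_div_iff₀ hx0]
    refine le_trans ?_ hbig
    calc _ ≤ (2 ^ c * H) ^ M * (Y ^ b * (Y ^ a1 * q78 * (2 ^ c * H) ^ ((M + 1) ^ 2))) * H := by gcongr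
      _ ≤ (Y ^ c * H) ^ M * (Y ^ b * (Y ^ a1 * q78 * (Y ^ c * H) ^ ((M + 1) ^ 2))) * H := by gcongr
      _ = _ := by rw [mul_pow, mul_pow, ← pow_mul, ← pow_mul]; ring
  have t2 : B * (Y ^ a2 * N / x) ≤ Y ^ (b + a2) * (N / x) := by
    calc _ ≤ Y ^ b * (Y ^ a2 * N / x) := by gcongr
      _ = _ := by ring
  have t3 : ((1 / H) ^ (M + 1) * q) * (B * (Y ^ a3 * H ^ M / H)) ≤ Y ^ (b + a3) * (N / x) := by
    calc _ = B * (Y ^ a3 * (N / H)) := by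
          rw [← hHN, one_div, inv_pow]; field_simp; ring
      _ ≤ Y ^ b * (Y ^ a3 * (N / x)) := by gcongr
      _ = _ := by ring
  have t4 : 1 / H ^ M * (Y ^ a4 * H ^ M / x) = Y ^ a4 / x := by field_simp
  have t5 : 1 / N * V ≤ (1 + Y ^ (b + a2) + Y ^ (b + a3)) / x := by
    calc 1 / N * V ≤ 1 / N * (N / x + Y ^ (b + a2) * (N / x) + Y ^ (b + a3) * (N / x)) := by
          gcongr; linarith
      _ = _ := by field_simp
  rw [t4]
  refine (add_le_add_left t5 _).trans ?_
  rw [← add_div]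
  gcongr
  have s : ∀ k, k ≤ b + a2 + b + a3 + a4 → Y ^ k ≤ Y ^ (b + a2 + b + a3 + a4) := fun k hk =>
    pow_le_pow_right₀ hY1 hk
  have s0 := s 0 (by omega)
  have s1 := s (b + a2) (by omega)
  have s2 := s (b + a3) (by omega)
  have s3 := s a4 (by omega)
  rw [pow_zero] at s0
  calc 1 + Y ^ (b + a2) + Y ^ (b + a3) + Y ^ a4 ≤ 2 * 2 * Y ^ (b + a2 + b + a3 + a4) := by linarith
    _ ≤ Y * Y * Y ^ (b + a2 + b + a3 + a4) := by gcongr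
    _ = Y ^ (b + a2 + b + a3 + a4 + 2) := by ring
    _ ≤ _ := pow_le_pow_right₀ hY1 hA

set_option maxHeartbeats 800000 in
/-- The correlation sums at the rational `κ / q`, compared with a Riemann sum of `f`. -/
theorem corr_main (hd : 2 ≤ d) (hf : TF M f B) :
    ∃ A : ℕ, ∀ (q : ℕ) [NeZero q] (P : Finset ℕ) (q2 : ℕ), Dec q P q2 →
    ∀ κ : ℤ, IsCoprime κ (q : ℤ) → ∀ (N : ℕ) (x H : ℝ), 1 ≤ x → H = x ^ 4 → H * N = q →
      (loss q P q2 * H) ^ A ≤ (q : ℝ) ^ (1 / 8 : ℝ) →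
      |corrGen (M + 1) N (fun n => (n : ℝ) ^ d * ((κ : ℝ) / q)) f -
        (∑ h ∈ box M ⌊B * H⌋₊, smp f H h) / H ^ M| ≤ loss q P q2 ^ A / x := by
  have hB := hf.one_le
  obtain ⟨a1, ha1⟩ := completion (M + 1) hd
  obtain ⟨a2, ha2⟩ := deg_count hd M hB
  obtain ⟨a3, ha3⟩ := deg_term (show 0 < d by omega) M hB
  obtain ⟨a4, ha4⟩ := main_term (show 0 < d by omega) hf
  obtain ⟨b, hb⟩ := exists_two_pow_ge B
  obtain ⟨c, hc⟩ := exists_two_pow_ge (2 * (M + 1) * B + 3 * B + 2)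
  set A := (b + a2 + b + a3 + a4 + 2) + (c * M + b + a1 + c * (M + 1) ^ 2) +
    (M + (M + 1) ^ 2 + 1 + 1) + (c + 1) with hA
  refine ⟨A, fun q _ P q2 hdec κ hκ N x H hx hHx hHN hbig => ?_⟩
  obtain ⟨hY2, -, -, -⟩ := hdec.le_loss
  have d2 := ha2 q P q2 hdec κ hκ N x H hx hHx hHN
  have d3 := ha3 q P q2 hdec κ hκ H (by rw [hHx]; exact one_le_pow₀ hx)
  have d4 := ha4 q P q2 hdec κ hκ H x hx hHx
  have d1 := ha1 q P q2 hdec κ hκ N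
  set Y := loss q P q2 with hYdef
  clear_value Y
  have hY1 : 1 ≤ Y := by linarith
  have hH : 1 ≤ H := by rw [hHx]; exact one_le_pow₀ hx
  have hH0 : 0 < H := by linarith
  have hq : 0 < q := NeZero.pos q
  have hq1 : (1 : ℝ) ≤ q := by exact_mod_cast hq
  have hqne : (q : ℝ) ≠ 0 := by linarith
  have hN0 : (0 : ℝ) < N := by
    by_contra hn
    have : (N : ℝ) = 0 := le_antisymm (not_lt.1 hn) (cast_nonneg _)
    rw [this, mul_zero] at hHN
    exact hqne hHN.symm
  have hNq : N ≤ q := by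
    have : (N : ℝ) ≤ q := by rw [← hHN]; exact le_mul_of_one_le_left hN0.le hH
    exact_mod_cast this
  have hq8 : (q : ℝ) ^ (1 / 8 : ℝ) ≤ q := by
    calc (q : ℝ) ^ (1 / 8 : ℝ) ≤ (q : ℝ) ^ (1 : ℝ) := Real.rpow_le_rpow_of_exponent_le hq1 (by norm_num)
      _ = q := Real.rpow_one _
  have hWf : ((⌊B * H⌋₊ : ℕ) : ℝ) ≤ B * H := Nat.floor_le (by positivity)
  have hM0 : (0 : ℝ) ≤ M := cast_nonneg _
  have hcH : (2 * (M + 1) * B + 3 * B + 2) * H < q := by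
    have h1 := (big_use (a := c + 1) (b := 1) hY1 hH (by omega) (by omega) hbig).trans hq8
    have h2 : 2 ^ c * H ≤ Y ^ c * H := by gcongr
    have h3 : (2 * (M + 1) * B + 3 * B + 2) * H ≤ 2 ^ c * H := by gcongr
    have h4 : 0 < Y ^ c * H := by positivity
    have h5 : Y ^ (c + 1) * H ^ 1 = Y * (Y ^ c * H) := by ring
    nlinarith
  have hW1 : 2 * ⌊B * H⌋₊ < q := by
    have : 2 * ((⌊B * H⌋₊ : ℕ) : ℝ) < q := by
      have : 0 ≤ (M : ℝ) * B * H := by positivity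
      nlinarith
    exact_mod_cast this
  have hW2 : 2 * M * ⌊B * H⌋₊ < q := by
    have : 2 * (M : ℝ) * ((⌊B * H⌋₊ : ℕ) : ℝ) < q := by
      have h1 : 2 * (M : ℝ) * ((⌊B * H⌋₊ : ℕ) : ℝ) ≤ 2 * M * (B * H) := by gcongr
      have : 0 ≤ B * H := by positivity
      nlinarith
    exact_mod_cast this
  have e2 := d2 (by
    refine le_trans ?_ hbig
    exact pow_le_pow_right₀ (by nlinarith) (by
      have : a2 ≤ b + a2 + b + a3 + a4 + 2 := by omega
      omega)) hW1
  have hfb := floor_mul_bounds hB hH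
  rw [corr_rat hf hH0 hHN κ]
  rw [Nat.cast_sum] at e2
  set W := ⌊B * H⌋₊ with hWdef
  clear_value W
  clear d2
  clear_value A
  have hW0 : (0 : ℝ) ≤ W := cast_nonneg _
  have hNH : (N : ℝ) / q = 1 / H := by
    field_simp; linarith
  have hHeq : 1 / (N : ℝ) * ((1 / H) ^ (M + 1) * q) = 1 / H ^ M := by
    rw [← hHN, one_div (H), inv_pow]; field_simp; ring
  have hcmp := weighted_cmp (box M W) (fun h => Injective (shf h)) (smp f H)
    (fun h => (((tup N (M + 1)).filter fun n => Injective n ∧ Solves q d κ h n).card : ℝ))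
    (sig q d M κ) (B := B) (E := Y ^ a2 * N / x) (F := Y ^ a3 * H ^ M / H) (g := (1 / H) ^ (M + 1) * q)
    (Err := Y ^ a1 * (q : ℝ) ^ (7 / 8 : ℝ) * (2 * (M : ℝ) * W + 1) ^ ((M + 1) ^ 2))
    (by linarith) (by positivity) (by positivity) (fun h => hf.bdd _) (fun h => cast_nonneg _)
    (fun h => sig_nonneg d M κ h) (fun h hh hinj => by
      rw [count_inj hh hW2 hinj]
      have hsh := shf_sub_le h (W := (W : ℝ)) (fun i => by
        rw [← cast_abs]; exact_mod_cast mem_box.1 hh i) (cast_nonneg _)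
      have := d1 hNq _ hinj (2 * (M : ℝ) * W + 1) (by have : 0 ≤ (M : ℝ) * W := by positivity
                                                      linarith) (fun i j => (hsh i j).trans (by linarith))
      rw [hNH] at this
      refine le_of_eq_of_le ?_ this
      rw [sig]
      congr 2
      field_simp)
    (by convert e2) (by convert d3)
  have hbig' : (Y ^ (c * M + b + a1 + c * (M + 1) ^ 2) * H ^ (M + (M + 1) ^ 2 + 1)) *
      (q : ℝ) ^ (7 / 8 : ℝ) ≤ N := by
    refine q78_le hq hH0 hHN ?_
    have := big_use (a := c * M + b + a1 + c * (M + 1) ^ 2) (b := M + (M + 1) ^ 2 + 1 + 1) hY1 hH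
      (by omega) (by omega) hbig
    rwa [pow_succ H, ← mul_assoc] at this
  have hfin := corr_arith (a4 := a4) (A := A) hB hY2 hx hHx hN0 hHN hb (by positivity)
    (by
      rw [card_box]
      push_cast
      refine pow_le_pow_left₀ (by positivity) (hfb.1.trans ?_) M
      refine mul_le_mul_of_nonneg_right (le_trans ?_ hc) hH0.le
      have : 0 ≤ (M : ℝ) * B := by positivity
      nlinarith) (by positivity) (by
      calc 2 * (M : ℝ) * W + 1 ≤ 2 * M * (B * H) + 1 * H := by gcongr; linarith
        _ ≤ (2 * (M + 1) * B + 3 * B + 2) * H := by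
          have : 0 ≤ B * H := by positivity
          nlinarith
        _ ≤ _ := by gcongr) hbig' (by omega) hcmp
  refine le_trans ?_ hfin
  have key : ∀ u v w : ℝ, 1 / (N : ℝ) * u - w / H ^ M =
      1 / (N : ℝ) * (u - (1 / H) ^ (M + 1) * q * v) + 1 / H ^ M * (v - w) := by
    intro u v w
    rw [mul_sub, ← mul_assoc (1 / (N : ℝ)), hHeq]; ring
  rw [key _ (∑ h ∈ box M W, smp f H h * sig q d M κ h)]
  refine (abs_add_le _ _).trans ?_
  rw [abs_mul, abs_mul, abs_of_nonneg (show 0 ≤ 1 / (N : ℝ) by positivity),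
    abs_of_nonneg (show 0 ≤ 1 / H ^ M by positivity)]
  exact add_le_add le_rfl (mul_le_mul_of_nonneg_left d4 (by positivity))

/-- The lattice vectors at distance at most `B` from `-Δ` in each coordinate. -/
def win {M : ℕ} (Δ : Fin M → ℝ) (B : ℝ) : Finset (Fin M → ℤ) :=
  piFinset fun i => Icc ⌈-Δ i - B⌉ ⌊-Δ i + B⌋

lemma mem_win {Δ : Fin M → ℝ} {l : Fin M → ℤ} : l ∈ win Δ B ↔ ∀ i, |(l i : ℝ) + Δ i| ≤ B := by
  simp only [win, mem_piFinset, mem_Icc, Int.ceil_le, Int.le_floor, abs_le]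
  refine forall_congr' fun i => ⟨fun h => ⟨by linarith [h.1], by linarith [h.2]⟩,
    fun h => ⟨by linarith [h.1], by linarith [h.2]⟩⟩

lemma card_win (Δ : Fin M → ℝ) (hB : 0 ≤ B) : ((win Δ B).card : ℝ) ≤ (2 * B + 1) ^ M := by
  rw [win, card_piFinset]
  push_cast
  refine (Finset.prod_le_prod (fun _ _ => cast_nonneg _) (g := fun _ => 2 * B + 1) fun i _ => ?_).trans
    (by simp)
  rw [Int.card_Icc]
  rcases le_total (⌊-Δ i + B⌋ + 1 - ⌈-Δ i - B⌉) 0 with h | h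
  · rw [Int.toNat_of_nonpos h]; push_cast; linarith
  · have : (((⌊-Δ i + B⌋ + 1 - ⌈-Δ i - B⌉).toNat : ℕ) : ℝ) = ((⌊-Δ i + B⌋ + 1 - ⌈-Δ i - B⌉ : ℤ) : ℝ) := by
      exact_mod_cast congrArg (Int.cast (R := ℝ)) (Int.toNat_of_nonneg h)
    rw [this]; push_cast
    linarith [Int.floor_le (-Δ i + B), Int.le_ceil (-Δ i - B)]

lemma tsum_win (hf : TF M f B) (hN : 1 ≤ N) {Δ Δ' : Fin M → ℝ} (hΔ : ∀ i, |Δ i - Δ' i| ≤ 1) :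
    ∑' l : Fin M → ℤ, f (fun i => (N : ℝ) * ((l i : ℝ) + Δ' i)) =
      ∑ l ∈ win Δ (B + 1), f (fun i => (N : ℝ) * ((l i : ℝ) + Δ' i)) := by
  refine tsum_eq_sum fun l hl => ?_
  rw [mem_win] at hl
  push Not at hl
  obtain ⟨i, hi⟩ := hl
  refine hf.supp _ ⟨i, ?_⟩
  have hN1 : (1 : ℝ) ≤ N := by exact_mod_cast hN
  have h1 : (l i : ℝ) + Δ i = ((l i : ℝ) + Δ' i) + (Δ i - Δ' i) := by ring
  rw [h1] at hi
  have h2 := abs_add_le ((l i : ℝ) + Δ' i) (Δ i - Δ' i)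
  rw [abs_mul, abs_of_nonneg (by linarith : (0 : ℝ) ≤ N)]
  have h3 : B < |(l i : ℝ) + Δ' i| := by linarith [hΔ i]
  have h4 := abs_nonneg ((l i : ℝ) + Δ' i)
  nlinarith

lemma tsum_perturb (hf : TF M f B) (hN : 1 ≤ N) {δ : ℝ}
    (hδ0 : 0 ≤ δ) (hδ : δ ≤ 1) {Δ Δ' : Fin M → ℝ} (hΔ : ∀ i, |Δ i - Δ' i| ≤ δ) :
    |∑' l : Fin M → ℤ, f (fun i => (N : ℝ) * ((l i : ℝ) + Δ i)) -
      ∑' l : Fin M → ℤ, f (fun i => (N : ℝ) * ((l i : ℝ) + Δ' i))| ≤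
      (2 * (B + 1) + 1) ^ M * (B * (N * δ)) := by
  have hB := hf.one_le
  rw [tsum_win hf hN (Δ := Δ) (Δ' := Δ) (fun i => by simp),
    tsum_win hf hN (Δ := Δ) (Δ' := Δ') (fun i => (hΔ i).trans hδ), ← sum_sub_distrib]
  refine (abs_sum_le_sum_abs _ _).trans ?_
  calc _ ≤ ∑ l ∈ win Δ (B + 1), B * (N * δ) := by
        refine sum_le_sum fun l _ => (hf.lip _ _).trans ?_
        refine mul_le_mul_of_nonneg_left ?_ (by linarith)
        refine (pi_norm_le_iff_of_nonneg (by positivity)).2 fun i => ?_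
        rw [Pi.sub_apply, norm_eq_abs]
        have : (N : ℝ) * ((l i : ℝ) + Δ i) - N * ((l i : ℝ) + Δ' i) = N * (Δ i - Δ' i) := by ring
        rw [this, abs_mul, abs_of_nonneg (cast_nonneg N)]
        exact mul_le_mul_of_nonneg_left (hΔ i) (cast_nonneg N)
    _ ≤ _ := by
        rw [sum_const, nsmul_eq_mul]
        refine mul_le_mul_of_nonneg_right (card_win Δ (by linarith)) (by positivity)

/-- Replacing the sequence by a nearby one changes the correlation sum little. -/
lemma corr_perturb (hf : TF M f B) (hN : 1 ≤ N) {δ : ℝ}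
    (hδ0 : 0 ≤ δ) (hδ : 2 * δ ≤ 1) {x x' : ℕ → ℝ} (hx : ∀ n, 1 ≤ n → n ≤ N → |x n - x' n| ≤ δ) :
    |corrGen (M + 1) N x f - corrGen (M + 1) N x' f| ≤
      (2 * (B + 1) + 1) ^ M * (2 * B) * (N ^ (M + 1) * δ) := by
  have hB := hf.one_le
  have hN0 : (0 : ℝ) < N := by exact_mod_cast hN
  unfold corrGen
  rw [← mul_sub, ← sum_sub_distrib, abs_mul, abs_of_nonneg (by positivity)]
  refine (mul_le_mul_of_nonneg_left (abs_sum_le_sum_abs _ _) (by positivity)).trans ?_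
  have h1 : ∀ n ∈ (piFinset fun _ : Fin (M + 1) => Icc 1 N).filter
      (fun n => Injective n),
      |∑' l : Fin (M + 1 - 1) → ℤ, f (fun i => (N : ℝ) * ((l i : ℝ) +
            (x (n ⟨i.1, by have := i.isLt; omega⟩) - x (n ⟨i.1 + 1, by have := i.isLt; omega⟩)))) -
        ∑' l : Fin (M + 1 - 1) → ℤ, f (fun i => (N : ℝ) * ((l i : ℝ) +
            (x' (n ⟨i.1, by have := i.isLt; omega⟩) - x' (n ⟨i.1 + 1, by have := i.isLt; omega⟩))))| ≤
      (2 * (B + 1) + 1) ^ M * (B * (N * (2 * δ))) := by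
    intro n hn
    have hn' := fun j => mem_Icc.1 (mem_piFinset.1 (mem_filter.1 hn).1 j)
    refine tsum_perturb (M := M) hf hN (by linarith) hδ fun i => ?_
    have a := hx _ (hn' ⟨i.1, by have := i.isLt; omega⟩).1 (hn' ⟨i.1, by have := i.isLt; omega⟩).2
    have b := hx _ (hn' ⟨i.1 + 1, by have := i.isLt; omega⟩).1 (hn' ⟨i.1 + 1, by have := i.isLt; omega⟩).2
    rw [abs_le] at a b ⊢
    constructor <;> linarith [a.1, a.2, b.1, b.2]
  refine (mul_le_mul_of_nonneg_left (sum_le_sum h1) (by positivity)).trans ?_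
  rw [sum_const, nsmul_eq_mul]
  have h2 : ((((piFinset fun _ : Fin (M + 1) => Icc 1 N).filter
      (fun n => Injective n)).card : ℕ) : ℝ) ≤ (N : ℝ) ^ (M + 1) := by
    have := card_filter_le (piFinset fun _ : Fin (M + 1) => Icc 1 N)
      (fun n => Injective n)
    rw [card_piFinset] at this
    simp only [Nat.card_Icc, Nat.add_sub_cancel, prod_const, card_univ, card_fin] at this
    exact_mod_cast this
  calc _ ≤ 1 / (N : ℝ) * ((N : ℝ) ^ (M + 1) * ((2 * (B + 1) + 1) ^ M * (B * (N * (2 * δ))))) := by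
        gcongr
    _ = _ := by field_simp

lemma tsum_nonneg_win {M : ℕ} {f : (Fin M → ℝ) → ℝ} (hf0 : ∀ y, 0 ≤ f y) (N : ℕ) (Δ : Fin M → ℝ) :
    0 ≤ ∑' l : Fin M → ℤ, f (fun i => (N : ℝ) * ((l i : ℝ) + Δ i)) :=
  tsum_nonneg fun _ => hf0 _

lemma one_le_tsum (hf : TF M f B) (hf0 : ∀ y, 0 ≤ f y)
    (hf1 : ∀ y, (∀ i, |y i| ≤ 1) → 1 ≤ f y) (hN : 1 ≤ N) {Δ : Fin M → ℝ}
    (hΔ : ∀ i, ∃ l : ℤ, |(N : ℝ) * ((l : ℝ) + Δ i)| ≤ 1) :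
    1 ≤ ∑' l : Fin M → ℤ, f (fun i => (N : ℝ) * ((l i : ℝ) + Δ i)) := by
  choose l hl using hΔ
  have hB := hf.one_le
  rw [tsum_win hf hN (Δ := Δ) (Δ' := Δ) (fun i => by simp)]
  have hmem : l ∈ win Δ (B + 1) := by
    rw [mem_win]
    intro i
    have h1 := hl i
    have hN1 : (1 : ℝ) ≤ N := by exact_mod_cast hN
    rw [abs_mul, abs_of_nonneg (by linarith : (0 : ℝ) ≤ N)] at h1
    have := abs_nonneg ((l i : ℝ) + Δ i)
    nlinarith
  exact (hf1 _ hl).trans (Finset.single_le_sum (f := fun l : Fin M → ℤ => f (fun i => (N : ℝ) * ((l i : ℝ) + Δ i)))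
    (fun _ _ => hf0 _) hmem)

/-- Clustering of many terms modulo one forces a large correlation sum. -/
lemma corr_ge (hf : TF M f B) (hf0 : ∀ y, 0 ≤ f y)
    (hf1 : ∀ y, (∀ i, |y i| ≤ 1) → 1 ≤ f y) (hN : 1 ≤ N) {x : ℕ → ℝ} {C : Finset ℕ}
    (hC : C ⊆ Icc 1 N) (hx : ∀ n ∈ C, ∀ n' ∈ C, ∃ l : ℤ, |(N : ℝ) * ((l : ℝ) + (x n - x n'))| ≤ 1) :
    1 / (N : ℝ) * (C.card.descFactorial (M + 1) : ℝ) ≤ corrGen (M + 1) N x f := by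
  unfold corrGen
  refine mul_le_mul_of_nonneg_left ?_ (by positivity)
  set S := (piFinset fun _ : Fin (M + 1) => C).filter (fun n => Injective n) with hS
  have h1 : (C.card.descFactorial (M + 1) : ℝ) ≤ S.card := by
    have e1 : C.card.descFactorial (M + 1) = Fintype.card (Fin (M + 1) ↪ ↥C) := by
      rw [Fintype.card_embedding_eq, Fintype.card_coe, card_fin]
    rw [e1, ← card_univ]
    refine Nat.cast_le.2 (card_le_card_of_injOn (fun e i => (e i : ℕ)) ?_ ?_)
    · intro e _
      simp only [hS, mem_coe, mem_filter, mem_piFinset]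
      exact ⟨fun i => (e i).2, fun i j h => e.injective (Subtype.ext h)⟩
    · intro e _ e' _ h
      ext i
      exact congrFun h i
  have hsub : S ⊆ (piFinset fun _ : Fin (M + 1) => Icc 1 N).filter
      (fun n => Injective n) :=
    Finset.filter_subset_filter _ (Fintype.piFinset_subset _ _ fun _ => hC)
  refine h1.trans (le_trans ?_ (sum_le_sum_of_subset_of_nonneg hsub fun n _ _ =>
    tsum_nonneg_win (M := M) hf0 N _))
  rw [Finset.card_eq_sum_ones]
  push_cast
  refine sum_le_sum fun n hn => ?_
  have hn' := mem_piFinset.1 (mem_filter.1 hn).1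
  exact one_le_tsum (M := M) hf hf0 hf1 hN fun i => hx _ (hn' _) _ (hn' _)

/-- A powerful number divides the square of a much smaller number. -/
lemma powerful_root {n : ℕ} (hn : n ≠ 0) (hp : ∀ p, p.Prime → p ∣ n → p ^ 2 ∣ n) :
    ∃ R : ℕ, 0 < R ∧ n ∣ R ^ 2 ∧ R ^ 3 ≤ n ^ 2 := by
  have hfac : ∏ p ∈ n.primeFactors, p ^ n.factorization p = n := Nat.prod_factorization_pow_eq_self hn
  refine ⟨∏ p ∈ n.primeFactors, p ^ ((n.factorization p + 1) / 2), ?_, ?_, ?_⟩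
  · exact prod_pos fun p hp => pow_pos (Nat.prime_of_mem_primeFactors hp).pos _
  · conv_lhs => rw [← hfac]
    rw [← prod_pow]
    refine Finset.prod_dvd_prod_of_dvd _ _ fun p _ => ?_
    rw [← pow_mul]
    exact pow_dvd_pow _ (by omega)
  · conv_rhs => rw [← hfac]
    rw [← prod_pow, ← prod_pow]
    refine Finset.prod_le_prod' fun p hpn => ?_
    have hpp := Nat.prime_of_mem_primeFactors hpn
    have h2 : 2 ≤ n.factorization p :=
      (hpp.pow_dvd_iff_le_factorization hn).1 (hp p hpp (Nat.dvd_of_mem_primeFactors hpn))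
    rw [← pow_mul, ← pow_mul]
    exact Nat.pow_le_pow_right hpp.pos (by omega)

/-- Splitting of `q` into a squarefree part and a coprime powerful part. -/
lemma exists_dec (q : ℕ) (hq : q ≠ 0) : ∃ (P : Finset ℕ) (q2 : ℕ), Dec q P q2 ∧
    ∀ p, p.Prime → p ∣ q2 → p ^ 2 ∣ q2 := by
  set P := q.primeFactors.filter fun p => ¬ p ^ 2 ∣ q with hP
  have hprime : ∀ p ∈ P, p.Prime := fun p hp => Nat.prime_of_mem_primeFactors (mem_filter.1 hp).1
  obtain ⟨q2, hq2⟩ : ∏ p ∈ P, p ∣ q :=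
    prod_primes_dvd q (fun p hp => (hprime p hp).prime)
      (fun p hp => Nat.dvd_of_mem_primeFactors (mem_filter.1 hp).1)
  have hcop : ∀ p ∈ P, p.Coprime q2 := by
    intro p hp
    rw [(hprime p hp).coprime_iff_not_dvd]
    intro hd
    refine (mem_filter.1 hp).2 ?_
    rw [hq2, pow_two]
    exact mul_dvd_mul (dvd_prod_of_mem _ hp) hd
  have hcop' : (∏ p ∈ P, p).Coprime q2 := Coprime.prod_left hcop
  refine ⟨P, q2, ⟨hprime, hcop, hq2⟩, fun p hp hd => ?_⟩
  have hpq : p ∣ q := hq2 ▸ Dvd.dvd.mul_left hd _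
  have hpP : p ∉ P := fun h => (hp.coprime_iff_not_dvd.1 (hcop p h)) hd
  have hp2 : p ^ 2 ∣ q := by
    by_contra h
    exact hpP (mem_filter.2 ⟨Nat.mem_primeFactors.2 ⟨hp, hpq, hq⟩, h⟩)
  rw [hq2] at hp2
  refine Coprime.dvd_of_dvd_mul_left ?_ hp2
  exact Coprime.pow_left 2 (Coprime.coprime_dvd_left hd hcop'.symm)

/-- Many multiples of `R` share the residue of `κ n ^ d` modulo `q`. -/
lemma cluster {q q1 q2 R : ℕ} (hd : 2 ≤ d) (hq : q = q1 * q2) (hq0 : 0 < q) (hR : 0 < R)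
    (hdvd : q2 ∣ R ^ 2) : ∃ C : Finset ℕ, C ⊆ Icc 1 N ∧ N / R / q1 ≤ C.card ∧
      ∀ n ∈ C, ∀ n' ∈ C, (q : ℤ) ∣ (n : ℤ) ^ d - (n' : ℤ) ^ d := by
  have hq1 : 0 < q1 := Nat.pos_of_ne_zero fun h => by simp [h] at hq; omega
  have hq2 : 0 < q2 := Nat.pos_of_ne_zero fun h => by simp [h] at hq; omega
  have hRd : ∀ n, q2 ∣ (R * n) ^ d := fun n => by
    rw [mul_pow]
    exact Dvd.dvd.mul_right (hdvd.trans (pow_dvd_pow R hd)) _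
  obtain ⟨y, -, hy⟩ := Finset.exists_le_card_fiber_of_mul_le_card_of_maps_to
    (s := Icc 1 (N / R)) (t := range q1) (f := fun n => ((R * n) ^ d / q2) % q1)
    (n := N / R / q1) (fun n _ => mem_range.2 (Nat.mod_lt _ hq1))
    (Finset.nonempty_range_iff.2 hq1.ne') (by
      rw [Finset.card_range, Nat.card_Icc, Nat.add_sub_cancel]; exact Nat.mul_div_le _ _)
  refine ⟨((Icc 1 (N / R)).filter fun n => ((R * n) ^ d / q2) % q1 = y).image fun n => R * n,
    ?_, ?_, ?_⟩
  · intro n hn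
    obtain ⟨n, hm, rfl⟩ := mem_image.1 hn
    obtain ⟨h1, h2⟩ := mem_Icc.1 (mem_filter.1 hm).1
    refine mem_Icc.2 ⟨Nat.mul_pos hR h1, ?_⟩
    rw [mul_comm]
    exact (Nat.le_div_iff_mul_le hR).1 h2
  · rwa [card_image_of_injective _ (fun a b h => Nat.eq_of_mul_eq_mul_left hR h)]
  · intro n hn n' hn'
    obtain ⟨n, hm, rfl⟩ := mem_image.1 hn
    obtain ⟨n', hm', rfl⟩ := mem_image.1 hn'
    obtain ⟨u, hu⟩ := hRd n
    obtain ⟨u', hu'⟩ := hRd n'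
    have e := (mem_filter.1 hm).2
    have e' := (mem_filter.1 hm').2
    rw [hu, Nat.mul_div_cancel_left _ hq2] at e
    rw [hu', Nat.mul_div_cancel_left _ hq2] at e'
    have h1 : (q1 : ℤ) ∣ (u : ℤ) - u' := by
      have : u' ≡ u [MOD q1] := by rw [Nat.ModEq, e, e']
      exact Nat.modEq_iff_dvd.1 this
    have a : ((R * n : ℕ) : ℤ) ^ d - ((R * n' : ℕ) : ℤ) ^ d = q2 * ((u : ℤ) - u') := by
      rw [← Nat.cast_pow, ← Nat.cast_pow, hu, hu']; push_cast; ring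
    rw [a, hq, mul_comm q1]
    push_cast
    exact mul_dvd_mul_left _ h1

lemma cluster_large {q q1 q2 R : ℕ} {κ : ℝ} (hq : q = q1 * q2) (hq0 : 1 ≤ q)
    (hR0 : 0 < R) (hR : R ^ 3 ≤ q2 ^ 2) (hbig : (q : ℝ) ^ κ ≤ q2) (hN : (q : ℝ) ^ (1 - κ / 6) ≤ N)
    (hN2 : (N : ℝ) ≤ (q : ℝ) ^ (2 : ℝ)) (hm : 36 ≤ κ * m) (h2 : 2 ≤ (q : ℝ) ^ (κ / 12))
    (h2m : 2 * (m : ℝ) ≤ (q : ℝ) ^ (κ / 6)) :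
    (q : ℝ) ≤ 1 / (N : ℝ) * ((N / R / q1).descFactorial m : ℝ) := by
  have hq1r : (1 : ℝ) ≤ q := by exact_mod_cast hq0
  have hqr : (0 : ℝ) < q := by linarith
  have hq1 : 0 < q1 := Nat.pos_of_ne_zero fun h => by simp [h] at hq; omega
  have hq2 : 0 < q2 := Nat.pos_of_ne_zero fun h => by simp [h] at hq; omega
  have hq2r : (0 : ℝ) < q2 := by exact_mod_cast hq2
  have hN0 : (0 : ℝ) < N := (Real.rpow_pos_of_pos hqr _).trans_le hN
  have hRq : (R : ℝ) * q1 ≤ (q : ℝ) ^ (1 - κ / 3) := by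
    refine (pow_le_pow_iff_left₀ (by positivity) (by positivity) (three_ne_zero)).1 ?_
    rw [← rpow_natCast ((q : ℝ) ^ (1 - κ / 3)), ← Real.rpow_mul hqr.le]
    have e : (1 - κ / 3) * ((3 : ℕ) : ℝ) = (3 : ℕ) - κ := by push_cast; ring
    rw [e, Real.rpow_sub hqr, rpow_natCast, le_div_iff₀ (by positivity)]
    calc ((R : ℝ) * q1) ^ 3 * (q : ℝ) ^ κ ≤ ((R : ℝ) ^ 3 * (q1 : ℝ) ^ 3) * q2 := by
          rw [mul_pow]; gcongr
      _ ≤ ((q2 : ℝ) ^ 2 * (q1 : ℝ) ^ 3) * q2 := by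
          gcongr; exact_mod_cast hR
      _ = _ := by rw [hq]; push_cast; ring
  have hT : (q : ℝ) ^ (κ / 6) - 1 ≤ ((N / R / q1 : ℕ) : ℝ) := by
    rw [Nat.div_div_eq_div_mul]
    have h1 : (N : ℝ) / ((R * q1 : ℕ) : ℝ) < ((N / (R * q1) : ℕ) : ℝ) + 1 := by
      rw [← Nat.floor_div_eq_div (K := ℝ)]
      exact Nat.lt_floor_add_one _
    have h3 : (q : ℝ) ^ (κ / 6) ≤ (N : ℝ) / ((R * q1 : ℕ) : ℝ) := by
      rw [le_div_iff₀ (by push_cast; positivity)]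
      push_cast
      calc (q : ℝ) ^ (κ / 6) * (R * q1) ≤ (q : ℝ) ^ (κ / 6) * (q : ℝ) ^ (1 - κ / 3) := by gcongr
        _ = (q : ℝ) ^ (1 - κ / 6) := by rw [← Real.rpow_add hqr]; congr 1; ring
        _ ≤ _ := hN
    linarith
  set T := N / R / q1 with hTdef
  have hbase : (q : ℝ) ^ (κ / 12) ≤ ((T + 1 - m : ℕ) : ℝ) := by
    have e1 : (q : ℝ) ^ (κ / 6) = (q : ℝ) ^ (κ / 12) * (q : ℝ) ^ (κ / 12) := by
      rw [← Real.rpow_add hqr]; congr 1; ring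
    have e2 : (T : ℝ) + 1 - m ≤ ((T + 1 - m : ℕ) : ℝ) := by
      have := le_tsub_add (a := m) (b := T + 1)
      have h' : ((T + 1 : ℕ) : ℝ) ≤ ((T + 1 - m + m : ℕ) : ℝ) := by exact_mod_cast this
      push_cast at h' ⊢
      linarith
    nlinarith
  have hpow : (q : ℝ) ^ (3 : ℝ) ≤ (T.descFactorial m : ℝ) := by
    calc (q : ℝ) ^ (3 : ℝ) ≤ (q : ℝ) ^ (κ / 12 * m) :=
          Real.rpow_le_rpow_of_exponent_le hq1r (by linarith)
      _ = ((q : ℝ) ^ (κ / 12)) ^ m := by rw [Real.rpow_mul hqr.le, rpow_natCast]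
      _ ≤ ((T + 1 - m : ℕ) : ℝ) ^ m := by gcongr
      _ ≤ _ := by exact_mod_cast Nat.pow_sub_le_descFactorial T m
  rw [one_div, inv_mul_eq_div, le_div_iff₀ hN0]
  calc (q : ℝ) * N ≤ q * (q : ℝ) ^ (2 : ℝ) := by gcongr
    _ = (q : ℝ) ^ (3 : ℝ) := by
        rw [← Real.rpow_one_add' hqr.le (by norm_num)]; norm_num
    _ ≤ _ := hpow

lemma exists_test (M : ℕ) : ∃ f : (Fin M → ℝ) → ℝ, SmoothCpt M f ∧ (∀ y, 0 ≤ f y) ∧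
    ∀ y, (∀ i, |y i| ≤ 1) → 1 ≤ f y := by
  let g : ContDiffBump (0 : Fin M → ℝ) := ⟨1, 2, by norm_num, by norm_num⟩
  refine ⟨g, ⟨g.contDiff, g.hasCompactSupport⟩, fun y => g.nonneg, fun y hy => ?_⟩
  refine (g.one_of_mem_closedBall ?_).ge
  rw [mem_closedBall_zero_iff]
  exact (pi_norm_le_iff_of_nonneg (by norm_num [g])).2 hy

lemma cluster_corr {q q1 q2 R : ℕ} {α : ℝ} {b : ℤ} (hf : TF M f B)
    (hf0 : ∀ y, 0 ≤ f y) (hf1 : ∀ y, (∀ i, |y i| ≤ 1) → 1 ≤ f y) (hd : 2 ≤ d) (hN : 1 ≤ N)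
    (hq : q = q1 * q2) (hq0 : 0 < q) (hR : 0 < R) (hdvd : q2 ∣ R ^ 2)
    (happ : (N : ℝ) * (N ^ d * |α - b / q|) ≤ 1) :
    1 / (N : ℝ) * ((N / R / q1).descFactorial (M + 1) : ℝ) ≤ corrPow (M + 1) N d α f := by
  obtain ⟨C, hCN, hCcard, hC⟩ := cluster (N := N) hd hq hq0 hR hdvd
  refine le_trans ?_ (corr_ge hf hf0 hf1 hN hCN fun n hn n' hn' => ?_)
  · refine mul_le_mul_of_nonneg_left ?_ (by positivity)
    exact_mod_cast Nat.descFactorial_le _ hCcard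
  · obtain ⟨z, hz⟩ := hC n hn n' hn'
    refine ⟨-(b * z), ?_⟩
    have hqr : (q : ℝ) ≠ 0 := by exact_mod_cast hq0.ne'
    have hz' : (n : ℝ) ^ d - (n' : ℝ) ^ d = q * z := by exact_mod_cast hz
    have e : ((-(b * z) : ℤ) : ℝ) + ((n : ℝ) ^ d * α - (n' : ℝ) ^ d * α) =
        ((n : ℝ) ^ d - (n' : ℝ) ^ d) * (α - b / q) := by
      rw [← sub_mul, hz']; push_cast; field_simp; ring
    rw [e, abs_mul, abs_of_nonneg (cast_nonneg N), abs_mul]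
    refine le_trans ?_ happ
    have b1 : ∀ n ∈ C, (n : ℝ) ^ d ≤ (N : ℝ) ^ d := fun n hn =>
      pow_le_pow_left₀ (cast_nonneg _) (by exact_mod_cast (mem_Icc.1 (hCN hn)).2) d
    have b2 : |(n : ℝ) ^ d - (n' : ℝ) ^ d| ≤ (N : ℝ) ^ d := by
      have p1 : (0 : ℝ) ≤ (n : ℝ) ^ d := by positivity
      have p2 : (0 : ℝ) ≤ (n' : ℝ) ^ d := by positivity
      rw [abs_le]; constructor <;> linarith [b1 n hn, b1 n' hn']
    gcongr

lemma log_q_tendsto {q Nseq : ℕ → ℕ} (hq2 : ∀ j, 2 ≤ q j) (hN : Tendsto Nseq atTop atTop)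
    (hlog : Tendsto (fun j => log (Nseq j) / log (q j)) atTop (nhds 1)) :
    Tendsto (fun j => log (q j)) atTop atTop := by
  have h1 : Tendsto (fun j => log (Nseq j) / 2) atTop atTop :=
    (Real.tendsto_log_atTop.comp (tendsto_natCast_atTop_atTop.comp hN)).atTop_div_const (by norm_num)
  refine tendsto_atTop_mono' _ ?_ h1
  filter_upwards [hlog.eventually (eventually_lt_nhds (show (1 : ℝ) < 2 by norm_num))] with j hj
  have : 0 < log (q j) := log_pos (by exact_mod_cast hq2 j)
  rw [div_lt_iff₀ this] at hj
  linarith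

lemma approx_le {q : ℕ} {k : ℤ} {e : ℝ} (hq : 1 ≤ q) (hN2 : (N : ℝ) ≤ (q : ℝ) ^ (2 : ℝ)) {r : ℕ}
    (hk : (2 * d + r : ℕ) ≤ k) (he : e ≤ (q : ℝ) ^ (-k)) : (N : ℝ) ^ d * e ≤ ((q : ℝ) ^ r)⁻¹ := by
  have hq1 : (1 : ℝ) ≤ q := by exact_mod_cast hq
  have hq0 : (0 : ℝ) < q := by linarith
  rw [Real.rpow_ofNat] at hN2
  calc (N : ℝ) ^ d * e ≤ (N : ℝ) ^ d * (q : ℝ) ^ (-k) := by gcongr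
    _ ≤ ((q : ℝ) ^ 2) ^ d * (q : ℝ) ^ (-((2 * d + r : ℕ) : ℤ)) := by
      gcongr
    _ = ((q : ℝ) ^ r)⁻¹ := by
      rw [zpow_neg, zpow_natCast, ← pow_mul, pow_add]; field_simp

/-- Poissonian correlations force the powerful part of the denominators to be negligible. -/
theorem powerful_small {α : ℝ} {b : ℕ → ℤ} {q : ℕ → ℕ} {k : ℕ → ℤ} (hq2 : ∀ j, 2 ≤ q j)
    (hk : Tendsto k atTop atTop) (happ : ∀ j, |α - (b j : ℝ) / (q j : ℝ)| ≤ (q j : ℝ) ^ (-(k j)))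
    (hd : 2 ≤ d) {Nseq : ℕ → ℕ} (hN : Tendsto Nseq atTop atTop)
    (hlog : Tendsto (fun j => log (Nseq j) / log (q j)) atTop (nhds 1))
    (hP : PoissonianAlong d α Nseq) {P : ℕ → Finset ℕ} {r : ℕ → ℕ} (hdec : ∀ j, Dec (q j) (P j) (r j))
    (hpow : ∀ j p, p.Prime → p ∣ r j → p ^ 2 ∣ r j) :
    Tendsto (fun j => log (r j) / log (q j)) atTop (nhds 0) := by
  have hL := log_q_tendsto hq2 hN hlog
  have hLpos : ∀ j, 0 < log (q j) := fun j => log_pos (by exact_mod_cast hq2 j)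
  have hr0 : ∀ j, 0 < r j := fun j => Nat.pos_of_ne_zero fun h => by
    have := (hdec j).eq
    rw [h, mul_zero] at this
    have := hq2 j
    omega
  refine tendsto_order.2 ⟨fun a ha => Eventually.of_forall fun j => ha.trans_le ?_, fun κ hκ => ?_⟩
  · exact div_nonneg (log_nonneg (by exact_mod_cast hr0 j)) (hLpos j).le
  obtain ⟨M, hM⟩ := exists_nat_ge (36 / κ)
  have hM' : 36 ≤ κ * ((M + 1 + 1 : ℕ) : ℝ) := by
    rw [div_le_iff₀ hκ] at hM
    push_cast
    linarith
  obtain ⟨f, hfs, hf0, hf1⟩ := exists_test (M + 1)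
  obtain ⟨B, hf⟩ := TF_exists hfs
  have hlim := hP (M + 1 + 1) (by omega) f hfs
  set I := ∫ y : Fin (M + 1 + 1 - 1) → ℝ, f y with hI
  have hqr : Tendsto (fun j => ((q j : ℕ) : ℝ)) atTop atTop := by
    refine tendsto_atTop_mono (fun j => ?_) hL
    exact (Real.log_le_sub_one_of_pos (by exact_mod_cast (by have := hq2 j; omega))).trans (by linarith)
  have hpw : ∀ s : ℝ, 0 < s → Tendsto (fun j => ((q j : ℕ) : ℝ) ^ s) atTop atTop := fun s hs =>
    (tendsto_rpow_atTop hs).comp hqr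
  filter_upwards [hlim.eventually (eventually_lt_nhds (show I < I + 1 by linarith)),
    hqr.eventually_ge_atTop (I + 1), (hpw (κ / 12) (by positivity)).eventually_ge_atTop 2,
    (hpw (κ / 6) (by positivity)).eventually_ge_atTop (2 * ((M + 1 + 1 : ℕ) : ℝ)),
    hlog.eventually (eventually_gt_nhds (show 1 - κ / 6 < 1 by linarith)),
    hlog.eventually (eventually_lt_nhds (show (1 : ℝ) < 2 by norm_num)),
    hk.eventually_ge_atTop ((2 * (d + 1) + 0 : ℕ) : ℤ), hN.eventually_ge_atTop 1] with
    j h1 h2 h3 h4 h5 h6 h7 h8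
  by_contra hcon
  push Not at hcon
  have hq0 : (0 : ℝ) < q j := by exact_mod_cast (by have := hq2 j; omega)
  have hN0 : (0 : ℝ) < Nseq j := by exact_mod_cast h8
  have hrj : (0 : ℝ) < r j := by exact_mod_cast hr0 j
  obtain ⟨R, hR0, hRdvd, hR3⟩ := powerful_root (hr0 j).ne' (hpow j)
  have e1 : ((q j : ℕ) : ℝ) ^ κ ≤ r j := by
    rw [Real.rpow_le_iff_le_log hq0 hrj]
    exact (le_div_iff₀ (hLpos j)).1 hcon
  have e2 : ((q j : ℕ) : ℝ) ^ (1 - κ / 6) ≤ Nseq j := by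
    rw [Real.rpow_le_iff_le_log hq0 hN0]
    exact ((lt_div_iff₀ (hLpos j)).1 h5).le
  have e3 : (Nseq j : ℝ) ≤ ((q j : ℕ) : ℝ) ^ (2 : ℝ) := by
    rw [Real.le_rpow_iff_log_le hN0 hq0]
    exact ((div_lt_iff₀ (hLpos j)).1 h6).le
  have c1 := cluster_large (m := M + 1 + 1) (hdec j).eq (by have := hq2 j; omega) hR0 hR3 e1 e2 e3 hM' h3 h4
  have ha := approx_le (by have := hq2 j; omega) e3 (r := 0) h7 (happ j)
  have c2 := cluster_corr hf hf0 hf1 hd h8 (hdec j).eq (by have := hq2 j; omega) hR0 hRdvd (b := b j) (α := α) (by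
    rw [pow_zero, inv_one, pow_succ] at ha
    linarith)
  linarith

/-- Splitting the primes at an arbitrary threshold `T` bounds their number by
`T + log q / log T`. -/
lemma Dec.card_le {q q2 : ℕ} [NeZero q] (h : Dec q P q2) {T : ℕ} (hT : 2 ≤ T) :
    (P.card : ℝ) ≤ T + log q / log T := by
  have hT1 : (1 : ℝ) < T := by exact_mod_cast hT
  have hc : P.card ≤ T + (P.filter (fun p => T ≤ p)).card := by
    rw [← card_filter_add_card_filter_not (s := P) (fun p => T ≤ p), add_comm]
    refine Nat.add_le_add_right ?_ _
    calc _ ≤ (range T).card := card_le_card fun p hp => by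
          rw [mem_filter] at hp
          exact mem_range.2 (not_le.1 hp.2)
      _ = T := Finset.card_range T
  have hp : T ^ (P.filter (fun p => T ≤ p)).card ≤ q :=
    calc T ^ (P.filter (fun p => T ≤ p)).card ≤ ∏ p ∈ P.filter (fun p => T ≤ p), p :=
          Finset.pow_card_le_prod _ _ _ fun p hp => (mem_filter.1 hp).2
      _ ≤ ∏ p ∈ P, p := Finset.prod_le_prod_of_subset_of_one_le' (filter_subset _ _)
          fun p hp _ => (h.prime p hp).one_lt.le
      _ ≤ q := h.prod_le
  have hlog : ((P.filter (fun p => T ≤ p)).card : ℝ) ≤ log q / log T := by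
    rw [le_div_iff₀ (log_pos hT1), ← log_pow]
    exact Real.log_le_log (by positivity) (by exact_mod_cast hp)
  have : (P.card : ℝ) ≤ T + ((P.filter (fun p => T ≤ p)).card : ℝ) := by exact_mod_cast hc
  linarith

lemma card_small {q r : ℕ → ℕ} {P : ℕ → Finset ℕ} (hq2 : ∀ j, 2 ≤ q j)
    (hL : Tendsto (fun j => log (q j)) atTop atTop) (hdec : ∀ j, Dec (q j) (P j) (r j)) :
    Tendsto (fun j => ((P j).card : ℝ) / log (q j)) atTop (nhds 0) := by
  have hLpos : ∀ j, 0 < log (q j) := fun j => log_pos (by exact_mod_cast hq2 j)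
  refine tendsto_order.2 ⟨fun a ha => Eventually.of_forall fun j => ha.trans_le ?_, fun κ hκ => ?_⟩
  · exact div_nonneg (cast_nonneg _) (hLpos j).le
  obtain ⟨T, hT2, hT⟩ : ∃ T : ℕ, 2 ≤ T ∧ 2 / κ < log T := by
    have := (Real.tendsto_log_atTop.comp tendsto_natCast_atTop_atTop).eventually_gt_atTop (2 / κ)
    obtain ⟨T, h1, h2⟩ := (this.and (eventually_ge_atTop 2)).exists
    exact ⟨T, h2, h1⟩
  filter_upwards [hL.eventually_gt_atTop (2 * T / κ)] with j hj
  have : NeZero (q j) := ⟨by have := hq2 j; omega⟩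
  have h1 := (hdec j).card_le hT2
  have hlT : 0 < log T := (by positivity : 0 < 2 / κ).trans hT
  rw [div_lt_iff₀ hκ] at hj hT
  have h2 : log (q j) / log T ≤ κ / 2 * log (q j) := by
    rw [div_le_iff₀ hlT]
    nlinarith [hLpos j]
  rw [div_lt_iff₀ (hLpos j)]
  linarith

/-- The total loss is `q ^ o(1)`. -/
lemma loss_small {q r : ℕ → ℕ} {P : ℕ → Finset ℕ} (hq2 : ∀ j, 2 ≤ q j)
    (hL : Tendsto (fun j => log (q j)) atTop atTop) (hdec : ∀ j, Dec (q j) (P j) (r j))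
    (hr : Tendsto (fun j => log (r j) / log (q j)) atTop (nhds 0)) :
    Tendsto (fun j => log (loss (q j) (P j) (r j)) / log (q j)) atTop (nhds 0) := by
  have hLpos : ∀ j, 0 < log (q j) := fun j => log_pos (by exact_mod_cast hq2 j)
  have h1 := (card_small hq2 hL hdec).const_mul (log 2)
  have h2 : Tendsto (fun j => log 2 / log (q j)) atTop (nhds 0) :=
    tendsto_const_nhds.div_atTop hL
  have h3 : Tendsto (fun j => log (1 + log (q j)) / log (q j)) atTop (nhds 0) := by
    have e : Tendsto (fun y : ℝ => log (1 + y) / y) atTop (nhds 0) := by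
      have a1 : Tendsto (fun y : ℝ => 2 * (log (1 + y) / (1 + y))) atTop (nhds 0) := by
        have := (Real.isLittleO_log_id_atTop.tendsto_div_nhds_zero.comp
          (tendsto_atTop_add_const_left atTop (1 : ℝ) tendsto_id)).const_mul 2
        simpa using this
      refine tendsto_of_tendsto_of_tendsto_of_le_of_le' tendsto_const_nhds a1 ?_ ?_
      · filter_upwards [eventually_gt_atTop 0] with y hy
        exact div_nonneg (log_nonneg (by linarith)) hy.le
      · filter_upwards [eventually_ge_atTop 1] with y hy
        have : 0 ≤ log (1 + y) := log_nonneg (by linarith)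
        rw [← mul_div_assoc, div_le_div_iff₀ (by linarith) (by linarith)]
        nlinarith
    exact e.comp hL
  have h4 := ((h2.add h1).add hr).add h3
  simp only [mul_zero, add_zero] at h4
  refine h4.congr fun j => ?_
  have hr0 : (r j : ℝ) ≠ 0 := by
    have : NeZero (q j) := ⟨by have := hq2 j; omega⟩
    exact_mod_cast (hdec j).q2_pos.ne'
  have hlq : 1 + log (q j) ≠ 0 := by linarith [hLpos j]
  rw [loss, log_mul (by positivity) hlq, log_mul (by positivity) hr0,
    log_mul (by norm_num) (by positivity), log_pow]
  ring

/-- For a loss `Y = q ^ o(1)`, writing `ε = log Y / log q`, the choice `N = ⌊q ^ (1 - √ε)⌋` makes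
`q / N` larger than every fixed power of `Y` and still `q ^ o(1)`. -/
lemma parameters {q : ℕ → ℕ} {Y : ℕ → ℝ} (hq2 : ∀ j, 2 ≤ q j)
    (hL : Tendsto (fun j => log (q j)) atTop atTop) (hY2 : ∀ j, 2 ≤ Y j)
    (hY : Tendsto (fun j => log (Y j) / log (q j)) atTop (nhds 0)) :
    ∃ N : ℕ → ℕ, Tendsto N atTop atTop ∧ Tendsto (fun j => log (N j) / log (q j)) atTop (nhds 1) ∧
      Tendsto (fun j => (q j : ℝ) / N j) atTop atTop ∧ (∀ᶠ j in atTop, 1 ≤ N j ∧ N j ≤ q j) ∧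
      ∀ A : ℕ, (∀ᶠ j in atTop, (Y j * ((q j : ℝ) / N j)) ^ A ≤ (q j : ℝ) ^ (1 / 8 : ℝ)) ∧
        Tendsto (fun j => Y j ^ A / ((q j : ℝ) / N j) ^ (1 / 4 : ℝ)) atTop (nhds 0) := by
  have hLpos : ∀ j, 0 < log (q j) := fun j => log_pos (by exact_mod_cast hq2 j)
  have hlY : ∀ j, log 2 ≤ log (Y j) := fun j => Real.log_le_log (by norm_num) (hY2 j)
  have hl2 : 0 < log 2 := log_pos (by norm_num)
  obtain ⟨L, hLdef⟩ : ∃ L : ℕ → ℝ, ∀ j, log (q j) = L j := ⟨_, fun _ => rfl⟩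
  have hqe : ∀ j, (q j : ℝ) = exp (L j) := fun j => by
    rw [← hLdef, Real.exp_log]
    exact_mod_cast (by have := hq2 j; omega)
  simp only [hLdef] at hL hY hLpos ⊢
  obtain ⟨s, hs⟩ : ∃ s : ℕ → ℝ, ∀ j, s j = √(log (Y j) / L j) := ⟨_, fun _ => rfl⟩
  have hs0 : ∀ j, 0 ≤ s j := fun j => by rw [hs]; positivity
  have hssq : ∀ j, s j ^ 2 * L j = log (Y j) := fun j => by
    rw [hs, sq_sqrt (div_nonneg (hl2.le.trans (hlY j)) (hLpos j).le),
      div_mul_cancel₀ _ (hLpos j).ne']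
  have hst : Tendsto s atTop (nhds 0) := by
    have := hY.sqrt
    rw [Real.sqrt_zero] at this
    exact this.congr fun j => (hs j).symm
  have hsL : Tendsto (fun j => s j * L j) atTop atTop := by
    have h1 : Tendsto (fun j => √(log 2 * L j)) atTop atTop :=
      Real.tendsto_sqrt_atTop.comp (hL.const_mul_atTop hl2)
    refine tendsto_atTop_mono (fun j => ?_) h1
    refine Real.sqrt_le_iff.2 ⟨mul_nonneg (hs0 j) (hLpos j).le, ?_⟩
    calc log 2 * L j ≤ log (Y j) * L j :=
          mul_le_mul_of_nonneg_right (hlY j) (hLpos j).le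
      _ = (s j * L j) ^ 2 := by rw [← hssq]; ring
  have h2L : Tendsto (fun j => log 2 / L j) atTop (nhds 0) := tendsto_const_nhds.div_atTop hL
  obtain ⟨N, hNdef⟩ : ∃ N : ℕ → ℕ, ∀ j, N j = ⌊exp (L j * (1 - s j))⌋₊ := ⟨_, fun _ => rfl⟩
  have hsh : ∀ᶠ j in atTop, s j < 1 / 2 := hst.eventually (eventually_lt_nhds (by norm_num))
  have hNle : ∀ j, (N j : ℝ) ≤ exp (L j * (1 - s j)) := fun j => by
    rw [hNdef]; exact Nat.floor_le (Real.exp_pos _).le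
  have hNge : ∀ᶠ j in atTop, exp (L j * (1 - s j) - log 2) ≤ N j := by
    filter_upwards [hsh] with j hj
    rw [Real.exp_sub, Real.exp_log (by norm_num)]
    have h1 : (1 : ℝ) ≤ exp (L j * (1 - s j)) :=
      Real.one_le_exp (mul_nonneg (hLpos j).le (by linarith))
    have h2 : (1 : ℝ) ≤ N j := by
      rw [hNdef]; exact_mod_cast Nat.le_floor (by exact_mod_cast h1)
    have h3 := Nat.lt_floor_add_one (exp (L j * (1 - s j)))
    rw [← hNdef] at h3
    linarith
  have hN0 : ∀ᶠ j in atTop, (0 : ℝ) < N j := by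
    filter_upwards [hNge] with j hj using (Real.exp_pos _).trans_le hj
  have hlN : ∀ᶠ j in atTop, L j * (1 - s j) - log 2 ≤ log (N j) ∧
      log (N j) ≤ L j * (1 - s j) := by
    filter_upwards [hNge, hN0] with j h1 h2
    exact ⟨(Real.le_log_iff_exp_le h2).2 h1, (Real.log_le_iff_le_exp h2).2 (hNle j)⟩
  have hH : ∀ᶠ j in atTop, s j * L j ≤ log ((q j : ℝ) / N j) ∧
      log ((q j : ℝ) / N j) ≤ s j * L j + log 2 := by
    filter_upwards [hlN, hN0] with j h1 h2
    rw [Real.log_div (by rw [hqe]; positivity) h2.ne', hLdef]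
    constructor <;> linarith
  have hH0 : ∀ᶠ j in atTop, (0 : ℝ) < (q j : ℝ) / N j := by
    filter_upwards [hN0] with j h2
    exact div_pos (by rw [hqe]; positivity) h2
  have hLs : Tendsto (fun j => L j * (1 - s j) - log 2) atTop atTop := by
    refine tendsto_atTop_add_const_right _ _ ?_
    exact hL.atTop_mul_pos (show (0 : ℝ) < 1 by norm_num) (by simpa using hst.const_sub 1)
  refine ⟨N, ?_, ?_, ?_, ?_, fun A => ⟨?_, ?_⟩⟩
  · exact tendsto_natCast_atTop_iff.1
      (tendsto_atTop_mono' _ hNge (Real.tendsto_exp_atTop.comp hLs))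
  · have h1 : Tendsto (fun j => (1 - s j) - log 2 / L j) atTop (nhds 1) := by
      simpa using (hst.const_sub 1).sub h2L
    have h2 : Tendsto (fun j => 1 - s j) atTop (nhds 1) := by simpa using hst.const_sub 1
    refine tendsto_of_tendsto_of_tendsto_of_le_of_le' h1 h2 ?_ ?_
    · filter_upwards [hlN] with j hj
      rw [le_div_iff₀ (hLpos j), sub_mul, div_mul_cancel₀ _ (hLpos j).ne']
      linarith [hj.1]
    · filter_upwards [hlN] with j hj
      rw [div_le_iff₀ (hLpos j)]
      linarith [hj.2]
  · refine tendsto_atTop_mono' _ ?_ (Real.tendsto_exp_atTop.comp hsL)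
    filter_upwards [hH, hH0] with j h1 h2 using (Real.le_log_iff_exp_le h2).1 h1.1
  · filter_upwards [hN0] with j h1
    refine ⟨by exact_mod_cast h1, ?_⟩
    have : (N j : ℝ) ≤ q j := by
      refine (hNle j).trans ?_
      rw [hqe, Real.exp_le_exp]
      nlinarith [hs0 j, hLpos j]
    exact_mod_cast this
  · have h1 : Tendsto (fun j => (A : ℝ) * (s j ^ 2 + (s j + log 2 / L j))) atTop (nhds 0) := by
      simpa using ((hst.pow 2).add (hst.add h2L)).const_mul (A : ℝ)
    filter_upwards [h1.eventually (eventually_lt_nhds (show (0 : ℝ) < 1 / 8 by norm_num)),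
      hH, hH0] with j h2 h3 h4
    have hY0 : 0 < Y j := by linarith [hY2 j]
    rw [Real.le_rpow_iff_log_le (by positivity) (by rw [hqe]; positivity), log_pow,
      log_mul hY0.ne' h4.ne', ← hssq, hLdef]
    calc (A : ℝ) * (s j ^ 2 * L j + log ((q j : ℝ) / N j))
        ≤ (A : ℝ) * (s j ^ 2 * L j + (s j * L j + log 2)) := by gcongr; exact h3.2
      _ = (A : ℝ) * (s j ^ 2 + (s j + log 2 / L j)) * L j := by
          field_simp [(hLpos j).ne']
      _ ≤ 1 / 8 * L j := mul_le_mul_of_nonneg_right h2.le (hLpos j).le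
  · have h1 : Tendsto (fun j => (A : ℝ) * s j) atTop (nhds 0) := by
      simpa using hst.const_mul (A : ℝ)
    have h2 : Tendsto (fun j => exp (-(s j * L j / 8))) atTop (nhds 0) :=
      Real.tendsto_exp_neg_atTop_nhds_zero.comp (hsL.atTop_div_const (by norm_num))
    refine tendsto_of_tendsto_of_tendsto_of_le_of_le' tendsto_const_nhds h2 ?_ ?_
    · filter_upwards [hH0] with j h4
      have hY0 : 0 < Y j := by linarith [hY2 j]
      positivity
    · filter_upwards [hH0, hH, h1.eventually (eventually_lt_nhds (show (0 : ℝ) < 1 / 8 by norm_num))]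
        with j h4 h5 h6
      have hY0 : 0 < Y j := by linarith [hY2 j]
      rw [← Real.log_le_iff_le_exp (by positivity),
        Real.log_div (by positivity) (by positivity), log_pow, Real.log_rpow h4, ← hssq]
      have h7 : (A : ℝ) * s j * (s j * L j) ≤ 1 / 8 * (s j * L j) :=
        mul_le_mul_of_nonneg_right h6.le (mul_nonneg (hs0 j) (hLpos j).le)
      have h8 := h5.1
      nlinarith

/-- Irrational approximations of the stated quality have the correlations of the rational. -/
lemma corr_rational (hf : TF M f B) {α : ℝ} {b : ℕ → ℤ}
    {q : ℕ → ℕ} {k : ℕ → ℤ} (hq2 : ∀ j, 2 ≤ q j) (hqr : Tendsto (fun j => (q j : ℝ)) atTop atTop)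
    (hk : Tendsto k atTop atTop)
    (happ : ∀ j, |α - (b j : ℝ) / (q j : ℝ)| ≤ (q j : ℝ) ^ (-(k j))) (d : ℕ) {N : ℕ → ℕ}
    (hN : ∀ᶠ j in atTop, 1 ≤ N j ∧ N j ≤ q j) :
    Tendsto (fun j => corrGen (M + 1) (N j) (fun n => (n : ℝ) ^ d * α) f -
      corrGen (M + 1) (N j) (fun n => (n : ℝ) ^ d * ((b j : ℝ) / (q j : ℝ))) f) atTop (nhds 0) := by
  set C := (2 * (B + 1) + 1) ^ M * (2 * B) with hC
  have hC0 : 0 ≤ C := by have := hf.one_le; positivity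
  have hlim : Tendsto (fun j => C * (q j : ℝ)⁻¹) atTop (nhds 0) := by
    simpa using (tendsto_inv_atTop_zero.comp hqr).const_mul C
  refine squeeze_zero_norm' ?_ hlim
  filter_upwards [hN, hk.eventually_ge_atTop ((2 * d + (M + 2) : ℕ) : ℤ)] with j ⟨hN1, hNq⟩ hkj
  have hq1 : (1 : ℝ) ≤ q j := by exact_mod_cast (by have := hq2 j; omega)
  have hq2' : (2 : ℝ) ≤ q j := by exact_mod_cast hq2 j
  have hNq' : (N j : ℝ) ≤ q j := by exact_mod_cast hNq
  have hN2 : (N j : ℝ) ≤ (q j : ℝ) ^ (2 : ℝ) := by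
    rw [Real.rpow_ofNat]
    nlinarith
  have ha := approx_le (by have := hq2 j; omega) hN2 hkj (happ j)
  set δ := ((q j : ℝ) ^ (M + 2))⁻¹ with hδ
  have hδ0 : 0 ≤ δ := by positivity
  have hδe : (q j : ℝ) ^ (M + 1) * δ = (q j : ℝ)⁻¹ := by
    rw [hδ, pow_succ _ (M + 1), mul_inv, mul_inv_cancel_left₀ (by positivity)]
  have hδ1 : 2 * δ ≤ 1 := by
    have h1 : (q j : ℝ)⁻¹ ≤ 2⁻¹ := inv_anti₀ (by norm_num) hq2'
    have h2 : δ ≤ (q j : ℝ) ^ (M + 1) * δ := le_mul_of_one_le_left hδ0 (one_le_pow₀ hq1)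
    linarith
  rw [norm_eq_abs]
  refine (corr_perturb hf hN1 hδ0 hδ1 fun n _ hn => ?_).trans ?_
  · rw [← mul_sub, abs_mul, abs_of_nonneg (by positivity)]
    refine le_trans ?_ ha
    gcongr
  · rw [← hC, ← hδe]
    gcongr

/-- Lacking any arithmetic obstruction, the correlations of every power converge along a suitable
choice of lengths that does not depend on the power. -/
theorem poissonian_of_small {α : ℝ} {b : ℕ → ℤ} {q : ℕ → ℕ} {k : ℕ → ℤ} (hq2 : ∀ j, 2 ≤ q j)
    (hcop : ∀ j, IsCoprime (b j) ((q j : ℤ))) (hk : Tendsto k atTop atTop)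
    (happ : ∀ j, |α - (b j : ℝ) / (q j : ℝ)| ≤ (q j : ℝ) ^ (-(k j)))
    (hL : Tendsto (fun j => log (q j)) atTop atTop) {P : ℕ → Finset ℕ} {r : ℕ → ℕ}
    (hdec : ∀ j, Dec (q j) (P j) (r j))
    (hr : Tendsto (fun j => log (r j) / log (q j)) atTop (nhds 0)) (hd : 2 ≤ d) :
    PoissonianWrt d α q := by
  have hne : ∀ j, NeZero (q j) := fun j => ⟨by have := hq2 j; omega⟩
  have hqr : Tendsto (fun j => ((q j : ℕ) : ℝ)) atTop atTop := by
    refine tendsto_atTop_mono (fun j => ?_) hL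
    exact (Real.log_le_sub_one_of_pos (by exact_mod_cast (by have := hq2 j; omega))).trans
      (by linarith)
  obtain ⟨N, hN, hlogN, hH, hNq, hpar⟩ := parameters (Y := fun j => loss (q j) (P j) (r j)) hq2 hL
    (fun j => (hdec j).le_loss.1) (loss_small hq2 hL hdec hr)
  refine ⟨N, hN, hlogN, fun m hm f hfs => ?_⟩
  obtain ⟨M, rfl⟩ : ∃ M, m = M + 1 := ⟨m - 1, by omega⟩
  change SmoothCpt M f at hfs
  change Tendsto _ _ (nhds (∫ y : Fin M → ℝ, f y))
  obtain ⟨B, hf⟩ := TF_exists hfs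
  obtain ⟨A, hA⟩ := corr_main hd hf
  obtain ⟨hp1, hp2⟩ := hpar A
  have h1 := corr_rational hf hq2 hqr hk happ d hNq
  have h2 : Tendsto (fun j => corrGen (M + 1) (N j)
      (fun n => (n : ℝ) ^ d * ((b j : ℝ) / (q j : ℝ))) f -
      (∑ h ∈ box M ⌊B * ((q j : ℝ) / N j)⌋₊, smp f ((q j : ℝ) / N j) h) / ((q j : ℝ) / N j) ^ M)
      atTop (nhds 0) := by
    refine squeeze_zero_norm' ?_ hp2
    filter_upwards [hp1, hH.eventually_ge_atTop 1, hNq] with j h3 h4 h5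
    have hN0 : (N j : ℝ) ≠ 0 := by
      have := h5.1
      exact_mod_cast (by omega : N j ≠ 0)
    refine hA (q j) (P j) (r j) (hdec j) (b j) (hcop j) (N j) _ _
      (Real.one_le_rpow h4 (by norm_num)) ?_ (div_mul_cancel₀ _ hN0) h3
    rw [← rpow_natCast, ← Real.rpow_mul (by linarith)]
    norm_num
  have h3 := (riemann hf).comp hH
  have h4 := (h1.add h2).add h3
  simp only [zero_add, Function.comp_def] at h4
  refine h4.congr fun j => ?_
  rw [corrPow]
  ring

end

end Pois

theorem statement0 (α : ℝ) (hirr : Irrational α)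
    (b : ℕ → ℤ) (q : ℕ → ℕ) (k : ℕ → ℤ)
    (hq2 : ∀ j, 2 ≤ q j)
    (hcop : ∀ j, IsCoprime (b j) ((q j : ℤ)))
    (hk : Tendsto k atTop atTop)
    (happ : ∀ j, |α - (b j : ℝ) / (q j : ℝ)| ≤ (q j : ℝ) ^ (-(k j)))
    (d d' : ℕ) (hd : 2 ≤ d) (hd' : 2 ≤ d')
    (hP : PoissonianWrt d α q) :
    PoissonianWrt d' α q := by
  obtain ⟨Nseq, hN, hlog, hP⟩ := hP
  have hdec : ∀ j, ∃ P : Finset ℕ, ∃ r : ℕ, Pois.Dec (q j) P r ∧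
      ∀ p, p.Prime → p ∣ r → p ^ 2 ∣ r := fun j =>
    Pois.exists_dec (q j) (by have := hq2 j; omega)
  choose P r hdec hpow using hdec
  exact Pois.poissonian_of_small hq2 hcop hk happ (Pois.log_q_tendsto hq2 hN hlog) hdec
    (Pois.powerful_small hq2 hk happ hd hN hlog hP hdec hpow) hd'
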